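/- Let R be a commutative noetherian local ring. Then i(R) < ∞, i.e. there exists an integer k ≥ 0 such that \overline{J}^n ⊆ J^{n−k} for every ideal J of R and every n ≥ k. -/

import Mathlib

/-!
A uniform Briançon–Skoda theorem for noetherian local rings. It is enough to bound the ideals `J`
containing a power of the maximal ideal `𝔪`, uniformly in `J` (`UBS.bs_local`): for general `J` one
applies the bound to `J + 𝔪 ^ N` and intersects over `N` by Krull's theorem.

*Enlarging the ring.* `R` maps to a complete noetherian local ring `A` with algebraically closed
residue field `K` and `𝔪 A` maximal, such that `J A ∩ R = J` for `𝔪`-primary `J` (`exists_cover`).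
The generators of an algebraic closure are adjoined along a well-order, each by a lift of its
minimal polynomial (`inflate`, resting on `infl_pure` and `infl_ker`), and the result is completed
(`adic_cover`). The completion is noetherian because it has a coefficient ring (`noeth_algClosed`,
`exists_witt_lift`, `noeth_of_coeff`).

*Dévissage.* For an ideal `J = (g)` let `u`, `W_i` map to `T⁻¹`, `g_i T` in the extended Rees algebra.
If a fixed power `u ^ k` turns all relations among them modulo `I` into obvious ones (`UB`), then `I`
satisfies a uniform Artin–Rees bound (`UB.artinRees`). Noetherian induction on `I` (`devissage`)
carries this bound together with the Briançon–Skoda bound modulo `I` (`BS`), and reduces both to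
bounds modulo a prime `p` in which a fixed multiplier `c ∉ p` is allowed (`Dom`).

*Complete domains.* Let `D` be a complete local domain with residue field `K`. By Noether
normalization (`noether_norm`) `D` is finite over `A = Λ[[X_1, …, X_d]]`, where `Λ` is the ring of Witt
vectors of `K` or `K[[t]]`. Adjoining `p`-power roots (`exists_sep_ext`; the bounds come back down by
`DomD.transfer`) one may assume that `D` is generated over `A` by roots `θ_i` of distinguished
polynomials `g_i` with `g_i'(θ_i) ≠ 0`. Then `D` is a quotient of the complete intersection
`C = A[Θ] / (g_i(Θ_i))` (`CR`), and an element `κ` of nonzero image in `D` kills the kernel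
(`exists_kappa`).

*Complete intersections.* `C` is free over `A`, hence Cohen–Macaulay, so that a reduction of `J` with
`d + 1` generators (`reduction`) is a regular sequence and its extended Rees algebra has only the
obvious relations (`TB_of_regular`). The different `∏ g_i'(Θ_i)` multiplies the integral closure of
`J ^ n` into `J ^ (n - (d + 1))` (`x4`): after approximation by polynomials this is the theorem of Lipman
and Sathaye (`lipman_sathaye`, proved by a trace argument), applied in `ls_main` to the extended Rees
algebra over the ring generated by the parameters `u - w_0 ^ s'` and `z_j - w_j ^ s`. Finally
`Pkg.descend` passes to `D` and `Dom.of_quotient` from `D = A / p` to `p`.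
-/

/-- An element `x` is integral over the ideal `J`: it satisfies an equation
`x ^ n + a 1 * x ^ (n - 1) + ⋯ + a n = 0` with `a i ∈ J ^ i` for `1 ≤ i ≤ n`. -/
def IsIntegralOverIdeal {R : Type*} [CommRing R] (J : Ideal R) (x : R) : Prop :=
  ∃ n : ℕ, 0 < n ∧ ∃ a : ℕ → R, (∀ i, 1 ≤ i → i ≤ n → a i ∈ J ^ i) ∧
    x ^ n + ∑ i ∈ Finset.Icc 1 n, a i * x ^ (n - i) = 0

/-- The integral closure `\overline J` of an ideal `J`: the ideal of all elements integral
over `J` (realized as the ideal generated by this set, which is in fact already an ideal). -/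
def Ideal.intClosure {R : Type*} [CommRing R] (J : Ideal R) : Ideal R :=
  Ideal.span {x | IsIntegralOverIdeal J x}

/-- `IntDimBound R k` : `\overline J ^ n ⊆ J ^ (n - k)` for every ideal `J` of `R` and
every `n ≥ k`. -/
def IntDimBound (R : Type*) [CommRing R] (k : ℕ) : Prop :=
  ∀ (J : Ideal R) (n : ℕ), k ≤ n → (Ideal.intClosure J) ^ n ≤ J ^ (n - k)

/-! ### Relations of the extended Rees algebra -/

namespace UBS
open LaurentPolynomial in
/-- Evaluation at the generic point of the extended Rees algebra: `u ↦ T`, `W i ↦ g i * T⁻¹`, where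
`u = X none` and `W i = X (some i)`. -/
noncomputable def eps {R : Type*} [CommRing R] {ι : Type*} (g : ι → R) :
    MvPolynomial (Option ι) R →ₐ[R] LaurentPolynomial R :=
  MvPolynomial.aeval (fun o => o.elim (T 1) (fun i => C (g i) * T (-1)))

/-- The ideal generated by the obvious relations `u * W i = g i`. -/
noncomputable def relI {R : Type*} [CommRing R] {ι : Type*} (g : ι → R) :
    Ideal (MvPolynomial (Option ι) R) :=
  Ideal.span (Set.range fun i => MvPolynomial.X none * MvPolynomial.X (some i) -
    MvPolynomial.C (g i))

/-- `TB I g c k`: modulo `I`, every relation of the extended Rees algebra of `g` becomes a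
consequence of the relations `u * W i = g i` after multiplication by `c * u ^ k`. -/
def TB {R : Type*} [CommRing R] {ι : Type*} (I : Ideal R) (g : ι → R) (c : R) (k : ℕ) : Prop :=
  ∀ F : MvPolynomial (Option ι) R, (∀ n, (eps g F).coeff n ∈ I) →
    MvPolynomial.C c * MvPolynomial.X none ^ k * F ∈ relI g ⊔ I.map MvPolynomial.C

section
variable {R : Type*} [CommRing R] {ι : Type*}

lemma eps_C (g : ι → R) (a : R) : eps g (MvPolynomial.C a) = LaurentPolynomial.C a :=
  MvPolynomial.aeval_C _ _

lemma eps_u (g : ι → R) : eps g (MvPolynomial.X none) = LaurentPolynomial.T 1 :=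
  MvPolynomial.aeval_X _ _

lemma eps_W (g : ι → R) (i : ι) : eps g (MvPolynomial.X (some i)) =
    LaurentPolynomial.C (g i) * LaurentPolynomial.T (-1) :=
  MvPolynomial.aeval_X _ _

lemma coeff_C_mul (r : R) (F : LaurentPolynomial R) (n : ℤ) :
    (LaurentPolynomial.C r * F).coeff n = r * F.coeff n := by
  rw [← LaurentPolynomial.smul_eq_C_mul]; simp

lemma coeff_mul_T (F : LaurentPolynomial R) (m n : ℤ) :
    (F * LaurentPolynomial.T m).coeff n = F.coeff (n - m) := by
  rw [LaurentPolynomial.T, AddMonoidAlgebra.coeff_mul_single_eq_coeff_mul (m₂ := n - m), mul_one]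
  intro a _
  omega

lemma eps_rel (g : ι → R) {F : MvPolynomial (Option ι) R} (hF : F ∈ relI g) : eps g F = 0 := by
  have : relI g ≤ RingHom.ker (eps g) := by
    rw [relI, Ideal.span_le]
    rintro _ ⟨i, rfl⟩
    rw [SetLike.mem_coe, RingHom.mem_ker, map_sub, map_mul, eps_u, eps_W, eps_C,
      mul_left_comm, ← LaurentPolynomial.T_add]
    simp
  exact this hF

/-- The coefficient of `T ^ n` in `eps g F` lies in `J ^ (-n)`, where `J` is generated by `g`. -/
lemma eps_coeff_mem (g : ι → R) (F : MvPolynomial (Option ι) R) (n : ℤ) :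
    (eps g F).coeff n ∈ (Ideal.span (Set.range g)) ^ (-n).toNat := by
  induction F using MvPolynomial.induction_on generalizing n with
  | C a =>
    rw [eps_C, LaurentPolynomial.C_apply]
    split_ifs with h
    · subst h; simp
    · simp
  | add p q hp hq =>
    rw [map_add]
    exact add_mem (hp n) (hq n)
  | mul_X p o hp =>
    rw [map_mul]
    cases o with
    | none =>
      rw [eps_u, coeff_mul_T]
      exact Ideal.pow_le_pow_right (by omega) (hp (n - 1))
    | some i =>
      rw [eps_W, mul_left_comm, coeff_C_mul, coeff_mul_T]
      have h1 := Ideal.mul_mem_mul (Ideal.subset_span (Set.mem_range_self i) :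
        g i ∈ Ideal.span (Set.range g)) (hp (n - -1))
      rw [← pow_succ'] at h1
      exact Ideal.pow_le_pow_right (by omega) h1

lemma eps_coeff_mem_mul_smul (g : ι → R) (I : Ideal R) (a x : MvPolynomial (Option ι) R)
    (hx : ∀ n : ℤ, (eps g x).coeff n ∈ (Ideal.span (Set.range g)) ^ (-n).toNat * I) (n : ℤ) :
    (eps g (a * x)).coeff n ∈ (Ideal.span (Set.range g)) ^ (-n).toNat * I := by
  induction a using MvPolynomial.induction_on generalizing n with
  | C a =>
    rw [map_mul, eps_C, coeff_C_mul]
    exact Ideal.mul_mem_left _ _ (hx n)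
  | add p q hp hq =>
    rw [add_mul, map_add]
    exact add_mem (hp n) (hq n)
  | mul_X p o hp =>
    rw [mul_right_comm, map_mul]
    cases o with
    | none =>
      rw [eps_u, coeff_mul_T]
      exact Ideal.mul_mono_left (Ideal.pow_le_pow_right (by omega)) (hp (n - 1))
    | some i =>
      rw [eps_W, mul_left_comm, coeff_C_mul, coeff_mul_T]
      have h1 := Ideal.mul_mem_mul (Ideal.subset_span (Set.mem_range_self i) :
        g i ∈ Ideal.span (Set.range g)) (hp (n - -1))
      rw [← mul_assoc, ← pow_succ'] at h1
      exact Ideal.mul_mono_left (Ideal.pow_le_pow_right (by omega)) h1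

lemma eps_coeff_mem_mul (g : ι → R) (I : Ideal R) {F : MvPolynomial (Option ι) R}
    (hF : F ∈ I.map MvPolynomial.C) (n : ℤ) :
    (eps g F).coeff n ∈ (Ideal.span (Set.range g)) ^ (-n).toNat * I := by
  induction hF using Submodule.span_induction generalizing n with
  | mem x hx =>
    obtain ⟨a, ha, rfl⟩ := hx
    rw [eps_C, LaurentPolynomial.C_apply]
    split_ifs with h
    · subst h; simpa using ha
    · simp
  | zero => simp
  | add x y _ _ hx hy => rw [map_add]; exact add_mem (hx n) (hy n)
  | smul a x _ hx => exact eps_coeff_mem_mul_smul g I a x hx n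

lemma eps_coeff_mem' (g : ι → R) (I : Ideal R) {F : MvPolynomial (Option ι) R}
    (hF : F ∈ I.map MvPolynomial.C) (n : ℤ) : (eps g F).coeff n ∈ I :=
  (Ideal.mul_le_right : (Ideal.span (Set.range g)) ^ (-n).toNat * I ≤ I)
    (eps_coeff_mem_mul g I hF n)

/-- Elements of `J ^ n` are values of forms of degree `n`. -/
lemma exists_eps_of_mem_pow (g : ι → R) (n : ℕ) {y : R} (hy : y ∈ (Ideal.span (Set.range g)) ^ n) :
    ∃ F : MvPolynomial (Option ι) R,
      eps g F = LaurentPolynomial.C y * LaurentPolynomial.T (-n) := by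
  induction n generalizing y with
  | zero => exact ⟨MvPolynomial.C y, by simp⟩
  | succ n ih =>
    rw [pow_succ] at hy
    induction hy using Submodule.mul_induction_on' with
    | mem_mul_mem a ha b hb =>
      obtain ⟨F, hF⟩ := ih ha
      induction hb using Submodule.span_induction with
      | mem x hx =>
        obtain ⟨i, rfl⟩ := hx
        refine ⟨F * MvPolynomial.X (some i), ?_⟩
        rw [map_mul, hF, eps_W, map_mul]
        have : (-((n + 1 : ℕ) : ℤ)) = -n + -1 := by push_cast; ring
        rw [this, LaurentPolynomial.T_add]; ring
      | zero => exact ⟨0, by simp⟩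
      | add x y _ _ hx hy =>
        obtain ⟨F1, h1⟩ := hx
        obtain ⟨F2, h2⟩ := hy
        exact ⟨F1 + F2, by rw [map_add, h1, h2, mul_add, map_add, add_mul]⟩
      | smul r x _ hx =>
        obtain ⟨F1, h1⟩ := hx
        exact ⟨MvPolynomial.C r * F1, by
          rw [map_mul, h1, eps_C, ← mul_assoc, ← map_mul, smul_eq_mul, mul_left_comm]⟩
    | add x _ y _ hx hy =>
      obtain ⟨F1, h1⟩ := hx
      obtain ⟨F2, h2⟩ := hy
      exact ⟨F1 + F2, by rw [map_add, h1, h2, map_add, add_mul]⟩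

lemma TB.mono {I : Ideal R} {g : ι → R} {c : R} {k k' : ℕ} (h : TB I g c k) (hk : k ≤ k') :
    TB I g c k' := by
  intro F hF
  have := Ideal.mul_mem_left _ (MvPolynomial.X none ^ (k' - k)) (h F hF)
  convert this using 1
  rw [show k' = (k' - k) + k by omega, pow_add]
  simp; ring

/-- Uniform Artin–Rees from a bound on the relations. -/
lemma TB.artinRees {I : Ideal R} {g : ι → R} {k : ℕ} (h : TB I g 1 k) (n : ℕ) :
    (Ideal.span (Set.range g)) ^ n ⊓ I ≤ (Ideal.span (Set.range g)) ^ (n - k) * I := by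
  rintro y ⟨hy, hyI⟩
  obtain ⟨F, hF⟩ := exists_eps_of_mem_pow g n hy
  have h1 := h F (fun m => by
    rw [hF, coeff_C_mul]; exact Ideal.mul_mem_right _ _ hyI)
  obtain ⟨a, ha, b, hb, hab⟩ := Submodule.mem_sup.1 h1
  have h2 := congrArg (fun x => (eps g x).coeff (k - n : ℤ)) hab
  simp only [map_add, map_mul, map_pow, eps_u, hF, eps_rel g ha, map_one, one_mul, zero_add,
    LaurentPolynomial.T_pow] at h2
  rw [mul_comm (LaurentPolynomial.T _), coeff_mul_T, coeff_mul_T, LaurentPolynomial.C_apply,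
    if_pos (by simp)] at h2
  rw [← h2]
  have := eps_coeff_mem_mul g I hb (k - n : ℤ)
  rwa [show (-(k - n : ℤ)).toNat = n - k by omega] at this

/-- A relation modulo `I` becomes, after multiplication by `c * u ^ k`, a sum of obvious relations and
of `x * G` with `G` a relation modulo `I : x`. This is the inductive step of the dévissage. -/
lemma TB.core {I : Ideal R} {x : R} {g : ι → R} {c : R} {k : ℕ}
    (h : TB (I ⊔ Ideal.span {x}) g c k) {F : MvPolynomial (Option ι) R}
    (hF : ∀ n, (eps g F).coeff n ∈ I) : ∃ G : MvPolynomial (Option ι) R,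
      (∀ m, x * (eps g G).coeff m ∈ I) ∧
      MvPolynomial.C c * MvPolynomial.X none ^ k * F - MvPolynomial.C x * G ∈
        relI g ⊔ I.map MvPolynomial.C := by
  have h2 := h F (fun m => Ideal.mem_sup_left (hF m))
  rw [Ideal.map_sup, Ideal.map_span, Set.image_singleton, ← sup_assoc] at h2
  obtain ⟨a, ha, b, hb, hab⟩ := Submodule.mem_sup.1 h2
  obtain ⟨G, rfl⟩ := Ideal.mem_span_singleton'.1 hb
  refine ⟨G, fun m => ?_, ?_⟩
  · obtain ⟨a1, ha1, a2, ha2, rfl⟩ := Submodule.mem_sup.1 ha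
    rw [← coeff_C_mul, ← eps_C g, ← map_mul]
    have : MvPolynomial.C x * G =
        MvPolynomial.C c * MvPolynomial.X none ^ k * F - a1 - a2 := by
      rw [← hab]; ring
    rw [this, map_sub, map_sub, eps_rel g ha1, sub_zero]
    have q2 : (eps g a2).coeff m ∈ I := eps_coeff_mem' g I ha2 m
    have q1 : (eps g (MvPolynomial.C c * MvPolynomial.X none ^ k * F)).coeff m ∈ I := by
      rw [map_mul, map_mul, eps_C, map_pow, eps_u, LaurentPolynomial.T_pow, mul_assoc,
        coeff_C_mul, mul_comm (LaurentPolynomial.T _), coeff_mul_T]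
      exact Ideal.mul_mem_left _ _ (hF _)
    exact sub_mem q1 q2
  · have : MvPolynomial.C c * MvPolynomial.X none ^ k * F - MvPolynomial.C x * G = a := by
      rw [← hab]; ring
    rwa [this]

/-- The relation bound passes through the extension `0 → R/(I : x) → R/I → R/(I + x) → 0`. -/
lemma TB.ext {I I1 : Ideal R} {x : R} {g : ι → R} {c c1 : R} {k k1 : ℕ}
    (hI1 : ∀ a, x * a ∈ I → a ∈ I1) (hI1' : ∀ a ∈ I1, x * a ∈ I)
    (h : TB (I ⊔ Ideal.span {x}) g c k) (h1 : TB I1 g c1 k1) : TB I g (c * c1) (k + k1) := by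
  intro F hF
  obtain ⟨G, hG, hFG⟩ := h.core hF
  have h4 := h1 G fun m => hI1 _ (hG m)
  obtain ⟨b1, hb1, b2, hb2, hb12⟩ := Submodule.mem_sup.1 h4
  have h5 : MvPolynomial.C x * b2 ∈ I.map (MvPolynomial.C (σ := Option ι)) := by
    rw [MvPolynomial.mem_map_C_iff] at hb2 ⊢
    intro m
    rw [MvPolynomial.coeff_C_mul]
    exact hI1' _ (hb2 m)
  have h6 : MvPolynomial.C (c * c1) * MvPolynomial.X none ^ (k + k1) * F =
      MvPolynomial.C c1 * MvPolynomial.X none ^ k1 *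
        (MvPolynomial.C c * MvPolynomial.X none ^ k * F - MvPolynomial.C x * G) +
        (MvPolynomial.C x * b1 + MvPolynomial.C x * b2) := by
    rw [← mul_add, hb12, pow_add, map_mul]
    ring
  rw [h6]
  exact add_mem (Ideal.mul_mem_left _ _ hFG)
    (Submodule.mem_sup.2 ⟨_, Ideal.mul_mem_left _ _ hb1, _, h5, rfl⟩)

/-- A relation bound with multiplier `x` modulo a prime, and one modulo `p + x`, give a relation
bound without multiplier. -/
lemma TB.of_prime {p : Ideal R} [p.IsPrime] {x : R} (hx : x ∉ p) {g : ι → R} {k k1 : ℕ}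
    (h : TB (p ⊔ Ideal.span {x}) g 1 k) (h1 : TB p g x k1) : TB p g 1 (k + k1) := by
  intro F hF
  obtain ⟨G, hG, hFG⟩ := h.core hF
  have h4 := h1 G fun m => (Ideal.IsPrime.mem_or_mem ‹_› (hG m)).resolve_left hx
  have h6 : MvPolynomial.C 1 * MvPolynomial.X none ^ (k + k1) * F =
      MvPolynomial.X none ^ k1 *
        (MvPolynomial.C 1 * MvPolynomial.X none ^ k * F - MvPolynomial.C x * G) +
        MvPolynomial.C x * MvPolynomial.X none ^ k1 * G := by
    rw [pow_add]
    ring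
  rw [h6]
  exact add_mem (Ideal.mul_mem_left _ _ hFG) h4

end
end UBS

/-! ### Dévissage to primes -/

namespace UBS
open IsLocalRing

/-- `J` is proper and contains a power of the maximal ideal. -/
def Prim {R : Type*} [CommRing R] [IsLocalRing R] (J : Ideal R) : Prop :=
  J ≤ maximalIdeal R ∧ ∃ N : ℕ, maximalIdeal R ^ N ≤ J

/-- A uniform bound, modulo `I`, on the relations of the extended Rees algebras of all
primary ideals. -/
def UB {R : Type*} [CommRing R] [IsLocalRing R] (I : Ideal R) (k : ℕ) : Prop :=
  ∀ (s : ℕ) (g : Fin s → R), Prim (Ideal.span (Set.range g)) → TB I g 1 k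

/-- The Briançon–Skoda bound modulo `I`, for all primary ideals. -/
def BS {R : Type*} [CommRing R] [IsLocalRing R] (I : Ideal R) (k : ℕ) : Prop :=
  ∀ J : Ideal R, Prim J → ∀ n, J.intClosure ^ n ≤ J ^ (n - k) ⊔ I

/-- Both bounds hold modulo the prime `p` up to a fixed multiplier outside `p`. -/
def Dom {R : Type*} [CommRing R] [IsLocalRing R] (p : Ideal R) : Prop :=
  ∃ c ∉ p, ∃ k : ℕ, (∀ J : Ideal R, Prim J → ∀ n, ∀ y ∈ J.intClosure ^ n,
    c * y ∈ J ^ (n - k) ⊔ p) ∧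
    ∀ (s : ℕ) (g : Fin s → R), Prim (Ideal.span (Set.range g)) → TB p g c k

section
variable {R : Type*} [CommRing R] [IsLocalRing R]

/-- A bound on the relations modulo `I` is a uniform Artin–Rees bound for `I`. -/
lemma UB.artinRees [IsNoetherianRing R] {I : Ideal R} {k : ℕ} (h : UB I k) {J : Ideal R}
    (hJ : Prim J) (n : ℕ) : J ^ n ⊓ I ≤ J ^ (n - k) * I := by
  obtain ⟨s, g, rfl⟩ := Submodule.fg_iff_exists_fin_generating_family.1
    (IsNoetherian.noetherian J)
  exact (h s g hJ).artinRees n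

/-- Auxiliary ideals controlling the error terms in `BS.ext`. -/
def errI (J K : Ideal R) (k : ℕ) : ℕ → Ideal R
  | 0 => ⊥
  | n + 1 => K * errI J K k n ⊔ J ^ (n - k)

/-- Multiplied by `K ^ m`, the error terms of `errI` lie in a bounded shift of the powers of `J` once
the Briançon–Skoda bound is known modulo `I1`. -/
lemma errI_le {J K I1 : Ideal R} {k k1 : ℕ} (h : ∀ n, K ^ n ≤ J ^ (n - k1) ⊔ I1) (n m : ℕ) :
    K ^ m * errI J K k n ≤ J ^ (m + n - (1 + k + k1)) ⊔ I1 := by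
  induction n generalizing m with
  | zero => simp [errI]
  | succ n ih =>
    rw [errI, Ideal.mul_sup, ← mul_assoc, ← pow_succ]
    refine sup_le ((ih (m + 1)).trans ?_) ((Ideal.mul_mono_left (h m)).trans ?_)
    · rw [show m + 1 + n = m + (n + 1) by ring]
    · rw [Ideal.sup_mul, ← pow_add]
      exact sup_le_sup (Ideal.pow_le_pow_right (by omega)) Ideal.mul_le_left

/-- The Briançon–Skoda bound modulo `I` follows from the bounds modulo `I + (x)` and modulo an ideal
`I1` with `x * I1 ⊆ I`. The Artin–Rees bound for `I + (x)` controls the correction terms. -/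
lemma BS.ext [IsNoetherianRing R] {I I1 : Ideal R} {x : R} {a k1 k2 : ℕ}
    (hI1 : ∀ a ∈ I1, x * a ∈ I) (h2 : BS (I ⊔ Ideal.span {x}) k2)
    (hU : UB (I ⊔ Ideal.span {x}) a) (h1 : BS I1 k1) : BS I (1 + (k2 + a) + k1) := by
  intro J hJ n
  set K := J.intClosure
  have hA : ∀ n, K ^ n ≤ J ^ (n - k2) ⊔ (Ideal.span {x} * errI J K (k2 + a) n ⊔ I) := by
    intro n
    induction n with
    | zero => simp
    | succ n ih =>
      rw [pow_succ', Ideal.mul_le]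
      intro t ht y hy
      obtain ⟨b, hb, ν, hν, rfl⟩ := Submodule.mem_sup.1 (ih hy)
      have hty : t * (b + ν) ∈ K ^ (n + 1) := by rw [pow_succ']; exact Ideal.mul_mem_mul ht hy
      obtain ⟨b', hb', ν', hν', hbν'⟩ := Submodule.mem_sup.1 (h2 J hJ _ hty)
      have hν2 : ν ∈ I ⊔ Ideal.span {x} := by
        have : Ideal.span {x} * errI J K (k2 + a) n ⊔ I ≤ I ⊔ Ideal.span {x} :=
          sup_le (Ideal.mul_le_left.trans le_sup_right) le_sup_left
        exact this hν
      have h3 : t * b - b' ∈ J ^ (n - k2) ⊓ (I ⊔ Ideal.span {x}) := by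
        refine ⟨sub_mem (Ideal.mul_mem_left _ _ hb) (Ideal.pow_le_pow_right (by omega) hb'), ?_⟩
        have : t * b - b' = ν' - t * ν := by linear_combination -hbν'
        rw [this]
        exact sub_mem hν' (Ideal.mul_mem_left _ _ hν2)
      have h4 := hU.artinRees hJ _ h3
      have e : t * (b + ν) = b' + ((t * b - b') + t * ν) := by ring
      rw [e]
      refine Submodule.add_mem_sup hb' (add_mem ?_ ?_)
      · have : J ^ (n - k2 - a) * (I ⊔ Ideal.span {x}) ≤
            Ideal.span {x} * errI J K (k2 + a) (n + 1) ⊔ I := by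
          rw [Ideal.mul_sup]
          refine sup_le (Ideal.mul_le_right.trans le_sup_right) (le_sup_of_le_left ?_)
          rw [mul_comm, errI, Nat.sub_sub]
          exact Ideal.mul_mono_right le_sup_right
        exact this h4
      · have : K * (Ideal.span {x} * errI J K (k2 + a) n ⊔ I) ≤
            Ideal.span {x} * errI J K (k2 + a) (n + 1) ⊔ I := by
          rw [Ideal.mul_sup, mul_left_comm, errI]
          exact sup_le_sup (Ideal.mul_mono_right le_sup_left) Ideal.mul_le_right
        exact this (Ideal.mul_mem_mul ht hν)
  refine (hA n).trans (sup_le ((Ideal.pow_le_pow_right (by omega)).trans le_sup_left)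
    (sup_le ?_ le_sup_right))
  rw [Ideal.mul_le]
  intro z hz e he
  obtain ⟨w, rfl⟩ := Ideal.mem_span_singleton'.1 hz
  have h5 := errI_le (k := k2 + a) (h1 J hJ) n 0 (by simpa using he)
  rw [zero_add] at h5
  obtain ⟨j, hj, i, hi, rfl⟩ := Submodule.mem_sup.1 h5
  have : w * x * (j + i) = w * x * j + w * (x * i) := by ring
  rw [this]
  exact Submodule.add_mem_sup (Ideal.mul_mem_left _ _ hj) (Ideal.mul_mem_left _ _ (hI1 _ hi))

/-- The multiplier `c` is removed with the help of the bound modulo `p + (c)` and of the Artin–Rees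
bound for `p + (c ^ 2)`. -/
lemma BS.of_prime [IsNoetherianRing R] {p : Ideal R} [p.IsPrime] {c : R} (hc : c ∉ p) {a k k2 : ℕ}
    (h2 : BS (p ⊔ Ideal.span {c}) k2) (hU : UB (p ⊔ Ideal.span {c ^ 2}) a)
    (h : ∀ J : Ideal R, Prim J → ∀ n, ∀ y ∈ J.intClosure ^ n, c * y ∈ J ^ (n - k) ⊔ p) :
    BS p (k + k2 + a) := by
  intro J hJ n y hy
  have hm : ∀ {b b'}, b ≤ b' → J ^ b' ≤ J ^ b := fun h => Ideal.pow_le_pow_right h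
  obtain ⟨j, hj, z, hz, rfl⟩ := Submodule.mem_sup.1 (h2 J hJ n hy)
  obtain ⟨q, hq, cd, hcd, rfl⟩ := Submodule.mem_sup.1 hz
  obtain ⟨d, rfl⟩ := Ideal.mem_span_singleton'.1 hcd
  obtain ⟨e, he, q', hq', heq⟩ := Submodule.mem_sup.1 (h J hJ n _ hy)
  have h3 : e - c * j ∈ J ^ (n - (k + k2)) ⊓ (p ⊔ Ideal.span {c ^ 2}) := by
    refine ⟨sub_mem (hm (by omega) he) (Ideal.mul_mem_left _ _ (hm (by omega) hj)), ?_⟩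
    have : e - c * j = (c * q - q') + d * c ^ 2 := by linear_combination heq
    rw [this]
    exact Submodule.add_mem_sup (sub_mem (Ideal.mul_mem_left _ _ hq) hq')
      (Ideal.mul_mem_left _ _ (Ideal.mem_span_singleton_self _))
  have h4 := hU.artinRees hJ _ h3
  rw [Ideal.mul_sup] at h4
  obtain ⟨v, hv, w, hw, hvw⟩ := Submodule.mem_sup.1 h4
  rw [mul_comm] at hw
  obtain ⟨j', hj', rfl⟩ := Ideal.mem_span_singleton_mul.1 hw
  have h5 : c ^ 2 * (d - j') ∈ p := by
    have : c ^ 2 * (d - j') = v - (c * q - q') := by linear_combination -heq - hvw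
    rw [this]
    exact sub_mem (Ideal.mul_le_right hv) (sub_mem (Ideal.mul_mem_left _ _ hq) hq')
  have h6 : d - j' ∈ p := (Ideal.IsPrime.mem_or_mem ‹_› h5).resolve_left
    fun h => hc (Ideal.IsPrime.mem_of_pow_mem ‹_› _ h)
  have : j + (q + d * c) = (j + c * j') + (q + c * (d - j')) := by ring
  rw [this]
  rw [Nat.sub_sub] at hj'
  exact Submodule.add_mem_sup (add_mem (hm (by omega) hj) (Ideal.mul_mem_left _ _ hj'))
    (add_mem hq (Ideal.mul_mem_left _ _ h6))

/-- Noetherian induction on `I`. In an ideal `I` maximal among those without bounds, either `I` is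
prime, and the multiplier allowed by `Dom` is removed, or `I` is reached from two larger ideals. -/
theorem devissage [IsNoetherianRing R] (H : ∀ p : Ideal R, p.IsPrime → Dom p) (I : Ideal R) :
    ∃ k, UB I k ∧ BS I k := by
  refine IsNoetherian.induction (P := fun I : Ideal R => ∃ k, UB I k ∧ BS I k) ?_ I
  intro (I : Ideal R) ih
  have hU : ∀ {I : Ideal R} {a b}, a ≤ b → UB I a → UB I b := fun h h1 s g hg => (h1 s g hg).mono h
  have hB : ∀ {I : Ideal R} {a b}, a ≤ b → BS I a → BS I b := fun h h1 J hJ n =>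
    (h1 J hJ n).trans (sup_le_sup_right (Ideal.pow_le_pow_right (by omega)) _)
  have hlt : ∀ x, x ∉ I → I < I ⊔ Ideal.span {x} := fun x hx =>
    lt_of_le_of_ne le_sup_left fun h => hx (h ▸ Ideal.mem_sup_right
      (Ideal.mem_span_singleton_self x))
  by_cases hI : I = ⊤
  · subst hI
    refine ⟨0, fun s g _ F _ => ?_, fun J _ n => by simp⟩
    rw [Ideal.map_top]; simp
  by_cases hp : I.IsPrime
  · obtain ⟨c, hc, k, hc1, hc2⟩ := H I hp
    obtain ⟨k1, hk1, hk1'⟩ := ih _ (hlt c hc)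
    obtain ⟨k2, hk2, -⟩ := ih _ (hlt (c ^ 2) fun h => hc (hp.mem_of_pow_mem _ h))
    have u1 : UB I (k1 + k) := fun s g hg => TB.of_prime hc (hk1 s g hg) (hc2 s g hg)
    have b1 := BS.of_prime hc hk1' hk2 hc1
    exact ⟨k1 + k + (k + k1 + k2), hU (by omega) u1, hB (by omega) b1⟩
  · obtain ⟨x, hx, y, hy, hxy⟩ : ∃ x, x ∉ I ∧ ∃ y, y ∉ I ∧ x * y ∈ I := by
      by_contra! hcon
      exact hp ⟨hI, fun {x y} hxy => by
        by_contra! h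
        exact hcon x h.1 y h.2 hxy⟩
    let I1 : Ideal R := Submodule.comap (LinearMap.mulLeft R x) I
    have hI1 : ∀ a, x * a ∈ I → a ∈ I1 := fun a ha => ha
    have hI1' : ∀ a ∈ I1, x * a ∈ I := fun a ha => ha
    have hlt1 : I < I1 := lt_of_le_of_ne (fun a ha => Ideal.mul_mem_left _ _ ha)
      fun h => hy (h ▸ hI1 y hxy)
    obtain ⟨k1, hk1, hk1'⟩ := ih _ hlt1
    obtain ⟨k2, hk2, hk2'⟩ := ih _ (hlt x hx)
    have u1 : UB I (k2 + k1) := fun s g hg => by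
      simpa using TB.ext hI1 hI1' (hk2 s g hg) (hk1 s g hg)
    have b1 := BS.ext hI1' hk2' hk2 hk1'
    exact ⟨(k2 + k1) + (1 + (k2 + k2) + k1), hU (by omega) u1, hB (by omega) b1⟩
end
end UBS

/-! ### The Lipman–Sathaye lemma -/

namespace UBS
open TensorProduct

lemma isIntegral_trace' {Q K L : Type*} [CommRing Q] [Field K] [Algebra Q K] [CommRing L]
    [Algebra K L] [Algebra Q L] [IsScalarTower Q K L] [Module.Finite K L] {z : L}
    (hz : IsIntegral Q z) : IsIntegral Q (Algebra.trace K L z) := by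
  classical
  obtain ⟨p, hp, hpz⟩ := hz
  let b := Module.finBasis K L
  let M := Algebra.leftMulMatrix b z
  let Ω := AlgebraicClosure K
  let φ := algebraMap K Ω
  let p' : Polynomial Ω := p.map (algebraMap Q Ω)
  rw [Algebra.trace_eq_matrix_trace b]
  rw [← isIntegral_algebraMap_iff (B := Ω) (algebraMap K Ω).injective]
  have h0 : Polynomial.aeval M p = 0 := by
    have h1 : (Algebra.leftMulMatrix b).restrictScalars Q (Polynomial.aeval z p) =
        Polynomial.aeval M p := by
      rw [← Polynomial.aeval_algHom_apply]; rfl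
    rw [← h1, Polynomial.aeval_def, hpz, map_zero]
  have h0' : Polynomial.aeval (M.map φ) p' = 0 := by
    have h1 : ((IsScalarTower.toAlgHom Q K Ω).mapMatrix : Matrix _ _ K →ₐ[Q] Matrix _ _ Ω)
        (Polynomial.aeval M p) = Polynomial.aeval (M.map φ) p := by
      rw [← Polynomial.aeval_algHom_apply]; rfl
    rw [Polynomial.aeval_map_algebraMap, ← h1, h0, map_zero]
  have h2 : algebraMap K Ω M.trace = (M.map φ).trace := by
    simp [Matrix.trace, map_sum, φ]
  have h3 : (M.map φ).trace = (M.map φ).charpoly.roots.sum := Matrix.trace_eq_sum_roots_charpoly _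
  change IsIntegral Q (algebraMap K Ω M.trace)
  rw [h2, h3]
  refine IsIntegral.multiset_sum ?_
  intro μ hμ
  refine ⟨p, hp, ?_⟩
  have h4 := Polynomial.isRoot_of_mem_roots hμ
  rw [← Matrix.mem_spectrum_iff_isRoot_charpoly] at h4
  have h5 := spectrum.subset_polynomial_aeval (M.map φ) p' ⟨μ, h4, rfl⟩
  rw [h0', spectrum.mem_iff, sub_zero] at h5
  by_contra h6
  refine h5 (IsUnit.map _ (isUnit_iff_ne_zero.2 ?_))
  change Polynomial.eval μ p' ≠ 0
  rwa [Polynomial.eval_map]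

lemma map_aeval' {Q E B σ : Type*} [CommRing Q] [CommRing E] [CommRing B] [Algebra Q E]
    [Algebra Q B] (μ : E →ₐ[Q] B) (a : σ → E) (F : MvPolynomial σ Q) :
    μ (MvPolynomial.aeval a F) = MvPolynomial.aeval (fun i => μ (a i)) F :=
  MvPolynomial.comp_aeval_apply a μ F

/-- First-order Taylor expansion of a polynomial in the difference of two points. -/
lemma taylor_one {Q E B : Type*} [CommRing Q] [CommRing E] [CommRing B] [Algebra Q E]
    [Algebra Q B] {σ : Type*} [Fintype σ] (μ : E →ₐ[Q] B) (a b : σ → E) (hab : ∀ j, μ (a j) = μ (b j))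
    (F : MvPolynomial σ Q) : ∃ H : σ → E,
      MvPolynomial.aeval a F - MvPolynomial.aeval b F = ∑ j, H j * (a j - b j) ∧
      ∀ j, μ (H j) = MvPolynomial.aeval (fun i => μ (a i)) (MvPolynomial.pderiv j F) := by
  classical
  induction F using MvPolynomial.induction_on with
  | C c => exact ⟨0, by simp, by simp⟩
  | add p q hp hq =>
    obtain ⟨H, h1, h2⟩ := hp
    obtain ⟨G, h3, h4⟩ := hq
    refine ⟨H + G, ?_, fun j => by simp [h2, h4]⟩
    simp only [map_add, Pi.add_apply, add_mul, Finset.sum_add_distrib, ← h1, ← h3]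
    ring
  | mul_X p i hp =>
    obtain ⟨H, h1, h2⟩ := hp
    refine ⟨fun j => H j * a i + Pi.single (M := fun _ => E) i (MvPolynomial.aeval b p) j, ?_,
      fun j => ?_⟩
    · have e : ∑ j, Pi.single (M := fun _ => E) i (MvPolynomial.aeval b p) j * (a j - b j) =
          MvPolynomial.aeval b p * (a i - b i) := by
        rw [Finset.sum_eq_single i] <;> simp +contextual
      simp only [add_mul, Finset.sum_add_distrib, e]
      have e2 : ∑ j, H j * a i * (a j - b j) = a i * ∑ j, H j * (a j - b j) := by
        rw [Finset.mul_sum]; exact Finset.sum_congr rfl fun _ _ => by ring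
      rw [e2, ← h1]
      simp only [map_mul, MvPolynomial.aeval_X]
      ring
    · have e : μ (MvPolynomial.aeval b p) = MvPolynomial.aeval (fun i => μ (a i)) p := by
        rw [map_aeval', funext hab]
      simp only [map_add, map_mul, h2, Derivation.leibniz, smul_eq_mul, MvPolynomial.pderiv_X,
        MvPolynomial.aeval_X, Pi.single_apply]
      by_cases h : j = i
      · subst h; simp [e]; ring
      · simp [h, Ne.symm h]; ring

/-- The diagonal element given by the Jacobian determinant. -/
lemma exists_diag {Q B : Type*} [CommRing Q] [CommRing B] [Algebra Q B]
    {σ : Type*} [Fintype σ] [DecidableEq σ] (x : σ → B)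
    (hx : Algebra.adjoin Q (Set.range x) = ⊤) (F : σ → MvPolynomial σ Q)
    (hF : ∀ i, MvPolynomial.aeval x (F i) = 0) : ∃ ε : B ⊗[Q] B,
      (∀ b : B, (b ⊗ₜ[Q] 1) * ε = (1 ⊗ₜ[Q] b) * ε) ∧
      Algebra.TensorProduct.lmul' Q ε =
        (Matrix.of fun i j => MvPolynomial.aeval x (MvPolynomial.pderiv j (F i))).det := by
  classical
  let μ := Algebra.TensorProduct.lmul' Q (S := B)
  let a : σ → B ⊗[Q] B := fun j => x j ⊗ₜ 1
  let b : σ → B ⊗[Q] B := fun j => 1 ⊗ₜ x j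
  have hμa : ∀ j, μ (a j) = x j := fun j => by simp [μ, a]
  have hμb : ∀ j, μ (b j) = x j := fun j => by simp [μ, b]
  choose H hH1 hH2 using fun i => taylor_one μ a b (fun j => by rw [hμa, hμb]) (F i)
  have ha : ∀ i, MvPolynomial.aeval a (F i) = 0 := fun i => by
    have : MvPolynomial.aeval a (F i) =
        Algebra.TensorProduct.includeLeft (S := Q) (MvPolynomial.aeval x (F i)) := by
      rw [map_aeval']; rfl
    rw [this, hF, map_zero]
  have hb : ∀ i, MvPolynomial.aeval b (F i) = 0 := fun i => by
    have : MvPolynomial.aeval b (F i) =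
        Algebra.TensorProduct.includeRight (R := Q) (A := B) (MvPolynomial.aeval x (F i)) := by
      rw [map_aeval']; rfl
    rw [this, hF, map_zero]
  let M : Matrix σ σ (B ⊗[Q] B) := Matrix.of H
  have hM : M.mulVec (fun j => a j - b j) = 0 := by
    ext i
    have := hH1 i
    rw [ha, hb, sub_zero] at this
    simpa [Matrix.mulVec, dotProduct, M] using this.symm
  have hdet : ∀ j, M.det * (a j - b j) = 0 := fun j => by
    have h1 := congrArg (fun v => M.adjugate.mulVec v) hM
    simp only [Matrix.mulVec_mulVec, Matrix.adjugate_mul, Matrix.mulVec_zero] at h1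
    have := congrFun h1 j
    simpa [Matrix.smul_mulVec] using this
  refine ⟨M.det, fun c => ?_, ?_⟩
  · have hc : c ∈ Algebra.adjoin Q (Set.range x) := hx ▸ Algebra.mem_top
    induction hc using Algebra.adjoin_induction with
    | mem y hy =>
      obtain ⟨j, rfl⟩ := hy
      have := hdet j
      linear_combination this
    | algebraMap r =>
      congr 1
      rw [Algebra.algebraMap_eq_smul_one, smul_tmul]
    | add y z _ _ h1 h2 => rw [add_tmul, tmul_add, add_mul, add_mul, h1, h2]
    | mul y z _ _ h1 h2 =>
      have e1 : ((y * z) ⊗ₜ[Q] (1 : B)) = (y ⊗ₜ[Q] 1) * (z ⊗ₜ[Q] 1) := by simp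
      have e2 : ((1 : B) ⊗ₜ[Q] (y * z)) = (1 ⊗ₜ[Q] y) * (1 ⊗ₜ[Q] z) := by simp
      rw [e1, e2, mul_assoc, h2, mul_left_comm, h1]
      ring
  · change μ M.det = _
    rw [AlgHom.map_det]
    congr 1
    ext i j
    simp only [AlgHom.mapMatrix_apply, Matrix.map_apply, Matrix.of_apply, M, hH2, hμa]

set_option maxHeartbeats 1000000 in
/-- The Lipman–Sathaye lemma, in the form: the Jacobian determinant multiplies the integral closure
of a principal ideal into the ideal. -/
lemma lipman_sathaye {Q B : Type*} [CommRing Q] [IsDomain Q] [IsIntegrallyClosed Q] [CommRing B]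
    [Algebra Q B] [Module.Finite Q B] (htf : ∀ (q : Q) (b : B), q ≠ 0 → q • b = 0 → b = 0)
    {σ : Type*} [Fintype σ] [DecidableEq σ] (x : σ → B)
    (hx : Algebra.adjoin Q (Set.range x) = ⊤) (F : σ → MvPolynomial σ Q)
    (hF : ∀ i, MvPolynomial.aeval x (F i) = 0) {s y : B} (hs : ∀ b, s * b = 0 → b = 0)
    (hy : IsIntegralOverIdeal (Ideal.span {s}) y) :
    s ∣ (Matrix.of fun i j => MvPolynomial.aeval x (MvPolynomial.pderiv j (F i))).det * y := by
  classical
  obtain ⟨ε, hε, hμε⟩ := exists_diag x hx F hF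
  rw [← hμε]
  let K := FractionRing Q
  let L := K ⊗[Q] B
  let ι : B →ₐ[Q] L := Algebra.TensorProduct.includeRight
  have hι : ∀ b, ι b = 0 → b = 0 := by
    intro b hb
    have : IsLocalizedModule (nonZeroDivisors Q) (TensorProduct.mk Q K B 1) :=
      (isLocalizedModule_iff_isBaseChange (nonZeroDivisors Q) K _).2
        (TensorProduct.isBaseChange Q B K)
    obtain ⟨c, hc⟩ := (IsLocalizedModule.eq_zero_iff (nonZeroDivisors Q)
      (TensorProduct.mk Q K B 1)).1 hb
    exact htf c b (nonZeroDivisors.coe_ne_zero c) hc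
  have hspan : ∀ l : L, ∃ q : Q, q ≠ 0 ∧ ∃ b : B, q • l = ι b := by
    intro l
    have : IsLocalizedModule (nonZeroDivisors Q) (TensorProduct.mk Q K B 1) :=
      (isLocalizedModule_iff_isBaseChange (nonZeroDivisors Q) K _).2
        (TensorProduct.isBaseChange Q B K)
    obtain ⟨⟨b, c⟩, hc⟩ := IsLocalizedModule.surj (nonZeroDivisors Q)
      (TensorProduct.mk Q K B 1) l
    exact ⟨c, nonZeroDivisors.coe_ne_zero c, b, hc⟩
  have htL : ∀ (q : Q) (l : L), q ≠ 0 → q • l = 0 → l = 0 := by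
    intro q l hq h
    rw [← algebraMap_smul K q l] at h
    exact (smul_eq_zero.1 h).resolve_left
      (by simpa [FaithfulSMul.algebraMap_eq_zero_iff] using hq)
  have hsu : IsUnit (ι s) := by
    have hinj : Function.Injective (LinearMap.mulLeft K (ι s)) := by
      rw [injective_iff_map_eq_zero]
      intro l hl
      obtain ⟨q, hq, b, hb⟩ := hspan l
      refine htL q l hq ?_
      rw [hb]
      have : s * b = 0 := by
        apply hι
        rw [map_mul, ← hb, mul_smul_comm]
        rw [LinearMap.mulLeft_apply] at hl
        rw [hl, smul_zero]
      rw [hs b this, map_zero]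
    obtain ⟨l, hl⟩ := LinearMap.surjective_of_injective hinj 1
    exact IsUnit.of_mul_eq_one _ hl
  obtain ⟨z, hz⟩ : ∃ z, ι s * z = ι y := ⟨hsu.unit⁻¹ * ι y, by
    rw [← mul_assoc, IsUnit.mul_val_inv, one_mul]⟩
  have hzint : IsIntegral Q z := by
    let _ : Algebra B L := ι.toRingHom.toAlgebra
    have : IsScalarTower Q B L := IsScalarTower.of_algebraMap_eq' (ι.comp_algebraMap).symm
    have : IsIntegral B z := by
      obtain ⟨n, hn, a, ha, hay⟩ := hy
      have ha' : ∀ i, ∃ b, i ∈ Finset.Icc 1 n → a i = s ^ i * b := by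
        intro i
        by_cases hi : i ∈ Finset.Icc 1 n
        · have := ha i (Finset.mem_Icc.1 hi).1 (Finset.mem_Icc.1 hi).2
          rw [Ideal.span_singleton_pow] at this
          obtain ⟨b, hb⟩ := Ideal.mem_span_singleton'.1 this
          exact ⟨b, fun _ => by rw [← hb, mul_comm]⟩
        · exact ⟨0, fun h => absurd h hi⟩
      choose b hb using ha'
      refine ⟨Polynomial.X ^ n + ∑ i ∈ Finset.Icc 1 n,
        Polynomial.C (b i) * Polynomial.X ^ (n - i), ?_, ?_⟩
      · refine Polynomial.monic_X_pow_add (lt_of_le_of_lt (Polynomial.degree_sum_le _ _) ?_)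
        rw [Finset.sup_lt_iff (by exact WithBot.bot_lt_coe n)]
        intro i hi
        rw [Finset.mem_Icc] at hi
        refine (Polynomial.degree_C_mul_X_pow_le _ _).trans_lt ?_
        exact_mod_cast (by omega : n - i < n)
      · have h1 : (ι s) ^ n * (z ^ n + ∑ i ∈ Finset.Icc 1 n, ι (b i) * z ^ (n - i)) = 0 := by
          have h2 := congrArg ι hay
          rw [map_zero, map_add, map_pow, map_sum, ← hz] at h2
          rw [← h2, mul_add, mul_pow, Finset.mul_sum]
          congr 1
          refine Finset.sum_congr rfl fun i hi => ?_
          rw [hb i hi, map_mul, map_mul, map_pow, map_pow, ← hz, mul_pow]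
          have : ι s ^ n = ι s ^ i * ι s ^ (n - i) := by
            rw [← pow_add, Nat.add_sub_cancel' (Finset.mem_Icc.1 hi).2]
          rw [this]; ring
        have h3 := (hsu.pow n).mul_right_eq_zero.1 h1
        rw [← h3]
        simp [Polynomial.eval₂_finsetSum, RingHom.algebraMap_toAlgebra]
    exact isIntegral_trans (R := Q) (A := B) z this
  -- The functional `a ⊗ b ↦ l a • b`.
  let Φ (l : L →ₗ[K] K) : B ⊗[Q] B →ₗ[Q] L := TensorProduct.lift
    (LinearMap.mk₂ Q (fun a b => l (ι a) • ι b)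
      (fun a a' b => by rw [map_add, map_add, add_smul])
      (fun q a b => by rw [map_smul, ← algebraMap_smul K q (ι a), map_smul, algebraMap_smul,
        smul_assoc])
      (fun a b b' => by rw [map_add, smul_add])
      (fun q a b => by rw [map_smul, smul_comm]))
  have hΦ : ∀ l a b, Φ l (a ⊗ₜ b) = l (ι a) • ι b := fun l a b => rfl
  have hΦmul : ∀ (l : L →ₗ[K] K) (w : L), Φ (l ∘ₗ LinearMap.mulLeft K w) ε = w * Φ l ε := by
    intro l w
    induction w using TensorProduct.induction_on with
    | zero =>
      have : ∀ t, Φ (l ∘ₗ LinearMap.mulLeft K 0) t = 0 := by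
        intro t
        induction t using TensorProduct.induction_on with
        | zero => simp
        | tmul a b => simp [hΦ]
        | add x y h1 h2 => rw [map_add, h1, h2, add_zero]
      rw [this, zero_mul]
    | add w w' h1 h2 =>
      rw [add_mul, ← h1, ← h2]
      have : ∀ t, Φ (l ∘ₗ LinearMap.mulLeft K (w + w')) t =
          Φ (l ∘ₗ LinearMap.mulLeft K w) t + Φ (l ∘ₗ LinearMap.mulLeft K w') t := by
        intro t
        induction t using TensorProduct.induction_on with
        | zero => simp
        | tmul a b => simp [hΦ, add_mul, add_smul]
        | add x y h1 h2 => rw [map_add, h1, h2, map_add, map_add]; abel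
      exact this ε
    | tmul k c =>
      have e : ∀ t : B ⊗[Q] B, Φ (l ∘ₗ LinearMap.mulLeft K (k ⊗ₜ c)) t =
          k • Φ l ((c ⊗ₜ 1) * t) := by
        intro t
        induction t using TensorProduct.induction_on with
        | zero => simp
        | tmul a b =>
          have h1 : (k ⊗ₜ[Q] c : L) * ι a = k • ι (c * a) := by
            change k ⊗ₜ[Q] c * 1 ⊗ₜ[Q] a = k • (1 ⊗ₜ[Q] (c * a))
            rw [Algebra.TensorProduct.tmul_mul_tmul, smul_tmul', smul_eq_mul]
          rw [Algebra.TensorProduct.tmul_mul_tmul, one_mul, hΦ, hΦ, LinearMap.comp_apply,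
            LinearMap.mulLeft_apply, h1, map_smul, smul_assoc]
        | add x y h1 h2 => rw [map_add, h1, h2, mul_add, map_add, smul_add]
      have e' : ∀ t : B ⊗[Q] B, k • Φ l ((1 ⊗ₜ c) * t) = (k ⊗ₜ[Q] c : L) * Φ l t := by
        intro t
        induction t using TensorProduct.induction_on with
        | zero => simp
        | tmul a b =>
          have h1 : (k ⊗ₜ[Q] c : L) * ι b = k • ι (c * b) := by
            change k ⊗ₜ[Q] c * 1 ⊗ₜ[Q] b = k • (1 ⊗ₜ[Q] (c * b))
            rw [Algebra.TensorProduct.tmul_mul_tmul, smul_tmul', smul_eq_mul]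
          rw [Algebra.TensorProduct.tmul_mul_tmul, one_mul, hΦ, hΦ, mul_smul_comm, h1, smul_comm]
        | add x y h1 h2 => rw [mul_add, map_add, smul_add, h1, h2, map_add, mul_add]
      rw [e, hε, e']
  let bas := Module.finBasis K L
  have htr : ∀ t : B ⊗[Q] B, Φ (Algebra.trace K L) t =
      ∑ i, Φ (bas.coord i ∘ₗ LinearMap.mulLeft K (bas i)) t := by
    intro t
    induction t using TensorProduct.induction_on with
    | zero => simp
    | tmul a b =>
      simp only [hΦ]
      rw [← Finset.sum_smul, Algebra.trace_eq_matrix_trace bas]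
      congr 1
      refine Finset.sum_congr rfl fun i _ => ?_
      rw [Matrix.diag_apply, Algebra.leftMulMatrix_eq_repr_mul, mul_comm]
      rfl
    | add x y h1 h2 => simp only [map_add, h1, h2, Finset.sum_add_distrib]
  have hsum : ∀ t : B ⊗[Q] B, ∑ i, bas i * Φ (bas.coord i) t =
      ι (Algebra.TensorProduct.lmul' Q t) := by
    intro t
    induction t using TensorProduct.induction_on with
    | zero => simp
    | tmul a b =>
      simp only [hΦ, Algebra.TensorProduct.lmul'_apply_tmul, map_mul]
      conv_rhs => rw [← bas.sum_repr (ι a), Finset.sum_mul]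
      refine Finset.sum_congr rfl fun i _ => ?_
      rw [mul_smul_comm, smul_mul_assoc]; rfl
    | add x y h1 h2 => simp only [map_add, mul_add, Finset.sum_add_distrib, h1, h2]
  have h1 : Φ (Algebra.trace K L ∘ₗ LinearMap.mulLeft K z) ε =
      z * ι (Algebra.TensorProduct.lmul' Q ε) := by
    rw [hΦmul, htr, ← hsum]
    simp only [hΦmul]
  have h2 : ∀ t : B ⊗[Q] B, ∃ b, Φ (Algebra.trace K L ∘ₗ LinearMap.mulLeft K z) t = ι b := by
    intro t
    induction t using TensorProduct.induction_on with
    | zero => exact ⟨0, by simp⟩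
    | tmul a b =>
      have h3 : IsIntegral Q (z * ι a) :=
        hzint.mul ((Algebra.IsIntegral.isIntegral (R := Q) a).map ι)
      obtain ⟨q, hq⟩ := (IsIntegrallyClosed.isIntegral_iff (K := K)).1
        (isIntegral_trace' (K := K) h3)
      refine ⟨q • b, ?_⟩
      rw [hΦ, LinearMap.comp_apply, LinearMap.mulLeft_apply, ← hq, algebraMap_smul, map_smul]
    | add x y h1 h2 =>
      obtain ⟨b, hb⟩ := h1
      obtain ⟨b', hb'⟩ := h2
      exact ⟨b + b', by rw [map_add, hb, hb', map_add]⟩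
  obtain ⟨b, hb⟩ := h2 ε
  refine ⟨b, ?_⟩
  rw [← sub_eq_zero]
  apply hι
  rw [map_sub, map_mul, map_mul, ← hb, h1, ← hz]
  ring

end UBS

/-! ### Weighted finiteness and the extended Rees algebra -/

namespace UBS

section weights
variable {Q B σ : Type*} [CommRing Q] [CommRing B] [Algebra Q B] [Fintype σ] (x : σ → B)
  (wt : σ → ℕ)

/-- The `Q`-span of the monomials in `x` of weight at most `k`. -/
def wtFil (k : ℕ) : Submodule Q B :=
  Submodule.span Q {b | ∃ α : σ → ℕ, ∑ i, wt i * α i ≤ k ∧ b = ∏ i, x i ^ α i}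

variable {x wt}

lemma wtFil_mono {k l : ℕ} (h : k ≤ l) : wtFil (Q := Q) x wt k ≤ wtFil x wt l :=
  Submodule.span_mono fun _ ⟨α, h1, h2⟩ => ⟨α, h1.trans h, h2⟩

lemma wtFil_mul {k l : ℕ} {a b : B} (ha : a ∈ wtFil (Q := Q) x wt k)
    (hb : b ∈ wtFil (Q := Q) x wt l) : a * b ∈ wtFil (Q := Q) x wt (k + l) := by
  have : wtFil (Q := Q) x wt k * wtFil x wt l ≤ wtFil x wt (k + l) := by
    rw [wtFil, wtFil, Submodule.span_mul_span]
    refine Submodule.span_mono ?_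
    rintro _ ⟨_, ⟨α, h1, rfl⟩, _, ⟨β, h2, rfl⟩, rfl⟩
    refine ⟨α + β, ?_, ?_⟩
    · simp only [Pi.add_apply, mul_add, Finset.sum_add_distrib]; omega
    · simp only [Pi.add_apply, pow_add, Finset.prod_mul_distrib]
  exact this (Submodule.mul_mem_mul ha hb)

lemma wtFil_one : (1 : B) ∈ wtFil (Q := Q) x wt 0 :=
  Submodule.subset_span ⟨0, by simp, by simp⟩

lemma wtFil_algebraMap (q : Q) : algebraMap Q B q ∈ wtFil (Q := Q) x wt 0 := by
  rw [Algebra.algebraMap_eq_smul_one]; exact Submodule.smul_mem _ _ wtFil_one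

lemma wtFil_pow {k : ℕ} {a : B} (ha : a ∈ wtFil (Q := Q) x wt k) (n : ℕ) :
    a ^ n ∈ wtFil (Q := Q) x wt (n * k) := by
  induction n with
  | zero => simpa using wtFil_one
  | succ n ih => rw [pow_succ, add_mul, one_mul]; exact wtFil_mul ih ha

lemma wtFil_var [DecidableEq σ] (i : σ) : x i ∈ wtFil (Q := Q) x wt (wt i) := by
  refine Submodule.subset_span ⟨Pi.single i 1, ?_, ?_⟩
  · rw [Finset.sum_eq_single i] <;> simp +contextual
  · rw [Finset.prod_eq_single i] <;> simp +contextual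

lemma wtFil_prod {ι : Type*} (S : Finset ι) (e : ι → B) (k : ι → ℕ)
    (h : ∀ i ∈ S, e i ∈ wtFil (Q := Q) x wt (k i)) :
    ∏ i ∈ S, e i ∈ wtFil (Q := Q) x wt (∑ i ∈ S, k i) := by
  classical
  induction S using Finset.induction_on with
  | empty => simpa using wtFil_one
  | insert i S hi ih =>
    rw [Finset.prod_insert hi, Finset.sum_insert hi]
    exact wtFil_mul (h i (Finset.mem_insert_self i S))
      (ih fun j hj => h j (Finset.mem_insert_of_mem hj))

lemma wtFil_aeval {Λ τ : Type*} [CommRing Λ] [Algebra Λ Q] [Algebra Λ B] [IsScalarTower Λ Q B]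
    (e : τ → B) {W : ℕ} (he : ∀ i, e i ∈ wtFil (Q := Q) x wt W) (p : MvPolynomial τ Λ) :
    MvPolynomial.aeval e p ∈ wtFil (Q := Q) x wt (p.totalDegree * W) := by
  rw [MvPolynomial.aeval_def, MvPolynomial.eval₂_eq]
  refine sum_mem fun α hα => ?_
  rw [← zero_add (p.totalDegree * W)]
  refine wtFil_mul ?_ (wtFil_mono ?_ (wtFil_prod _ _ _ fun i _ => wtFil_pow (he i) (α i)))
  · rw [IsScalarTower.algebraMap_apply Λ Q B]; exact wtFil_algebraMap _
  · rw [← Finset.sum_mul]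
    exact Nat.mul_le_mul_right _ (MvPolynomial.le_totalDegree hα)

/-- Finiteness from relations expressing a power of each generator in lower weight. -/
lemma finite_of_wt [DecidableEq σ] (hx : Algebra.adjoin Q (Set.range x) = ⊤)
    (h : ∀ i, ∃ D k, k < D * wt i ∧ x i ^ D ∈ wtFil (Q := Q) x wt k) : Module.Finite Q B := by
  choose D k hk hD using h
  let S : Set B := Set.range fun α : (∀ i, Fin (D i)) => ∏ i, x i ^ (α i : ℕ)
  have hS : S.Finite := Set.finite_range _
  have key : ∀ n, wtFil (Q := Q) x wt n ≤ Submodule.span Q S := by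
    intro n
    induction n using Nat.strong_induction_on with
    | _ n ih =>
    rw [wtFil, Submodule.span_le]
    rintro _ ⟨α, hα, rfl⟩
    by_cases hlt : ∀ i, α i < D i
    · exact Submodule.subset_span ⟨fun i => ⟨α i, hlt i⟩, rfl⟩
    push Not at hlt
    obtain ⟨i, hi⟩ := hlt
    let β : σ → ℕ := Function.update α i (α i - D i)
    have e1 : ∏ j, x j ^ α j = x i ^ D i * ∏ j, x j ^ β j := by
      rw [← Finset.mul_prod_erase _ _ (Finset.mem_univ i),
        ← Finset.mul_prod_erase _ (fun j => x j ^ β j) (Finset.mem_univ i), ← mul_assoc]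
      congr 1
      · simp only [β, Function.update_self, ← pow_add]
        congr 1; omega
      · refine Finset.prod_congr rfl fun j hj => ?_
        simp [β, Function.update_of_ne (Finset.ne_of_mem_erase hj)]
    have e2 : ∑ j, wt j * α j = D i * wt i + ∑ j, wt j * β j := by
      rw [← Finset.add_sum_erase _ _ (Finset.mem_univ i),
        ← Finset.add_sum_erase _ (fun j => wt j * β j) (Finset.mem_univ i), ← add_assoc]
      congr 1
      · simp only [β, Function.update_self]
        rw [mul_comm (D i), ← mul_add]
        congr 1; omega
      · refine Finset.sum_congr rfl fun j hj => ?_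
        simp [β, Function.update_of_ne (Finset.ne_of_mem_erase hj)]
    rw [e1]
    have h1 : ∏ j, x j ^ β j ∈ wtFil (Q := Q) x wt (∑ j, wt j * β j) :=
      Submodule.subset_span ⟨β, le_rfl, rfl⟩
    have := hk i
    exact ih (k i + ∑ j, wt j * β j) (by omega) (wtFil_mul (hD i) h1)
  refine ⟨Submodule.fg_def.2 ⟨S, hS, ?_⟩⟩
  rw [eq_top_iff]
  intro b _
  have hb : b ∈ Algebra.adjoin Q (Set.range x) := hx ▸ Algebra.mem_top
  have : ∃ n, b ∈ wtFil (Q := Q) x wt n := by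
    induction hb using Algebra.adjoin_induction with
    | mem y hy => obtain ⟨i, rfl⟩ := hy; exact ⟨_, wtFil_var i⟩
    | algebraMap q => exact ⟨_, wtFil_algebraMap q⟩
    | add y z _ _ h1 h2 =>
      obtain ⟨a, ha⟩ := h1 trivial
      obtain ⟨b, hb⟩ := h2 trivial
      exact ⟨a + b, add_mem (wtFil_mono (by omega) ha) (wtFil_mono (by omega) hb)⟩
    | mul y z _ _ h1 h2 =>
      obtain ⟨a, ha⟩ := h1 trivial
      obtain ⟨b, hb⟩ := h2 trivial
      exact ⟨a + b, wtFil_mul ha hb⟩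
  obtain ⟨n, hn⟩ := this
  exact key n hn
end weights

section jacobian
open MvPolynomial
variable {Λ : Type*} [CommRing Λ] {d t : ℕ}

/-- The parameter ring: the variable `none` stands for `u - w₀ ^ s'`, the variable `some j` for
`z j - w j ^ s`. -/
abbrev QRing (Λ : Type*) [CommRing Λ] (d : ℕ) := MvPolynomial (Option (Fin d)) Λ

/-- Polynomials over the parameter ring in the variables `w` and `Θ`. -/
abbrev SRing (Λ : Type*) [CommRing Λ] (d t : ℕ) :=
  MvPolynomial (Option (Fin d) ⊕ Fin t) (QRing Λ d)

/-- `z j = y j + w j ^ s`. -/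
noncomputable def zS (Λ : Type*) [CommRing Λ] (d t s : ℕ) (j : Fin d) : SRing Λ d t :=
  C (X (some j)) + X (Sum.inl (some j)) ^ s

/-- The ideal `(w) ^ (s - 1)`. -/
noncomputable def wS (Λ : Type*) [CommRing Λ] (d t s : ℕ) : Ideal (SRing Λ d t) :=
  Ideal.span (Set.range fun o => X (Sum.inl o)) ^ (s - 1)

lemma pderiv_pow_mem {s s1 : ℕ} (hs : s ≤ s1) (k : Option (Fin d) ⊕ Fin t) (o : Option (Fin d)) :
    pderiv k ((X (Sum.inl o) : SRing Λ d t) ^ s1) ∈ wS Λ d t s := by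
  rw [Derivation.leibniz_pow, smul_eq_mul, nsmul_eq_mul]
  refine Ideal.mul_mem_left _ _ (Ideal.mul_mem_right _ _ ?_)
  exact Ideal.pow_le_pow_right (by omega)
    (Ideal.pow_mem_pow (Ideal.subset_span (Set.mem_range_self o)) _)

lemma pderiv_zS_mem (s : ℕ) (k : Option (Fin d) ⊕ Fin t) (j : Fin d) :
    pderiv k (zS Λ d t s j) ∈ wS Λ d t s := by
  rw [zS, map_add, pderiv_C, zero_add]
  exact pderiv_pow_mem le_rfl _ _

lemma pderiv_zS_inr (s : ℕ) (i : Fin t) (j : Fin d) :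
    pderiv (Sum.inr i) (zS Λ d t s j) = 0 := by
  classical
  rw [zS, map_add, pderiv_C, zero_add, Derivation.leibniz_pow, pderiv_X]
  simp

lemma pderiv_aeval_mem {τ : Type*} (I : Ideal (SRing Λ d t)) (k : Option (Fin d) ⊕ Fin t)
    (e : τ → SRing Λ d t) (he : ∀ i, pderiv k (e i) ∈ I) (p : MvPolynomial τ Λ) :
    pderiv k (aeval e p) ∈ I := by
  induction p using MvPolynomial.induction_on with
  | C c =>
    rw [aeval_C, IsScalarTower.algebraMap_apply Λ (QRing Λ d) (SRing Λ d t),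
      Derivation.map_algebraMap]
    exact zero_mem _
  | add p q hp hq => rw [map_add, map_add]; exact add_mem hp hq
  | mul_X p i hp =>
    rw [map_mul, aeval_X, Derivation.leibniz]
    exact add_mem (Ideal.mul_mem_left _ _ (he i)) (Ideal.mul_mem_left _ _ hp)

lemma pderiv_eval₂ (s : ℕ) (i k : Fin t) (g : Polynomial (MvPolynomial (Fin d) Λ)) :
    pderiv (Sum.inr k) (g.eval₂ (aeval (zS Λ d t s)).toRingHom (X (Sum.inr i))) =
      if k = i then g.derivative.eval₂ (aeval (zS Λ d t s)).toRingHom (X (Sum.inr i)) else 0 := by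
  classical
  have h0 : ∀ p : MvPolynomial (Fin d) Λ, pderiv (Sum.inr k) (aeval (zS Λ d t s) p) = 0 :=
    fun p => Ideal.mem_bot.1 (pderiv_aeval_mem (⊥ : Ideal (SRing Λ d t)) (Sum.inr k) (zS Λ d t s)
      (fun j => by rw [pderiv_zS_inr]; exact zero_mem _) p)
  induction g using Polynomial.induction_on' with
  | add p q hp hq =>
    rw [Polynomial.eval₂_add, map_add, hp, hq, Polynomial.derivative_add, Polynomial.eval₂_add]
    split_ifs <;> simp
  | monomial n a =>
    rw [Polynomial.eval₂_monomial, Derivation.leibniz, Derivation.leibniz_pow, pderiv_X,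
      Polynomial.derivative_monomial, Polynomial.eval₂_monomial]
    have := h0 a
    simp only [AlgHom.toRingHom_eq_coe, RingHom.coe_coe, this, smul_zero, add_zero, map_mul,
      map_natCast]
    by_cases h : k = i
    · subst h; simp; ring
    · simp [h, Ne.symm h]

lemma pderiv_eval₂_mem (s : ℕ) (i : Fin t) (o : Option (Fin d))
    (g : Polynomial (MvPolynomial (Fin d) Λ)) :
    pderiv (Sum.inl o) (g.eval₂ (aeval (zS Λ d t s)).toRingHom (X (Sum.inr i))) ∈ wS Λ d t s := by
  classical
  induction g using Polynomial.induction_on' with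
  | add p q hp hq => rw [Polynomial.eval₂_add, map_add]; exact add_mem hp hq
  | monomial n a =>
    rw [Polynomial.eval₂_monomial, Derivation.leibniz, Derivation.leibniz_pow, pderiv_X]
    refine add_mem (by simp) (Ideal.mul_mem_left _ _ ?_)
    exact pderiv_aeval_mem _ _ _ (pderiv_zS_mem s _) a
end jacobian
end UBS

namespace UBS
open MvPolynomial

set_option maxHeartbeats 800000 in
/-- Finiteness of `B` over the ring `Q` generated by the parameters. With weight `1` on the `w`'s and
`s * E + 1` on the `θ`'s, every monomial of high weight drops to lower weight modulo the relations,
and the numerical hypotheses on `s`, `s'` and `M` say exactly that. -/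
lemma ls_finite {Λ Q B : Type*} [CommRing Λ] [CommRing Q] [CommRing B] [Algebra Λ Q]
    [Algebra Λ B] [Algebra Q B] [IsScalarTower Λ Q B] {d t : ℕ}
    (z : Fin d → B) (θ : Fin t → B) (w : Option (Fin d) → B) (u : B)
    (g : Fin t → Polynomial (MvPolynomial (Fin d) Λ)) (hg : ∀ i, (g i).Monic)
    (f : Option (Fin d) → MvPolynomial (Fin d ⊕ Fin t) Λ)
    (h : Fin d → MvPolynomial (Fin d ⊕ Fin t) Λ) (M : ℕ)
    (hf : ∀ j, f (some j) = h j + X (Sum.inl j) ^ M)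
    (hgθ : ∀ i, (g i).eval₂ (aeval z).toRingHom (θ i) = 0)
    (hw : ∀ o, u * w o = aeval (Sum.elim z θ) (f o))
    {s s' E : ℕ} (hs : 1 ≤ s) (hss : s ≤ s') (hE : ∀ i k, ((g i).coeff k).totalDegree ≤ E)
    (h0 : (f none).totalDegree * (s + (s * E + 1)) < s' + 1)
    (hM : s' + 1 < s * M) (hhM : ∀ j, (h j).totalDegree * (s + (s * E + 1)) < s * M)
    (q0 : Q) (q : Fin d → Q) (hφn : algebraMap Q B q0 = u - w none ^ s')
    (hφs : ∀ j, algebraMap Q B (q j) = z j - w (some j) ^ s)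
    (hx : Algebra.adjoin Q (Set.range (Sum.elim w θ)) = ⊤) : Module.Finite Q B := by
  classical
  let φ : Q → B := algebraMap Q B
  replace hφn : φ q0 = u - w none ^ s' := hφn
  replace hφs : ∀ j, φ (q j) = z j - w (some j) ^ s := hφs
  let x : Option (Fin d) ⊕ Fin t → B := Sum.elim w θ
  let wt : Option (Fin d) ⊕ Fin t → ℕ := Sum.elim (fun _ => 1) (fun _ => s * E + 1)
  -- Weights of the various elements.
  have hVw : ∀ o, w o ∈ wtFil (Q := Q) x wt 1 := fun o => wtFil_var (Sum.inl o)
  have hVθ : ∀ i, θ i ∈ wtFil (Q := Q) x wt (s * E + 1) := fun i => wtFil_var (Sum.inr i)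
  have hVw' : ∀ o (k : ℕ), w o ^ k ∈ wtFil (Q := Q) x wt k := fun o k => by
    simpa using wtFil_pow (hVw o) k
  have hVφ : ∀ q, φ q ∈ wtFil (Q := Q) x wt 0 := fun q => wtFil_algebraMap q
  have hVz : ∀ j, z j ∈ wtFil (Q := Q) x wt s := fun j => by
    have := add_mem (wtFil_mono (Nat.zero_le s) (hVφ (q j))) (hVw' (some j) s)
    rw [hφs] at this
    simpa using this
  have hVp : ∀ p : MvPolynomial (Fin d ⊕ Fin t) Λ, aeval (Sum.elim z θ) p ∈
      wtFil (Q := Q) x wt (p.totalDegree * (s + (s * E + 1))) := fun p => by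
    have h1 : ∀ a, Sum.elim z θ a ∈ wtFil (Q := Q) x wt (s + (s * E + 1)) := by
      rintro (j | i)
      · exact wtFil_mono (Nat.le_add_right _ _) (hVz j)
      · exact wtFil_mono (Nat.le_add_left _ _) (hVθ i)
    exact wtFil_aeval (Q := Q) (x := x) (wt := wt) (W := s + (s * E + 1)) (Sum.elim z θ) h1 p
  have hVu : u ∈ wtFil (Q := Q) x wt s' := by
    have := add_mem (wtFil_mono (Nat.zero_le s') (hVφ q0)) (hVw' none s')
    rw [hφn] at this
    simpa using this
  have hfin : Module.Finite Q B := by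
    refine finite_of_wt (wt := wt) hx ?_
    rintro ((_ | j) | i)
    · -- `w₀ ^ (s' + 1) = f₀ - t * w₀`
      refine ⟨s' + 1, max ((f none).totalDegree * (s + (s * E + 1))) 1, ?_, ?_⟩
      · simp only [wt, Sum.elim_inl]; omega
      · have e1 : x (Sum.inl none) ^ (s' + 1) =
            aeval (Sum.elim z θ) (f none) - φ q0 * w none := by
          rw [← hw, hφn]; simp only [x, Sum.elim_inl]; ring
        rw [e1]
        refine sub_mem (wtFil_mono (le_max_left _ _) (hVp _)) (wtFil_mono (le_max_right _ _) ?_)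
        simpa using wtFil_mul (hVφ q0) (hVw none)
    · -- `(y j + w j ^ s) ^ M = u * w j - h j`
      have hMpos : 0 < M := Nat.pos_of_ne_zero fun h => by subst h; omega
      obtain ⟨r, hr⟩ : ∃ r, z j ^ M = w (some j) ^ (s * M) + r ∧
          r ∈ wtFil (Q := Q) x wt (s * (M - 1)) := by
        have hz : z j = w (some j) ^ s + φ (q j) := by rw [hφs]; ring
        have : ∀ m, ∃ r, z j ^ (m + 1) = w (some j) ^ (s * (m + 1)) + r ∧
            r ∈ wtFil (Q := Q) x wt (s * m) := by
          intro m
          induction m with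
          | zero => exact ⟨φ (q j), by simpa using hz, by simpa using hVφ _⟩
          | succ m ih =>
            obtain ⟨r, h1, h2⟩ := ih
            refine ⟨w (some j) ^ (s * (m + 1)) * φ (q j) + r * z j, ?_, add_mem ?_ ?_⟩
            · rw [pow_succ, h1, add_mul]
              nth_rewrite 1 [hz]
              ring
            · simpa using wtFil_mul (hVw' (some j) (s * (m + 1))) (hVφ (q j))
            · have := wtFil_mul h2 (hVz j)
              rwa [mul_add, mul_one]
        obtain ⟨r, h1, h2⟩ := this (M - 1)
        rw [Nat.sub_add_cancel hMpos] at h1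
        exact ⟨r, h1, h2⟩
      have hlt : s * (M - 1) < s * M := Nat.mul_lt_mul_of_pos_left (by omega) (by omega)
      have hh := hhM j
      refine ⟨s * M, max (max (s * (M - 1)) ((h j).totalDegree * (s + (s * E + 1)))) (s' + 1),
        ?_, ?_⟩
      · simp only [wt, Sum.elim_inl]; omega
      · have e1 : x (Sum.inl (some j)) ^ (s * M) =
            u * w (some j) - aeval (Sum.elim z θ) (h j) - r := by
          rw [hw, hf, map_add, map_pow, aeval_X, Sum.elim_inl, hr.1]; simp only [x, Sum.elim_inl]
          ring
        rw [e1]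
        exact sub_mem (sub_mem (wtFil_mono (le_max_right _ _) (wtFil_mul hVu (hVw _)))
          (wtFil_mono (by omega) (hVp _))) (wtFil_mono (by omega) hr.2)
    · -- integral equation of `θ i`
      by_cases hdeg : (g i).natDegree = 0
      · refine ⟨1, 0, by simp [wt], ?_⟩
        have h1 : g i = 1 := Polynomial.eq_one_of_monic_natDegree_zero (hg i) hdeg
        have h2 := hgθ i
        rw [h1, Polynomial.eval₂_one] at h2
        have : x (Sum.inr i) ^ 1 = 0 := by rw [← mul_one (x _ ^ 1), h2, mul_zero]
        rw [this]; exact zero_mem _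
      refine ⟨(g i).natDegree, s * E + ((g i).natDegree - 1) * (s * E + 1), ?_, ?_⟩
      · simp only [wt, Sum.elim_inr]
        obtain ⟨m, hm⟩ := Nat.exists_eq_succ_of_ne_zero hdeg
        rw [hm, Nat.succ_sub_one, Nat.succ_mul]; omega
      · have h1 := hgθ i
        rw [Polynomial.eval₂_eq_sum_range, Finset.sum_range_succ, (hg i).coeff_natDegree,
          map_one, one_mul] at h1
        have e1 : x (Sum.inr i) ^ (g i).natDegree = - ∑ k ∈ Finset.range (g i).natDegree,
            (aeval z).toRingHom ((g i).coeff k) * θ i ^ k := eq_neg_of_add_eq_zero_right h1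
        rw [e1]
        refine neg_mem (sum_mem fun k hk => ?_)
        rw [Finset.mem_range] at hk
        refine wtFil_mul (wtFil_mono ?_ (wtFil_aeval (W := s) z hVz ((g i).coeff k)))
          (wtFil_mono ?_ (wtFil_pow (hVθ i) k))
        · rw [mul_comm]; exact Nat.mul_le_mul_left _ (hE i k)
        · exact Nat.mul_le_mul_right _ (by omega)
  exact hfin

set_option maxHeartbeats 4000000 in
/-- The Lipman–Sathaye argument for the extended Rees algebra, in abstract form. -/
lemma ls_abs {Λ B : Type*} [CommRing Λ] [IsDomain Λ] [UniqueFactorizationMonoid Λ] [CommRing B]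
    [Algebra Λ B] {d t : ℕ} (z : Fin d → B) (θ : Fin t → B) (w : Option (Fin d) → B) (u : B)
    (g : Fin t → Polynomial (MvPolynomial (Fin d) Λ)) (hg : ∀ i, (g i).Monic)
    (f : Option (Fin d) → MvPolynomial (Fin d ⊕ Fin t) Λ)
    (h : Fin d → MvPolynomial (Fin d ⊕ Fin t) Λ) (M : ℕ)
    (hf : ∀ j, f (some j) = h j + X (Sum.inl j) ^ M)
    (hgθ : ∀ i, (g i).eval₂ (aeval z).toRingHom (θ i) = 0)
    (hw : ∀ o, u * w o = aeval (Sum.elim z θ) (f o))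
    (hgen : Algebra.adjoin Λ (Set.range z ∪ Set.range θ ∪ Set.range w ∪ {u}) = ⊤)
    {s s' E : ℕ} (hs : 1 ≤ s) (hss : s ≤ s') (hE : ∀ i k, ((g i).coeff k).totalDegree ≤ E)
    (h0 : (f none).totalDegree * (s + (s * E + 1)) < s' + 1)
    (hM : s' + 1 < s * M) (hhM : ∀ j, (h j).totalDegree * (s + (s * E + 1)) < s * M)
    (htf : ∀ (q : QRing Λ d) (b : B), q ≠ 0 →
      aeval (fun o : Option (Fin d) => o.elim (u - w none ^ s') fun j => z j - w (some j) ^ s) q * b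
        = 0 → b = 0)
    (hu : ∀ b, u * b = 0 → b = 0) {n : ℕ} {y : B}
    (hy : IsIntegralOverIdeal (Ideal.span {u ^ n}) y) :
    ∃ e ∈ Ideal.span (Set.range w) ^ (s - 1), u ^ n ∣
      ((-u) ^ (d + 1) * ∏ i, (g i).derivative.eval₂ (aeval z).toRingHom (θ i) + e) * y := by
  classical
  let φ : QRing Λ d →ₐ[Λ] B :=
    aeval (fun o : Option (Fin d) => o.elim (u - w none ^ s') fun j => z j - w (some j) ^ s)
  let _ : Algebra (QRing Λ d) B := φ.toRingHom.toAlgebra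
  have : IsScalarTower Λ (QRing Λ d) B := IsScalarTower.of_algebraMap_eq' φ.comp_algebraMap.symm
  have hφ : ∀ q, algebraMap (QRing Λ d) B q = φ q := fun q => rfl
  have hφn : φ (X none) = u - w none ^ s' := by simp [φ]
  have hφs : ∀ j, φ (X (some j)) = z j - w (some j) ^ s := fun j => by simp [φ]
  let x : Option (Fin d) ⊕ Fin t → B := Sum.elim w θ
  let ev : SRing Λ d t →ₐ[QRing Λ d] B := aeval x
  have hevz : ∀ j, ev (zS Λ d t s j) = z j := fun j => by
    simp only [ev, zS, map_add, map_pow, aeval_X, aeval_C, hφ, hφs, x, Sum.elim_inl]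
    ring
  let F : Option (Fin d) ⊕ Fin t → SRing Λ d t := Sum.elim
    (fun o => aeval (Sum.elim (zS Λ d t s) fun i => X (Sum.inr i)) (f o) -
      (C (X none) + X (Sum.inl none) ^ s') * X (Sum.inl o))
    (fun i => (g i).eval₂ (aeval (zS Λ d t s)).toRingHom (X (Sum.inr i)))
  have hevp : ∀ p : MvPolynomial (Fin d) Λ, ev (aeval (zS Λ d t s) p) = aeval z p := fun p => by
    have := map_aeval' (ev.restrictScalars Λ) (zS Λ d t s) p
    simpa [hevz] using this
  have hevF : ∀ p, ev (aeval (Sum.elim (zS Λ d t s) fun i => X (Sum.inr i)) p) =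
      aeval (Sum.elim z θ) p := fun p => by
    have := map_aeval' (ev.restrictScalars Λ) (Sum.elim (zS Λ d t s) fun i => X (Sum.inr i)) p
    rw [AlgHom.restrictScalars_apply] at this
    rw [this]
    congr 2
    ext i
    rcases i with j | i
    · simp [hevz]
    · simp [ev, x]
  have hevg : ∀ i (q : Polynomial (MvPolynomial (Fin d) Λ)),
      ev (q.eval₂ (aeval (zS Λ d t s)).toRingHom (X (Sum.inr i))) =
        q.eval₂ (aeval z).toRingHom (θ i) := fun i q => by
    have := Polynomial.hom_eval₂ q (aeval (zS Λ d t s)).toRingHom ev.toRingHom (X (Sum.inr i))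
    refine this.trans ?_
    have e1 : ev.toRingHom.comp (aeval (zS Λ d t s)).toRingHom =
        ((aeval z).toRingHom : MvPolynomial (Fin d) Λ →+* B) := by
      exact RingHom.ext fun p => hevp p
    rw [e1]
    congr 1
    simp [ev, x]
  have hevu : ev (C (X none) + X (Sum.inl none) ^ s') = u := by
    simp only [ev, map_add, map_pow, aeval_X, aeval_C, hφ, hφn, x, Sum.elim_inl]
    ring
  have hF : ∀ i, aeval x (F i) = 0 := by
    rintro (o | i)
    · change ev _ = 0
      simp only [F, Sum.elim_inl]
      rw [map_sub, map_mul, hevu, hevF, ← hw]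
      simp [ev, x]
    · change ev _ = 0
      simp only [F, Sum.elim_inr]
      rw [hevg, hgθ]
  have hx : Algebra.adjoin (QRing Λ d) (Set.range x) = ⊤ := by
    rw [eq_top_iff]
    intro b _
    have hb : b ∈ Algebra.adjoin Λ (Set.range z ∪ Set.range θ ∪ Set.range w ∪ {u}) :=
      hgen ▸ Algebra.mem_top
    have hxm : ∀ i, x i ∈ Algebra.adjoin (QRing Λ d) (Set.range x) := fun i =>
      Algebra.subset_adjoin (Set.mem_range_self i)
    have hqm : ∀ q, φ q ∈ Algebra.adjoin (QRing Λ d) (Set.range x) := fun q =>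
      Subalgebra.algebraMap_mem _ q
    have : Algebra.adjoin Λ (Set.range z ∪ Set.range θ ∪ Set.range w ∪ {u}) ≤
        (Algebra.adjoin (QRing Λ d) (Set.range x)).restrictScalars Λ := by
      rw [Algebra.adjoin_le_iff]
      rintro c (((⟨j, rfl⟩ | ⟨i, rfl⟩) | ⟨o, rfl⟩) | rfl)
      · have := add_mem (hqm (X (some j))) (pow_mem (hxm (Sum.inl (some j))) s)
        rw [hφs] at this
        simpa [x] using this
      · exact hxm (Sum.inr i)
      · exact hxm (Sum.inl o)
      · have := add_mem (hqm (X none)) (pow_mem (hxm (Sum.inl none)) s')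
        rw [hφn] at this
        simpa [x] using this
    exact this hb
  have hfin : Module.Finite (QRing Λ d) B := ls_finite z θ w u g hg f h M hf hgθ hw hs hss hE h0
    hM hhM (X none) (fun j => X (some j)) hφn hφs hx
  have hun : ∀ b, u ^ n * b = 0 → b = 0 := by
    have : ∀ m b, u ^ m * b = 0 → b = 0 := by
      intro m
      induction m with
      | zero => intro b hb; simpa using hb
      | succ m ih => intro b hb; exact hu _ (ih _ (by rw [← hb]; ring))
    exact this n
  have key := lipman_sathaye (Q := QRing Λ d) (fun q b hq hqb => htf q b hq
    (by rw [Algebra.smul_def] at hqb; exact hqb)) x hx F hF hun hy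
  -- The Jacobian matrix modulo `(w) ^ (s - 1)`.
  set 𝔴 := Ideal.span (Set.range w) ^ (s - 1) with h𝔴
  have hmem : ∀ p ∈ wS Λ d t s, ev p ∈ 𝔴 := by
    intro p hp
    have := Ideal.mem_map_of_mem ev hp
    rw [wS, Ideal.map_pow, Ideal.map_span, ← Set.range_comp] at this
    convert this using 4
    ext o
    simp [ev, x]
  let mk := Ideal.Quotient.mk 𝔴
  let Jac : Matrix _ _ B := Matrix.of fun i j => aeval x (pderiv j (F i))
  have hJ : mk Jac.det = mk ((-u) ^ (d + 1) *
      ∏ i, (g i).derivative.eval₂ (aeval z).toRingHom (θ i)) := by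
    rw [RingHom.map_det]
    have hblock : mk.mapMatrix Jac = Matrix.fromBlocks
        (Matrix.diagonal fun _ => mk (-u))
        (Matrix.of fun o i => mk (Jac (Sum.inl o) (Sum.inr i))) 0
        (Matrix.diagonal fun i => mk ((g i).derivative.eval₂ (aeval z).toRingHom (θ i))) := by
      ext (o | i) (o' | k)
      · rw [Matrix.fromBlocks_apply₁₁, RingHom.mapMatrix_apply, Matrix.map_apply]
        simp only [Jac, Matrix.of_apply]
        have e1 : pderiv (Sum.inl o') (F (Sum.inl o)) + (if o = o' then
            (C (X none) + X (Sum.inl none) ^ s') else 0) ∈ wS Λ d t s := by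
          simp only [F, Sum.elim_inl]
          rw [map_sub, Derivation.leibniz, pderiv_X, map_add, pderiv_C, zero_add]
          have q1 := pderiv_aeval_mem (wS Λ d t s) (Sum.inl o')
            (Sum.elim (zS Λ d t s) fun i => X (Sum.inr i)) (by
              rintro (j | i)
              · exact pderiv_zS_mem s _ j
              · simp [pderiv_X]) (f o)
          have q2 := pderiv_pow_mem (Λ := Λ) (t := t) hss (Sum.inl o') none
          have q3 := Ideal.mul_mem_left _ (X (Sum.inl o)) q2
          by_cases ho : o = o'
          · subst ho
            rw [if_pos rfl, Pi.single_eq_same]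
            convert sub_mem q1 q3 using 1
            simp only [smul_eq_mul]; ring
          · rw [if_neg ho, Pi.single_eq_of_ne (by simpa using ho)]
            convert sub_mem q1 q3 using 1
            simp only [smul_eq_mul]; ring
        have e2 := hmem _ e1
        rw [map_add] at e2
        by_cases ho : o = o'
        · subst ho
          rw [if_pos rfl, hevu] at e2
          rw [Matrix.diagonal_apply_eq, Ideal.Quotient.eq, sub_neg_eq_add]
          exact e2
        · rw [if_neg ho, map_zero, add_zero] at e2
          rw [Matrix.diagonal_apply_ne _ ho]
          exact Ideal.Quotient.eq_zero_iff_mem.2 e2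
      · rfl
      · rw [Matrix.fromBlocks_apply₂₁, RingHom.mapMatrix_apply, Matrix.map_apply]
        exact Ideal.Quotient.eq_zero_iff_mem.2 (hmem _ (pderiv_eval₂_mem s i o' (g i)))
      · rw [Matrix.fromBlocks_apply₂₂, RingHom.mapMatrix_apply, Matrix.map_apply]
        simp only [Jac, Matrix.of_apply, F, Sum.elim_inr]
        rw [pderiv_eval₂]
        by_cases hik : k = i
        · subst hik
          rw [if_pos rfl, Matrix.diagonal_apply_eq]
          congr 1
          exact hevg k _
        · rw [if_neg hik, Matrix.diagonal_apply_ne _ (Ne.symm hik), map_zero, map_zero]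
    rw [hblock, Matrix.det_fromBlocks_zero₂₁, Matrix.det_diagonal, Matrix.det_diagonal,
      Finset.prod_const, Finset.card_univ, Fintype.card_option, Fintype.card_fin, map_mul, map_pow,
      map_prod]
  refine ⟨Jac.det - (-u) ^ (d + 1) * ∏ i, (g i).derivative.eval₂ (aeval z).toRingHom (θ i),
    Ideal.Quotient.eq.1 hJ, ?_⟩
  rw [add_sub_cancel]
  exact key
end UBS

namespace UBS
open MvPolynomial

lemma isIntegralOverIdeal_map {R S : Type*} [CommRing R] [CommRing S] (φ : R →+* S) {J : Ideal R}
    {x : R} (h : IsIntegralOverIdeal J x) : IsIntegralOverIdeal (J.map φ) (φ x) := by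
  obtain ⟨n, hn, a, ha, h⟩ := h
  refine ⟨n, hn, fun i => φ (a i), fun i h1 h2 => ?_, ?_⟩
  · rw [← Ideal.map_pow]; exact Ideal.mem_map_of_mem _ (ha i h1 h2)
  · have := congrArg φ h
    simpa using this

lemma isIntegralOverIdeal_mono {R : Type*} [CommRing R] {J J' : Ideal R} (hJ : J ≤ J')
    {x : R} (h : IsIntegralOverIdeal J x) : IsIntegralOverIdeal J' x := by
  obtain ⟨n, hn, a, ha, h⟩ := h
  exact ⟨n, hn, a, fun i h1 h2 => Ideal.pow_right_mono hJ i (ha i h1 h2), h⟩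

section lead
variable {C : Type*} [CommRing C]
open LaurentPolynomial

/-- `F` has degree at most `m`, and its coefficient at `T ^ m` is `c`. -/
def Lead (F : LaurentPolynomial C) (m : ℤ) (c : C) : Prop :=
  ∃ P : Polynomial C, F = T m * invert (Polynomial.toLaurent P) ∧ P.coeff 0 = c

lemma Lead.mul {F G : LaurentPolynomial C} {m n : ℤ} {c d : C} (hF : Lead F m c)
    (hG : Lead G n d) : Lead (F * G) (m + n) (c * d) := by
  obtain ⟨P, rfl, rfl⟩ := hF
  obtain ⟨Q, rfl, rfl⟩ := hG
  refine ⟨P * Q, ?_, Polynomial.mul_coeff_zero _ _⟩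
  rw [map_mul, map_mul, T_add]; ring

lemma Lead.add {F G : LaurentPolynomial C} {m : ℤ} {c d : C} (hF : Lead F m c)
    (hG : Lead G m d) : Lead (F + G) m (c + d) := by
  obtain ⟨P, rfl, rfl⟩ := hF
  obtain ⟨Q, rfl, rfl⟩ := hG
  refine ⟨P + Q, ?_, Polynomial.coeff_add _ _ _⟩
  rw [map_add, map_add]; ring

lemma lead_C (c : C) : Lead (LaurentPolynomial.C c) 0 c :=
  ⟨Polynomial.C c, by simp, by simp⟩

lemma lead_T (m : ℤ) : Lead (T m : LaurentPolynomial C) m 1 :=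
  ⟨1, by simp, by simp⟩

lemma Lead.raise {F : LaurentPolynomial C} {m : ℤ} {c : C} (hF : Lead F m c) {k : ℕ}
    (hk : 0 < k) : Lead F (m + k) 0 := by
  obtain ⟨P, rfl, rfl⟩ := hF
  refine ⟨P * Polynomial.X ^ k, ?_, ?_⟩
  · rw [map_mul, map_mul, map_pow, Polynomial.toLaurent_X, T_pow, invert_T, T_add]
    rw [show (T m * T (k : ℤ) * (invert (Polynomial.toLaurent P) * T (-(↑k * 1))) :
      LaurentPolynomial C) = T m * invert (Polynomial.toLaurent P) * (T k * T (-(k * 1))) by ring,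
      ← T_add]
    simp
  · rw [Polynomial.mul_coeff_zero]; simp [hk.ne]

lemma lead_zero (m : ℤ) : Lead (0 : LaurentPolynomial C) m 0 := ⟨0, by simp, by simp⟩

lemma Lead.pow {F : LaurentPolynomial C} {m : ℤ} {c : C} (hF : Lead F m c) (k : ℕ) :
    Lead (F ^ k) (k * m) (c ^ k) := by
  induction k with
  | zero => simpa using lead_T (C := C) 0
  | succ k ih =>
    rw [pow_succ, pow_succ]
    convert ih.mul hF using 1
    push_cast; ring

lemma lead_neg_pow (c : C) {k : ℕ} (hk : 0 < k) :
    Lead (-(LaurentPolynomial.C c * T (-1)) ^ k) 0 0 := by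
  have h1 := (((lead_C c).mul (lead_T (-1))).pow k).raise hk
  have h2 := (lead_C (-1 : C)).mul h1
  have e : (0 : ℤ) + (k * (0 + -1) + k) = 0 := by ring
  rw [e, mul_zero] at h2
  simpa using h2

/-- A Laurent polynomial whose leading coefficient is a nonzerodivisor is a nonzerodivisor. -/
lemma Lead.nzd {F b : LaurentPolynomial C} {m : ℤ} {c : C} (hF : Lead F m c)
    (hc : ∀ a, c * a = 0 → a = 0) (h : F * b = 0) : b = 0 := by
  obtain ⟨P, rfl, rfl⟩ := hF
  obtain ⟨n, Q, hQ⟩ := exists_T_pow (invert b)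
  have hb : b = invert (Polynomial.toLaurent Q) * T n := by
    have := congrArg invert hQ
    rw [map_mul, invert_T] at this
    rw [this, mul_assoc, ← T_add]
    simp only [neg_add_cancel, T_zero, mul_one]
    exact (involutive_invert b).symm
  have h1 : invert (Polynomial.toLaurent (P * Q)) = 0 := by
    rw [map_mul, map_mul]
    have h2 : (T m * invert (Polynomial.toLaurent P) * b) * T (-n) * T (-m) = 0 := by
      rw [h, zero_mul, zero_mul]
    rw [hb] at h2
    rw [← h2]
    have e : (T m * T (-m) : LaurentPolynomial C) = 1 := by rw [← T_add]; simp
    have e' : (T n * T (-n) : LaurentPolynomial C) = 1 := by rw [← T_add]; simp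
    linear_combination (invert (Polynomial.toLaurent P) * invert (Polynomial.toLaurent Q)) *
      (-e - (T m * T (-m)) * e')
  have h2 : P * Q = 0 := by
    apply Polynomial.toLaurent_injective
    apply invert.injective
    rw [h1, map_zero, map_zero]
  have h3 : ∀ k, Q.coeff k = 0 := by
    intro k
    induction k using Nat.strong_induction_on with
    | _ k ih =>
      apply hc
      have := congrArg (fun p => p.coeff k) h2
      simp only [Polynomial.coeff_zero] at this
      rw [Polynomial.coeff_mul, Finset.sum_eq_single (0, k)] at this
      · exact this
      · rintro ⟨i, j⟩ hij hne
        rw [Finset.HasAntidiagonal.mem_antidiagonal] at hij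
        simp only at hij
        have : j < k := by
          rcases Nat.eq_zero_or_pos i with rfl | hi
          · exact absurd (by simp at hij; rw [hij]) hne
          · omega
        rw [ih j this, mul_zero]
      · intro h; exact absurd (by simp) h
  have h4 : Q = 0 := Polynomial.ext h3
  rw [hb, h4]; simp

/-- A nonzero polynomial in the perturbed parameters is a nonzerodivisor on Laurent polynomials. -/
lemma ls_htf {Λ : Type*} [CommRing Λ] [Algebra Λ C] {d : ℕ} (z : Fin d → C)
    (htf : ∀ (p : MvPolynomial (Fin d) Λ) (a : C), p ≠ 0 → aeval z p * a = 0 → a = 0)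
    (f : Option (Fin d) → C) {s s' : ℕ} (hs : 0 < s) (hs' : 0 < s')
    (q : QRing Λ d) (b : LaurentPolynomial C) (hq : q ≠ 0)
    (hb : aeval (fun o : Option (Fin d) => o.elim
      ((T 1 : LaurentPolynomial C) - (LaurentPolynomial.C (f none) * T (-1)) ^ s')
      fun j => LaurentPolynomial.C (z j) - (LaurentPolynomial.C (f (some j)) * T (-1)) ^ s) q * b
        = 0) : b = 0 := by
  set t0 : LaurentPolynomial C := T 1 - (LaurentPolynomial.C (f none) * T (-1)) ^ s' with ht0
  set zz : Fin d → LaurentPolynomial C :=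
    fun j => LaurentPolynomial.C (z j) - (LaurentPolynomial.C (f (some j)) * T (-1)) ^ s with hzz
  have hl0 : Lead t0 1 1 := by
    have := (lead_T (C := C) 1).add ((lead_neg_pow (f none) hs').raise (k := 1) one_pos)
    simpa [ht0, sub_eq_add_neg] using this
  have hlz : ∀ j, Lead (zz j) 0 (z j) := fun j => by
    have := (lead_C (z j)).add (lead_neg_pow (f (some j)) hs)
    simpa [hzz, sub_eq_add_neg] using this
  have hlp : ∀ p : MvPolynomial (Fin d) Λ, Lead (aeval zz p) 0 (aeval z p) := by
    intro p
    induction p using MvPolynomial.induction_on with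
    | C a => rw [aeval_C, aeval_C]; exact lead_C (algebraMap Λ C a)
    | add p q hp hq => rw [map_add, map_add]; exact hp.add hq
    | mul_X p j hp =>
      rw [map_mul, map_mul, aeval_X, aeval_X]; simpa using hp.mul (hlz j)
  let P := optionEquivLeft Λ (Fin d) q
  have hP : P ≠ 0 := by
    intro h
    exact hq ((optionEquivLeft Λ (Fin d)).injective (by rw [map_zero]; exact h))
  have hev : aeval (fun o : Option (Fin d) => o.elim t0 zz) q =
      P.eval₂ (aeval zz).toRingHom t0 := by
    simp only [P]
    clear hP P hb hq
    induction q using MvPolynomial.induction_on with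
    | C a => simp [optionEquivLeft_C]
    | add p q hp hq => rw [map_add, map_add, Polynomial.eval₂_add, hp, hq]
    | mul_X p j hp =>
      rw [map_mul, map_mul, Polynomial.eval₂_mul, hp, aeval_X]
      congr 1
      cases j with
      | none => simp [optionEquivLeft_X_none]
      | some j => simp [optionEquivLeft_X_some]
  rw [hev, Polynomial.eval₂_eq_sum_range, Finset.sum_range_succ] at hb
  have h1 : Lead (∑ k ∈ Finset.range P.natDegree,
      (aeval zz).toRingHom (P.coeff k) * t0 ^ k) P.natDegree 0 := by
    refine Finset.sum_induction _ (fun F => Lead F (P.natDegree : ℤ) (0 : C))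
      (fun a b ha hb => by simpa using ha.add hb) (lead_zero _) fun k hk => ?_
    rw [Finset.mem_range] at hk
    have := ((hlp (P.coeff k)).mul (hl0.pow k)).raise (k := P.natDegree - k) (by omega)
    have e : (0 + (k : ℤ) * 1 + ((P.natDegree - k : ℕ) : ℤ)) = P.natDegree := by omega
    rw [e] at this
    exact this
  have h2 := h1.add ((hlp (P.coeff P.natDegree)).mul (hl0.pow P.natDegree) |> fun h => by
    simpa using h)
  rw [zero_add] at h2
  refine h2.nzd (fun a ha => htf _ a ?_ ha) hb
  exact Polynomial.leadingCoeff_ne_zero.2 hP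
end lead

set_option maxHeartbeats 2000000 in
/-- Lipman–Sathaye for the powers of an ideal whose generators are very general: the different
annihilates the integral closure modulo a power which is smaller by a bounded amount. -/
theorem ls_main {Λ C : Type*} [CommRing Λ] [IsDomain Λ] [UniqueFactorizationMonoid Λ] [CommRing C]
    [Algebra Λ C] {d t : ℕ} (z : Fin d → C) (θ : Fin t → C)
    (hsurj : Function.Surjective (aeval (R := Λ) (Sum.elim z θ)))
    (g : Fin t → Polynomial (MvPolynomial (Fin d) Λ)) (hg : ∀ i, (g i).Monic)
    (hgθ : ∀ i, (g i).eval₂ (aeval z).toRingHom (θ i) = 0)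
    (htf : ∀ (p : MvPolynomial (Fin d) Λ) (a : C), p ≠ 0 → aeval z p * a = 0 → a = 0)
    (f0 : C) (h : Fin d → C) (n : ℕ) : ∃ M0, ∀ M, M0 ≤ M → ∀ y0 : C,
      IsIntegralOverIdeal
        (Ideal.span (Set.range fun o : Option (Fin d) => o.elim f0 fun j => h j + z j ^ M) ^ n) y0 →
      (∏ i, (g i).derivative.eval₂ (aeval z).toRingHom (θ i)) * y0 ∈
        Ideal.span (Set.range fun o : Option (Fin d) => o.elim f0 fun j => h j + z j ^ M)
          ^ (n - (d + 1)) := by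
  classical
  obtain ⟨F0, hF0⟩ := hsurj f0
  choose H hH using fun j => hsurj (h j)
  obtain ⟨E, hE⟩ : ∃ E, ∀ i k, ((g i).coeff k).totalDegree ≤ E := by
    refine ⟨∑ i, ∑ k ∈ (g i).support, ((g i).coeff k).totalDegree, fun i k => ?_⟩
    by_cases hk : k ∈ (g i).support
    · refine le_trans ?_ (Finset.single_le_sum (f := fun i => ∑ k ∈ (g i).support,
        ((g i).coeff k).totalDegree) (fun _ _ => Nat.zero_le _) (Finset.mem_univ i))
      exact Finset.single_le_sum (f := fun k => ((g i).coeff k).totalDegree)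
        (fun _ _ => Nat.zero_le _) hk
    · rw [Polynomial.notMem_support_iff.1 hk]; simp
  -- With `s > n` the correction terms `w ^ s` below lie too deep to affect membership in `J ^ n`;
  -- `s'` and the bound on `M` are what `ls_finite` requires.
  let s := n + 1
  let s' := s + F0.totalDegree * (s + (s * E + 1))
  refine ⟨s' + 2 + ∑ j, (H j).totalDegree * (s + (s * E + 1)), fun M hM y0 hy0 => ?_⟩
  have hsM : M ≤ s * M := Nat.le_mul_of_pos_left _ (Nat.succ_pos n)
  set fC : Option (Fin d) → C := fun o => o.elim f0 fun j => h j + z j ^ M with hfC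
  set J := Ideal.span (Set.range fC) with hJ
  let B := (eps fC).range
  let u : B := ⟨eps fC (X none), ⟨_, rfl⟩⟩
  let w : Option (Fin d) → B := fun o => ⟨eps fC (X (some o)), ⟨_, rfl⟩⟩
  let zB : Fin d → B := fun j => algebraMap C B (z j)
  let θB : Fin t → B := fun i => algebraMap C B (θ i)
  let f : Option (Fin d) → MvPolynomial (Fin d ⊕ Fin t) Λ :=
    fun o => o.elim F0 fun j => H j + X (Sum.inl j) ^ M
  have hfe : ∀ o, aeval (R := Λ) (Sum.elim z θ) (f o) = fC o := by
    rintro (_ | j)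
    · exact hF0
    · simp [f, hfC, hH]
  let ι : C →ₐ[Λ] B := IsScalarTower.toAlgHom Λ C B
  have hzB : ∀ p : MvPolynomial (Fin d) Λ, aeval zB p = ι (aeval z p) := fun p =>
    (map_aeval' ι z p).symm
  have hgB : ∀ i (q : Polynomial (MvPolynomial (Fin d) Λ)),
      q.eval₂ (aeval zB).toRingHom (θB i) = ι (q.eval₂ (aeval z).toRingHom (θ i)) := fun i q => by
    have := Polynomial.hom_eval₂ q (aeval z).toRingHom ι.toRingHom (θ i)
    refine Eq.trans ?_ this.symm
    have e1 : ι.toRingHom.comp (aeval z).toRingHom =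
        ((aeval zB).toRingHom : MvPolynomial (Fin d) Λ →+* B) :=
      RingHom.ext fun p => (hzB p).symm
    rw [e1]; rfl
  have huw : ∀ o, u * w o = ι (fC o) := fun o => Subtype.ext <| by
    change eps fC _ * eps fC _ = LaurentPolynomial.C (fC o)
    rw [eps_u, eps_W, mul_left_comm, ← LaurentPolynomial.T_add]
    simp
  have hgen : Algebra.adjoin Λ (Set.range zB ∪ Set.range θB ∪ Set.range w ∪ {u}) = ⊤ := by
    rw [eq_top_iff]
    rintro ⟨_, F, rfl⟩ -
    change (eps fC).rangeRestrict F ∈ _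
    induction F using MvPolynomial.induction_on with
    | C a =>
      obtain ⟨p, rfl⟩ := hsurj a
      have : (eps fC).rangeRestrict (MvPolynomial.C (aeval (R := Λ) (Sum.elim z θ) p)) =
          aeval (R := Λ) (Sum.elim zB θB) p := by
        have e : (eps fC).rangeRestrict (MvPolynomial.C (aeval (R := Λ) (Sum.elim z θ) p)) =
          ι (aeval (R := Λ) (Sum.elim z θ) p) := Subtype.ext (eps_C fC _)
        rw [e, map_aeval' ι]
        congr 2
        ext i; rcases i with i | i <;> rfl
      rw [this, aeval_def, eval₂_eq]
      refine sum_mem fun α _ => mul_mem (Subalgebra.algebraMap_mem _ _)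
        (prod_mem fun i _ => pow_mem (Algebra.subset_adjoin ?_) _)
      rcases i with i | i
      · exact Or.inl (Or.inl (Or.inl ⟨i, rfl⟩))
      · exact Or.inl (Or.inl (Or.inr ⟨i, rfl⟩))
    | add p q hp hq => rw [map_add]; exact add_mem hp hq
    | mul_X p o hp =>
      rw [map_mul]
      refine mul_mem hp (Algebra.subset_adjoin ?_)
      cases o with
      | none => exact Or.inr rfl
      | some o => exact Or.inl (Or.inr ⟨o, rfl⟩)
  have hhtf : ∀ (q : QRing Λ d) (b : B), q ≠ 0 →
      aeval (fun o : Option (Fin d) => o.elim (u - w none ^ s') fun j => zB j - w (some j) ^ s) q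
        * b = 0 → b = 0 := by
    intro q b hq hb
    have h1 := congrArg (fun b : B => (b : LaurentPolynomial C)) hb
    refine Subtype.ext (ls_htf (Λ := Λ) z htf fC (s := s) (s' := s') (Nat.succ_pos n)
      (by omega) q b hq ?_)
    refine Eq.trans ?_ h1
    change _ = (B.val.restrictScalars Λ) (aeval _ q) * (b : LaurentPolynomial C)
    rw [map_aeval' (B.val.restrictScalars Λ)]
    congr 3
    ext1 o
    rcases o with _ | j
    · simp only [Option.elim_none]
      rw [map_sub, map_pow]
      congr 1
      · exact (eps_u fC).symm
      · congr 1; exact (eps_W fC none).symm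
    · simp only [Option.elim_some]
      rw [map_sub, map_pow]
      exact congrArg₂ (fun a b => a - b) rfl (congrArg (fun a => a ^ s) (eps_W fC (some j)).symm)
  have hu : ∀ b : B, u * b = 0 → b = 0 := by
    intro b hb
    have h1 := congrArg (fun b : B => LaurentPolynomial.T (-1) * (b : LaurentPolynomial C)) hb
    refine Subtype.ext ?_
    change LaurentPolynomial.T (-1) * (eps fC (X none) * (b : LaurentPolynomial C)) =
      LaurentPolynomial.T (-1) * 0 at h1
    rw [eps_u, ← mul_assoc, ← LaurentPolynomial.T_add] at h1
    simpa using h1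
  have hy : IsIntegralOverIdeal (Ideal.span {u ^ n}) (ι y0) := by
    have h1 := isIntegralOverIdeal_map ι.toRingHom hy0
    refine isIntegralOverIdeal_mono ?_ h1
    rw [Ideal.map_pow, ← Ideal.span_singleton_pow]
    refine Ideal.pow_right_mono ?_ n
    rw [Ideal.map_span, Ideal.span_le]
    rintro _ ⟨_, ⟨o, rfl⟩, rfl⟩
    exact Ideal.mem_span_singleton'.2 ⟨w o, by rw [mul_comm]; exact huw o⟩
  obtain ⟨e, he, b, hb⟩ := ls_abs (Λ := Λ) zB θB w u g hg f H M (fun j => rfl)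
    (fun i => by rw [hgB, hgθ, map_zero]) (fun o => by
      rw [huw, ← hfe, map_aeval' ι]
      congr 2
      ext i; rcases i with i | i <;> rfl) hgen (s := s) (s' := s') (E := E) (Nat.succ_pos n)
    (Nat.le_add_right _ _) hE (by simp only [f, Option.elim_none, s']; omega) (by omega)
    (fun j => by
      have := Finset.single_le_sum (f := fun j => (H j).totalDegree * (s + (s * E + 1)))
        (fun _ _ => Nat.zero_le _) (Finset.mem_univ j)
      omega) hhtf hu hy
  -- Compare the coefficients of `u ^ (d + 1)`.
  set Δ := ∏ i, (g i).derivative.eval₂ (aeval z).toRingHom (θ i) with hΔ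
  have hΔB : ∏ i, (g i).derivative.eval₂ (aeval zB).toRingHom (θB i) = ι Δ := by
    rw [hΔ, map_prod]; exact Finset.prod_congr rfl fun i _ => hgB i _
  rw [hΔB] at hb
  have he' : ∀ m, (e : LaurentPolynomial C).coeff m ∈ J ^ n := by
    have h1 : (e : LaurentPolynomial C) ∈ (J ^ n).map LaurentPolynomial.C := by
      have h2 := Ideal.mem_map_of_mem B.val.toRingHom he
      rw [Ideal.map_pow, Ideal.map_span] at h2
      rw [Ideal.map_pow]
      refine Ideal.pow_right_mono ?_ n h2
      rw [Ideal.span_le]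
      rintro _ ⟨_, ⟨o, rfl⟩, rfl⟩
      change eps fC (X (some o)) ∈ _
      rw [eps_W]
      exact Ideal.mul_mem_right _ _ (Ideal.mem_map_of_mem _ (Ideal.subset_span ⟨o, rfl⟩))
    refine Submodule.span_induction ?_ ?_ ?_ ?_ h1
    · rintro _ ⟨a, ha, rfl⟩ m
      rw [← mul_one (LaurentPolynomial.C a), coeff_C_mul]
      exact Ideal.mul_mem_right _ _ ha
    · intro m; simp
    · intro x y _ _ hx hy m
      rw [AddMonoidAlgebra.coeff_add, Finsupp.add_apply]; exact add_mem (hx m) (hy m)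
    · intro a x _ hx m
      rw [smul_eq_mul]
      induction a using LaurentPolynomial.induction_on' generalizing m with
      | add p q hp hq =>
        rw [add_mul, AddMonoidAlgebra.coeff_add, Finsupp.add_apply]; exact add_mem (hp m) (hq m)
      | C_mul_T k a =>
        rw [mul_assoc, coeff_C_mul, mul_comm (LaurentPolynomial.T k), coeff_mul_T]
        exact Ideal.mul_mem_left _ _ (hx _)
  have h1 := congrArg (fun b : B => (b : LaurentPolynomial C).coeff ((d + 1 : ℕ) : ℤ)) hb
  have hbc : (b : LaurentPolynomial C).coeff ((d + 1 : ℕ) - n : ℤ) ∈ J ^ (n - (d + 1)) := by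
    obtain ⟨_, F, rfl⟩ := b
    have := eps_coeff_mem fC F ((d + 1 : ℕ) - n : ℤ)
    rwa [show (-(((d + 1 : ℕ) : ℤ) - n)).toNat = n - (d + 1) by omega] at this
  have e1 : ((u ^ n * b : B) : LaurentPolynomial C).coeff ((d + 1 : ℕ) : ℤ) =
      (b : LaurentPolynomial C).coeff ((d + 1 : ℕ) - n : ℤ) := by
    have : ((u ^ n * b : B) : LaurentPolynomial C) =
        (b : LaurentPolynomial C) * LaurentPolynomial.T n := by
      change eps fC (X none) ^ n * (b : LaurentPolynomial C) = _
      rw [eps_u, LaurentPolynomial.T_pow, mul_comm, mul_one]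
    rw [this, coeff_mul_T]
  have e2 : (((-u) ^ (d + 1) * ι Δ + e) * ι y0 : B) = ι ((-1) ^ (d + 1) * (Δ * y0)) * u ^ (d + 1)
      + ι y0 * e := by
    rw [neg_pow]; simp only [map_mul, map_pow, map_neg, map_one]; ring
  have e3 : ((((-u) ^ (d + 1) * ι Δ + e) * ι y0 : B) : LaurentPolynomial C).coeff ((d + 1 : ℕ) : ℤ)
      = (-1) ^ (d + 1) * (Δ * y0) + y0 * (e : LaurentPolynomial C).coeff ((d + 1 : ℕ) : ℤ) := by
    rw [e2]
    change (LaurentPolynomial.C ((-1) ^ (d + 1) * (Δ * y0)) * eps fC (X none) ^ (d + 1) +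
      LaurentPolynomial.C y0 * (e : LaurentPolynomial C)).coeff ((d + 1 : ℕ) : ℤ) = _
    rw [AddMonoidAlgebra.coeff_add, Finsupp.add_apply, coeff_C_mul, eps_u, LaurentPolynomial.T_pow,
      coeff_C_mul, LaurentPolynomial.T_apply, if_pos (by omega), mul_one]
  rw [e3, e1] at h1
  have h2 : (-1) ^ (d + 1) * (Δ * y0) ∈ J ^ (n - (d + 1)) := by
    rw [eq_sub_of_add_eq h1]
    exact sub_mem hbc (Ideal.mul_mem_left _ _ (Ideal.pow_le_pow_right (Nat.sub_le _ _) (he' _)))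
  have h3 := Ideal.mul_mem_left _ ((-1) ^ (d + 1)) h2
  rwa [← mul_assoc, ← mul_pow, neg_one_mul, neg_neg, one_pow, one_mul] at h3
end UBS

/-! ### Complete intersections over the base -/

namespace UBS
universe v
section
variable {A : Type v} [CommRing A] {t : ℕ}

/-- The ideal generated by the polynomials `g i` evaluated at the variable `X i`. -/
noncomputable def relC (g : Fin t → Polynomial A) : Ideal (MvPolynomial (Fin t) A) :=
  Ideal.span (Set.range fun i => (g i).eval₂ MvPolynomial.C (MvPolynomial.X i))

/-- The algebra `A[Θ₁, …, Θₜ] / (g₁(Θ₁), …, gₜ(Θₜ))`. -/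
abbrev CR (g : Fin t → Polynomial A) : Type v := MvPolynomial (Fin t) A ⧸ relC g

variable {g : Fin t → Polynomial A}

/-- The class of the `i`-th variable, a root of `g i`. -/
noncomputable def CR.root (g : Fin t → Polynomial A) (i : Fin t) : CR g :=
  Ideal.Quotient.mk _ (MvPolynomial.X i)

lemma CR.eval_root (i : Fin t) : (g i).eval₂ (algebraMap A (CR g)) (CR.root g i) = 0 := by
  have := Polynomial.hom_eval₂ (g i) MvPolynomial.C (Ideal.Quotient.mk (relC g)) (MvPolynomial.X i)
  refine Eq.trans this.symm ?_
  exact Ideal.Quotient.eq_zero_iff_mem.2 (Ideal.subset_span ⟨i, rfl⟩)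

/-- The ring homomorphism out of `CR g` given by a homomorphism on `A` and a root of each `g i`. -/
noncomputable def CR.lift {B : Type*} [CommRing B] (φ : A →+* B) (b : Fin t → B)
    (h : ∀ i, (g i).eval₂ φ (b i) = 0) : CR g →+* B :=
  Ideal.Quotient.lift _ (MvPolynomial.eval₂Hom φ b) (by
    have : relC g ≤ RingHom.ker (MvPolynomial.eval₂Hom φ b) := by
      rw [relC, Ideal.span_le]
      rintro _ ⟨i, rfl⟩
      rw [SetLike.mem_coe, RingHom.mem_ker, Polynomial.hom_eval₂]
      have e : (MvPolynomial.eval₂Hom φ b).comp MvPolynomial.C = φ :=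
        RingHom.ext fun a => MvPolynomial.eval₂Hom_C _ _ _
      rw [e, MvPolynomial.eval₂Hom_X']
      exact h i
    exact fun a ha => this ha)

@[simp] lemma CR.lift_algebraMap {B : Type*} [CommRing B] (φ : A →+* B) (b : Fin t → B)
    (h : ∀ i, (g i).eval₂ φ (b i) = 0) (a : A) : CR.lift φ b h (algebraMap A (CR g) a) = φ a :=
  MvPolynomial.eval₂Hom_C _ _ _

@[simp] lemma CR.lift_root {B : Type*} [CommRing B] (φ : A →+* B) (b : Fin t → B)
    (h : ∀ i, (g i).eval₂ φ (b i) = 0) (i : Fin t) : CR.lift φ b h (CR.root g i) = b i :=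
  MvPolynomial.eval₂Hom_X' _ _ _

lemma CR.ringHom_ext {B : Type*} [CommRing B] {φ ψ : CR g →+* B}
    (h : ∀ a, φ (algebraMap A (CR g) a) = ψ (algebraMap A (CR g) a))
    (hr : ∀ i, φ (CR.root g i) = ψ (CR.root g i)) : φ = ψ := by
  apply Ideal.Quotient.ringHom_ext
  exact MvPolynomial.ringHom_ext h hr

/-- The algebra `CR g` is free and finite over `A`: it is an iterated monogenic extension. -/
lemma CR.exists_model : ∀ (t : ℕ) (g : Fin t → Polynomial A), (∀ i, (g i).Monic) →
    ∃ (C : Type v) (_ : CommRing C) (_ : Algebra A C), Module.Free A C ∧ Module.Finite A C ∧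
      ∃ φ : MvPolynomial (Fin t) A →ₐ[A] C, Function.Surjective φ ∧ RingHom.ker φ = relC g := by
  intro t
  induction t with
  | zero =>
    intro g hg
    refine ⟨A, inferInstance, inferInstance, inferInstance, inferInstance,
      (MvPolynomial.isEmptyAlgEquiv A (Fin 0)).toAlgHom,
      (MvPolynomial.isEmptyAlgEquiv A (Fin 0)).surjective, ?_⟩
    rw [relC, Set.range_eq_empty, Ideal.span_empty]
    refine (RingHom.injective_iff_ker_eq_bot _).1 ?_
    exact (MvPolynomial.isEmptyAlgEquiv A (Fin 0)).injective
  | succ t ih =>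
    intro g hg
    obtain ⟨C, _, _, hfree, hfin, φ, hφ, hker⟩ := ih (fun i => g i.castSucc) fun i => hg _
    let G := (g (Fin.last t)).map (algebraMap A C)
    have hG : G.Monic := (hg _).map _
    have : Module.Free C (AdjoinRoot G) := Module.Free.of_basis (AdjoinRoot.powerBasis' hG).basis
    have : Module.Finite C (AdjoinRoot G) := (AdjoinRoot.powerBasis' hG).finite
    let φ' : MvPolynomial (Fin (t + 1)) A →ₐ[A] AdjoinRoot G := MvPolynomial.aeval
      (Fin.snoc (α := fun _ => AdjoinRoot G)
        (fun i => AdjoinRoot.of G (φ (MvPolynomial.X i))) (AdjoinRoot.root G))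
    have hφ'1 : ∀ i : Fin t, φ' (MvPolynomial.X i.castSucc) =
        AdjoinRoot.of G (φ (MvPolynomial.X i)) := fun i => by simp [φ']
    have hφ'2 : φ' (MvPolynomial.X (Fin.last t)) = AdjoinRoot.root G := by simp [φ']
    have hφ'3 : ∀ p, φ' (MvPolynomial.rename Fin.castSucc p) = AdjoinRoot.of G (φ p) := by
      intro p
      have : (φ'.comp (MvPolynomial.rename Fin.castSucc)) =
          (IsScalarTower.toAlgHom A C (AdjoinRoot G)).comp φ := by
        apply MvPolynomial.algHom_ext
        intro i
        simp only [AlgHom.comp_apply, MvPolynomial.rename_X, hφ'1]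
        rfl
      exact DFunLike.congr_fun this p
    refine ⟨AdjoinRoot G, inferInstance, inferInstance, Module.Free.trans (S := C),
      Module.Finite.trans C _, φ', ?_, ?_⟩
    · intro x
      induction x using AdjoinRoot.induction_on with
      | _ p =>
        induction p using Polynomial.induction_on' with
        | add p q hp hq =>
          obtain ⟨a, ha⟩ := hp
          obtain ⟨b, hb⟩ := hq
          exact ⟨a + b, by rw [map_add, ha, hb, map_add]⟩
        | monomial n c =>
          obtain ⟨p, rfl⟩ := hφ c
          refine ⟨MvPolynomial.rename Fin.castSucc p * MvPolynomial.X (Fin.last t) ^ n, ?_⟩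
          rw [map_mul, hφ'3, map_pow, hφ'2, ← Polynomial.C_mul_X_pow_eq_monomial, map_mul, map_pow]
          rfl
    · apply le_antisymm
      · let Q := MvPolynomial (Fin (t + 1)) A ⧸ relC g
        let ρ : MvPolynomial (Fin t) A →ₐ[A] Q :=
          (Ideal.Quotient.mkₐ A (relC g)).comp (MvPolynomial.rename Fin.castSucc)
        have hρ : ∀ p ∈ RingHom.ker φ, ρ p = 0 := by
          rw [hker]
          have : relC (fun i : Fin t => g i.castSucc) ≤ RingHom.ker ρ := by
            rw [relC, Ideal.span_le]
            rintro _ ⟨i, rfl⟩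
            have h1 := Polynomial.hom_eval₂ (g i.castSucc) (MvPolynomial.C (σ := Fin t)) ρ.toRingHom
              (MvPolynomial.X i)
            refine Eq.trans h1 ?_
            have e : ρ.toRingHom.comp MvPolynomial.C = algebraMap A Q :=
              RingHom.ext fun a => ρ.commutes a
            rw [e]
            have e2 : ρ.toRingHom (MvPolynomial.X i) = CR.root g i.castSucc := by
              change Ideal.Quotient.mk _ (MvPolynomial.rename Fin.castSucc (MvPolynomial.X i)) = _
              rw [MvPolynomial.rename_X]; rfl
            rw [e2]
            exact CR.eval_root _
          exact fun p hp => this hp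
        let ψ0 : C →ₐ[A] Q := (Ideal.Quotient.liftₐ (RingHom.ker φ) ρ hρ).comp
          (Ideal.quotientKerAlgEquivOfSurjective hφ).symm.toAlgHom
        have hψ0 : ∀ p, ψ0 (φ p) = ρ p := by
          intro p
          have : (Ideal.quotientKerAlgEquivOfSurjective hφ).symm (φ p) = Ideal.Quotient.mk _ p := by
            rw [AlgEquiv.symm_apply_eq]; rfl
          change Ideal.Quotient.liftₐ (RingHom.ker φ) ρ hρ
            ((Ideal.quotientKerAlgEquivOfSurjective hφ).symm (φ p)) = _
          rw [this]; rfl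
        let ψ : AdjoinRoot G →+* Q := AdjoinRoot.lift ψ0.toRingHom (CR.root g (Fin.last t)) (by
          rw [Polynomial.eval₂_map]
          have e : ψ0.toRingHom.comp (algebraMap A C) = algebraMap A Q :=
            RingHom.ext fun a => ψ0.commutes a
          rw [e]; exact CR.eval_root _)
        have hψ : ψ.comp φ'.toRingHom = Ideal.Quotient.mk (relC g) := by
          apply MvPolynomial.ringHom_ext
          · intro a
            have e : φ' (MvPolynomial.C a) = AdjoinRoot.of G (algebraMap A C a) := φ'.commutes a
            change ψ (φ' (MvPolynomial.C a)) = _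
            rw [e]
            simp only [ψ, AdjoinRoot.lift_of]
            exact ψ0.commutes a
          · intro i
            change ψ (φ' (MvPolynomial.X i)) = _
            induction i using Fin.lastCases with
            | last => rw [hφ'2]; simp only [ψ, AdjoinRoot.lift_root]; rfl
            | cast i =>
              rw [hφ'1]; simp only [ψ, AdjoinRoot.lift_of]
              refine (hψ0 _).trans ?_
              simp [ρ]
        intro p hp
        rw [← Ideal.Quotient.eq_zero_iff_mem, ← hψ]
        change ψ (φ' p) = 0
        rw [RingHom.mem_ker] at hp
        rw [hp, map_zero]
      · rw [relC, Ideal.span_le]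
        rintro _ ⟨i, rfl⟩
        have h1 := Polynomial.hom_eval₂ (g i) (MvPolynomial.C (σ := Fin (t + 1))) φ'.toRingHom
              (MvPolynomial.X i)
        refine Eq.trans h1 ?_
        have e : φ'.toRingHom.comp MvPolynomial.C = algebraMap A (AdjoinRoot G) :=
          RingHom.ext fun a => φ'.commutes a
        rw [e]
        change Polynomial.eval₂ _ (φ' (MvPolynomial.X i)) _ = 0
        induction i using Fin.lastCases with
        | last =>
          rw [hφ'2, IsScalarTower.algebraMap_eq A C (AdjoinRoot G), ← Polynomial.eval₂_map]
          exact AdjoinRoot.eval₂_root G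
        | cast i =>
          rw [hφ'1]
          have h2 := Polynomial.hom_eval₂ (g i.castSucc) (MvPolynomial.C (σ := Fin t))
            ((AdjoinRoot.of G).comp φ.toRingHom) (MvPolynomial.X i)
          have e3 : ((AdjoinRoot.of G).comp φ.toRingHom).comp MvPolynomial.C =
              algebraMap A (AdjoinRoot G) := RingHom.ext fun a => by
            change AdjoinRoot.of G (φ (MvPolynomial.C a)) = _
            have : φ (MvPolynomial.C a) = algebraMap A C a := φ.commutes a
            rw [this]; rfl
          rw [e3] at h2
          refine Eq.trans h2.symm ?_
          change AdjoinRoot.of G (φ _) = 0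
          have : φ (Polynomial.eval₂ MvPolynomial.C (MvPolynomial.X i) (g i.castSucc)) = 0 := by
            rw [← RingHom.mem_ker, hker]
            exact Ideal.subset_span ⟨i, rfl⟩
          rw [this, map_zero]

/-- Adjoining the roots one at a time shows that `CR g` is free and finite over `A`. -/
lemma CR.free_finite (hg : ∀ i, (g i).Monic) : Module.Free A (CR g) ∧ Module.Finite A (CR g) := by
  obtain ⟨C, _, _, hfree, hfin, φ, hφ, hker⟩ := CR.exists_model t g hg
  let e1 : (MvPolynomial (Fin t) A ⧸ RingHom.ker φ) ≃ₐ[A] C :=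
    Ideal.quotientKerAlgEquivOfSurjective hφ
  let e2 : CR g ≃ₐ[A] (MvPolynomial (Fin t) A ⧸ RingHom.ker φ) :=
    Ideal.quotientEquivAlgOfEq A hker.symm
  exact ⟨Module.Free.of_equiv (e2.trans e1).symm.toLinearEquiv,
    Module.Finite.equiv (e2.trans e1).symm.toLinearEquiv⟩

end
end UBS

namespace UBS
open MvPolynomial (aeval X)

/-- `ι : P → A` identifies `A` with `P` modulo all powers of `I`. -/
def ApproxIso {P A : Type*} [CommRing P] [CommRing A] (I : Ideal P) (ι : P →+* A) : Prop :=
  (∀ N a, ∃ p, a - ι p ∈ (I.map ι) ^ N) ∧ ∀ N p, ι p ∈ (I.map ι) ^ N → p ∈ I ^ N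

/-- An approximation `ι : P → A` modulo all powers of `I` yields for each `N` a map from `A` to a
quotient of `P` that is compatible with `ι`. -/
lemma ApproxIso.exists_hom {P A : Type*} [CommRing P] [CommRing A] {I : Ideal P} {ι : P →+* A}
    (h : ApproxIso I ι) (N : ℕ) : ∃ χ : A →+* P ⧸ I ^ N,
      (∀ p, χ (ι p) = Ideal.Quotient.mk _ p) ∧ ∀ a ∈ (I.map ι) ^ N, χ a = 0 := by
  let φ : P →+* A ⧸ (I.map ι) ^ N := (Ideal.Quotient.mk _).comp ι
  have hφ : Function.Surjective φ := by
    intro a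
    obtain ⟨a, rfl⟩ := Ideal.Quotient.mk_surjective a
    obtain ⟨p, hp⟩ := h.1 N a
    exact ⟨p, (Ideal.Quotient.eq.2 hp).symm⟩
  have hker : RingHom.ker φ = I ^ N := by
    ext p
    rw [RingHom.mem_ker]
    change Ideal.Quotient.mk _ (ι p) = 0 ↔ _
    rw [Ideal.Quotient.eq_zero_iff_mem]
    refine ⟨h.2 N p, fun hp => ?_⟩
    rw [← Ideal.map_pow]; exact Ideal.mem_map_of_mem _ hp
  let e := (RingHom.quotientKerEquivOfSurjective hφ).symm.trans (Ideal.quotEquivOfEq hker)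
  refine ⟨e.toRingHom.comp (Ideal.Quotient.mk _), fun p => ?_, fun a ha => ?_⟩
  · change Ideal.quotEquivOfEq hker ((RingHom.quotientKerEquivOfSurjective hφ).symm (φ p)) = _
    have : (RingHom.quotientKerEquivOfSurjective hφ).symm (φ p) = Ideal.Quotient.mk _ p := by
      rw [RingEquiv.symm_apply_eq]; rfl
    rw [this]; rfl
  · change e (Ideal.Quotient.mk _ a) = 0
    rw [Ideal.Quotient.eq_zero_iff_mem.2 ha, map_zero]

section
universe v
variable {A : Type v} [CommRing A] {t : ℕ} {g : Fin t → Polynomial A}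

/-- The ideal of `CR g` generated by an ideal of the base and the variables. -/
noncomputable def CR.mx (g : Fin t → Polynomial A) (I : Ideal A) : Ideal (CR g) :=
  I.map (algebraMap A (CR g)) ⊔ Ideal.span (Set.range (CR.root g))

lemma CR.mk_mx_surj (I : Ideal A) (x : CR g) : ∃ a, x - algebraMap A (CR g) a ∈ CR.mx g I := by
  obtain ⟨p, rfl⟩ := Ideal.Quotient.mk_surjective x
  induction p using MvPolynomial.induction_on with
  | C a => exact ⟨a, by
      change algebraMap A (CR g) a - _ ∈ _
      rw [sub_self]; exact zero_mem _⟩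
  | add p q hp hq =>
    obtain ⟨a, ha⟩ := hp
    obtain ⟨b, hb⟩ := hq
    refine ⟨a + b, ?_⟩
    convert add_mem ha hb using 1
    rw [map_add, map_add]; ring
  | mul_X p i hp =>
    refine ⟨0, ?_⟩
    rw [map_zero, sub_zero, map_mul]
    exact Ideal.mul_mem_left _ _ (Ideal.mem_sup_right (Ideal.subset_span ⟨i, rfl⟩))

/-- `CR g` is local if the `g i` are powers of the variable modulo the maximal ideal. -/
lemma CR.isLocalRing [IsLocalRing A] (hg : ∀ i, (g i).Monic) (hg0 : ∀ i, (g i).natDegree ≠ 0)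
    (hgm : ∀ i k, k < (g i).natDegree → (g i).coeff k ∈ IsLocalRing.maximalIdeal A) :
    ∃ _ : IsLocalRing (CR g), IsLocalRing.maximalIdeal (CR g) =
      CR.mx g (IsLocalRing.maximalIdeal A) := by
  set 𝔪 := CR.mx g (IsLocalRing.maximalIdeal A) with h𝔪
  have : Module.Finite A (CR g) := (CR.free_finite hg).2
  have hne : 𝔪 ≠ ⊤ := by
    let φ : CR g →+* IsLocalRing.ResidueField A := CR.lift (IsLocalRing.residue A) 0 (fun i => by
      rw [Polynomial.eval₂_eq_sum_range]
      refine Finset.sum_eq_zero fun k hk => ?_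
      rcases Nat.eq_zero_or_pos k with rfl | hk'
      · rw [(IsLocalRing.residue_eq_zero_iff _).2 (hgm i 0 (Nat.pos_of_ne_zero (hg0 i))), zero_mul]
      · rw [Pi.zero_apply, zero_pow hk'.ne', mul_zero])
    have h1 : 𝔪 ≤ RingHom.ker φ := by
      rw [h𝔪, CR.mx, sup_le_iff, Ideal.map_le_iff_le_comap, Ideal.span_le]
      constructor
      · intro a ha
        rw [Ideal.mem_comap, RingHom.mem_ker, CR.lift_algebraMap]
        exact (IsLocalRing.residue_eq_zero_iff _).2 ha
      · rintro _ ⟨i, rfl⟩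
        rw [SetLike.mem_coe, RingHom.mem_ker, CR.lift_root]; rfl
    intro h
    rw [h] at h1
    have := h1 (Submodule.mem_top (x := (1 : CR g)))
    rw [RingHom.mem_ker, map_one] at this
    exact one_ne_zero this
  have hmax : ∀ n : Ideal (CR g), n.IsMaximal → 𝔪 ≤ n := by
    intro n hn
    have h1 : (n.comap (algebraMap A (CR g))).IsMaximal :=
      Ideal.isMaximal_comap_of_isIntegral_of_isMaximal n
    have h2 := IsLocalRing.eq_maximalIdeal h1
    have h3 : (IsLocalRing.maximalIdeal A).map (algebraMap A (CR g)) ≤ n := by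
      rw [Ideal.map_le_iff_le_comap, h2]
    rw [h𝔪, CR.mx, sup_le_iff, Ideal.span_le]
    refine ⟨h3, ?_⟩
    rintro _ ⟨i, rfl⟩
    have h4 := CR.eval_root (g := g) i
    rw [Polynomial.eval₂_eq_sum_range, Finset.sum_range_succ, (hg i).coeff_natDegree, map_one,
      one_mul] at h4
    refine hn.isPrime.mem_of_pow_mem (g i).natDegree ?_
    rw [eq_neg_of_add_eq_zero_right h4]
    refine neg_mem (sum_mem fun k hk => Ideal.mul_mem_right _ _ (h3 ?_))
    exact Ideal.mem_map_of_mem _ (hgm i k (Finset.mem_range.1 hk))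
  have h𝔪max : 𝔪.IsMaximal := by
    obtain ⟨n, hn, hle⟩ := Ideal.exists_le_maximal 𝔪 hne
    have : 𝔪 = n := by
      refine le_antisymm hle fun x hx => ?_
      obtain ⟨a, ha⟩ := CR.mk_mx_surj (IsLocalRing.maximalIdeal A) x
      have h2 : (n.comap (algebraMap A (CR g))).IsMaximal :=
        Ideal.isMaximal_comap_of_isIntegral_of_isMaximal n
      have h3 := IsLocalRing.eq_maximalIdeal h2
      have h4 : algebraMap A (CR g) a ∈ n := by
        have := sub_mem hx (hle ha)
        rwa [sub_sub_cancel] at this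
      have h5 : a ∈ IsLocalRing.maximalIdeal A := by rw [← h3]; exact h4
      have h6 : algebraMap A (CR g) a ∈ 𝔪 := Ideal.mem_sup_left (Ideal.mem_map_of_mem _ h5)
      have := add_mem ha h6
      rwa [sub_add_cancel] at this
    rw [this]; exact hn
  have hloc : IsLocalRing (CR g) := IsLocalRing.of_unique_max_ideal
    ⟨𝔪, h𝔪max, fun n hn => (h𝔪max.eq_of_le hn.ne_top (hmax n hn)).symm⟩
  exact ⟨hloc, (IsLocalRing.eq_maximalIdeal h𝔪max).symm⟩
end
end UBS

namespace UBS
open MvPolynomial (aeval X)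
universe v

/-- A monic polynomial over `A` can be replaced by a monic one over `P` that agrees with it after every
base change identifying `a` with `p a`. -/
lemma approx_poly {A P : Type v} [CommRing A] [CommRing P] [Nontrivial P] (p : A → P)
    {g : Polynomial A}
    (hg : g.Monic) : ∃ gt : Polynomial P, gt.Monic ∧ ∀ {B : Type v} [CommRing B] (α : A →+* B)
      (α' : P →+* B), (∀ a, α a = α' (p a)) → g.map α = gt.map α' := by
  classical
  refine ⟨Polynomial.X ^ g.natDegree + ∑ k ∈ Finset.range g.natDegree,
    Polynomial.C (p (g.coeff k)) * Polynomial.X ^ k, ?_, ?_⟩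
  · refine Polynomial.monic_X_pow_add ?_
    refine (Polynomial.degree_sum_le _ _).trans_lt ?_
    rw [Finset.sup_lt_iff (by exact WithBot.bot_lt_coe _)]
    intro k hk
    refine (Polynomial.degree_C_mul_X_pow_le _ _).trans_lt ?_
    exact_mod_cast Finset.mem_range.1 hk
  · intro B _ α α' h
    conv_lhs => rw [hg.as_sum]
    simp [Polynomial.map_sum, h]

/-- Nakayama in elementwise form: up to a power of an element congruent to `1` modulo `𝔪`, the power
`𝔪 ^ (e * k)` lies in `F ^ k`. -/
lemma exists_mul_pow_le {C : Type*} [CommRing C] [IsNoetherianRing C] {𝔪 F : Ideal C} {e : ℕ}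
    (h : 𝔪 ^ e ≤ F ⊔ 𝔪 ^ (e + 1)) : ∃ a, a - 1 ∈ 𝔪 ∧ ∀ k, ∀ x ∈ 𝔪 ^ (e * k), a ^ k * x ∈ F ^ k := by
  obtain ⟨a, ha, ha'⟩ := Submodule.exists_sub_one_mem_and_smul_eq_zero_of_fg_of_le_smul 𝔪
    (Submodule.map F.mkQ (𝔪 ^ e)) ((IsNoetherian.noetherian (𝔪 ^ e)).map _) (by
      rintro _ ⟨x, hx, rfl⟩
      obtain ⟨y, hy, z, hz, rfl⟩ := Submodule.mem_sup.1 (h hx)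
      rw [map_add, show F.mkQ y = 0 from (Submodule.Quotient.mk_eq_zero F).2 hy, zero_add,
        ← Submodule.map_smul'']
      refine Submodule.mem_map_of_mem ?_
      rw [smul_eq_mul, ← pow_succ']; exact hz)
  refine ⟨a, ha, fun k x hx => ?_⟩
  have h1 : Ideal.span {a} * 𝔪 ^ e ≤ F := by
    rw [Ideal.mul_le]
    intro r hr s hs
    obtain ⟨c, rfl⟩ := Ideal.mem_span_singleton'.1 hr
    have := ha' _ (Submodule.mem_map_of_mem hs)
    rw [← map_smul] at this
    have h2 : a • s ∈ F := (Submodule.Quotient.mk_eq_zero F).1 this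
    rw [mul_assoc]; exact Ideal.mul_mem_left _ _ h2
  have h2 := Ideal.pow_right_mono h1 k
  rw [mul_pow, ← pow_mul, Ideal.span_singleton_pow] at h2
  exact h2 (Ideal.mul_mem_mul (Ideal.mem_span_singleton_self _) hx)

/-- A quotient ring presented as an abstract type, which keeps later elaboration cheap. -/
lemma exists_quot {C : Type v} [CommRing C] (K : Ideal C) : ∃ (Cq : Type v) (_ : CommRing Cq)
    (q : C →+* Cq), Function.Surjective q ∧ ∀ x, q x = 0 ↔ x ∈ K :=
  ⟨C ⧸ K, inferInstance, Ideal.Quotient.mk K, Ideal.Quotient.mk_surjective,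
    fun _ => Ideal.Quotient.eq_zero_iff_mem⟩

/-- A quotient ring with its lifting property, again as an abstract type. -/
lemma exists_quotLift {C B : Type v} [CommRing C] [CommRing B] (K : Ideal C) (φ : C →+* B)
    (h : ∀ x ∈ K, φ x = 0) : ∃ β : C ⧸ K →+* B, ∀ r, β (Ideal.Quotient.mk K r) = φ r :=
  ⟨Ideal.Quotient.lift K φ h, fun _ => rfl⟩

/-- Transfer of an estimate for parameter ideals between two rings `C` and `T` whose quotients by
high powers of `𝔪C` and `𝔪T` correspond. -/
lemma x4_core {C T Cq Tq : Type v} [CommRing C] [CommRing T] [CommRing Cq] [CommRing Tq]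
    [IsNoetherianRing T] [IsLocalRing C] {𝔪C : Ideal C} {𝔪T : Ideal T}
    (hCmax : IsLocalRing.maximalIdeal C = 𝔪C) {d : ℕ} (z : Fin d → T) (hz : ∀ j, z j ∈ 𝔪T)
    (f : Option (Fin d) → C) (e n : ℕ) (he : 𝔪C ^ e ≤ Ideal.span (Set.range f)) (y0 : C)
    {N m : ℕ} (hN1 : e * (n * m) ≤ N) (hN2 : e * n ≤ N) (hN3 : e + 1 ≤ N)
    (hm : 0 < m) (a : ℕ → C)
    (ha : ∀ i, 1 ≤ i → i ≤ m → a i ∈ (Ideal.span (Set.range f) ^ n) ^ i)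
    (hyeq : y0 ^ m + ∑ i ∈ Finset.Icc 1 m, a i * y0 ^ (m - i) = 0)
    (q : T →+* Tq) (hq : Function.Surjective q) (hqk : ∀ x, q x = 0 ↔ x ∈ 𝔪T ^ N)
    (qC : C →+* Cq) (hqC : Function.Surjective qC) (hqCk : ∀ x, qC x = 0 ↔ x ∈ 𝔪C ^ N)
    (χ : C →+* Tq) (ψ : T →+* Cq) (ψq : Tq →+* Cq) (hψq : ∀ x, ψq (q x) = ψ x)
    (hψχ : ∀ x, ψq (χ x) = qC x) (hψ𝔪 : 𝔪T.map ψ ≤ 𝔪C.map qC) (hχ𝔪 : 𝔪T.map q ≤ 𝔪C.map χ)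
    (ΔT : T) (Δ : C) (hΔψ : ψ ΔT = qC Δ)
    (hls : ∀ F : Option (Fin d) → T, ∃ M0, ∀ M, M0 ≤ M → ∀ yt, IsIntegralOverIdeal
      (Ideal.span (Set.range fun o : Option (Fin d) => o.elim (F none)
        fun j => F (some j) + z j ^ M) ^ n) yt →
      ΔT * yt ∈ Ideal.span (Set.range fun o : Option (Fin d) => o.elim (F none)
        fun j => F (some j) + z j ^ M) ^ (n - (d + 1))) :
    Δ * y0 ∈ Ideal.span (Set.range f) ^ (n - (d + 1)) := by
  have hqe : ∀ x y, q x = q y → x - y ∈ 𝔪T ^ N := fun x y h => by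
    rw [← hqk, map_sub, h, sub_self]
  have hqCe : ∀ x y, qC x = qC y → x - y ∈ 𝔪C ^ N := fun x y h => by
    rw [← hqCk, map_sub, h, sub_self]
  set J := Ideal.span (Set.range f) with hJ
  choose F hF using fun o => hq (χ (f o))
  obtain ⟨M0, hM0⟩ := hls F
  replace hM0 := hM0 (max M0 N) (le_max_left _ _)
  -- A high power of `z j` is added to make `ls_main` applicable; it changes nothing modulo a high power
  -- of the maximal ideal.
  set ft : Option (Fin d) → T := fun o => o.elim (F none)
    fun j => F (some j) + z j ^ max M0 N with hft
  set JT := Ideal.span (Set.range ft) with hJT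
  have hqft : ∀ o, q (ft o) = χ (f o) := by
    rintro (_ | j)
    · exact hF none
    · simp only [hft, Option.elim_some, map_add, hF]
      rw [add_eq_left]
      refine (hqk _).2 (Ideal.pow_le_pow_right (le_max_right M0 N) ?_)
      exact Ideal.pow_mem_pow (hz j) _
  have hJq : JT.map q = J.map χ := by
    rw [hJT, hJ, Ideal.map_span, Ideal.map_span, ← Set.range_comp, ← Set.range_comp]
    congr 2
    exact funext hqft
  have hlift : ∀ k, ∀ b ∈ J ^ k, ∃ c ∈ JT ^ k, q c = χ b := by
    intro k b hb
    have h1 := Ideal.mem_map_of_mem χ hb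
    rw [Ideal.map_pow, ← hJq, ← Ideal.map_pow] at h1
    exact (Ideal.mem_map_iff_of_surjective q hq).1 h1
  obtain ⟨b, hb1, hb2⟩ := exists_mul_pow_le (𝔪 := 𝔪T) (F := JT) (e := e) (by
    intro x hx
    have h1 := Ideal.mem_map_of_mem q hx
    rw [Ideal.map_pow] at h1
    have h2 := Ideal.pow_right_mono hχ𝔪 e h1
    rw [← Ideal.map_pow] at h2
    have h3 := Ideal.map_mono (f := χ) he h2
    rw [← hJq] at h3
    obtain ⟨c, hc, hcx⟩ := (Ideal.mem_map_iff_of_surjective q hq).1 h3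
    have h4 : x - c ∈ 𝔪T ^ N := hqe _ _ hcx.symm
    rw [← add_sub_cancel c x]
    exact Submodule.add_mem_sup hc (Ideal.pow_le_pow_right hN3 h4))
  obtain ⟨yt, hyt⟩ := hq (χ y0)
  have hat : ∀ i, ∃ c, (1 ≤ i → i ≤ m → c ∈ (JT ^ n) ^ i) ∧ q c = χ (a i) := by
    intro i
    by_cases hi : 1 ≤ i ∧ i ≤ m
    · have h1 := ha i hi.1 hi.2
      rw [← pow_mul] at h1
      obtain ⟨c, hc, hc'⟩ := hlift _ _ h1
      exact ⟨c, fun _ _ => by rwa [← pow_mul], hc'⟩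
    · obtain ⟨c, hc⟩ := hq (χ (a i))
      exact ⟨c, fun h1 h2 => absurd ⟨h1, h2⟩ hi, hc⟩
  choose at' hat1 hat2 using hat
  set ρ := yt ^ m + ∑ i ∈ Finset.Icc 1 m, at' i * yt ^ (m - i) with hρ
  have hρN : ρ ∈ 𝔪T ^ N := by
    rw [← hqk]
    have h1 := congrArg χ hyeq
    rw [map_zero] at h1
    rw [← h1]
    simp only [hρ, map_add, map_sum, map_mul, map_pow, hyt, hat2]
  have h_integral : IsIntegralOverIdeal (JT ^ n) (b ^ n * yt) := by
    refine ⟨m, hm, fun i => b ^ (n * i) * (at' i - if i = m then ρ else 0), fun i h1 h2 => ?_, ?_⟩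
    · beta_reduce
      rw [mul_sub]
      refine sub_mem (Ideal.mul_mem_left _ _ (hat1 i h1 h2)) ?_
      split_ifs with him
      · subst him
        rw [← pow_mul]
        exact hb2 _ _ (Ideal.pow_le_pow_right hN1 hρN)
      · rw [mul_zero]; exact zero_mem _
    · have h1 : ∀ i ∈ Finset.Icc 1 m, b ^ (n * i) * (at' i - if i = m then ρ else 0) *
          (b ^ n * yt) ^ (m - i) = b ^ (n * m) * (at' i * yt ^ (m - i)) -
            if i = m then b ^ (n * m) * ρ else 0 := by
        intro i hi
        rw [Finset.mem_Icc] at hi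
        split_ifs with him
        · subst him; simp; ring
        · rw [mul_pow, ← pow_mul]
          have : b ^ (n * m) = b ^ (n * i) * b ^ (n * (m - i)) := by
            rw [← pow_add, ← mul_add, Nat.add_sub_cancel' hi.2]
          rw [this]; ring
      rw [Finset.sum_congr rfl h1, Finset.sum_sub_distrib, Finset.sum_ite_eq',
        if_pos (Finset.mem_Icc.2 ⟨hm, le_rfl⟩), ← Finset.mul_sum, mul_pow, ← pow_mul]
      rw [hρ]; ring
  have h5 := hM0 (b ^ n * yt) h_integral
  -- Return to `CR g`.
  have hψJ : JT.map ψ = J.map qC := by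
    have e1 : ψ = ψq.comp q := RingHom.ext fun x => (hψq x).symm
    have e2 : qC = ψq.comp χ := RingHom.ext fun x => (hψχ x).symm
    rw [e1, e2, ← Ideal.map_map, ← Ideal.map_map, hJq]
  have h6 := Ideal.mem_map_of_mem ψ h5
  rw [Ideal.map_pow, hψJ, ← Ideal.map_pow] at h6
  obtain ⟨b0, hb0⟩ := hqC (ψ b)
  have hN𝔪 : 𝔪C ^ N ≤ 𝔪C := Ideal.pow_le_self (by omega)
  have hb0u : IsUnit b0 := by
    have h7 : b0 - 1 ∈ 𝔪C := by
      have h8 := hψ𝔪 (Ideal.mem_map_of_mem ψ hb1)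
      rw [map_sub, map_one, ← hb0, ← map_one qC, ← map_sub] at h8
      obtain ⟨c, hc, hc'⟩ := (Ideal.mem_map_iff_of_surjective qC hqC).1 h8
      have h9 := hN𝔪 (hqCe _ _ hc')
      have := sub_mem hc h9
      rwa [sub_sub_cancel] at this
    rw [← hCmax] at h7
    by_contra hnu
    have := sub_mem ((IsLocalRing.mem_maximalIdeal b0).2 hnu) h7
    rw [sub_sub_cancel] at this
    exact (IsLocalRing.mem_maximalIdeal _).1 this isUnit_one
  have h7 : qC (b0 ^ n * (Δ * y0)) ∈ (J ^ (n - (d + 1))).map qC := by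
    convert h6 using 1
    rw [map_mul ψ, map_mul ψ, hΔψ, map_pow ψ, ← hb0, ← hψq yt, hyt, hψχ]
    simp only [map_mul, map_pow]
    ring
  obtain ⟨c, hc, hc'⟩ := (Ideal.mem_map_iff_of_surjective qC hqC).1 h7
  have h8 := hqCe _ _ hc'
  have h9 : 𝔪C ^ N ≤ J ^ (n - (d + 1)) := by
    refine (Ideal.pow_le_pow_right (m := e * (n - (d + 1))) ?_).trans ?_
    · exact (Nat.mul_le_mul_left e (Nat.sub_le _ _)).trans hN2
    · rw [pow_mul]; exact Ideal.pow_right_mono he _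
  have h10 := sub_mem hc (h9 h8)
  rw [sub_sub_cancel] at h10
  exact (Ideal.unit_mul_mem_iff_mem _ (hb0u.pow n)).1 h10


set_option maxHeartbeats 1000000 in
/-- The Lipman–Sathaye estimate for parameter ideals in a free extension of `A`. -/
theorem x4 {Λ A : Type v} [CommRing Λ] [IsDomain Λ] [UniqueFactorizationMonoid Λ]
    [IsNoetherianRing Λ] [CommRing A] [IsLocalRing A] {d t : ℕ}
    (I : Ideal (MvPolynomial (Fin d) Λ)) (hX : ∀ j, X j ∈ I)
    (ι : MvPolynomial (Fin d) Λ →+* A) (hι : ApproxIso I ι)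
    (hmax : I.map ι = IsLocalRing.maximalIdeal A) (g : Fin t → Polynomial A)
    (hg : ∀ i, (g i).Monic) (hg0 : ∀ i, (g i).natDegree ≠ 0)
    (hgm : ∀ i k, k < (g i).natDegree → (g i).coeff k ∈ IsLocalRing.maximalIdeal A)
    (f : Option (Fin d) → CR g) (e : ℕ)
    (he : CR.mx g (IsLocalRing.maximalIdeal A) ^ e ≤ Ideal.span (Set.range f)) (n : ℕ) (y0 : CR g)
    (hy : IsIntegralOverIdeal (Ideal.span (Set.range f) ^ n) y0) :
    (∏ i, (g i).derivative.eval₂ (algebraMap A (CR g)) (CR.root g i)) * y0 ∈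
      Ideal.span (Set.range f) ^ (n - (d + 1)) := by
  classical
  obtain ⟨hloc, hCmax⟩ := CR.isLocalRing hg hg0 hgm
  set mA := IsLocalRing.maximalIdeal A with hmA
  obtain ⟨m, hm, a, ha, hyeq⟩ := hy
  obtain ⟨N, hN1, hN2, hN3⟩ : ∃ N, e * (n * m) ≤ N ∧ e * n ≤ N ∧ e + 1 ≤ N :=
    ⟨e * (n * m) + e * n + e + 1, by omega, by omega, by omega⟩
  choose p hp using hι.1 N
  choose gt hgt hgt' using fun i => approx_poly p (hg i)
  set 𝔪C := CR.mx g mA with h𝔪C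
  set 𝔪T := CR.mx gt I with h𝔪T
  obtain ⟨χA, hχA, hχA0⟩ := hι.exists_hom N
  obtain ⟨Tq, _, q, hq, hqk⟩ := exists_quot (𝔪T ^ N)
  obtain ⟨Cq, _, qC, hqC, hqCk⟩ := exists_quot (𝔪C ^ N)
  obtain ⟨β, hβ⟩ := exists_quotLift (I ^ N) (q.comp (algebraMap _ (CR gt))) (by
    intro x hx
    rw [RingHom.comp_apply, hqk]
    have h2 := Ideal.mem_map_of_mem (algebraMap (MvPolynomial (Fin d) Λ) (CR gt)) hx
    rw [Ideal.map_pow] at h2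
    exact Ideal.pow_right_mono le_sup_left N h2)
  have hχp : ∀ r, χA r = Ideal.Quotient.mk _ (p r) := fun r => by
    have := hχA0 _ (hp r)
    rw [map_sub, hχA, sub_eq_zero] at this
    exact this
  have hqCp : ∀ r, qC (algebraMap A _ r) = qC (algebraMap A _ (ι (p r))) := fun r => by
    rw [← sub_eq_zero, ← map_sub, ← map_sub, hqCk]
    have h1 := hp r
    rw [hmax] at h1
    have h2 := Ideal.mem_map_of_mem (algebraMap A (CR g)) h1
    rw [Ideal.map_pow] at h2
    exact Ideal.pow_right_mono le_sup_left N h2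
  let χ1 : A →+* Tq := β.comp χA
  let q1 : MvPolynomial (Fin d) Λ →+* Tq := q.comp (algebraMap _ (CR gt))
  have hχ1 : ∀ r, χ1 r = q1 (p r) := fun r => by
    change β (χA r) = q (algebraMap _ (CR gt) (p r))
    rw [hχp, hβ]; rfl
  have hgχ : ∀ i, (g i).map (β.comp χA) = (gt i).map (q.comp (algebraMap _ (CR gt))) := fun i =>
    @hgt' i Tq _ χ1 q1 hχ1
  let ψ1 : A →+* Cq := qC.comp (algebraMap A _)
  have hgψ : ∀ i, (g i).map (qC.comp (algebraMap A _)) =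
      (gt i).map ((qC.comp (algebraMap A _)).comp ι) := fun i =>
    @hgt' i Cq _ ψ1 (ψ1.comp ι) hqCp
  let χ : CR g →+* Tq := CR.lift (β.comp χA) (fun i => q (CR.root gt i)) (fun i => by
    rw [← Polynomial.eval_map, hgχ, Polynomial.eval_map, ← Polynomial.hom_eval₂, CR.eval_root,
      map_zero])
  have hψg : ∀ i, (gt i).eval₂ ((qC.comp (algebraMap A _)).comp ι) (qC (CR.root g i)) = 0 :=
    fun i => by
    rw [← Polynomial.eval_map, ← hgψ, Polynomial.eval_map, ← Polynomial.hom_eval₂, CR.eval_root,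
      map_zero]
  let ψ : CR gt →+* Cq := CR.lift ((qC.comp (algebraMap A _)).comp ι) (fun i => qC (CR.root g i))
    hψg
  have hψ𝔪 : 𝔪T.map ψ ≤ 𝔪C.map qC := by
    rw [h𝔪T, CR.mx, Ideal.map_sup, sup_le_iff]
    constructor
    · rw [Ideal.map_map, Ideal.map_le_iff_le_comap]
      intro r hr
      rw [Ideal.mem_comap, RingHom.comp_apply, CR.lift_algebraMap]
      refine Ideal.mem_map_of_mem qC (Ideal.mem_sup_left (Ideal.mem_map_of_mem _ ?_))
      rw [← hmax]; exact Ideal.mem_map_of_mem _ hr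
    · rw [Ideal.map_span, Ideal.span_le]
      rintro _ ⟨_, ⟨i, rfl⟩, rfl⟩
      rw [SetLike.mem_coe, CR.lift_root]
      exact Ideal.mem_map_of_mem qC (Ideal.mem_sup_right (Ideal.subset_span ⟨i, rfl⟩))
  have hψN : ∀ x ∈ 𝔪T ^ N, ψ x = 0 := by
    intro x hx
    have h1 := Ideal.mem_map_of_mem ψ hx
    rw [Ideal.map_pow] at h1
    have h2 := Ideal.pow_right_mono hψ𝔪 N h1
    rw [← Ideal.map_pow] at h2
    obtain ⟨c, hc, hc'⟩ := (Ideal.mem_map_iff_of_surjective qC hqC).1 h2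
    rw [← hc', hqCk]; exact hc
  obtain ⟨ψq, hψq⟩ : ∃ ψq : Tq →+* Cq, ∀ x, ψq (q x) = ψ x :=
    ⟨q.liftOfSurjective hq ⟨ψ, fun x hx => hψN x ((hqk x).1 hx)⟩,
      fun x => RingHom.liftOfRightInverse_comp_apply _ _ _ _ x⟩
  have hψχ : ∀ x, ψq (χ x) = qC x := by
    have : ψq.comp χ = qC := CR.ringHom_ext (fun r => by
      rw [RingHom.comp_apply, CR.lift_algebraMap, RingHom.comp_apply, hχp, hβ, RingHom.comp_apply, hψq,
        CR.lift_algebraMap]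
      exact (hqCp r).symm) (fun i => by
      rw [RingHom.comp_apply, CR.lift_root, hψq, CR.lift_root])
    exact fun x => DFunLike.congr_fun this x
  have hχ𝔪 : 𝔪T.map q ≤ 𝔪C.map χ := by
    rw [h𝔪T, CR.mx, Ideal.map_sup, sup_le_iff]
    constructor
    · rw [Ideal.map_map, Ideal.map_le_iff_le_comap]
      intro r hr
      have : q (algebraMap _ (CR gt) r) = χ (algebraMap A _ (ι r)) := by
        rw [CR.lift_algebraMap, RingHom.comp_apply, hχA, hβ]; rfl
      rw [Ideal.mem_comap, RingHom.comp_apply, this]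
      refine Ideal.mem_map_of_mem χ (Ideal.mem_sup_left (Ideal.mem_map_of_mem _ ?_))
      rw [← hmax]; exact Ideal.mem_map_of_mem _ hr
    · rw [Ideal.map_span, Ideal.span_le]
      rintro _ ⟨_, ⟨i, rfl⟩, rfl⟩
      have : q (CR.root gt i) = χ (CR.root g i) := by rw [CR.lift_root]
      rw [SetLike.mem_coe, this]
      exact Ideal.mem_map_of_mem χ (Ideal.mem_sup_right (Ideal.subset_span ⟨i, rfl⟩))
  -- The torsion-freeness of the approximation.
  have hfree : Module.Free (MvPolynomial (Fin d) Λ) (CR gt) := (CR.free_finite hgt).1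
  let z : Fin d → CR gt := fun j => algebraMap (MvPolynomial (Fin d) Λ) _ (X j)
  have hz : ∀ r : MvPolynomial (Fin d) Λ, aeval z r = algebraMap (MvPolynomial (Fin d) Λ) _ r := by
    intro r
    have := map_aeval' (IsScalarTower.toAlgHom Λ (MvPolynomial (Fin d) Λ) (CR gt)) X r
    rw [MvPolynomial.aeval_X_left_apply] at this
    exact this.symm
  have hzr : ((aeval z).toRingHom : MvPolynomial (Fin d) Λ →+* CR gt) = algebraMap _ _ :=
    RingHom.ext hz
  have hsurj : Function.Surjective (aeval (R := Λ) (Sum.elim z (CR.root gt))) := by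
    intro x
    obtain ⟨P, rfl⟩ := Ideal.Quotient.mk_surjective x
    induction P using MvPolynomial.induction_on with
    | C r =>
      refine ⟨MvPolynomial.rename Sum.inl r, ?_⟩
      rw [MvPolynomial.aeval_rename, Sum.elim_comp_inl, hz]; rfl
    | add P Q hP hQ =>
      obtain ⟨a, ha⟩ := hP
      obtain ⟨b, hb⟩ := hQ
      exact ⟨a + b, by rw [map_add, ha, hb, map_add]⟩
    | mul_X P i hP =>
      obtain ⟨a, ha⟩ := hP
      refine ⟨a * X (Sum.inr i), ?_⟩
      rw [map_mul, ha, MvPolynomial.aeval_X, map_mul]; rfl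
  refine x4_core hCmax z (fun j => Ideal.mem_sup_left (Ideal.mem_map_of_mem _ (hX j))) f e n he y0
    hN1 hN2 hN3 hm a ha hyeq q hq hqk qC hqC hqCk χ ψ ψq hψq hψχ hψ𝔪 hχ𝔪
    (∏ i, (gt i).derivative.eval₂ (algebraMap _ (CR gt)) (CR.root gt i)) _ ?_ fun F => ?_
  · rw [map_prod, map_prod]
    refine Finset.prod_congr rfl fun i _ => ?_
    rw [Polynomial.hom_eval₂, Polynomial.hom_eval₂, ← Polynomial.eval_map, ← Polynomial.eval_map,
      ← Polynomial.derivative_map, ← Polynomial.derivative_map, hgψ]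
    have e1 : ψ.comp (algebraMap _ (CR gt)) = (qC.comp (algebraMap A _)).comp ι :=
      RingHom.ext fun r => CR.lift_algebraMap (g := gt) _ _ hψg r
    have e2 : ψ (CR.root gt i) = qC (CR.root g i) := CR.lift_root (g := gt) _ _ hψg i
    rw [e1, e2]
  · have := ls_main (Λ := Λ) z (CR.root gt) hsurj gt hgt
      (fun i => by rw [hzr]; exact CR.eval_root i) (fun r x hr hx => by
        rw [hz, ← Algebra.smul_def] at hx
        exact (smul_eq_zero.1 hx).resolve_left hr) (F none) (fun j => F (some j)) n
    rwa [hzr] at this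
end UBS

/-! ### Power series rings and Noether normalization -/

namespace UBS
universe v

section PS
variable {σ Λ : Type*} [CommRing Λ] (𝔩 : Ideal Λ)

/-- The ideal `(𝔩, X)` of the polynomial ring. -/
noncomputable def polyI (σ : Type*) {Λ : Type*} [CommRing Λ] (𝔩 : Ideal Λ) : Ideal (MvPolynomial σ Λ) :=
  𝔩.map MvPolynomial.C ⊔ Ideal.span (Set.range MvPolynomial.X)

/-- The inclusion of polynomials in power series. -/
noncomputable abbrev psι (σ Λ : Type*) [CommRing Λ] : MvPolynomial σ Λ →+* MvPowerSeries σ Λ :=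
  MvPolynomial.coeToMvPowerSeries.ringHom

/-- The ideal `(𝔩, X)` of the power series ring. -/
noncomputable def psI (σ : Type*) {Λ : Type*} [CommRing Λ] (𝔩 : Ideal Λ) :
    Ideal (MvPowerSeries σ Λ) := (polyI σ 𝔩).map (psι σ Λ)

lemma psI_eq : psI σ 𝔩 = 𝔩.map (MvPowerSeries.C (σ := σ)) ⊔
    Ideal.span (Set.range (MvPowerSeries.X (R := Λ) (σ := σ))) := by
  rw [psI, polyI, Ideal.map_sup, Ideal.map_map, Ideal.map_span, ← Set.range_comp]
  congr 2
  · ext1 x; simp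
  · congr 1; ext1 x; simp

lemma poly_mem (p : MvPolynomial σ Λ) (n : ℕ)
    (h : ∀ e, p.coeff e ∈ 𝔩 ^ (n - e.degree)) : p ∈ polyI σ 𝔩 ^ n := by
  rw [p.as_sum]
  refine sum_mem fun e _ => ?_
  have h1 : MvPolynomial.monomial e (p.coeff e) =
      MvPolynomial.C (p.coeff e) * MvPolynomial.monomial e 1 := by
    rw [MvPolynomial.C_mul_monomial, mul_one]
  rw [h1]
  refine Ideal.pow_le_pow_right (m := n) (n := (n - e.degree) + e.degree) (by omega) ?_
  rw [pow_add]
  refine Ideal.mul_mem_mul ?_ ?_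
  · refine Ideal.pow_right_mono le_sup_left _ ?_
    rw [← Ideal.map_pow]
    exact Ideal.mem_map_of_mem _ (h e)
  · rw [MvPolynomial.monomial_eq, map_one, one_mul, Finsupp.degree_apply,
      ← Finset.prod_pow_eq_pow_sum]
    exact Ideal.prod_mem_prod fun i _ =>
      Ideal.pow_mem_pow (Ideal.mem_sup_right (Ideal.subset_span (Set.mem_range_self i))) _

/-- Power series whose degree `e` coefficients lie in `𝔩 ^ (n - |e|)`. -/
def psW (σ : Type*) {Λ : Type*} [CommRing Λ] (𝔩 : Ideal Λ) (n : ℕ) :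
    Ideal (MvPowerSeries σ Λ) where
  carrier := {f | ∀ e, MvPowerSeries.coeff e f ∈ 𝔩 ^ (n - e.degree)}
  zero_mem' e := by simp
  add_mem' hf hg e := by rw [map_add]; exact add_mem (hf e) (hg e)
  smul_mem' f g hg e := by
    classical
    rw [smul_eq_mul, MvPowerSeries.coeff_mul]
    refine sum_mem fun x hx => Ideal.mul_mem_left _ _ (Ideal.pow_le_pow_right ?_ (hg x.2))
    have := Finset.HasAntidiagonal.mem_antidiagonal.1 hx
    rw [← this, map_add Finsupp.degree]; omega

lemma psW_mul (a b : ℕ) : psW σ 𝔩 a * psW σ 𝔩 b ≤ psW σ 𝔩 (a + b) := by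
  classical
  rw [Ideal.mul_le]
  intro f hf g hg e
  rw [MvPowerSeries.coeff_mul]
  refine sum_mem fun x hx => ?_
  have h1 := Ideal.mul_mem_mul (hf x.1) (hg x.2)
  rw [← pow_add] at h1
  refine Ideal.pow_le_pow_right ?_ h1
  have := Finset.HasAntidiagonal.mem_antidiagonal.1 hx
  rw [← this, map_add Finsupp.degree]; omega

lemma psI_le_psW : psI σ 𝔩 ≤ psW σ 𝔩 1 := by
  classical
  rw [psI_eq, sup_le_iff, Ideal.map_le_iff_le_comap, Ideal.span_le]
  constructor
  · intro x hx e
    rw [MvPowerSeries.coeff_C]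
    split_ifs with h
    · subst h; simpa using hx
    · exact zero_mem _
  · rintro _ ⟨i, rfl⟩ e
    rw [MvPowerSeries.coeff_X]
    split_ifs with h
    · subst h; simp
    · exact zero_mem _

lemma psI_pow_le (n : ℕ) : psI σ 𝔩 ^ n ≤ psW σ 𝔩 n := by
  induction n with
  | zero => intro f _ e; simp
  | succ n ih =>
    rw [pow_succ]
    exact (Ideal.mul_mono ih (psI_le_psW 𝔩)).trans (psW_mul 𝔩 n 1)

open Classical in
/-- The part of a power series without the variable `X i`. -/
noncomputable def psRest (i : σ) (f : MvPowerSeries σ Λ) : MvPowerSeries σ Λ :=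
  fun e => if e i = 0 then MvPowerSeries.coeff e f else 0

open Classical in
lemma coeff_psRest (i : σ) (f : MvPowerSeries σ Λ) (e) : MvPowerSeries.coeff e (psRest i f) =
    if e i = 0 then MvPowerSeries.coeff e f else 0 := rfl

lemma exists_psRest (i : σ) (f : MvPowerSeries σ Λ) : ∃ g, f = psRest i f + MvPowerSeries.X i * g ∧
    ∀ e, MvPowerSeries.coeff e g = MvPowerSeries.coeff (e + Finsupp.single i 1) f := by
  classical
  have h : MvPowerSeries.X i ∣ f - psRest i f := by
    rw [MvPowerSeries.X_dvd_iff]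
    intro m hm
    rw [map_sub, coeff_psRest, if_pos hm, sub_self]
  obtain ⟨g, hg⟩ := h
  refine ⟨g, by rw [← hg, add_sub_cancel], fun e => ?_⟩
  have h1 := congrArg (MvPowerSeries.coeff (e + Finsupp.single i 1)) hg
  rw [map_sub, coeff_psRest, if_neg (by simp), sub_zero, add_comm e, MvPowerSeries.X,
    MvPowerSeries.coeff_add_monomial_mul, one_mul] at h1
  rw [← h1, add_comm]

/-- Membership in the ideal of some of the variables. -/
lemma mem_span_X [DecidableEq σ] (s : Finset σ) : ∀ (f : MvPowerSeries σ Λ),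
    f ∈ Ideal.span (MvPowerSeries.X '' (s : Set σ)) ↔
    ∀ e : σ →₀ ℕ, (∀ i ∈ s, e i = 0) → MvPowerSeries.coeff e f = 0 := by
  classical
  induction s using Finset.induction_on with
  | empty =>
    intro f
    simp [MvPowerSeries.ext_iff]
  | insert i s his ih =>
    intro f
    rw [Finset.coe_insert, Set.image_insert_eq, Ideal.span_insert]
    constructor
    · rintro hf e he
      obtain ⟨a, ha, b, hb, rfl⟩ := Submodule.mem_sup.1 hf
      rw [map_add, (ih b).1 hb e fun j hj => he j (Finset.mem_insert_of_mem hj), add_zero]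
      exact (MvPowerSeries.X_dvd_iff.1 (Ideal.mem_span_singleton.1 ha)) e
        (he i (Finset.mem_insert_self i s))
    · intro hf
      obtain ⟨g, hg, -⟩ := exists_psRest i f
      rw [hg]
      refine add_mem (Ideal.mem_sup_right ((ih _).2 fun e he => ?_))
        (Ideal.mem_sup_left (Ideal.mul_mem_right _ _ (Ideal.mem_span_singleton_self _)))
      rw [coeff_psRest]
      split_ifs with h
      · exact hf e fun j hj => (Finset.mem_insert.1 hj).elim (fun h' => h' ▸ h) (he j)
      · rfl

lemma high_mem [Finite σ] (n : ℕ) : ∀ f : MvPowerSeries σ Λ,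
    (∀ e : σ →₀ ℕ, e.degree < n → MvPowerSeries.coeff e f = 0) →
    f ∈ Ideal.span (Set.range (MvPowerSeries.X (R := Λ) (σ := σ))) ^ n := by
  classical
  have := Fintype.ofFinite σ
  induction n with
  | zero => intro f _; simp
  | succ n ih =>
    have key : ∀ s : Finset σ, ∀ f : MvPowerSeries σ Λ,
        (∀ e : σ →₀ ℕ, e.degree < n + 1 → MvPowerSeries.coeff e f = 0) →
        (∀ e : σ →₀ ℕ, (∀ i ∈ s, e i = 0) → MvPowerSeries.coeff e f = 0) →
        f ∈ Ideal.span (Set.range (MvPowerSeries.X (R := Λ) (σ := σ))) ^ (n + 1) := by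
      intro s
      induction s using Finset.induction_on with
      | empty =>
        intro f _ hf
        rw [show f = 0 from MvPowerSeries.ext fun e => by rw [hf e (by simp), map_zero]]
        exact zero_mem _
      | insert i s his ihs =>
        intro f hf hf'
        obtain ⟨g, hg, hg'⟩ := exists_psRest i f
        rw [hg]
        refine add_mem (ihs _ (fun e he => ?_) fun e he => ?_) ?_
        · rw [coeff_psRest, hf e he, ite_self]
        · rw [coeff_psRest]
          split_ifs with h
          · exact hf' e fun j hj => (Finset.mem_insert.1 hj).elim (fun h' => h' ▸ h) (he j)
          · rfl
        · rw [pow_succ']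
          refine Ideal.mul_mem_mul (Ideal.subset_span ⟨i, rfl⟩) (ih g fun e he => ?_)
          rw [hg']
          refine hf _ ?_
          rw [map_add, Finsupp.degree_single]; omega
    intro f hf
    refine key Finset.univ f hf fun e he => hf e ?_
    have : e = 0 := Finsupp.ext fun i => he i (Finset.mem_univ i)
    rw [this]; simp

lemma sub_trunc_mem [Finite σ] (n : ℕ) (f : MvPowerSeries σ Λ) :
    f - psι σ Λ (f.truncTotal n) ∈ psI σ 𝔩 ^ n := by
  refine Ideal.pow_right_mono (by rw [psI_eq]; exact le_sup_right) _ (high_mem n _ fun e he => ?_)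
  rw [map_sub, MvPolynomial.coeToMvPowerSeries.ringHom_apply, MvPolynomial.coeff_coe,
    MvPowerSeries.coeff_truncTotal _ he, sub_self]

lemma psI_pow [Finite σ] (n : ℕ) : psI σ 𝔩 ^ n = psW σ 𝔩 n := by
  refine le_antisymm (psI_pow_le 𝔩 n) fun f hf => ?_
  rw [← sub_add_cancel f (psι σ Λ (f.truncTotal n))]
  refine add_mem (sub_trunc_mem 𝔩 n f) ?_
  rw [psI, ← Ideal.map_pow]
  refine Ideal.mem_map_of_mem _ (poly_mem 𝔩 _ n fun e => ?_)
  rw [MvPowerSeries.coeff_truncTotal_eq_ite]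
  split_ifs
  · exact hf e
  · exact zero_mem _

/-- Polynomials approximate power series modulo all powers of the ideal. -/
lemma approxIso_ps [Finite σ] : ApproxIso (polyI σ 𝔩) (psι σ Λ) := by
  refine ⟨fun N a => ⟨_, sub_trunc_mem 𝔩 N a⟩, fun N p hp => poly_mem 𝔩 p N fun e => ?_⟩
  have := psI_pow_le 𝔩 N hp e
  rwa [MvPolynomial.coeToMvPowerSeries.ringHom_apply, MvPolynomial.coeff_coe] at this

instance psI_complete [Finite σ] [IsAdicComplete 𝔩 Λ] : IsAdicComplete (psI σ 𝔩)
    (MvPowerSeries σ Λ) where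
  haus' f hf := by
    ext e
    rw [map_zero]
    refine IsHausdorff.haus (I := 𝔩) inferInstance _ fun n => ?_
    have := hf (n + e.degree)
    rw [SModEq.zero, smul_eq_mul, Ideal.mul_top] at this ⊢
    rw [psI_pow] at this
    have := this e
    rwa [Nat.add_sub_cancel] at this
  prec' f hf := by
    have h1 : ∀ e : σ →₀ ℕ, ∃ L : Λ, ∀ n,
        MvPowerSeries.coeff e (f (n + e.degree)) - L ∈ 𝔩 ^ n := by
      intro e
      obtain ⟨L, hL⟩ := IsPrecomplete.prec (I := 𝔩) (M := Λ) inferInstance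
        (f := fun n => MvPowerSeries.coeff e (f (n + e.degree))) (fun {m n} hmn => by
          have := hf (Nat.add_le_add_right hmn e.degree)
          rw [SModEq.sub_mem, smul_eq_mul, Ideal.mul_top] at this ⊢
          rw [psI_pow] at this
          have := this e
          rwa [Nat.add_sub_cancel] at this)
      refine ⟨L, fun n => ?_⟩
      have := hL n
      rwa [SModEq.sub_mem, smul_eq_mul, Ideal.mul_top] at this
    choose L hL using h1
    obtain ⟨L', hL'⟩ : ∃ L' : MvPowerSeries σ Λ, ∀ e, MvPowerSeries.coeff e L' = L e :=
      ⟨fun e => L e, fun e => rfl⟩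
    refine ⟨L', fun n => ?_⟩
    rw [SModEq.sub_mem, smul_eq_mul, Ideal.mul_top, psI_pow]
    intro e
    rw [map_sub, hL']
    rcases le_total n e.degree with h | h
    · rw [Nat.sub_eq_zero_of_le h]; simp
    · have := hL e (n - e.degree)
      rwa [Nat.sub_add_cancel h] at this

lemma psI_comap_C : (psI σ 𝔩).comap MvPowerSeries.C = 𝔩 := by
  ext x
  rw [Ideal.mem_comap]
  constructor
  · intro h
    have := psI_le_psW 𝔩 h 0
    simpa using this
  · intro h
    rw [psI_eq]
    exact Ideal.mem_sup_left (Ideal.mem_map_of_mem _ h)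

lemma ps_maximalIdeal [Finite σ] [IsLocalRing Λ] : psI σ (IsLocalRing.maximalIdeal Λ) =
    IsLocalRing.maximalIdeal (MvPowerSeries σ Λ) := by
  ext f
  rw [← pow_one (psI σ (IsLocalRing.maximalIdeal Λ)), psI_pow, IsLocalRing.mem_maximalIdeal, mem_nonunits_iff,
    MvPowerSeries.isUnit_iff_constantCoeff]
  constructor
  · intro h
    have := h 0
    simpa using this
  · intro h e
    rcases Nat.eq_zero_or_pos e.degree with h' | h'
    · have : e = 0 := (Finsupp.degree_eq_zero_iff e).1 h'
      subst this
      simpa using h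
    · rw [Nat.sub_eq_zero_of_le h']; simp
end PS
end UBS

namespace UBS

open Ideal.Quotient in
/-- The universal property of the approximation `ι : P → A` towards complete rings. -/
lemma ApproxIso.lift {P A D : Type*} [CommRing P] [CommRing A] [CommRing D] {I : Ideal P}
    {ι : P →+* A} (h : ApproxIso I ι) (φ : P →+* D) (𝔫 : Ideal D) [IsAdicComplete 𝔫 D]
    (hφ : I.map φ ≤ 𝔫) : ∃ ψ : A →+* D, ∀ p, ψ (ι p) = φ p := by
  choose χ hχ hχ0 using fun N => h.exists_hom N
  have hk : ∀ N, ∀ p ∈ I ^ N, ((Ideal.Quotient.mk (𝔫 ^ N)).comp φ) p = 0 := by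
    intro N p hp
    rw [RingHom.comp_apply, Ideal.Quotient.eq_zero_iff_mem]
    exact Ideal.pow_right_mono hφ N (by rw [← Ideal.map_pow]; exact Ideal.mem_map_of_mem _ hp)
  let f : ∀ N, A →+* D ⧸ 𝔫 ^ N := fun N =>
    (Ideal.Quotient.lift (I ^ N) ((Ideal.Quotient.mk (𝔫 ^ N)).comp φ) (hk N)).comp (χ N)
  have hfι : ∀ N p, f N (ι p) = Ideal.Quotient.mk _ (φ p) := by
    intro N p
    change Ideal.Quotient.lift (I ^ N) _ (hk N) (χ N (ι p)) = _
    rw [hχ, Ideal.Quotient.lift_mk]; rfl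
  have hf0 : ∀ N, ∀ a ∈ (I.map ι) ^ N, f N a = 0 := by
    intro N a ha
    change Ideal.Quotient.lift (I ^ N) _ (hk N) (χ N a) = _
    rw [hχ0 N a ha, map_zero]
  have hf : ∀ {m n : ℕ} (hle : m ≤ n), (factorPow 𝔫 hle).comp (f n) = f m := by
    intro m n hle
    ext a
    obtain ⟨p, hp⟩ := h.1 n a
    have e : a = ι p + (a - ι p) := by ring
    rw [RingHom.comp_apply, e, map_add, map_add, map_add, hf0 n _ hp,
      hf0 m _ (Ideal.pow_le_pow_right hle hp), hfι, hfι]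
    simp
  refine ⟨IsAdicComplete.liftRingHom 𝔫 f (fun hle => hf hle), fun p => ?_⟩
  rw [← sub_eq_zero]
  refine IsHausdorff.haus (I := 𝔫) inferInstance _ fun n => ?_
  rw [SModEq.zero, smul_eq_mul, Ideal.mul_top, ← Ideal.Quotient.eq_zero_iff_mem, map_sub,
    IsAdicComplete.mk_liftRingHom, hfι, sub_self]

/-- Nakayama's lemma over a complete base ring, without a finiteness hypothesis. -/
lemma complete_nakayama {A D : Type*} [CommRing A] [CommRing D] [Algebra A D] (I : Ideal A)
    [IsPrecomplete I A] [IsHausdorff I D] {t : ℕ} (b : Fin t → D)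
    (h : ∀ x : D, ∃ c : Fin t → A, x - ∑ i, c i • b i ∈ (I.map (algebraMap A D))) :
    Module.Finite A D := by
  have : IsPrecomplete I (Fin t → A) := by
    refine ⟨fun f hf => ?_⟩
    have hm : ∀ n (v : Fin t → A), v ∈ (I ^ n • ⊤ : Submodule A (Fin t → A)) ↔ ∀ i, v i ∈ I ^ n := by
      intro n v
      constructor
      · intro hv i
        refine Submodule.smul_induction_on hv (fun r hr n _ => ?_) (fun x y hx hy => ?_)
        · exact Ideal.mul_mem_right _ _ hr
        · exact add_mem hx hy
      · intro hv
        rw [pi_eq_sum_univ' v]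
        exact Submodule.sum_mem _ fun i _ => Submodule.smul_mem_smul (hv i) trivial
    have hc : ∀ i, ∃ L : A, ∀ n, f n i ≡ L [SMOD (I ^ n • ⊤ : Submodule A A)] := by
      intro i
      refine IsPrecomplete.prec (I := I) (M := A) inferInstance (f := fun n => f n i)
        fun {m n} hmn => ?_
      rw [SModEq.sub_mem, smul_eq_mul, Ideal.mul_top]
      exact (hm m _).1 (SModEq.sub_mem.1 (hf hmn)) i
    choose L hL using hc
    refine ⟨L, fun n => ?_⟩
    rw [SModEq.sub_mem, hm]
    intro i
    have := SModEq.sub_mem.1 (hL i n)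
    rwa [smul_eq_mul, Ideal.mul_top] at this
  have hs : Function.Surjective (Fintype.linearCombination A b) := by
    refine surjective_of_mkQ_comp_surjective (I := I) fun x => ?_
    obtain ⟨x, rfl⟩ := Submodule.mkQ_surjective _ x
    obtain ⟨c, hc⟩ := h x
    refine ⟨c, ?_⟩
    rw [LinearMap.comp_apply, Fintype.linearCombination_apply, eq_comm, ← sub_eq_zero, ← map_sub]
    rw [Submodule.mkQ_apply, Submodule.Quotient.mk_eq_zero, Ideal.smul_top_eq_map]
    exact hc
  exact Module.Finite.of_surjective _ hs

/-- Finite homomorphisms do not raise the dimension, since comparable primes with equal contraction are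
equal. -/
lemma ringKrullDim_le_of_finite {A D : Type*} [CommRing A] [CommRing D] (f : A →+* D)
    (hf : f.IsIntegral) : ringKrullDim D ≤ ringKrullDim A := by
  let _ := f.toAlgebra
  have : Algebra.IsIntegral A D := ⟨hf⟩
  refine Order.krullDim_le_of_strictMono (PrimeSpectrum.comap f) fun P Q hPQ => ?_
  have := P.2
  exact Ideal.IsIntegral.comap_lt_comap (R := A) (show P.asIdeal < Q.asIdeal from hPQ)

end UBS

namespace UBS
open IsLocalRing (maximalIdeal)

lemma exists_fg_approx {A D : Type*} [CommRing A] [CommRing D] [IsNoetherianRing D] [Algebra A D]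
    (𝔪 : Ideal D) (hres : ∀ x : D, ∃ a : A, x - algebraMap A D a ∈ 𝔪) (i : ℕ) :
    ∃ N : Submodule A D, N.FG ∧ ∀ y, ∃ n ∈ N, y - n ∈ 𝔪 ^ i := by
  induction i with
  | zero => exact ⟨⊥, Submodule.fg_bot, fun y => ⟨0, zero_mem _, by simp⟩⟩
  | succ i ih =>
    obtain ⟨N, hN, h⟩ := ih
    obtain ⟨S, hS⟩ := IsNoetherian.noetherian (𝔪 ^ i)
    have hSle : ∀ n ∈ Submodule.span A (S : Set D), n ∈ 𝔪 ^ i := by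
      intro n hn
      have : Submodule.span A (S : Set D) ≤ (𝔪 ^ i).restrictScalars A :=
        Submodule.span_le.2 fun s hs => by
          change s ∈ 𝔪 ^ i; rw [← hS]; exact Submodule.subset_span hs
      exact this hn
    have key : ∀ z ∈ 𝔪 ^ i, ∃ n ∈ Submodule.span A (S : Set D), z - n ∈ 𝔪 ^ (i + 1) := by
      intro z hz
      rw [← hS] at hz
      induction hz using Submodule.span_induction with
      | mem x hx => exact ⟨x, Submodule.subset_span hx, by simp⟩
      | zero => exact ⟨0, zero_mem _, by simp⟩
      | add x y _ _ hx hy =>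
        obtain ⟨n, hn, h1⟩ := hx
        obtain ⟨n', hn', h2⟩ := hy
        exact ⟨n + n', add_mem hn hn', by convert add_mem h1 h2 using 1; ring⟩
      | smul d x _ hx =>
        obtain ⟨n, hn, h1⟩ := hx
        obtain ⟨a, ha⟩ := hres d
        refine ⟨a • n, Submodule.smul_mem _ _ hn, ?_⟩
        have : d • x - a • n = d * (x - n) + (d - algebraMap A D a) * n := by
          rw [Algebra.smul_def a, smul_eq_mul]; ring
        rw [this]
        refine add_mem (Ideal.mul_mem_left _ _ h1) ?_
        rw [pow_succ']
        exact Ideal.mul_mem_mul ha (hSle n hn)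
    refine ⟨N ⊔ Submodule.span A S, hN.sup (Submodule.fg_span S.finite_toSet), fun y => ?_⟩
    obtain ⟨n, hn, h1⟩ := h y
    obtain ⟨n', hn', h2⟩ := key _ h1
    exact ⟨n + n', Submodule.add_mem_sup hn hn', by rwa [sub_sub] at h2⟩

universe v

/-- Noether normalization of a complete local domain over a complete discrete valuation ring
whose uniformizer is mapped to a nonzero element. -/
lemma noether_norm {Λ D : Type v} [CommRing Λ] [IsNoetherianRing Λ] [IsDomain Λ] [IsLocalRing Λ]
    (ϖ : Λ) (hϖ : maximalIdeal Λ = Ideal.span {ϖ}) [IsAdicComplete (maximalIdeal Λ) Λ]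
    [CommRing D] [IsNoetherianRing D] [IsDomain D] [IsLocalRing D]
    [IsAdicComplete (maximalIdeal D) D] (σ : Λ →+* D) (h0 : σ ϖ ≠ 0) (hm : σ ϖ ∈ maximalIdeal D)
    (hres : ∀ x, ∃ a, x - σ a ∈ maximalIdeal D) :
    ∃ (d : ℕ) (φ : MvPowerSeries (Fin d) Λ →+* D), Function.Injective φ ∧ φ.Finite ∧
      ringKrullDim D = d + 1 ∧ (∀ a, φ (MvPowerSeries.C a) = σ a) ∧
      (maximalIdeal (MvPowerSeries (Fin d) Λ)).map φ ≤ maximalIdeal D := by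
  classical
  -- a system of parameters starting with the image of the uniformizer
  let D1 := D ⧸ Ideal.span {σ ϖ}
  have hD1 : Nontrivial D1 := Ideal.Quotient.nontrivial_iff.2
    (ne_top_of_le_ne_top (maximalIdeal.isMaximal D).ne_top
      ((Ideal.span_singleton_le_iff_mem _).2 hm))
  have : IsLocalRing D1 := IsLocalRing.of_surjective' _ Ideal.Quotient.mk_surjective
  obtain ⟨s, hs, hcard⟩ := (maximalIdeal D1).exists_finset_card_eq_height_of_isNoetherianRing
  set d := s.card with hd
  let x1 : Fin d → D1 := fun j => (s.equivFin.symm j : D1)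
  have hx1 : Ideal.span (Set.range x1) = Ideal.span (s : Set D1) := by
    congr 1
    ext y
    constructor
    · rintro ⟨j, rfl⟩; exact (s.equivFin.symm j).2
    · intro hy; exact ⟨s.equivFin ⟨y, hy⟩, by simp [x1]⟩
  choose x hx using fun j => Ideal.Quotient.mk_surjective (x1 j)
  have hxm : ∀ j, x j ∈ maximalIdeal D := by
    intro j
    have h1 : x1 j ∈ maximalIdeal D1 := hs.1.2 (by
      rw [← hx1]; exact Ideal.subset_span ⟨j, rfl⟩)
    rw [IsLocalRing.mem_maximalIdeal, mem_nonunits_iff] at h1 ⊢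
    intro h
    rw [← hx] at h1
    exact h1 (h.map _)
  let 𝔮 := Ideal.span {σ ϖ} ⊔ Ideal.span (Set.range x)
  have h𝔮 : ∃ N, maximalIdeal D ^ N ≤ 𝔮 := by
    refine Ideal.exists_pow_le_of_le_radical_of_fg ?_ (IsNoetherian.noetherian _)
    rw [Ideal.radical_eq_sInf]
    refine le_sInf fun p ⟨hp, hpp⟩ => ?_
    have hker : RingHom.ker (Ideal.Quotient.mk (Ideal.span {σ ϖ})) ≤ p := by
      rw [Ideal.mk_ker]; exact le_sup_left.trans hp
    have hp1 : (p.map (Ideal.Quotient.mk (Ideal.span {σ ϖ}))).IsPrime :=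
      Ideal.map_isPrime_of_surjective Ideal.Quotient.mk_surjective hker
    have h2 : maximalIdeal D1 ≤ p.map (Ideal.Quotient.mk (Ideal.span {σ ϖ})) := by
      refine hs.2 ⟨hp1, ?_⟩ (IsLocalRing.le_maximalIdeal hp1.ne_top)
      rw [← hx1, Ideal.span_le]
      rintro _ ⟨j, rfl⟩
      rw [← hx]
      exact Ideal.mem_map_of_mem _ (hp (Ideal.mem_sup_right (Ideal.subset_span ⟨j, rfl⟩)))
    intro y hy
    have : Ideal.Quotient.mk (Ideal.span {σ ϖ}) y ∈ maximalIdeal D1 := by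
      rw [IsLocalRing.mem_maximalIdeal, mem_nonunits_iff] at hy ⊢
      intro hu
      obtain ⟨z, hz⟩ := Ideal.Quotient.mk_surjective (hu.unit⁻¹ : D1ˣ).1
      have h3 : Ideal.Quotient.mk (Ideal.span {σ ϖ}) (y * z) =
        Ideal.Quotient.mk (Ideal.span {σ ϖ}) 1 := by
        rw [map_mul, hz, map_one]; exact hu.mul_val_inv
      rw [Ideal.Quotient.eq] at h3
      have h4 : y * z - 1 ∈ maximalIdeal D := (Ideal.span_singleton_le_iff_mem _).2 hm h3
      have h5 : y * z ∈ maximalIdeal D := Ideal.mul_mem_right _ _ hy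
      have : (1 : D) ∈ maximalIdeal D := by
        have := sub_mem h5 h4
        rwa [sub_sub_cancel] at this
      exact (Ideal.ne_top_iff_one _).1 (maximalIdeal.isMaximal D).ne_top this
    have h6 := Ideal.mem_comap.2 (h2 this)
    rwa [Ideal.comap_map_of_surjective' _ Ideal.Quotient.mk_surjective, sup_eq_left.2 hker] at h6
  have hm𝔮 : 𝔮 ≤ maximalIdeal D := sup_le ((Ideal.span_singleton_le_iff_mem _).2 hm)
    (Ideal.span_le.2 (by rintro _ ⟨j, rfl⟩; exact hxm j))
  -- the map
  let φ0 : MvPolynomial (Fin d) Λ →+* D := MvPolynomial.eval₂Hom σ x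
  have hφ0 : (polyI (Fin d) (maximalIdeal Λ)).map φ0 = 𝔮 := by
    rw [polyI, Ideal.map_sup, hϖ, Ideal.map_span, Ideal.map_span, Ideal.map_span,
      Set.image_singleton, Set.image_singleton, ← Set.range_comp]
    congr 2
    · simp [φ0]
    · congr 1; ext j; simp [φ0]
  obtain ⟨φ, hφ⟩ := (approxIso_ps (σ := Fin d) (maximalIdeal Λ)).lift φ0 (maximalIdeal D)
    (hφ0.le.trans hm𝔮)
  have hφC : ∀ a, φ (MvPowerSeries.C a) = σ a := by
    intro a
    have := hφ (MvPolynomial.C a)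
    rw [MvPolynomial.coe_eval₂Hom, MvPolynomial.eval₂_C] at this
    rw [← this]; congr 1
    exact (MvPolynomial.coe_C a).symm
  have hφm : (maximalIdeal (MvPowerSeries (Fin d) Λ)).map φ = 𝔮 := by
    rw [← ps_maximalIdeal, psI, Ideal.map_map, ← hφ0]
    congr 1
    exact RingHom.ext hφ
  let _ := φ.toAlgebra
  have hfin : φ.Finite := by
    obtain ⟨N, hN⟩ := h𝔮
    obtain ⟨M, ⟨S, hS⟩, hM⟩ := exists_fg_approx (A := MvPowerSeries (Fin d) Λ) (maximalIdeal D)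
      (fun x => by
        obtain ⟨a, ha⟩ := hres x
        exact ⟨MvPowerSeries.C a, by change x - φ _ ∈ _; rwa [hφC]⟩) N
    have : IsAdicComplete (maximalIdeal (MvPowerSeries (Fin d) Λ)) (MvPowerSeries (Fin d) Λ) := by
      rw [← ps_maximalIdeal]; infer_instance
    have hH : IsHausdorff (maximalIdeal (MvPowerSeries (Fin d) Λ)) D := by
      rw [← IsHausdorff.map_algebraMap_iff (S := D)]
      change IsHausdorff ((maximalIdeal (MvPowerSeries (Fin d) Λ)).map φ) D
      rw [hφm]
      exact IsHausdorff.of_isLocalRing _ _ (ne_top_of_le_ne_top (maximalIdeal.isMaximal D).ne_top hm𝔮)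
    refine complete_nakayama (maximalIdeal _) (fun i => (S.equivFin.symm i : D)) fun x => ?_
    obtain ⟨n, hn, h⟩ := hM x
    rw [← hS] at hn
    have : Set.range (fun i => (S.equivFin.symm i : D)) = S := by
      ext y
      constructor
      · rintro ⟨j, rfl⟩; exact (S.equivFin.symm j).2
      · intro hy; exact ⟨S.equivFin ⟨y, hy⟩, by simp⟩
    rw [← this] at hn
    obtain ⟨c, hc⟩ := (Submodule.mem_span_range_iff_exists_fun _).1 hn
    refine ⟨c, ?_⟩
    change _ ∈ (maximalIdeal (MvPowerSeries (Fin d) Λ)).map φ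
    rw [hc, hφm]
    exact hN h
  have hdim1 : ringKrullDim D1 = d := by
    rw [← IsLocalRing.maximalIdeal_height_eq_ringKrullDim, ← hcard]; rfl
  have hdimD : (d : WithBot ℕ∞) + 1 ≤ ringKrullDim D := by
    rw [← hdim1]
    exact ringKrullDim_quotient_succ_le_of_nonZeroDivisor (mem_nonZeroDivisors_of_ne_zero h0)
  have hdimA : ringKrullDim (MvPowerSeries (Fin d) Λ) ≤ d + 1 := by
    refine (ringKrullDim_le_spanFinrank_maximalIdeal _).trans ?_
    have : maximalIdeal (MvPowerSeries (Fin d) Λ) =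
        Ideal.span (insert (MvPowerSeries.C ϖ) (Set.range MvPowerSeries.X)) := by
      rw [← ps_maximalIdeal, psI_eq, hϖ, Ideal.map_span, Set.image_singleton, Ideal.span_insert]
    rw [this]
    have h1 : (Ideal.span (insert (MvPowerSeries.C ϖ) (Set.range
        (MvPowerSeries.X : Fin d → MvPowerSeries (Fin d) Λ)))).spanFinrank ≤ d + 1 := by
      refine (Submodule.spanFinrank_span_le_ncard_of_finite
        ((Set.finite_range _).insert _)).trans ((Set.ncard_insert_le _ _).trans ?_)
      gcongr
      rw [← Set.image_univ]
      refine (Set.ncard_image_le Set.finite_univ).trans ?_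
      simp [Set.ncard_univ]
    exact_mod_cast h1
  refine ⟨d, φ, ?_, hfin, le_antisymm
    ((ringKrullDim_le_of_finite φ hfin.to_isIntegral).trans hdimA) hdimD, hφC, hφm ▸ hm𝔮⟩
  by_contra hinj
  rw [RingHom.injective_iff_ker_eq_bot] at hinj
  obtain ⟨a, ha, ha0⟩ := Submodule.exists_mem_ne_zero_of_ne_bot hinj
  have h1 : ringKrullDim D ≤ ringKrullDim (MvPowerSeries (Fin d) Λ ⧸ RingHom.ker φ) :=
    ringKrullDim_le_of_finite (RingHom.kerLift φ) (by
      have := hfin.to_isIntegral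
      intro y
      obtain ⟨p, hp, hp1⟩ := this y
      refine ⟨p.map (Ideal.Quotient.mk _), hp.map _, ?_⟩
      rw [Polynomial.eval₂_map]
      exact hp1)
  have h2 := ringKrullDim_succ_le_of_surjective (Ideal.Quotient.mk (RingHom.ker φ))
    Ideal.Quotient.mk_surjective (mem_nonZeroDivisors_of_ne_zero ha0)
    (Ideal.Quotient.eq_zero_iff_mem.2 ha)
  have h3 : (d : WithBot ℕ∞) + 1 + 1 ≤ d + 1 :=
    (add_le_add_left (hdimD.trans h1) 1).trans (h2.trans hdimA)
  have h4 : d + 1 + 1 ≤ d + 1 := by exact_mod_cast h3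
  omega

end UBS

/-! ### Integral closure and reductions -/

namespace UBS
open Polynomial in
/-- Integrality over powers of an ideal is integrality over the Rees algebra. -/
lemma integral_iff {R : Type*} [CommRing R] (J : Ideal R) (n : ℕ) (x : R) :
    IsIntegralOverIdeal (J ^ n) x ↔ IsIntegral (reesAlgebra J) (monomial n x : R[X]) := by
  constructor
  · rintro ⟨m, hm, a, ha, hx⟩
    have hb : ∀ i, ∃ b : reesAlgebra J, i ∈ Finset.Icc 1 m → (b : R[X]) = monomial (n * i) (a i) := by
      intro i
      by_cases hi : i ∈ Finset.Icc 1 m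
      · rw [Finset.mem_Icc] at hi
        refine ⟨⟨monomial (n * i) (a i), ?_⟩, fun _ => rfl⟩
        refine reesAlgebra.monomial_mem.2 ?_
        rw [pow_mul]; exact ha i hi.1 hi.2
      · exact ⟨0, fun h => absurd h hi⟩
    choose b hb using hb
    refine ⟨X ^ m + ∑ i ∈ Finset.Icc 1 m, C (b i) * X ^ (m - i), monic_X_pow_add ?_, ?_⟩
    · refine (degree_sum_le _ _).trans_lt ?_
      rw [Finset.sup_lt_iff (by exact WithBot.bot_lt_coe m)]
      intro i hi
      rw [Finset.mem_Icc] at hi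
      refine (degree_C_mul_X_pow_le _ _).trans_lt ?_
      exact_mod_cast (by omega : m - i < m)
    · rw [eval₂_add, eval₂_finsetSum, eval₂_pow, eval₂_X]
      have : ∀ i ∈ Finset.Icc 1 m, eval₂ (algebraMap (reesAlgebra J) R[X]) (monomial n x)
          (C (b i) * X ^ (m - i)) = monomial (n * m) (a i * x ^ (m - i)) := by
        intro i hi
        rw [eval₂_mul, eval₂_C, eval₂_pow, eval₂_X]
        change (b i : R[X]) * _ = _
        rw [hb i hi, monomial_pow, monomial_mul_monomial]
        congr 2
        rw [Finset.mem_Icc] at hi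
        rw [← mul_add]; congr 1; omega
      rw [Finset.sum_congr rfl this, monomial_pow, ← map_sum, ← map_add, hx, map_zero]
  · rintro ⟨p, hp, hpx⟩
    let q := p * X
    have hq : q.Monic := hp.mul monic_X
    rcases subsingleton_or_nontrivial R with hR | hR
    · exact ⟨1, one_pos, 0, fun i _ _ => by simp, Subsingleton.elim _ _⟩
    have hR' : Nontrivial (reesAlgebra J) := by
      refine ⟨0, 1, fun h => ?_⟩
      have := congrArg (fun z : reesAlgebra J => (z : R[X]).coeff 0) h
      simp at this
    have hqx : eval₂ (algebraMap (reesAlgebra J) R[X]) (monomial n x) q = 0 := by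
      rw [eval₂_mul, hpx, zero_mul]
    have hdeg : 0 < q.natDegree := by
      rw [hp.natDegree_mul monic_X, natDegree_X]; omega
    refine ⟨q.natDegree, hdeg, fun i => (q.coeff (q.natDegree - i) : R[X]).coeff (n * i), ?_, ?_⟩
    · intro i _ _
      rw [← pow_mul]
      exact (mem_reesAlgebra_iff _ _).1 (q.coeff (q.natDegree - i)).2 _
    · have h := congrArg (fun z => coeff z (n * q.natDegree)) hqx
      simp only [eval₂_eq_sum_range, finsetSum_coeff, coeff_zero] at h
      rw [Finset.sum_range_succ, hq.coeff_natDegree, map_one, one_mul, monomial_pow,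
        coeff_monomial, if_pos rfl, add_comm] at h
      rw [← h]
      congr 1
      refine Finset.sum_bij' (fun i _ => q.natDegree - i) (fun i _ => q.natDegree - i) ?_ ?_ ?_ ?_ ?_
      · intro i hi; simp at hi ⊢; omega
      · intro i hi; simp at hi ⊢; omega
      · intro i hi; simp at hi ⊢; omega
      · intro i hi; simp at hi ⊢; omega
      · intro i hi
        simp only [Finset.mem_Icc] at hi
        rw [monomial_pow]
        have : n * q.natDegree = n * i + n * (q.natDegree - i) := by
          rw [← mul_add]; congr 1; omega
        rw [this, coeff_mul_monomial]
        rfl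

lemma integral_of_pow_intClosure {R : Type*} [CommRing R] {J : Ideal R} {n : ℕ} {y : R}
    (hy : y ∈ J.intClosure ^ n) : IsIntegralOverIdeal (J ^ n) y := by
  induction n generalizing y with
  | zero =>
    refine ⟨1, one_pos, fun _ => - y, fun i _ _ => by simp [Ideal.one_eq_top, Ideal.top_pow], by simp⟩
  | succ n ih =>
    rw [pow_succ] at hy
    rw [integral_iff]
    refine Submodule.mul_induction_on hy (fun a ha b hb => ?_) (fun a b ha hb => ?_)
    · have h1 := (integral_iff J n a).1 (ih ha)
      have h2 : IsIntegral (reesAlgebra J) (Polynomial.monomial 1 b : Polynomial R) := by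
        refine Submodule.span_induction ?_ ?_ ?_ ?_ hb
        · intro x hx
          rw [← integral_iff, pow_one]; exact hx
        · rw [map_zero]; exact isIntegral_zero
        · intro x y _ _ hx hy
          rw [map_add]; exact hx.add hy
        · intro c x _ hx
          have : (Polynomial.monomial 1 (c • x) : Polynomial R) =
              algebraMap (reesAlgebra J) _ (algebraMap R _ c) * Polynomial.monomial 1 x := by
            change _ = Polynomial.C c * _
            rw [Polynomial.C_mul_monomial, smul_eq_mul]
          rw [this]
          exact isIntegral_algebraMap.mul hx
      rw [← Polynomial.monomial_mul_monomial]
      exact h1.mul h2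
    · rw [map_add]; exact ha.add hb

lemma integral_trans {R : Type*} [CommRing R] {J K : Ideal R} (h : ∀ x ∈ J, IsIntegralOverIdeal K x)
    {n : ℕ} {y : R} (hy : IsIntegralOverIdeal (J ^ n) y) : IsIntegralOverIdeal (K ^ n) y := by
  rw [integral_iff] at hy ⊢
  have hle : reesAlgebra J ≤ (integralClosure (reesAlgebra K) (Polynomial R)).restrictScalars R := by
    rw [← adjoin_monomial_eq_reesAlgebra]
    refine Algebra.adjoin_le ?_
    rintro _ ⟨x, hx, rfl⟩
    have := (integral_iff K 1 x).1 (by rw [pow_one]; exact h x hx)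
    exact this
  obtain ⟨p, hp, hpy⟩ := hy
  have : IsIntegral (integralClosure (reesAlgebra K) (Polynomial R))
      (Polynomial.monomial n y : Polynomial R) := by
    let φ : reesAlgebra J →+* integralClosure (reesAlgebra K) (Polynomial R) :=
      (Subalgebra.inclusion hle).toRingHom
    refine ⟨p.map φ, hp.map _, ?_⟩
    rw [Polynomial.eval₂_map]
    exact hpy
  exact isIntegral_trans _ this

lemma integral_trans_one {R : Type*} [CommRing R] {J K : Ideal R}
    (h : ∀ x ∈ J, IsIntegralOverIdeal K x) {y : R} (hy : IsIntegralOverIdeal J y) :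
    IsIntegralOverIdeal K y := by
  have := integral_trans h (n := 1) (by rwa [pow_one])
  rwa [pow_one] at this

/-- A root of a monic polynomial whose coefficients lie in the appropriate powers of `K` is integral
over `K`. -/
lemma integral_of_poly {R : Type*} [CommRing R] {K : Ideal R} {p : Polynomial R} (hp : p.Monic)
    (h0 : 0 < p.natDegree) (hc : ∀ k, p.coeff k ∈ K ^ (p.natDegree - k)) {x : R}
    (hx : p.eval x = 0) : IsIntegralOverIdeal K x := by
  refine ⟨p.natDegree, h0, fun i => p.coeff (p.natDegree - i), fun i h1 h2 => ?_, ?_⟩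
  · convert hc _ using 2; omega
  · rw [Polynomial.eval_eq_sum_range, Finset.sum_range_succ, hp.coeff_natDegree, one_mul,
      add_comm] at hx
    rw [← hx]
    congr 1
    refine Finset.sum_bij' (fun i _ => p.natDegree - i) (fun i _ => p.natDegree - i) ?_ ?_ ?_ ?_ ?_
    · intro i hi; simp at hi ⊢; omega
    · intro i hi; simp at hi ⊢; omega
    · intro i hi; simp at hi ⊢; omega
    · intro i hi; simp at hi ⊢; omega
    · intro i hi; rfl

/-- A reduction of an ideal has the same integral closure. -/
lemma integral_of_reduction {R : Type*} [CommRing R] {J K : Ideal R} (hJ : J.FG) {N : ℕ}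
    (h : J ^ (N + 1) ≤ K * J ^ N) : ∀ x ∈ J, IsIntegralOverIdeal K x := by
  intro x hx
  have hfin : Module.Finite R (J ^ N : Ideal R) := Module.Finite.of_fg (hJ.pow (n := N))
  let f : Module.End R (J ^ N : Ideal R) := x • LinearMap.id
  obtain ⟨p, hp, hdeg, hc, hpf⟩ :=
    LinearMap.exists_monic_and_natDegree_eq_and_coeff_mem_pow_and_aeval_eq_zero R f K (by
      rintro _ ⟨z, rfl⟩
      have h1 : x * (z : R) ∈ K * J ^ N := h (by rw [pow_succ']; exact Ideal.mul_mem_mul hx z.2)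
      have h2 : K * J ^ N = (K • (⊤ : Submodule R (J ^ N : Ideal R))).map
          (Submodule.subtype (J ^ N : Ideal R)) := by
        rw [Submodule.map_smul'', Submodule.map_top, Submodule.range_subtype, smul_eq_mul]
      rw [h2] at h1
      obtain ⟨w, hw, hwz⟩ := h1
      have : f z = w := Subtype.ext hwz.symm
      rw [this]; exact hw)
  have hev : ∀ z ∈ J ^ N, p.eval x * z = 0 := by
    intro z hz
    have hk : ∀ q : Polynomial R, ∀ z : (J ^ N : Ideal R),
        ((Polynomial.aeval f q z : (J ^ N : Ideal R)) : R) = q.eval x * z := by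
      intro q z
      induction q using Polynomial.induction_on' with
      | add p q hp hq => simp [hp, hq, add_mul]
      | monomial n a =>
        rw [Polynomial.aeval_monomial, Polynomial.eval_monomial]
        have : f ^ n = x ^ n • LinearMap.id := by
          ext z
          simp [f, smul_pow]
        rw [this]; simp [mul_assoc, mul_left_comm]
    have := hk p ⟨z, hz⟩
    rw [hpf] at this
    exact this.symm
  have h0 : p.eval x * x ^ (N + 1) = 0 := by
    rw [pow_succ, ← mul_assoc, hev _ (Ideal.pow_mem_pow hx N), zero_mul]
  rcases subsingleton_or_nontrivial R with hR | hR
  · exact ⟨1, one_pos, 0, fun i _ _ => by simp, Subsingleton.elim _ _⟩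
  have hq := hp.mul (Polynomial.monic_X_pow (R := R) (N + 1))
  have hd : (p * Polynomial.X ^ (N + 1)).natDegree = p.natDegree + (N + 1) := by
    rw [hp.natDegree_mul (Polynomial.monic_X_pow _), Polynomial.natDegree_X_pow]
  refine integral_of_poly hq (by omega) (fun k => ?_) (by simpa using h0)
  rw [Polynomial.coeff_mul_X_pow', hd]
  split_ifs with hk
  · convert hc _ using 2; omega
  · exact zero_mem _
end UBS

namespace UBS
open IsLocalRing (maximalIdeal)

/-- The colength of an ideal. -/
noncomputable def colen {C : Type*} [CommRing C] (I : Ideal C) : ℕ∞ := Module.length C (C ⧸ I)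

section
variable {C : Type*} [CommRing C]

lemma colen_anti {I I' : Ideal C} (h : I ≤ I') : colen I' ≤ colen I :=
  Module.length_le_of_surjective (Submodule.factor h) (Submodule.factor_surjective h)

lemma colen_le_add (I X : Ideal C) (b : C) (h : ∀ x ∈ X, x * b ∈ I) :
    colen I ≤ colen (I ⊔ Ideal.span {b}) + colen X := by
  let f : C →ₗ[C] C ⧸ I := (Submodule.mkQ I).comp (LinearMap.toSpanSingleton C C b)
  have hf : ∀ x, f x = Submodule.mkQ I (x * b) := fun x => rfl
  have h1 := Module.length_eq_add_of_exact (LinearMap.range f).subtype (LinearMap.range f).mkQ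
    (Submodule.subtype_injective _) (Submodule.mkQ_surjective _)
    (LinearMap.exact_subtype_mkQ _)
  rw [colen, h1, add_comm]
  refine add_le_add ?_ ?_
  · refine Module.length_le_of_surjective (Submodule.mapQ (I ⊔ Ideal.span {b}) (LinearMap.range f)
      (Submodule.mkQ I) ?_) ?_
    · refine sup_le (fun x hx => ?_) ((Ideal.span_singleton_le_iff_mem _).2 ?_)
      · rw [Submodule.mem_comap, Submodule.mkQ_apply, (Submodule.Quotient.mk_eq_zero I).2 hx]
        exact zero_mem _
      · exact ⟨1, by rw [hf, one_mul]⟩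
    · intro y
      obtain ⟨y, rfl⟩ := Submodule.mkQ_surjective _ y
      obtain ⟨y, rfl⟩ := Submodule.mkQ_surjective _ y
      exact ⟨Submodule.mkQ _ y, rfl⟩
  · refine Module.length_le_of_surjective (Submodule.liftQ X f.rangeRestrict fun x hx => ?_) ?_
    · rw [LinearMap.mem_ker]
      apply Subtype.ext
      change Submodule.mkQ I (x * b) = 0
      rw [Submodule.mkQ_apply, Submodule.Quotient.mk_eq_zero]
      exact h x hx
    · rintro ⟨_, y, rfl⟩
      exact ⟨Submodule.mkQ X y, rfl⟩

lemma colen_add_one_le {I : Ideal C} {b : C} (hb : b ∉ I) :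
    colen (I ⊔ Ideal.span {b}) + 1 ≤ colen I := by
  have hle : I ≤ I ⊔ Ideal.span {b} := le_sup_left
  have h1 := Module.length_eq_add_of_exact (LinearMap.ker (Submodule.factor hle)).subtype
    (Submodule.factor hle) (Submodule.subtype_injective _) (Submodule.factor_surjective hle)
    (LinearMap.exact_subtype_ker_map _)
  rw [colen, colen, h1, add_comm]
  gcongr
  rw [Order.one_le_iff_pos, Module.length_pos_iff]
  refine ⟨⟨Submodule.mkQ I b, ?_⟩, 0, fun h => hb ?_⟩
  · rw [LinearMap.mem_ker]
    change Submodule.mkQ _ b = 0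
    rw [Submodule.mkQ_apply, Submodule.Quotient.mk_eq_zero]
    exact Ideal.mem_sup_right (Ideal.mem_span_singleton_self b)
  · exact (Submodule.Quotient.mk_eq_zero I).1 (congrArg Subtype.val h)

lemma colen_mul_le (I : Ideal C) (a b : C) :
    colen (I ⊔ Ideal.span {a * b}) ≤ colen (I ⊔ Ideal.span {a}) + colen (I ⊔ Ideal.span {b}) := by
  refine (colen_le_add _ (I ⊔ Ideal.span {b}) a fun x hx => ?_).trans ?_
  · obtain ⟨y, hy, z, hz, rfl⟩ := Submodule.mem_sup.1 hx
    obtain ⟨z, rfl⟩ := Ideal.mem_span_singleton'.1 hz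
    rw [add_mul]
    refine add_mem (Ideal.mem_sup_left (Ideal.mul_mem_right _ _ hy)) (Ideal.mem_sup_right ?_)
    exact Ideal.mem_span_singleton'.2 ⟨z, by ring⟩
  · gcongr
    exact colen_anti (sup_le_sup_right le_sup_left _)

lemma colen_pow_le (I : Ideal C) (a : C) (K : ℕ) :
    colen (I ⊔ Ideal.span {a ^ K}) ≤ K * colen (I ⊔ Ideal.span {a}) := by
  induction K with
  | zero =>
    rw [pow_zero, Ideal.span_singleton_one, sup_top_eq, colen, Module.length_eq_zero]
    exact zero_le
  | succ K ih =>
    rw [pow_succ]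
    refine (colen_mul_le I _ _).trans ?_
    push_cast
    rw [add_mul, one_mul]
    gcongr

/-- Replacing `x i` by `x i ^ K` for the indices in `t` multiplies the colength by at most
`K ^ t.card`. -/
lemma colen_pows_le {r : Type*} [DecidableEq r] (x : r → C) (K : ℕ) (t : Finset r) : ∀ (I : Ideal C),
    colen (I ⊔ Ideal.span ((fun i => x i ^ K) '' t)) ≤ K ^ t.card * colen (I ⊔ Ideal.span (x '' t)) := by
  induction t using Finset.induction_on with
  | empty => intro I; simp
  | insert i t hi ih =>
    intro I
    rw [Finset.coe_insert, Set.image_insert_eq, Set.image_insert_eq, Ideal.span_insert,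
      Ideal.span_insert, ← sup_assoc, Finset.card_insert_of_notMem hi]
    refine (ih _).trans ?_
    rw [sup_right_comm, pow_succ, mul_assoc]
    gcongr
    rw [← sup_assoc, sup_right_comm I (Ideal.span {x i})]
    exact colen_pow_le _ _ _

lemma colen_pow_le' {r : ℕ} (x : Fin r → C) (K : ℕ) :
    colen (Ideal.span (Set.range x) ^ K) ≤ K ^ r * colen (Ideal.span (Set.range x)) := by
  have h := colen_pows_le x K Finset.univ ⊥
  rw [bot_sup_eq, bot_sup_eq, Finset.coe_univ, Set.image_univ, Set.image_univ, Finset.card_univ,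
    Fintype.card_fin] at h
  refine (colen_anti (Ideal.span_le.2 ?_)).trans h
  rintro _ ⟨i, rfl⟩
  exact Ideal.pow_mem_pow (Ideal.subset_span (Set.mem_range_self i)) K

lemma colen_ne_top [IsNoetherianRing C] [IsLocalRing C] {I : Ideal C} {e : ℕ}
    (h : maximalIdeal C ^ e ≤ I) : colen I ≠ ⊤ := by
  obtain ⟨r, x, hx⟩ := Submodule.fg_iff_exists_fin_generating_family.1
    (IsNoetherian.noetherian (maximalIdeal C))
  have h0 := colen_pow_le' x e
  rw [show Ideal.span (Set.range x) ^ e = maximalIdeal C ^ e from congrArg (· ^ e) hx] at h0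
  have h1 := (colen_anti h).trans h0
  have h2 : colen (Ideal.span (Set.range x)) = 1 := by
    change colen (Submodule.span C (Set.range x)) = 1
    rw [hx, colen, Module.length_eq_one_iff]
    exact isSimpleModule_iff_isCoatom.2 (maximalIdeal.isMaximal C).out
  rw [h2, mul_one] at h1
  refine ne_top_of_le_ne_top ?_ h1
  exact_mod_cast ENat.coe_ne_top (e ^ r)

/-- More generators of a primary ideal than the number of parameters satisfy a nontrivial form in
the fibre cone. -/
lemma exists_form [IsNoetherianRing C] [IsLocalRing C] {r s : ℕ} (hrs : r < s) (x : Fin r → C)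
    (hx : Prim (Ideal.span (Set.range x))) (g : Fin s → C) (hg : Prim (Ideal.span (Set.range g))) :
    ∃ (n : ℕ) (S : Finset (Fin s → ℕ)) (c : (Fin s → ℕ) → C), (∀ α ∈ S, ∑ i, α i = n) ∧
      (∃ α ∈ S, IsUnit (c α)) ∧ ∑ α ∈ S, c α * ∏ i, g i ^ α i ∈
        maximalIdeal C * Ideal.span (Set.range g) ^ n := by
  classical
  by_contra hno
  set 𝔪 := maximalIdeal C with h𝔪
  set J := Ideal.span (Set.range g) with hJ
  set X := Ideal.span (Set.range x) with hX
  have hmon : ∀ n (α : Fin s → ℕ), ∑ i, α i = n → ∏ i, g i ^ α i ∈ J ^ n := by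
    intro n α hα
    rw [← hα, ← Finset.prod_pow_eq_pow_sum]
    exact Ideal.prod_mem_prod fun i _ => Ideal.pow_mem_pow (Ideal.subset_span (Set.mem_range_self i)) _
  have h1 : ∀ n (S : Finset (Fin s → ℕ)), (∀ α ∈ S, ∑ i, α i = n) →
      colen (𝔪 * J ^ n ⊔ Ideal.span ((fun α : Fin s → ℕ => ∏ i, g i ^ α i) '' S)) + S.card ≤
        colen (𝔪 * J ^ n) := by
    intro n S hS
    induction S using Finset.induction_on with
    | empty => simp
    | insert α S hα ih =>
      have ih' := ih fun β hβ => hS β (Finset.mem_insert_of_mem hβ)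
      refine le_trans ?_ ih'
      rw [Finset.coe_insert, Set.image_insert_eq, Ideal.span_insert, sup_left_comm, sup_comm,
        Finset.card_insert_of_notMem hα]
      push_cast
      rw [add_comm (S.card : ℕ∞), ← add_assoc]
      gcongr
      refine colen_add_one_le fun hmem => hno ?_
      obtain ⟨y, hy, z, hz, hyz⟩ := Submodule.mem_sup.1 hmem
      obtain ⟨c, hc⟩ := (Submodule.mem_span_image_finset_iff_exists_fun C).1 hz
      let c' : (Fin s → ℕ) → C := fun β => if h : β ∈ S then - c ⟨β, h⟩ else 1
      refine ⟨n, insert α S, c', hS, ⟨α, Finset.mem_insert_self _ _, ?_⟩, ?_⟩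
      · simp [c', hα]
      · rw [Finset.sum_insert hα]
        have : ∑ β ∈ S, c' β * ∏ i, g i ^ β i = - z := by
          rw [← hc, ← Finset.sum_coe_sort S, ← Finset.sum_neg_distrib]
          refine Finset.sum_congr rfl fun β _ => ?_
          simp [c', β.2]
        rw [this, ← hyz]
        simpa [c', hα] using hy
  obtain ⟨N, hN⟩ := hg.2
  have h2 : ∀ n (S : Finset (Fin s → ℕ)), (∀ α ∈ S, ∑ i, α i = n) →
      colen (J ^ n) + S.card ≤ colen (J ^ (n + 1)) := by
    intro n S hS
    refine le_trans ?_ ((h1 n S hS).trans (colen_anti ?_))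
    · gcongr
      refine colen_anti (sup_le Ideal.mul_le_right (Ideal.span_le.2 ?_))
      rintro _ ⟨α, hα, rfl⟩
      exact hmon n α (hS α hα)
    · rw [pow_succ']; exact Ideal.mul_mono_left hg.1
  have h3 : ∀ (q M : ℕ), ((((Fintype.piFinset fun _ : Fin s => Finset.range (q + 1)).filter
      fun α => ∑ i, α i < M).card : ℕ) : ℕ∞) ≤ colen (J ^ M) := by
    intro q M
    induction M with
    | zero => simp
    | succ M ih =>
      refine le_trans ?_ (h2 M ((Fintype.piFinset fun _ : Fin s => Finset.range (q + 1)).filter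
        fun α => ∑ i, α i = M) fun α hα => (Finset.mem_filter.1 hα).2)
      refine le_trans ?_ (add_le_add_left ih _)
      norm_cast
      refine le_trans (Finset.card_le_card ?_) (Finset.card_union_le _ _)
      intro α hα
      simp only [Finset.mem_union, Finset.mem_filter] at hα ⊢
      rcases Nat.lt_succ_iff_lt_or_eq.1 hα.2 with h | h
      · exact Or.inl ⟨hα.1, h⟩
      · exact Or.inr ⟨hα.1, h⟩
  obtain ⟨e, he⟩ := hx.2
  obtain ⟨l, hl⟩ := ENat.ne_top_iff_exists.1 (colen_ne_top he)
  have h4 : ∀ q : ℕ, (q + 1) ^ s ≤ (N * (s * q + 1)) ^ r * l := by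
    intro q
    have h5 := h3 q (s * q + 1)
    rw [Finset.filter_true_of_mem, Fintype.card_piFinset] at h5
    · have h6 : colen (J ^ (s * q + 1)) ≤ colen (X ^ (N * (s * q + 1))) := by
        refine colen_anti ?_
        rw [pow_mul]
        exact Ideal.pow_right_mono ((Ideal.pow_right_mono hx.1 N).trans hN) _
      have h7 := h5.trans (h6.trans (colen_pow_le' x _))
      change _ ≤ _ * colen X at h7
      rw [← hl] at h7
      simp only [Finset.card_range, Finset.prod_const, Finset.card_univ, Fintype.card_fin] at h7
      exact_mod_cast h7
    · intro α hα
      rw [Fintype.mem_piFinset] at hα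
      have : ∑ i, α i ≤ ∑ _i : Fin s, q := Finset.sum_le_sum fun i _ => by
        have := Finset.mem_range.1 (hα i); omega
      simp at this
      omega
  have h5 : ∀ q : ℕ, q + 1 ≤ (N * s) ^ r * l := by
    intro q
    have h6 : (q + 1) ^ (r + 1) ≤ (N * (s * q + 1)) ^ r * l :=
      (Nat.pow_le_pow_right (by omega) hrs).trans (h4 q)
    have h7 : (N * (s * q + 1)) ^ r ≤ (N * s) ^ r * (q + 1) ^ r := by
      rw [← mul_pow, mul_assoc]
      gcongr
      rw [mul_add, mul_one]; omega
    have h8 : (q + 1) ^ r * (q + 1) ≤ (q + 1) ^ r * ((N * s) ^ r * l) := by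
      rw [← pow_succ]
      calc _ ≤ _ := h6
        _ ≤ (N * s) ^ r * (q + 1) ^ r * l := by gcongr
        _ = _ := by ring
    exact Nat.le_of_mul_le_mul_left h8 (by positivity)
  exact absurd (h5 ((N * s) ^ r * l)) (by omega)

end
end UBS

namespace UBS
open IsLocalRing (maximalIdeal)

section
variable {C : Type*} [CommRing C]

lemma mul_E_le (G J : Ideal C) (n m : ℕ) : J ^ n * (G * J ^ (m - 1)) ≤ G * J ^ (n + m - 1) := by
  rw [mul_left_comm, ← pow_add]
  exact Ideal.mul_mono_right (Ideal.pow_le_pow_right (by omega))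

lemma pow_sub_pow_mem_E {G J : Ideal C} {a b : C} (ha : a ∈ J) (hb : b ∈ J) (h : a - b ∈ G) (e : ℕ) :
    a ^ e - b ^ e ∈ G * J ^ (e - 1) := by
  induction e with
  | zero => simp
  | succ e ih =>
    have : a ^ (e + 1) - b ^ (e + 1) = a ^ e * (a - b) + b * (a ^ e - b ^ e) := by ring
    rw [this]
    refine add_mem ?_ ?_
    · rw [mul_comm G]; exact Ideal.mul_mem_mul (Ideal.pow_mem_pow ha e) h
    · have := mul_E_le G J 1 e (Ideal.mul_mem_mul (by simpa using hb) ih)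
      rwa [add_comm 1 e] at this

lemma prod_sub_prod_mem_E {σ : Type*} {G J : Ideal C} (a b : σ → C) (ha : ∀ i, a i ∈ J)
    (hb : ∀ i, b i ∈ J) (h : ∀ i, a i - b i ∈ G) (α : σ → ℕ) (t : Finset σ) :
    ∏ i ∈ t, a i ^ α i - ∏ i ∈ t, b i ^ α i ∈ G * J ^ (∑ i ∈ t, α i - 1) := by
  classical
  induction t using Finset.induction_on with
  | empty => simp
  | insert i t hi ih =>
    rw [Finset.prod_insert hi, Finset.prod_insert hi, Finset.sum_insert hi]
    have : a i ^ α i * ∏ i ∈ t, a i ^ α i - b i ^ α i * ∏ i ∈ t, b i ^ α i =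
      a i ^ α i * (∏ i ∈ t, a i ^ α i - ∏ i ∈ t, b i ^ α i) +
        (∏ i ∈ t, b i ^ α i) * (a i ^ α i - b i ^ α i) := by ring
    rw [this]
    refine add_mem ?_ ?_
    · exact mul_E_le G J _ _ (Ideal.mul_mem_mul (Ideal.pow_mem_pow (ha i) _) ih)
    · rw [add_comm (α i)]
      refine mul_E_le G J _ _ (Ideal.mul_mem_mul ?_ (pow_sub_pow_mem_E (ha i) (hb i) (h i) _))
      rw [← Finset.prod_pow_eq_pow_sum]
      exact Ideal.prod_mem_prod fun i _ => Ideal.pow_mem_pow (hb i) _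

lemma sup_pow_le_E (G : Ideal C) (g : C) (n : ℕ) :
    (G ⊔ Ideal.span {g}) ^ n ≤ G * (G ⊔ Ideal.span {g}) ^ (n - 1) ⊔ Ideal.span {g ^ n} := by
  set J := G ⊔ Ideal.span {g} with hJ
  induction n with
  | zero => simp
  | succ n ih =>
    have h1 : J ^ (n + 1) = G * J ^ n ⊔ Ideal.span {g} * J ^ n := by
      rw [pow_succ', ← Ideal.sup_mul]
    rw [h1, add_tsub_cancel_right]
    refine sup_le le_sup_left ((Ideal.mul_mono_right ih).trans ?_)
    rw [Ideal.mul_sup, Ideal.span_singleton_mul_span_singleton, ← pow_succ']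
    refine sup_le_sup_right ?_ _
    have := mul_E_le G J 1 n
    rw [pow_one, add_tsub_cancel_left] at this
    exact (Ideal.mul_mono_left le_sup_right).trans this

/-- A form vanishing in the fibre cone allows one to drop a generator, up to integral closure. -/
lemma reduction_step [IsNoetherianRing C] [IsLocalRing C] [Infinite (IsLocalRing.ResidueField C)]
    {r s : ℕ} (hrs : r < s + 1) (x : Fin r → C)
    (hx : Prim (Ideal.span (Set.range x))) (g : Fin (s + 1) → C)
    (hg : Prim (Ideal.span (Set.range g))) :
    ∃ g' : Fin s → C, (∀ i, g' i ∈ Ideal.span (Set.range g)) ∧ Prim (Ideal.span (Set.range g')) ∧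
      ∀ z ∈ Ideal.span (Set.range g), IsIntegralOverIdeal (Ideal.span (Set.range g')) z := by
  classical
  obtain ⟨n, S, c, hS, ⟨α₀, hα₀, hu⟩, hmem⟩ := exists_form hrs x hx g hg
  set J := Ideal.span (Set.range g) with hJ
  let P : MvPolynomial (Fin (s + 1)) (IsLocalRing.ResidueField C) :=
    ∑ α ∈ S, MvPolynomial.monomial (Finsupp.equivFunOnFinite.symm α) (IsLocalRing.residue C (c α))
  have hP : P ≠ 0 := by
    intro h
    have h1 := congrArg (MvPolynomial.coeff (Finsupp.equivFunOnFinite.symm α₀)) h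
    simp only [P, MvPolynomial.coeff_sum, MvPolynomial.coeff_monomial, MvPolynomial.coeff_zero,
      EmbeddingLike.apply_eq_iff_eq, Finset.sum_ite_eq', if_pos hα₀] at h1
    exact (hu.map (IsLocalRing.residue C)).ne_zero h1
  obtain ⟨b, hb⟩ : ∃ b, MvPolynomial.eval b (P * MvPolynomial.X 0) ≠ 0 := by
    by_contra! h
    exact mul_ne_zero hP (MvPolynomial.X_ne_zero 0) (MvPolynomial.funext fun b => by rw [h, map_zero])
  rw [map_mul, MvPolynomial.eval_X] at hb
  choose B hB using fun i => IsLocalRing.residue_surjective (b i)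
  have hB0 : IsUnit (B 0) := by
    rw [← IsLocalRing.residue_ne_zero_iff_isUnit, hB]; exact right_ne_zero_of_mul hb
  obtain ⟨w, hw⟩ := hB0.exists_left_inv
  have hwu : IsUnit w := IsUnit.of_mul_eq_one _ hw
  have hPu : IsUnit (∑ α ∈ S, c α * ∏ i, B i ^ α i) := by
    rw [← IsLocalRing.residue_ne_zero_iff_isUnit]
    convert left_ne_zero_of_mul hb using 1
    simp only [P, map_sum, map_mul, map_prod, map_pow, hB, MvPolynomial.eval_monomial]
    refine Finset.sum_congr rfl fun α _ => ?_
    rw [Finsupp.prod_fintype _ _ (by simp)]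
    simp
  let g' : Fin s → C := fun j => g j.succ - B j.succ * w * g 0
  have hgJ : ∀ i, g i ∈ J := fun i => Ideal.subset_span (Set.mem_range_self i)
  have hg' : ∀ i, g' i ∈ J := fun i => sub_mem (hgJ _) (Ideal.mul_mem_left _ _ (hgJ _))
  set G := Ideal.span (Set.range g') with hG
  have hGJ : G ≤ J := by
    rw [hG, Ideal.span_le]; rintro _ ⟨i, rfl⟩; exact hg' i
  have hdiff : ∀ i, g i - B i * w * g 0 ∈ G := by
    intro i
    refine Fin.cases ?_ (fun j => Ideal.subset_span ⟨j, rfl⟩) i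
    rw [mul_comm (B 0), hw, one_mul, sub_self]; exact zero_mem _
  have hJG : J = G ⊔ Ideal.span {g 0} := by
    refine le_antisymm ?_ (sup_le hGJ ((Ideal.span_singleton_le_iff_mem _).2 (hgJ 0)))
    rw [hJ, Ideal.span_le]
    rintro _ ⟨i, rfl⟩
    rw [← sub_add_cancel (g i) (B i * w * g 0)]
    exact add_mem (Ideal.mem_sup_left (hdiff i))
      (Ideal.mem_sup_right (Ideal.mul_mem_left _ _ (Ideal.mem_span_singleton_self _)))
  have h0n : g 0 ^ n ∈ G * J ^ (n - 1) ⊔ maximalIdeal C * J ^ n := by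
    have h1 : ∑ α ∈ S, c α * ∏ i, (B i * w * g 0) ^ α i ∈
        G * J ^ (n - 1) ⊔ maximalIdeal C * J ^ n := by
      rw [← sub_add_cancel (∑ α ∈ S, c α * ∏ i, (B i * w * g 0) ^ α i)
        (∑ α ∈ S, c α * ∏ i, g i ^ α i), ← Finset.sum_sub_distrib]
      refine add_mem (Ideal.mem_sup_left (sum_mem fun α hα => ?_)) (Ideal.mem_sup_right hmem)
      rw [← mul_sub, ← neg_sub, mul_neg]
      refine neg_mem (Ideal.mul_mem_left _ _ ?_)
      have := prod_sub_prod_mem_E g (fun i => B i * w * g 0) hgJ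
        (fun i => Ideal.mul_mem_left _ _ (hgJ 0)) hdiff α Finset.univ
      rwa [hS α hα] at this
    have h2 : ∑ α ∈ S, c α * ∏ i, (B i * w * g 0) ^ α i =
        ((∑ α ∈ S, c α * ∏ i, B i ^ α i) * w ^ n) * g 0 ^ n := by
      rw [Finset.sum_mul, Finset.sum_mul]
      refine Finset.sum_congr rfl fun α hα => ?_
      simp only [mul_pow, Finset.prod_mul_distrib, Finset.prod_pow_eq_pow_sum, hS α hα]
      ring
    rw [h2] at h1
    exact (Ideal.unit_mul_mem_iff_mem _ (hPu.mul (hwu.pow n))).1 h1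
  have hle : J ^ n ≤ G * J ^ (n - 1) ⊔ maximalIdeal C • J ^ n := by
    have h := sup_pow_le_E G (g 0) n
    rw [← hJG] at h
    refine h.trans (sup_le le_sup_left ?_)
    rw [Ideal.span_singleton_le_iff_mem]
    exact h0n
  have hle' : J ^ n ≤ G * J ^ (n - 1) :=
    Submodule.le_of_le_smul_of_le_jacobson_bot (IsNoetherian.noetherian _)
      (IsLocalRing.maximalIdeal_le_jacobson _) hle
  obtain _ | N := n
  · exfalso
    have : (1 : C) ∈ maximalIdeal C := hg.1 (hGJ (Ideal.mul_le_left (hle' (by simp))))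
    exact (Ideal.ne_top_iff_one _).1 (maximalIdeal.isMaximal C).ne_top this
  rw [add_tsub_cancel_right] at hle'
  refine ⟨g', hg', ⟨hGJ.trans hg.1, ?_⟩,
    integral_of_reduction (IsNoetherian.noetherian J) hle'⟩
  obtain ⟨M, hM⟩ := hg.2
  refine ⟨M * (N + 1), ?_⟩
  rw [pow_mul]
  exact (Ideal.pow_right_mono hM _).trans (hle'.trans Ideal.mul_le_left)

/-- Induction on the number of generators: as long as there are more than `r`, `reduction_step` drops
one without changing the integral closure. -/
lemma reduction_aux [IsNoetherianRing C] [IsLocalRing C] [Infinite (IsLocalRing.ResidueField C)]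
    {r : ℕ} (x : Fin r → C) (hx : Prim (Ideal.span (Set.range x))) : ∀ (s : ℕ) (g : Fin s → C)
    (_ : Prim (Ideal.span (Set.range g))),
    ∃ f : Fin r → C, (∀ i, f i ∈ Ideal.span (Set.range g)) ∧ Prim (Ideal.span (Set.range f)) ∧
      ∀ z ∈ Ideal.span (Set.range g), IsIntegralOverIdeal (Ideal.span (Set.range f)) z := by
  intro s
  induction s with
  | zero =>
    intro g hg
    have h0 : Ideal.span (Set.range g) = ⊥ := by simp [Set.range_eq_empty]
    have h1 : Ideal.span (Set.range (fun _ : Fin r => (0 : C))) = ⊥ := by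
      rw [Ideal.span_eq_bot]; rintro _ ⟨_, rfl⟩; rfl
    refine ⟨fun _ => 0, fun _ => zero_mem _, by rw [h1, ← h0]; exact hg, fun z hz => ?_⟩
    rw [h0] at hz
    rw [h1]
    exact ⟨1, Nat.one_pos, fun _ => 0, fun i _ _ => zero_mem _, by simpa using hz⟩
  | succ s ih =>
    intro g hg
    by_cases hrs : r < s + 1
    · obtain ⟨g', h1, h2, h3⟩ := reduction_step hrs x hx g hg
      obtain ⟨f, h4, h5, h6⟩ := ih g' h2
      refine ⟨f, fun i => ?_, h5, fun z hz => integral_trans_one h6 (h3 z hz)⟩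
      refine Ideal.span_le.2 ?_ (h4 i)
      rintro _ ⟨j, rfl⟩; exact h1 j
    · push Not at hrs
      let f : Fin r → C := fun i => if h : (i : ℕ) < s + 1 then g ⟨i, h⟩ else 0
      have hf : Ideal.span (Set.range f) = Ideal.span (Set.range g) := by
        refine le_antisymm (Ideal.span_le.2 ?_) (Ideal.span_le.2 ?_)
        · rintro _ ⟨i, rfl⟩
          simp only [f]
          split_ifs with h
          · exact Ideal.subset_span (Set.mem_range_self _)
          · exact zero_mem _
        · rintro _ ⟨i, rfl⟩
          refine Ideal.subset_span ⟨⟨i, by omega⟩, ?_⟩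
          simp only [f]; rw [dif_pos i.2]
      refine ⟨f, fun i => ?_, by rw [hf]; exact hg, fun z hz => ?_⟩
      · rw [← hf]; exact Ideal.subset_span (Set.mem_range_self _)
      · rw [hf]
        exact integral_of_reduction (K := Ideal.span (Set.range g)) (N := 0)
          (IsNoetherian.noetherian _) (by simp) z hz

/-- Over an infinite residue field every primary ideal has a reduction with at most `r` generators,
`r` being the number of elements in some system generating a primary ideal. -/
theorem reduction [IsNoetherianRing C] [IsLocalRing C] [Infinite (IsLocalRing.ResidueField C)]
    {r : ℕ} (x : Fin r → C) (hx : Prim (Ideal.span (Set.range x))) (J : Ideal C) (hJ : Prim J) :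
    ∃ f : Fin r → C, (∀ i, f i ∈ J) ∧ Prim (Ideal.span (Set.range f)) ∧
      ∀ z ∈ J, IsIntegralOverIdeal (Ideal.span (Set.range f)) z := by
  obtain ⟨s, g, hg⟩ := Submodule.fg_iff_exists_fin_generating_family.1
    (IsNoetherian.noetherian J)
  obtain rfl : Ideal.span (Set.range g) = J := hg
  exact reduction_aux x hx s g hJ

end
end UBS

/-! ### Regular sequences and depth -/

namespace UBS
open IsLocalRing (maximalIdeal)

section
variable {C : Type*} [CommRing C]

/-- `a` is a nonzerodivisor modulo `I`. -/
def Nz (a : C) (I : Ideal C) : Prop := ∀ x, a * x ∈ I → x ∈ I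

/-- There is a regular sequence of length `n` on `C ⧸ I` in the maximal ideal. -/
def Dep [IsLocalRing C] : ℕ → Ideal C → Prop
  | 0, _ => True
  | n + 1, I => ∃ a ∈ maximalIdeal C, Nz a I ∧ Dep n (I ⊔ Ideal.span {a})

lemma mem_sup_span {I : Ideal C} {a x : C} : x ∈ I ⊔ Ideal.span {a} ↔ ∃ y, x - a * y ∈ I := by
  rw [Submodule.mem_sup]
  constructor
  · rintro ⟨i, hi, z, hz, rfl⟩
    obtain ⟨y, rfl⟩ := Ideal.mem_span_singleton.1 hz
    exact ⟨y, by simpa using hi⟩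
  · rintro ⟨y, hy⟩
    exact ⟨_, hy, a * y, Ideal.mem_span_singleton.2 (dvd_mul_right _ _), by ring⟩

variable [IsNoetherianRing C] [IsLocalRing C]

/-- Regular sequences in a noetherian local ring may be permuted. -/
lemma Nz.swap {I : Ideal C} {a c : C} (ha : a ∈ maximalIdeal C) (h1 : Nz a I)
    (h2 : Nz c (I ⊔ Ideal.span {a})) : Nz c I ∧ Nz a (I ⊔ Ideal.span {c}) := by
  have hc : Nz c I := by
    let K : Ideal C := Submodule.comap (LinearMap.mulLeft C c) I
    have hK : ∀ x, x ∈ K ↔ c * x ∈ I := fun x => Iff.rfl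
    have : K ≤ I := by
      refine Submodule.le_of_le_smul_of_le_jacobson_bot (I := Ideal.span {a})
        (IsNoetherian.noetherian K) ?_ ?_
      · exact ((Ideal.span_singleton_le_iff_mem _).2 ha).trans
          (IsLocalRing.maximalIdeal_le_jacobson _)
      · intro x hx
        obtain ⟨y, hy⟩ := mem_sup_span.1 (h2 x (Ideal.mem_sup_left ((hK x).1 hx)))
        have hyK : y ∈ K := by
          refine (hK y).2 (h1 _ ?_)
          have : a * (c * y) = c * x - c * (x - a * y) := by ring
          rw [this]
          exact sub_mem ((hK x).1 hx) (Ideal.mul_mem_left _ _ hy)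
        rw [← sub_add_cancel x (a * y)]
        exact add_mem (Ideal.mem_sup_left hy) (Ideal.mem_sup_right
          (Ideal.mul_mem_mul (Ideal.mem_span_singleton_self a) hyK))
    exact fun x hx => this ((hK x).2 hx)
  refine ⟨hc, fun x hx => ?_⟩
  obtain ⟨y, hy⟩ := mem_sup_span.1 hx
  have h3 : c * y ∈ I ⊔ Ideal.span {a} := mem_sup_span.2 ⟨x, by
    rw [← neg_mem_iff]; convert hy using 1; ring⟩
  obtain ⟨z, hz⟩ := mem_sup_span.1 (h2 y h3)
  refine mem_sup_span.2 ⟨z, h1 _ ?_⟩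
  have : a * (x - c * z) = (a * x - c * y) + c * (y - a * z) := by ring
  rw [this]
  exact add_mem hy (Ideal.mul_mem_left _ _ hz)

/-- If neither quotient has socle elements, some element of the maximal ideal is a nonzerodivisor
on both. -/
lemma exists_nz {I₁ I₂ : Ideal C} (h1 : ∀ x, (∀ t ∈ maximalIdeal C, t * x ∈ I₁) → x ∈ I₁)
    (h2 : ∀ x, (∀ t ∈ maximalIdeal C, t * x ∈ I₂) → x ∈ I₂) :
    ∃ c ∈ maximalIdeal C, Nz c I₁ ∧ Nz c I₂ := by
  have hsub : Subsingleton ((C ⧸ maximalIdeal C) →ₗ[C] (C ⧸ I₁) × (C ⧸ I₂)) := by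
    refine ⟨fun f g => ?_⟩
    have key : ∀ f : (C ⧸ maximalIdeal C) →ₗ[C] (C ⧸ I₁) × (C ⧸ I₂), f = 0 := by
      intro f
      have ht : ∀ t ∈ maximalIdeal C, t • f (Ideal.Quotient.mk _ 1) = 0 := by
        intro t ht
        rw [← map_smul]
        have : t • (Ideal.Quotient.mk (maximalIdeal C) 1) = 0 :=
          Ideal.Quotient.eq_zero_iff_mem.2 (by simpa using ht)
        rw [this, map_zero]
      obtain ⟨x, hx⟩ := Ideal.Quotient.mk_surjective (f (Ideal.Quotient.mk _ 1)).1
      obtain ⟨y, hy⟩ := Ideal.Quotient.mk_surjective (f (Ideal.Quotient.mk _ 1)).2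
      have hx0 : x ∈ I₁ := h1 x fun t htm => by
        have := congrArg Prod.fst (ht t htm)
        rw [Prod.smul_fst, ← hx] at this
        exact Ideal.Quotient.eq_zero_iff_mem.1 this
      have hy0 : y ∈ I₂ := h2 y fun t htm => by
        have := congrArg Prod.snd (ht t htm)
        rw [Prod.smul_snd, ← hy] at this
        exact Ideal.Quotient.eq_zero_iff_mem.1 this
      have h0 : f (Ideal.Quotient.mk _ 1) = 0 := by
        refine Prod.ext ?_ ?_
        · rw [← hx]; exact Ideal.Quotient.eq_zero_iff_mem.2 hx0
        · rw [← hy]; exact Ideal.Quotient.eq_zero_iff_mem.2 hy0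
      ext
      · simpa using congrArg Prod.fst h0
      · simpa using congrArg Prod.snd h0
    rw [key f, key g]
  obtain ⟨c, hc, hreg⟩ := IsSMulRegular.subsingleton_linearMap_iff.1 hsub
  rw [Ideal.annihilator_quotient] at hc
  rw [isSMulRegular_iff_right_eq_zero_of_smul] at hreg
  refine ⟨c, hc, fun x hx => ?_, fun x hx => ?_⟩
  · have := hreg (Ideal.Quotient.mk I₁ x, 0) (Prod.ext (Ideal.Quotient.eq_zero_iff_mem.2 hx)
      (smul_zero c))
    exact Ideal.Quotient.eq_zero_iff_mem.1 (congrArg Prod.fst this)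
  · have := hreg (0, Ideal.Quotient.mk I₂ x) (Prod.ext (smul_zero c)
      (Ideal.Quotient.eq_zero_iff_mem.2 hx))
    exact Ideal.Quotient.eq_zero_iff_mem.1 (congrArg Prod.snd this)

/-- Depth drops by exactly one modulo any nonzerodivisor. -/
lemma Dep.exchange {n : ℕ} : ∀ {I : Ideal C} {a b : C}, a ∈ maximalIdeal C → b ∈ maximalIdeal C →
    Nz a I → Nz b I → Dep n (I ⊔ Ideal.span {a}) → Dep n (I ⊔ Ideal.span {b}) := by
  induction n with
  | zero => intros; trivial
  | succ n ih =>
    rintro I a b ha hb hna hnb ⟨c', hc', hnc', hd⟩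
    obtain ⟨c, hc, hca, hcb⟩ := exists_nz (I₁ := I ⊔ Ideal.span {a}) (I₂ := I ⊔ Ideal.span {b})
      (fun x hx => hnc' x (hx c' hc')) (by
        intro x hx
        obtain ⟨w, hw⟩ := mem_sup_span.1 (hx a ha)
        obtain ⟨v, hv⟩ := mem_sup_span.1 (hx c' hc')
        have h1 : w ∈ I ⊔ Ideal.span {a} := by
          refine hnc' w (mem_sup_span.2 ⟨v, hnb _ ?_⟩)
          have : b * (c' * w - a * v) = a * (c' * x - b * v) - c' * (a * x - b * w) := by ring
          rw [this]
          exact sub_mem (Ideal.mul_mem_left _ _ hv) (Ideal.mul_mem_left _ _ hw)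
        obtain ⟨z, hz⟩ := mem_sup_span.1 h1
        refine mem_sup_span.2 ⟨z, hna _ ?_⟩
        have : a * (x - b * z) = (a * x - b * w) + b * (w - a * z) := by ring
        rw [this]
        exact add_mem hw (Ideal.mul_mem_left _ _ hz))
    have h1 := ih hc' hc hnc' hca hd
    obtain ⟨-, h2⟩ := Nz.swap ha hna hca
    obtain ⟨-, h3⟩ := Nz.swap hb hnb hcb
    refine ⟨c, hc, hcb, ?_⟩
    rw [sup_right_comm] at h1 ⊢
    exact ih ha hb h2 h3 h1

/-- The annihilator of a nonzero element of `C ⧸ I` has dimension at least the depth. -/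
lemma Dep.dim {n : ℕ} : ∀ {I : Ideal C} {x : C}, Dep n I → x ∉ I → ∀ {K : Ideal C},
    (∀ y, y ∈ K ↔ y * x ∈ I) → (n : WithBot ℕ∞) ≤ ringKrullDim (C ⧸ K) := by
  induction n with
  | zero =>
    intro I x _ hx K hK
    have : Nontrivial (C ⧸ K) := Ideal.Quotient.nontrivial_iff.2 fun h => hx (by
      have := (hK 1).1 (h ▸ Submodule.mem_top)
      rwa [one_mul] at this)
    exact ringKrullDim_nonneg_of_nontrivial
  | succ n ih =>
    rintro I x ⟨a, ha, hna, hd⟩ hx K hK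
    -- divide `x` by the largest possible power of `a`
    obtain ⟨x', hx', hK'⟩ : ∃ x', x' ∉ I ⊔ Ideal.span {a} ∧ ∀ y, y ∈ K ↔ y * x' ∈ I := by
      by_contra! hno
      have hdiv : ∀ j, ∃ x', x - a ^ j * x' ∈ I ∧ ∀ y, y ∈ K ↔ y * x' ∈ I := by
        intro j
        induction j with
        | zero => exact ⟨x, by simp, hK⟩
        | succ j ihj =>
          obtain ⟨x', h1, h2⟩ := ihj
          have h3 : x' ∈ I ⊔ Ideal.span {a} := by
            by_contra h
            obtain ⟨y, hy⟩ := hno x' h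
            have := h2 y
            tauto
          obtain ⟨x'', hx''⟩ := mem_sup_span.1 h3
          refine ⟨x'', ?_, fun y => (h2 y).trans ⟨fun h => hna _ ?_, fun h => ?_⟩⟩
          · have : x - a ^ (j + 1) * x'' = (x - a ^ j * x') + a ^ j * (x' - a * x'') := by ring
            rw [this]
            exact add_mem h1 (Ideal.mul_mem_left _ _ hx'')
          · have : a * (y * x'') = y * x' - y * (x' - a * x'') := by ring
            rw [this]
            exact sub_mem h (Ideal.mul_mem_left _ _ hx'')
          · have : y * x' = a * (y * x'') + y * (x' - a * x'') := by ring
            rw [this]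
            exact add_mem (Ideal.mul_mem_left _ _ h) (Ideal.mul_mem_left _ _ hx'')
      apply hx
      have hH : IsHausdorff (maximalIdeal C) (C ⧸ I) :=
        ⟨fun z hz => (Ideal.iInf_pow_smul_eq_bot_of_isLocalRing (M := C ⧸ I) (maximalIdeal C)
          (maximalIdeal.isMaximal C).ne_top).le (by simpa [SModEq.zero] using hz)⟩
      apply Ideal.Quotient.eq_zero_iff_mem.1
      refine hH.haus _ fun j => ?_
      obtain ⟨x', h1, -⟩ := hdiv j
      rw [SModEq.zero, Ideal.Quotient.eq.2 h1]
      exact Submodule.smul_mem_smul (N := (⊤ : Submodule C (C ⧸ I)))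
        (Ideal.pow_mem_pow ha j) (Submodule.mem_top (x := Ideal.Quotient.mk I x'))
    let K' : Ideal C := Submodule.comap (LinearMap.mulRight C x') (I ⊔ Ideal.span {a})
    have h1 := ih (K := K') hd hx' (fun y => Iff.rfl)
    have hKK' : K ≤ K' := fun y hy => Ideal.mem_sup_left ((hK' y).1 hy)
    have hnd : Ideal.Quotient.mk K a ∈ nonZeroDivisors (C ⧸ K) := by
      rw [mem_nonZeroDivisors_iff_right]
      intro z hz
      obtain ⟨z, rfl⟩ := Ideal.Quotient.mk_surjective z
      rw [← map_mul, Ideal.Quotient.eq_zero_iff_mem, hK'] at hz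
      rw [Ideal.Quotient.eq_zero_iff_mem, hK']
      exact hna _ (by convert hz using 1; ring)
    have h2 := ringKrullDim_succ_le_of_surjective (Ideal.Quotient.factor hKK')
      (Ideal.Quotient.factor_surjective hKK') hnd (by
        rw [Ideal.Quotient.factor_mk, Ideal.Quotient.eq_zero_iff_mem]
        exact Ideal.mem_sup_right (Ideal.mem_span_singleton'.2 ⟨x', mul_comm _ _⟩))
    refine le_trans ?_ h2
    push_cast
    gcongr


/-- Krull's height theorem for the maximal ideal of `C ⧸ K`. -/
lemma dim_le_of_prim {n : ℕ} (f : Fin n → C) {K : Ideal C} (h : Prim (K ⊔ Ideal.span (Set.range f))) :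
    ringKrullDim (C ⧸ K) ≤ n := by
  classical
  have hK : K ≤ maximalIdeal C := le_sup_left.trans h.1
  have : Nontrivial (C ⧸ K) := Ideal.Quotient.nontrivial_iff.2 fun h' =>
    (maximalIdeal.isMaximal C).ne_top (top_le_iff.1 (h' ▸ hK))
  have hloc : IsLocalRing (C ⧸ K) :=
    IsLocalRing.of_surjective' (Ideal.Quotient.mk K) Ideal.Quotient.mk_surjective
  rw [← IsLocalRing.maximalIdeal_height_eq_ringKrullDim]
  have hmem : maximalIdeal (C ⧸ K) ∈
      (Ideal.span ((Finset.univ.image fun i => Ideal.Quotient.mk K (f i) : Finset (C ⧸ K)) :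
        Set (C ⧸ K))).minimalPrimes := by
    have hmap : (maximalIdeal C).map (Ideal.Quotient.mk K) = maximalIdeal (C ⧸ K) :=
      IsLocalRing.map_maximalIdeal_of_surjective _ Ideal.Quotient.mk_surjective
    have hspan : Ideal.span ((Finset.univ.image fun i => Ideal.Quotient.mk K (f i) : Finset (C ⧸ K)) :
        Set (C ⧸ K)) = (K ⊔ Ideal.span (Set.range f)).map (Ideal.Quotient.mk K) := by
      rw [Ideal.map_sup, Ideal.map_quotient_self, bot_sup_eq, Ideal.map_span, Finset.coe_image,
        Finset.coe_univ, Set.image_univ, ← Set.range_comp]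
      rfl
    rw [hspan]
    obtain ⟨N, hN⟩ := h.2
    refine ⟨⟨(maximalIdeal.isMaximal _).isPrime, ?_⟩, ?_⟩
    · rw [← hmap]; exact Ideal.map_mono h.1
    · rintro q ⟨hq, hq2⟩ -
      rw [← hmap, Ideal.map_le_iff_le_comap]
      intro x hx
      refine hq.mem_of_pow_mem N (hq2 ?_)
      rw [← map_pow]
      exact Ideal.mem_map_of_mem _ (hN (Ideal.pow_mem_pow hx N))
  have h1 := Ideal.height_le_card_of_mem_minimalPrimes_span_finset hmem
  have h2 : (Finset.univ.image fun i => Ideal.Quotient.mk K (f i)).card ≤ n :=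
    Finset.card_image_le.trans (by simp)
  exact_mod_cast h1.trans (by exact_mod_cast h2)

/-- Over a Cohen–Macaulay local ring, systems of parameters are regular sequences. -/
lemma Dep.regular {n : ℕ} : ∀ {I : Ideal C} (f : Fin n → C), Dep n I →
    Prim (I ⊔ Ideal.span (Set.range f)) → ∀ i, Nz (f i) (I ⊔ Ideal.span (f '' {j | j < i})) := by
  induction n with
  | zero => intro I f _ _ i; exact i.elim0
  | succ n ih =>
    intro I f hd hP
    have hf0 : f 0 ∈ maximalIdeal C :=
      hP.1 (Ideal.mem_sup_right (Ideal.subset_span (Set.mem_range_self 0)))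
    have hsp : ∀ K : Ideal C, K ⊔ Ideal.span {f 0} ⊔ Ideal.span (Set.range fun i : Fin n => f i.succ) =
        K ⊔ Ideal.span (Set.range f) := by
      intro K
      rw [sup_assoc, ← Ideal.span_union]
      congr 2
      ext y
      simp only [Set.mem_union, Set.mem_singleton_iff, Set.mem_range, Fin.exists_fin_succ, eq_comm]
    have hnz : Nz (f 0) I := by
      intro x hx
      by_contra hxI
      let K : Ideal C := Submodule.comap (LinearMap.mulRight C x) I
      have h1 := Dep.dim (K := K) hd hxI (fun y => Iff.rfl)
      have hIK : I ≤ K := fun y hy => Ideal.mul_mem_right _ _ hy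
      have hf0K : f 0 ∈ K := hx
      have h2 := dim_le_of_prim (K := K) (fun i : Fin n => f i.succ) (by
        have h3 : K = K ⊔ Ideal.span {f 0} :=
          (sup_eq_left.2 ((Ideal.span_singleton_le_iff_mem _).2 hf0K)).symm
        rw [h3, hsp]
        refine ⟨sup_le (fun y hy => ?_) (le_sup_right.trans hP.1), ?_⟩
        · by_contra hu
          have hu : IsUnit y := by simpa using hu
          exact hxI ((Ideal.unit_mul_mem_iff_mem _ hu).1 hy)
        · obtain ⟨N, hN⟩ := hP.2
          exact ⟨N, hN.trans (sup_le_sup_right hIK _)⟩)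
      have h3 := h1.trans h2
      have h4 : n + 1 ≤ n := by exact_mod_cast h3
      omega
    obtain ⟨a, ha, hna, hda⟩ := hd
    have h1 := Dep.exchange ha hf0 hna hnz hda
    intro i
    refine Fin.cases ?_ (fun i => ?_) i
    · simpa using hnz
    · have h2 := ih (fun i : Fin n => f i.succ) h1 (by rw [hsp]; exact hP) i
      convert h2 using 1
      rw [sup_assoc, ← Ideal.span_union]
      congr 2
      ext y
      simp only [Set.mem_union, Set.mem_singleton_iff, Set.mem_image, Set.mem_ofPred_eq,
        Fin.exists_fin_succ, Fin.succ_lt_succ_iff, Fin.succ_pos, true_and, eq_comm]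

end
end UBS

namespace UBS
open IsLocalRing (maximalIdeal)

/-- The relations of a regular sequence `f` modulo `u` lift to the elements `u * W i - f i`. -/
lemma koszul_lift {P : Type*} [CommRing P] (u : P) : ∀ (n : ℕ) (W f : Fin n → P),
    (∀ i, Nz (f i) (Ideal.span {u} ⊔ Ideal.span (f '' {j | j < i}))) →
    ∀ H : Fin n → P, ∑ i, f i * H i ∈ Ideal.span {u} →
    ∃ y ∈ Ideal.span (Set.range fun i => u * W i - f i), ∑ i, (u * W i - f i) * H i = u * y := by
  intro n
  induction n with
  | zero => intro W f _ H _; exact ⟨0, zero_mem _, by simp⟩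
  | succ n ih =>
    intro W f hf H hH
    rw [Fin.sum_univ_castSucc] at hH
    obtain ⟨b, h, hb⟩ : ∃ (b : Fin n → P) (h : P),
        H (Fin.last n) = ∑ j, b j * f j.castSucc + u * h := by
      have h1 : f (Fin.last n) * H (Fin.last n) ∈
          Ideal.span {u} ⊔ Ideal.span (f '' {j | j < Fin.last n}) := by
        rw [← add_sub_cancel_left (∑ i : Fin n, f i.castSucc * H i.castSucc)
          (f (Fin.last n) * H (Fin.last n))]
        refine sub_mem (Ideal.mem_sup_left hH) (Ideal.mem_sup_right (sum_mem fun i _ => ?_))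
        exact Ideal.mul_mem_right _ _ (Ideal.subset_span ⟨_, Fin.castSucc_lt_last i, rfl⟩)
      have h2 := hf _ _ h1
      obtain ⟨y, hy, z, hz, hyz⟩ := Submodule.mem_sup.1 h2
      obtain ⟨h, rfl⟩ := Ideal.mem_span_singleton.1 hy
      have h3 : f '' {j | j < Fin.last n} = Set.range fun j : Fin n => f j.castSucc := by
        ext y
        constructor
        · rintro ⟨j, hj, rfl⟩
          exact ⟨j.castPred (ne_of_lt hj), by simp⟩
        · rintro ⟨j, rfl⟩
          exact ⟨_, Fin.castSucc_lt_last j, rfl⟩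
      rw [h3] at hz
      obtain ⟨b, rfl⟩ := (Submodule.mem_span_range_iff_exists_fun P).1 hz
      exact ⟨b, h, by rw [← hyz, add_comm]; rfl⟩
    have h1 : ∀ i : Fin n, Nz (f i.castSucc)
        (Ideal.span {u} ⊔ Ideal.span ((fun j : Fin n => f j.castSucc) '' {j | j < i})) := by
      intro i
      convert hf i.castSucc using 3
      ext y
      constructor
      · rintro ⟨j, hj, rfl⟩
        exact ⟨j.castSucc, Fin.castSucc_lt_castSucc_iff.2 hj, rfl⟩
      · rintro ⟨j, hj, rfl⟩
        have hj' : j < i.castSucc := hj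
        exact ⟨j.castPred (ne_of_lt (hj'.trans (Fin.castSucc_lt_last i))),
          by rw [Set.mem_ofPred_eq, ← Fin.castSucc_lt_castSucc_iff]; simpa using hj', by simp⟩
    obtain ⟨y, hy, hy2⟩ := ih (fun j => W j.castSucc) (fun j => f j.castSucc) h1
      (fun i => H i.castSucc + b i * f (Fin.last n)) (by
        have : ∑ i : Fin n, f i.castSucc * (H i.castSucc + b i * f (Fin.last n)) =
            (∑ i : Fin n, f i.castSucc * H i.castSucc + f (Fin.last n) * H (Fin.last n)) -
              u * (h * f (Fin.last n)) := by
          rw [hb]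
          simp only [mul_add, Finset.sum_add_distrib, Finset.mul_sum]
          rw [show ∑ i : Fin n, f i.castSucc * (b i * f (Fin.last n)) =
            ∑ i : Fin n, f (Fin.last n) * (b i * f i.castSucc) from
              Finset.sum_congr rfl fun i _ => by ring]
          ring
        rw [this]
        exact sub_mem hH (Ideal.mul_mem_right _ _ (Ideal.mem_span_singleton_self u)))
    have hv : ∀ i, u * W i - f i ∈ Ideal.span (Set.range fun i => u * W i - f i) := fun i =>
      Ideal.subset_span ⟨i, rfl⟩
    refine ⟨y + ∑ j : Fin n, b j * (W j.castSucc * (u * W (Fin.last n) - f (Fin.last n)) -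
      W (Fin.last n) * (u * W j.castSucc - f j.castSucc)) +
        (u * W (Fin.last n) - f (Fin.last n)) * h, ?_, ?_⟩
    · refine add_mem (add_mem ?_ (sum_mem fun j _ => Ideal.mul_mem_left _ _ (sub_mem
        (Ideal.mul_mem_left _ _ (hv _)) (Ideal.mul_mem_left _ _ (hv _)))))
        (Ideal.mul_mem_right _ _ (hv _))
      refine Ideal.span_mono ?_ hy
      rintro _ ⟨j, rfl⟩; exact ⟨j.castSucc, rfl⟩
    · rw [mul_add, mul_add, ← hy2, Fin.sum_univ_castSucc, hb]
      simp only [mul_add, Finset.sum_add_distrib, Finset.mul_sum]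
      rw [add_assoc, add_assoc, add_right_inj, ← add_assoc]
      congr 1
      · rw [← Finset.sum_add_distrib]
        refine Finset.sum_congr rfl fun i _ => ?_
        ring
      · ring

section
variable {C : Type*} [CommRing C]

lemma mem_u_sup {ι : Type*} {I : Ideal C} {F : MvPolynomial (Option ι) C} :
    F ∈ Ideal.span {MvPolynomial.X none} ⊔ I.map MvPolynomial.C ↔
      ∀ e : Option ι →₀ ℕ, e none = 0 → MvPolynomial.coeff e F ∈ I := by
  classical
  constructor
  · intro h e he
    obtain ⟨y, hy, z, hz, rfl⟩ := Submodule.mem_sup.1 h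
    obtain ⟨y, rfl⟩ := Ideal.mem_span_singleton.1 hy
    rw [MvPolynomial.coeff_add, MvPolynomial.coeff_X_mul', if_neg (by simpa using he), zero_add]
    exact MvPolynomial.mem_map_C_iff.1 hz e
  · intro h
    rw [F.as_sum]
    refine sum_mem fun e _ => ?_
    by_cases he : e none = 0
    · refine Ideal.mem_sup_right (MvPolynomial.mem_map_C_iff.2 fun e' => ?_)
      rw [MvPolynomial.coeff_monomial]
      split_ifs with h'
      · exact h e he
      · exact zero_mem _
    · refine Ideal.mem_sup_left (Ideal.mem_span_singleton.2 ?_)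
      exact MvPolynomial.X_dvd_monomial.2 (Or.inr he)

/-- Modulo the obvious relations, `X none ^ N * F` is a polynomial in `X none` alone, because
`X none * X (some i)` is congruent to a constant. -/
lemma eps_ker_torsion {ι : Type*} (f : ι → C) (F : MvPolynomial (Option ι) C) :
    ∃ (N : ℕ) (p : Polynomial C), MvPolynomial.X none ^ N * F -
      Polynomial.aeval (MvPolynomial.X none) p ∈ relI f := by
  induction F using MvPolynomial.induction_on with
  | C a => exact ⟨0, Polynomial.C a, by simp [MvPolynomial.algebraMap_eq]⟩
  | add F G hF hG =>
    obtain ⟨N, p, hp⟩ := hF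
    obtain ⟨M, q, hq⟩ := hG
    refine ⟨N + M, Polynomial.X ^ M * p + Polynomial.X ^ N * q, ?_⟩
    convert add_mem (Ideal.mul_mem_left _ (MvPolynomial.X none ^ M) hp)
      (Ideal.mul_mem_left _ (MvPolynomial.X none ^ N) hq) using 1
    simp only [map_add, map_mul, map_pow, Polynomial.aeval_X]
    ring
  | mul_X F o hF =>
    obtain ⟨N, p, hp⟩ := hF
    cases o with
    | none =>
      refine ⟨N, Polynomial.X * p, ?_⟩
      convert Ideal.mul_mem_left _ (MvPolynomial.X none) hp using 1
      simp only [map_mul, Polynomial.aeval_X]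
      ring
    | some i =>
      refine ⟨N + 1, Polynomial.C (f i) * p, ?_⟩
      have h1 : MvPolynomial.X none * MvPolynomial.X (some i) - MvPolynomial.C (f i) ∈ relI f :=
        Ideal.subset_span ⟨i, rfl⟩
      convert add_mem (Ideal.mul_mem_left _ (MvPolynomial.C (f i)) hp)
        (Ideal.mul_mem_left _ (MvPolynomial.X none ^ N * F) h1) using 1
      simp only [map_mul, Polynomial.aeval_C, MvPolynomial.algebraMap_eq]
      ring

/-- The extended Rees algebra of a regular sequence has only the obvious relations. -/
theorem TB_of_regular {n : ℕ} (f : Fin n → C)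
    (hf : ∀ i, Nz (f i) (Ideal.span (f '' {j | j < i}))) : TB ⊥ f 1 0 := by
  have htors : ∀ F : MvPolynomial (Option (Fin n)) C, MvPolynomial.X none * F ∈ relI f →
      F ∈ relI f := by
    intro F hF
    obtain ⟨H, hH⟩ := (Submodule.mem_span_range_iff_exists_fun _).1 hF
    simp only [smul_eq_mul] at hH
    have hreg : ∀ i, Nz (MvPolynomial.C (σ := Option (Fin n)) (f i)) (Ideal.span {MvPolynomial.X none} ⊔
        Ideal.span ((fun i => MvPolynomial.C (f i)) '' {j | j < i})) := by
      intro i x hx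
      have h1 : Ideal.span ((fun i => MvPolynomial.C (σ := Option (Fin n)) (f i)) '' {j | j < i}) =
          (Ideal.span (f '' {j | j < i})).map MvPolynomial.C := by
        rw [Ideal.map_span, Set.image_image]
      rw [h1, mem_u_sup] at hx ⊢
      intro e he
      have := hx e he
      rw [MvPolynomial.coeff_C_mul] at this
      exact hf i _ this
    obtain ⟨y, hy, hy2⟩ := koszul_lift (MvPolynomial.X none) n
      (fun i => MvPolynomial.X (some i)) (fun i => MvPolynomial.C (f i)) hreg H (by
        have : ∑ i, MvPolynomial.C (f i) * H i = MvPolynomial.X none *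
            (∑ i, MvPolynomial.X (some i) * H i - F) := by
          rw [mul_sub, ← hH, Finset.mul_sum, ← Finset.sum_sub_distrib]
          refine Finset.sum_congr rfl fun i _ => ?_
          ring
        rw [this]
        exact Ideal.mul_mem_right _ _ (Ideal.mem_span_singleton_self _))
    have h2 : MvPolynomial.X none * F = MvPolynomial.X none * y := by
      rw [← hy2, ← hH]
      exact Finset.sum_congr rfl fun i _ => mul_comm _ _
    have h3 : F = y := by
      classical
      ext e
      have := congrArg (MvPolynomial.coeff (Finsupp.single none 1 + e)) h2
      rwa [MvPolynomial.coeff_X_mul, MvPolynomial.coeff_X_mul] at this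
    rw [h3]; exact hy
  intro F hF
  rw [Ideal.map_bot, sup_bot_eq, map_one, one_mul, pow_zero, one_mul]
  obtain ⟨N, p, hp⟩ := eps_ker_torsion f F
  have h0 : eps f F = 0 := by
    ext n
    simpa using hF n
  have h1 := eps_rel f hp
  rw [map_sub, map_mul, h0, mul_zero, zero_sub, neg_eq_zero, ← Polynomial.aeval_algHom_apply,
    eps_u] at h1
  have h2 : p = 0 := by
    have : Polynomial.aeval (LaurentPolynomial.T 1) p = Polynomial.toLaurentAlg p := by
      conv_rhs => rw [← Polynomial.aeval_X_left_apply p, ← Polynomial.aeval_algHom_apply]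
      simp [Polynomial.toLaurentAlg_apply]
    rw [this, Polynomial.toLaurentAlg_apply, Polynomial.toLaurent_eq_zero] at h1
    exact h1
  rw [h2, map_zero, sub_zero] at hp
  clear h1 h0
  induction N with
  | zero => simpa using hp
  | succ N ih =>
    refine ih (htors _ ?_)
    rwa [← mul_assoc, ← pow_succ']

end
end UBS

namespace UBS
open IsLocalRing (maximalIdeal)

section
variable {A C : Type*} [CommRing A] [CommRing C] [Algebra A C]

lemma mem_map_iff_repr {ι : Type*} (b : Module.Basis ι A C) (I : Ideal A) (x : C) :
    x ∈ I.map (algebraMap A C) ↔ ∀ i, b.repr x i ∈ I := by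
  constructor
  · intro hx i
    have h1 : x ∈ I • (⊤ : Submodule A C) := by
      rw [Ideal.smul_top_eq_map]; exact hx
    refine Submodule.smul_induction_on (p := fun x => b.repr x i ∈ I) h1 ?_ ?_
    · intro r hr y _
      rw [map_smul, Finsupp.smul_apply, smul_eq_mul]
      exact Ideal.mul_mem_right _ _ hr
    · intro y z hy hz
      rw [map_add, Finsupp.add_apply]
      exact add_mem hy hz
  · intro h
    rw [← b.linearCombination_repr x, Finsupp.linearCombination_apply, Finsupp.sum]
    refine sum_mem fun i _ => ?_
    rw [Algebra.smul_def]
    exact Ideal.mul_mem_right _ _ (Ideal.mem_map_of_mem _ (h i))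

/-- Free base change preserves nonzerodivisors modulo an ideal. -/
lemma Nz.map [Module.Free A C] {a : A} {I : Ideal A} (h : Nz a I) :
    Nz (algebraMap A C a) (I.map (algebraMap A C)) := by
  intro x hx
  rw [mem_map_iff_repr (Module.Free.chooseBasis A C)] at hx ⊢
  intro i
  refine h _ ?_
  have := hx i
  rwa [← Algebra.smul_def, map_smul, Finsupp.smul_apply] at this

lemma Dep.map [IsLocalRing A] [IsLocalRing C] [Module.Free A C]
    (hloc : (maximalIdeal A).map (algebraMap A C) ≤ maximalIdeal C) {n : ℕ} : ∀ {I : Ideal A},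
    Dep n I → Dep n (I.map (algebraMap A C)) := by
  induction n with
  | zero => intros; trivial
  | succ n ih =>
    rintro I ⟨a, ha, hn, hd⟩
    refine ⟨algebraMap A C a, hloc (Ideal.mem_map_of_mem _ ha), hn.map, ?_⟩
    have := ih hd
    rwa [Ideal.map_sup, Ideal.map_span, Set.image_singleton] at this

end

/-- The element `ϖ` and the variables form a regular sequence in the power series ring. -/
lemma dep_ps {Λ : Type*} [CommRing Λ] [IsDomain Λ] [IsLocalRing Λ] [IsNoetherianRing Λ] {ϖ : Λ}
    (hϖ : ϖ ∈ maximalIdeal Λ) (h0 : ϖ ≠ 0) (d : ℕ) :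
    Dep (d + 1) (⊥ : Ideal (MvPowerSeries (Fin d) Λ)) := by
  classical
  have hmax := ps_maximalIdeal (σ := Fin d) (Λ := Λ)
  have key : ∀ (n : ℕ) (s : Finset (Fin d)), s.card + n = d →
      Dep (n + 1) (Ideal.span (MvPowerSeries.X (R := Λ) '' (s : Set (Fin d)))) := by
    intro n
    induction n with
    | zero =>
      intro s hs
      obtain rfl : s = Finset.univ := Finset.card_eq_iff_eq_univ s |>.1 (by simpa using hs)
      refine ⟨MvPowerSeries.C ϖ, ?_, fun x hx => ?_, trivial⟩
      · rw [← hmax, psI_eq]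
        exact Ideal.mem_sup_left (Ideal.mem_map_of_mem _ hϖ)
      · rw [mem_span_X] at hx ⊢
        intro e he
        have := hx e he
        rw [MvPowerSeries.coeff_C_mul] at this
        exact (mul_eq_zero.1 this).resolve_left h0
    | succ n ih =>
      intro s hs
      obtain ⟨i, hi⟩ : ∃ i, i ∉ s := by
        by_contra! h
        have : s = Finset.univ := Finset.eq_univ_iff_forall.2 h
        subst this
        simp at hs
      refine ⟨MvPowerSeries.X i, ?_, fun x hx => ?_, ?_⟩
      · rw [← hmax, psI_eq]
        exact Ideal.mem_sup_right (Ideal.subset_span ⟨i, rfl⟩)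
      · rw [mem_span_X] at hx ⊢
        intro e he
        have := hx (Finsupp.single i 1 + e) fun j hj => by
          rw [Finsupp.add_apply, he j hj, Finsupp.single_apply, if_neg (by rintro rfl; exact hi hj)]
        rwa [MvPowerSeries.X, MvPowerSeries.coeff_add_monomial_mul, one_mul] at this
      · have := ih (insert i s) (by rw [Finset.card_insert_of_notMem hi]; omega)
        rwa [Finset.coe_insert, Set.image_insert_eq, Ideal.span_insert, sup_comm] at this
  simpa using key d ∅ (by simp)

end UBS

/-! ### Bounds for complete intersections and their quotients -/

namespace UBS
open IsLocalRing (maximalIdeal)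
universe v

/-- Every primary ideal of `C` has a reduction generated by a regular sequence of length `r`, and
`δ` multiplies the integral closure of its `n`-th power into its `(n - r)`-th power. -/
def Pkg (C : Type*) [CommRing C] [IsLocalRing C] (δ : C) (r : ℕ) : Prop :=
  ∀ J : Ideal C, Prim J → ∃ f : Fin r → C, (∀ i, f i ∈ J) ∧ Prim (Ideal.span (Set.range f)) ∧
    (∀ z ∈ J, IsIntegralOverIdeal (Ideal.span (Set.range f)) z) ∧ TB ⊥ f 1 0 ∧
    ∀ n y, IsIntegralOverIdeal (Ideal.span (Set.range f) ^ n) y →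
      δ * y ∈ Ideal.span (Set.range f) ^ (n - r)

lemma CR.root_pow_mem {A : Type v} [CommRing A] {t : ℕ} {g : Fin t → Polynomial A} {I : Ideal A}
    (hg : ∀ i, (g i).Monic) (hgm : ∀ i k, k < (g i).natDegree → (g i).coeff k ∈ I) (i : Fin t) :
    CR.root g i ^ (g i).natDegree ∈ I.map (algebraMap A (CR g)) := by
  have h := CR.eval_root (g := g) i
  rw [Polynomial.eval₂_eq_sum_range, Finset.sum_range_succ, (hg i).coeff_natDegree, map_one,
    one_mul] at h
  rw [eq_neg_of_add_eq_zero_right h]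
  refine neg_mem (sum_mem fun k hk => Ideal.mul_mem_right _ _ (Ideal.mem_map_of_mem _ ?_))
  exact hgm i k (Finset.mem_range.1 hk)

/-- The complete intersection `CR g` over a power series ring carries the bounds of `Pkg`, with
multiplier the different `∏ g i'(Θ i)` and shift one more than the number of variables. -/
theorem pkg_CR {Λ : Type v} [CommRing Λ] [IsDomain Λ] [UniqueFactorizationMonoid Λ]
    [IsNoetherianRing Λ] [IsLocalRing Λ] {ϖ : Λ} (hϖ : maximalIdeal Λ = Ideal.span {ϖ})
    (h0 : ϖ ≠ 0) [Infinite (IsLocalRing.ResidueField Λ)] {d t : ℕ}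
    (g : Fin t → Polynomial (MvPowerSeries (Fin d) Λ))
    (hg : ∀ i, (g i).Monic) (hg0 : ∀ i, (g i).natDegree ≠ 0)
    (hgm : ∀ i k, k < (g i).natDegree → (g i).coeff k ∈ maximalIdeal (MvPowerSeries (Fin d) Λ)) :
    ∃ _ : IsLocalRing (CR g), IsNoetherianRing (CR g) ∧
      maximalIdeal (CR g) = CR.mx g (maximalIdeal _) ∧
      Pkg (CR g) (∏ i, (g i).derivative.eval₂ (algebraMap _ (CR g)) (CR.root g i)) (d + 1) := by
  obtain ⟨hloc, hmax⟩ := CR.isLocalRing hg hg0 hgm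
  obtain ⟨hfree, hfin⟩ := CR.free_finite hg
  have hN : IsNoetherianRing (CR g) := IsNoetherianRing.of_finite (MvPowerSeries (Fin d) Λ) _
  refine ⟨hloc, hN, hmax, ?_⟩
  have hmA : maximalIdeal (MvPowerSeries (Fin d) Λ) =
      Ideal.span {MvPowerSeries.C ϖ} ⊔ Ideal.span (Set.range MvPowerSeries.X) := by
    rw [← ps_maximalIdeal, psI_eq, hϖ, Ideal.map_span, Set.image_singleton]
  have hAC : (maximalIdeal (MvPowerSeries (Fin d) Λ)).map (algebraMap _ (CR g)) ≤
      maximalIdeal (CR g) := by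
    rw [hmax, CR.mx]; exact le_sup_left
  -- parameters of `CR g`
  let x : Fin (d + 1) → CR g := fun i => algebraMap (MvPowerSeries (Fin d) Λ) (CR g)
    ((Fin.cons (MvPowerSeries.C ϖ) (fun i => MvPowerSeries.X i) :
      Fin (d + 1) → MvPowerSeries (Fin d) Λ) i)
  have hx : Ideal.span (Set.range x) =
      (maximalIdeal (MvPowerSeries (Fin d) Λ)).map (algebraMap _ (CR g)) := by
    rw [hmA, ← Ideal.span_union, Ideal.map_span]
    congr 1
    have : Set.range x = algebraMap (MvPowerSeries (Fin d) Λ) (CR g) ''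
      Set.range (Fin.cons (MvPowerSeries.C ϖ) (fun i => MvPowerSeries.X i) :
        Fin (d + 1) → MvPowerSeries (Fin d) Λ) := by
      rw [← Set.range_comp]; rfl
    rw [this, Fin.range_cons, Set.insert_eq]
  have hxP : Prim (Ideal.span (Set.range x)) := by
    rw [hx]
    refine ⟨hAC, Ideal.exists_pow_le_of_le_radical_of_fg ?_ (IsNoetherian.noetherian _)⟩
    rw [hmax, CR.mx, sup_le_iff, Ideal.span_le]
    refine ⟨Ideal.le_radical, ?_⟩
    rintro _ ⟨i, rfl⟩
    exact ⟨_, CR.root_pow_mem hg hgm i⟩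
  have hinf : Infinite (IsLocalRing.ResidueField (CR g)) := by
    let φ : Λ →+* CR g := (algebraMap (MvPowerSeries (Fin d) Λ) (CR g)).comp MvPowerSeries.C
    have hφ : IsLocalHom φ := by
      refine ⟨fun a ha => ?_⟩
      by_contra h
      have h1 : φ a ∈ maximalIdeal (CR g) := hAC (Ideal.mem_map_of_mem _ (by
        rw [← ps_maximalIdeal, psI_eq]
        exact Ideal.mem_sup_left (Ideal.mem_map_of_mem _ h)))
      exact h1 ha
    exact Infinite.of_injective (IsLocalRing.ResidueField.map φ) (RingHom.injective _)
  intro J hJ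
  obtain ⟨f, hfJ, hfP, hfi⟩ := reduction x hxP J hJ
  refine ⟨f, hfJ, hfP, hfi, ?_, ?_⟩
  · have h1 : Dep (d + 1) (⊥ : Ideal (CR g)) := by
      have := Dep.map (C := CR g) hAC (dep_ps (Λ := Λ) (ϖ := ϖ) (by
        rw [hϖ]; exact Ideal.mem_span_singleton_self _) h0 d)
      rwa [Ideal.map_bot] at this
    refine TB_of_regular f fun i => ?_
    have := Dep.regular f h1 (by rwa [bot_sup_eq]) i
    rwa [bot_sup_eq] at this
  · intro n y hy
    obtain ⟨e, he⟩ := hfP.2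
    let f' : Option (Fin d) → CR g := f ∘ (finSuccEquiv d).symm
    have hf' : Set.range f' = Set.range f := (finSuccEquiv d).symm.surjective.range_comp f
    have hpsi : (polyI (Fin d) (maximalIdeal Λ)).map (psι (Fin d) Λ) =
        maximalIdeal (MvPowerSeries (Fin d) Λ) := by
      rw [← ps_maximalIdeal]
      rfl
    have hX : ∀ j : Fin d, MvPolynomial.X j ∈ polyI (Fin d) (maximalIdeal Λ) := by
      intro j
      exact Ideal.mem_sup_right (Ideal.subset_span (Set.mem_range_self j))
    have := x4 (polyI (Fin d) (maximalIdeal Λ)) hX (psι (Fin d) Λ) (approxIso_ps _) hpsi g hg hg0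
      hgm f' e (by rw [← hmax, hf']; exact he) n y (by rwa [hf'])
    rwa [hf'] at this

end UBS

namespace UBS
open IsLocalRing (maximalIdeal)

section
variable {D : Type*} [CommRing D] {ι : Type*}

open MvPolynomial (X)

lemma TB_bot {g : ι → D} {c : D} {k : ℕ} : TB ⊥ g c k ↔
    ∀ F, eps g F = 0 → MvPolynomial.C c * X none ^ k * F ∈ relI g := by
  unfold TB
  rw [Ideal.map_bot, sup_bot_eq]
  refine forall_congr' fun F => ⟨fun h h0 => h fun n => ?_, fun h h0 => h ?_⟩
  · rw [h0]; rfl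
  · ext n; exact h0 n

lemma u_mul_W_sub (g : ι → D) (j : ι) :
    X none * X (some j) - MvPolynomial.C (g j) ∈ relI g :=
  Ideal.subset_span (Set.mem_range_self j)

/-- An element of the ideal equals, modulo the obvious relations, the variable `X none` times a linear
form in the remaining ones. -/
lemma exists_form_one (g : ι → D) {y : D} (hy : y ∈ Ideal.span (Set.range g)) :
    ∃ w, X none * w - MvPolynomial.C y ∈ relI g := by
  induction hy using Submodule.span_induction with
  | mem x hx => obtain ⟨j, rfl⟩ := hx; exact ⟨_, u_mul_W_sub g j⟩
  | zero => exact ⟨0, by simp⟩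
  | add x y _ _ hx hy =>
    obtain ⟨a, ha⟩ := hx
    obtain ⟨b, hb⟩ := hy
    refine ⟨a + b, ?_⟩
    convert add_mem ha hb using 1
    rw [map_add]; ring
  | smul r x _ hx =>
    obtain ⟨a, ha⟩ := hx
    refine ⟨MvPolynomial.C r * a, ?_⟩
    convert Ideal.mul_mem_left _ (MvPolynomial.C r) ha using 1
    rw [smul_eq_mul, map_mul]; ring

/-- A bound on the relations of the extended Rees algebra of a reduction gives one for the
ideal itself. -/
theorem TB_excess {r : ℕ} {f : Fin r → D} {g : ι → D} {c1 c : D} {k1 k : ℕ}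
    (hfg : ∀ i, f i ∈ Ideal.span (Set.range g)) (hf : TB ⊥ f c1 k1)
    (hc : ∀ n, ∀ y ∈ Ideal.span (Set.range g) ^ n, c * y ∈ Ideal.span (Set.range f) ^ (n - k)) :
    TB ⊥ g (c1 * c) (k1 + k + 1) := by
  rw [TB_bot] at hf ⊢
  choose w hw using fun i => exists_form_one g (hfg i)
  let φ : MvPolynomial (Option (Fin r)) D →ₐ[D] MvPolynomial (Option ι) D :=
    MvPolynomial.aeval (fun o => o.elim (X none) w)
  have hφu : φ (X none) = X none := MvPolynomial.aeval_X _ _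
  have hφW (i) : φ (X (some i)) = w i := MvPolynomial.aeval_X _ _
  have hφC (a) : φ (MvPolynomial.C a) = MvPolynomial.C a := MvPolynomial.aeval_C _ _
  have hφrel : ∀ F ∈ relI f, φ F ∈ relI g := by
    have : relI f ≤ (relI g).comap φ := by
      conv_lhs => rw [relI]
      rw [Ideal.span_le]
      rintro _ ⟨i, rfl⟩
      rw [SetLike.mem_coe, Ideal.mem_comap, map_sub, map_mul, hφu, hφW, hφC]
      exact hw i
    exact this
  set E : MvPolynomial (Option ι) D := MvPolynomial.C c1 * X none ^ k1 with hE
  have hker : ∀ x, eps f x = 0 → E * φ x ∈ relI g := by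
    intro x hx
    have := hφrel _ (hf x hx)
    rwa [map_mul, map_mul, map_pow, hφu, hφC] at this
  let W : List ι → MvPolynomial (Option ι) D := fun l => (l.map fun j => X (some j)).prod
  let R : MvPolynomial (Option ι) D → Prop := fun F => ∃ h,
    eps f h = LaurentPolynomial.C c * LaurentPolynomial.T k * eps g F ∧
      X none * E * (MvPolynomial.C c * X none ^ k * F - φ h) ∈ relI g
  have hWeps : ∀ l : List ι, ∃ y ∈ Ideal.span (Set.range g) ^ l.length,
      eps g (W l) = LaurentPolynomial.C y * LaurentPolynomial.T (-(l.length : ℤ)) := by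
    intro l
    induction l with
    | nil => exact ⟨1, by simp, by simp [W]⟩
    | cons j l ih =>
      obtain ⟨y, hy, h⟩ := ih
      refine ⟨g j * y, ?_, ?_⟩
      · rw [List.length_cons, pow_succ']
        exact Ideal.mul_mem_mul (Ideal.subset_span (Set.mem_range_self j)) hy
      · have : W (j :: l) = X (some j) * W l := by simp [W]
        rw [this, map_mul, eps_W, h, map_mul, List.length_cons]
        have e : (-((l.length + 1 : ℕ) : ℤ)) = -1 + -(l.length : ℤ) := by push_cast; ring
        rw [e, LaurentPolynomial.T_add]; ring
  have hWlift : ∀ l : List ι, ∃ h,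
      eps f h = LaurentPolynomial.C c * LaurentPolynomial.T k * eps g (W l) := by
    intro l
    obtain ⟨y, hy, h⟩ := hWeps l
    obtain ⟨F, hF⟩ := exists_eps_of_mem_pow f _ (hc _ y hy)
    refine ⟨X none ^ (k - l.length) * F, ?_⟩
    have e : LaurentPolynomial.T (R := D) ((k - l.length : ℕ) : ℤ) *
        LaurentPolynomial.T (-((l.length - k : ℕ) : ℤ)) =
        LaurentPolynomial.T k * LaurentPolynomial.T (-(l.length : ℤ)) := by
      rw [← LaurentPolynomial.T_add, ← LaurentPolynomial.T_add]; congr 1; omega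
    rw [map_mul, map_pow, eps_u, LaurentPolynomial.T_pow, hF, h, map_mul, mul_one]
    linear_combination (LaurentPolynomial.C c * LaurentPolynomial.C y) * e
  have hRW : ∀ l, R (W l) := by
    intro l
    induction l with
    | nil =>
      refine ⟨MvPolynomial.C c * X none ^ k, ?_, ?_⟩
      · simp [W, eps_u, LaurentPolynomial.T_pow]
      · rw [map_mul, map_pow, hφu, hφC]
        simp [W]
    | cons j l ih =>
      obtain ⟨h, h1, h2⟩ := ih
      obtain ⟨H, hH⟩ := hWlift (j :: l)
      refine ⟨H, hH, ?_⟩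
      have e : W (j :: l) = X (some j) * W l := by simp [W]
      have h3 := hker (MvPolynomial.C (g j) * h - X none * H) (by
        have hT : (LaurentPolynomial.T 1 * LaurentPolynomial.T (-1) : LaurentPolynomial D) = 1 := by
          rw [← LaurentPolynomial.T_add]; simp
        rw [map_sub, map_mul, map_mul, eps_C, eps_u, h1, hH, e, map_mul, eps_W]
        linear_combination (-LaurentPolynomial.C c * LaurentPolynomial.T k * LaurentPolynomial.C (g j) *
          eps g (W l)) * hT)
      rw [map_sub, map_mul, map_mul, hφC, hφu] at h3
      rw [e]
      have h4 := Ideal.mul_mem_left (relI g) (E * (MvPolynomial.C c * X none ^ k * W l))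
        (u_mul_W_sub g j)
      have h5 := Ideal.mul_mem_left (relI g) (E * (MvPolynomial.C c * X none ^ k * W l - φ h))
        (u_mul_W_sub g j)
      have h6 := Ideal.mul_mem_left (relI g) (X (some j)) h2
      convert add_mem (add_mem h3 h4) (sub_mem h6 h5) using 1
      ring
  have hR : ∀ F l, R (F * W l) := by
    intro F
    induction F using MvPolynomial.induction_on with
    | C a =>
      intro l
      obtain ⟨h, h1, h2⟩ := hRW l
      refine ⟨MvPolynomial.C a * h, ?_, ?_⟩
      · rw [map_mul, map_mul, eps_C, eps_C, h1]; ring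
      · rw [map_mul, hφC]
        convert Ideal.mul_mem_left _ (MvPolynomial.C a) h2 using 1
        ring
    | add p q hp hq =>
      intro l
      obtain ⟨h, h1, h2⟩ := hp l
      obtain ⟨h', h1', h2'⟩ := hq l
      refine ⟨h + h', ?_, ?_⟩
      · rw [map_add, add_mul, map_add, h1, h1', mul_add]
      · rw [map_add]
        convert add_mem h2 h2' using 1
        ring
    | mul_X p o hp =>
      intro l
      cases o with
      | none =>
        obtain ⟨h, h1, h2⟩ := hp l
        refine ⟨X none * h, ?_, ?_⟩
        · rw [map_mul, h1, eps_u, mul_right_comm p, map_mul, map_mul, map_mul, eps_u]; ring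
        · rw [map_mul, hφu]
          convert Ideal.mul_mem_left _ (X none) h2 using 1
          ring
      | some j =>
        have := hp (j :: l)
        have e : W (j :: l) = X (some j) * W l := by simp [W]
        rwa [e, ← mul_assoc] at this
  intro F hF
  obtain ⟨h, h1, h2⟩ := hR F []
  have e : W [] = 1 := by simp [W]
  rw [e, mul_one] at h1 h2
  rw [hF, mul_zero] at h1
  have h3 := Ideal.mul_mem_left (relI g) (X none) (hker h h1)
  convert add_mem h2 h3 using 1
  rw [hE, map_mul]; ring

lemma TB.mul {I : Ideal D} {g : ι → D} {c : D} {k : ℕ} (h : TB I g c k) (a : D) :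
    TB I g (a * c) k := by
  intro F hF
  have := Ideal.mul_mem_left _ (MvPolynomial.C a) (h F hF)
  convert this using 1
  rw [map_mul]; ring

/-- Relations descend along `π` after multiplication by an annihilator of the kernel. -/
lemma TB.descend {C : Type*} [CommRing C] {π : C →+* D} (hπ : Function.Surjective π) {κ : C}
    (hκ : ∀ x, π x = 0 → κ * x = 0) {f : ι → C} {c : C} {k : ℕ} (h : TB ⊥ f c k) :
    TB ⊥ (fun i => π (f i)) (π (κ * c)) k := by
  rw [TB_bot] at h ⊢
  intro F hF
  obtain ⟨G, rfl⟩ := MvPolynomial.map_surjective π hπ F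
  have hcomp : ∀ G (n : ℤ), (eps (fun i => π (f i)) (MvPolynomial.map π G)).coeff n =
      π ((eps f G).coeff n) := by
    intro G
    induction G using MvPolynomial.induction_on with
    | C a =>
      intro n
      rw [MvPolynomial.map_C, eps_C, eps_C, LaurentPolynomial.C_apply, LaurentPolynomial.C_apply]
      split_ifs <;> simp
    | add p q hp hq =>
      intro n
      rw [map_add, map_add, map_add, AddMonoidAlgebra.coeff_add, AddMonoidAlgebra.coeff_add,
        Finsupp.add_apply, Finsupp.add_apply, hp, hq, map_add]
    | mul_X p o hp =>
      intro n
      rw [map_mul, MvPolynomial.map_X, map_mul, map_mul]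
      cases o with
      | none => rw [eps_u, eps_u, coeff_mul_T, coeff_mul_T, hp]
      | some i =>
        rw [eps_W, eps_W, mul_left_comm, coeff_C_mul, coeff_mul_T, mul_left_comm, coeff_C_mul,
          coeff_mul_T, hp, map_mul]
  have h1 := h (MvPolynomial.C κ * G) (by
    ext n
    rw [map_mul, eps_C, coeff_C_mul]
    refine hκ _ ?_
    rw [← hcomp, hF]; rfl)
  have hrel : relI f ≤ (relI fun i => π (f i)).comap (MvPolynomial.map π) := by
    conv_lhs => rw [relI]
    rw [Ideal.span_le]
    rintro _ ⟨i, rfl⟩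
    rw [SetLike.mem_coe, Ideal.mem_comap, map_sub, map_mul, MvPolynomial.map_X, MvPolynomial.map_X,
      MvPolynomial.map_C]
    exact u_mul_W_sub _ i
  have h2 := Ideal.mem_comap.1 (hrel h1)
  convert h2 using 1
  simp only [map_mul, map_pow, MvPolynomial.map_X, MvPolynomial.map_C]
  ring

end

end UBS

namespace UBS
open IsLocalRing (maximalIdeal)

/-- Every primary ideal of `D` has a reduction generated by `r` elements for which the relations of
the extended Rees algebra, and the integral closures of powers, are uniformly bounded. -/
def GPkg (D : Type*) [CommRing D] [IsLocalRing D] (c : D) (k r : ℕ) : Prop :=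
  ∀ J : Ideal D, Prim J → ∃ f : Fin r → D, (∀ i, f i ∈ J) ∧ Prim (Ideal.span (Set.range f)) ∧
    (∀ z ∈ J, IsIntegralOverIdeal (Ideal.span (Set.range f)) z) ∧ TB ⊥ f c k ∧
    ∀ n y, IsIntegralOverIdeal (Ideal.span (Set.range f) ^ n) y →
      c * y ∈ Ideal.span (Set.range f) ^ (n - k)

/-- A nonzero element of `D` giving uniform bounds for all primary ideals. -/
def DomD (D : Type*) [CommRing D] [IsLocalRing D] : Prop :=
  ∃ c : D, c ≠ 0 ∧ ∃ k : ℕ,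
    (∀ J : Ideal D, Prim J → ∀ n, ∀ y ∈ J.intClosure ^ n, c * y ∈ J ^ (n - k)) ∧
    ∀ (s : ℕ) (g : Fin s → D), Prim (Ideal.span (Set.range g)) → TB ⊥ g c k

lemma integral_self {R : Type*} [CommRing R] {J : Ideal R} {x : R} (hx : x ∈ J) :
    IsIntegralOverIdeal J x := by
  refine ⟨1, one_pos, fun _ => -x, fun i h1 h2 => ?_, by simp⟩
  obtain rfl : i = 1 := by omega
  simpa using hx

theorem GPkg.domD {D : Type*} [CommRing D] [IsDomain D] [IsLocalRing D] {c : D} {k r : ℕ}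
    (h : GPkg D c k r) (hc : c ≠ 0) : DomD D := by
  refine ⟨c * c, mul_ne_zero hc hc, k + k + 1, fun J hJ n y hy => ?_, fun s g hg => ?_⟩
  · obtain ⟨f, hfJ, hfP, hfi, -, hfb⟩ := h J hJ
    have h1 := hfb n y (integral_trans hfi (integral_of_pow_intClosure hy))
    rw [mul_assoc]
    refine Ideal.mul_mem_left _ _ (Ideal.pow_right_mono ?_ _ (Ideal.pow_le_pow_right (by omega) h1))
    rw [Ideal.span_le]
    rintro _ ⟨i, rfl⟩
    exact hfJ i
  · obtain ⟨f, hfJ, hfP, hfi, hTB, hfb⟩ := h _ hg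
    exact TB_excess hfJ hTB fun n y hy => hfb n y (integral_trans hfi (integral_self hy))

/-- The bounds pass along a surjection whose kernel is killed by `κ`, at the cost of multiplying by
`κ`. -/
theorem Pkg.descend {C D : Type*} [CommRing C] [CommRing D] [IsLocalRing C] [IsLocalRing D]
    {π : C →+* D} (hπ : Function.Surjective π) {δ κ : C} (hκ : ∀ x, π x = 0 → κ * x = 0) {r : ℕ}
    (h : Pkg C δ r) : GPkg D (π (δ * κ)) r r := by
  intro J hJ
  have hm : (maximalIdeal D).comap π = maximalIdeal C := by
    have : ((maximalIdeal D).comap π).IsMaximal := Ideal.comap_isMaximal_of_surjective π hπ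
    exact IsLocalRing.eq_maximalIdeal this
  have hm' : (maximalIdeal C).map π = maximalIdeal D := by
    rw [← hm, Ideal.map_comap_of_surjective π hπ]
  have hJC : Prim (J.comap π) := by
    refine ⟨hm ▸ Ideal.comap_mono hJ.1, ?_⟩
    obtain ⟨N, hN⟩ := hJ.2
    refine ⟨N, ?_⟩
    rw [← Ideal.map_le_iff_le_comap, Ideal.map_pow, hm']
    exact hN
  obtain ⟨f, hfJ, hfP, hfi, hTB, hfb⟩ := h _ hJC
  have hsp : Ideal.span (Set.range fun i => π (f i)) = (Ideal.span (Set.range f)).map π := by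
    rw [Ideal.map_span, ← Set.range_comp]; rfl
  refine ⟨fun i => π (f i), hfJ, ?_, fun z hz => ?_, ?_, fun n y hy => ?_⟩
  · rw [hsp]
    obtain ⟨N, hN⟩ := hfP.2
    refine ⟨hm' ▸ Ideal.map_mono hfP.1, N, ?_⟩
    rw [← hm', ← Ideal.map_pow]
    exact Ideal.map_mono hN
  · obtain ⟨z, rfl⟩ := hπ z
    rw [hsp]
    exact isIntegralOverIdeal_map π (hfi z hz)
  · have h1 := ((hTB.descend hπ hκ).mul (π δ)).mono (Nat.zero_le r)
    rwa [mul_one, ← map_mul] at h1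
  · rw [hsp] at hy ⊢
    set I := Ideal.span (Set.range f) with hI
    obtain ⟨y, rfl⟩ := hπ y
    obtain ⟨m, hm, a, ha, he⟩ := hy
    have : ∀ i, ∃ b, i ∈ Finset.Icc 1 m → b ∈ (I ^ n) ^ i ∧ π b = a i := by
      intro i
      by_cases hi : i ∈ Finset.Icc 1 m
      · have hi' := Finset.mem_Icc.1 hi
        have h2 := ha i hi'.1 hi'.2
        rw [← Ideal.map_pow, ← Ideal.map_pow, Ideal.mem_map_iff_of_surjective π hπ] at h2
        obtain ⟨b, hb⟩ := h2
        exact ⟨b, fun _ => hb⟩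
      · exact ⟨0, fun h => absurd h hi⟩
    choose b hb using this
    have h3 : IsIntegralOverIdeal (I ^ n) (κ * y) := by
      refine ⟨m, hm, fun i => κ ^ i * b i, fun i h1 h2 =>
        Ideal.mul_mem_left _ _ (hb i (Finset.mem_Icc.2 ⟨h1, h2⟩)).1, ?_⟩
      have h4 := hκ (y ^ m + ∑ i ∈ Finset.Icc 1 m, b i * y ^ (m - i)) (by
        rw [map_add, map_pow, map_sum, ← he]
        congr 1
        refine Finset.sum_congr rfl fun i hi => ?_
        rw [map_mul, map_pow, (hb i hi).2])
      obtain ⟨m, rfl⟩ : ∃ m', m = m' + 1 := ⟨m - 1, by omega⟩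
      have h5 : κ ^ m * (κ * (y ^ (m + 1) + ∑ i ∈ Finset.Icc 1 (m + 1), b i * y ^ (m + 1 - i))) = 0 := by
        rw [h4, mul_zero]
      rw [← h5, ← mul_assoc, ← pow_succ, mul_add, Finset.mul_sum, mul_pow]
      congr 1
      refine Finset.sum_congr rfl fun i hi => ?_
      have : κ ^ (m + 1) = κ ^ i * κ ^ (m + 1 - i) := by
        rw [← pow_add]; congr 1; have := Finset.mem_Icc.1 hi; omega
      rw [this, mul_pow]; ring
    have h6 := Ideal.mem_map_of_mem π (hfb n _ h3)
    rwa [← mul_assoc, map_mul, Ideal.map_pow] at h6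

end UBS

/-! ### Separable generation and finite extensions -/

namespace UBS
open IsLocalRing (maximalIdeal)
open scoped TensorProduct
universe v

/-- A finite module over a domain is, up to multiplication by a nonzero scalar, controlled by its
linear functionals. -/
lemma exists_functionals (A M : Type*) [CommRing A] [IsDomain A] [AddCommGroup M] [Module A M]
    [Module.Finite A M] : ∃ (n : ℕ) (ψ : Fin n → (M →ₗ[A] A)) (b : Fin n → M) (a : A), a ≠ 0 ∧
      ∀ d, a • d = ∑ l, ψ l d • b l := by
  classical
  obtain ⟨m, v, hv⟩ := Module.Finite.exists_fin (R := A) (M := M)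
  obtain ⟨I, hI, hI'⟩ := exists_maximal_linearIndepOn A v
  have h1 : ∀ i, ∃ a : A, a ≠ 0 ∧ a • v i ∈ Submodule.span A (v '' I) := by
    intro i
    by_cases hi : i ∈ I
    · exact ⟨1, one_ne_zero, by rw [one_smul]; exact Submodule.subset_span ⟨i, hi, rfl⟩⟩
    · exact hI' i hi
  choose a ha ha' using h1
  set N := Submodule.span A (Set.range fun i : I => v i) with hN
  have hN' : N = Submodule.span A (v '' I) := by rw [hN, ← Set.image_eq_range]
  have h2 : ∀ d : M, (∏ i, a i) • d ∈ N := by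
    intro d
    have hd : d ∈ Submodule.span A (Set.range v) := by rw [hv]; trivial
    induction hd using Submodule.span_induction with
    | mem x hx =>
      obtain ⟨i, rfl⟩ := hx
      rw [hN', ← Finset.mul_prod_erase _ _ (Finset.mem_univ i), mul_comm, mul_smul]
      exact Submodule.smul_mem _ _ (ha' i)
    | zero => simp
    | add x y _ _ hx hy => rw [smul_add]; exact add_mem hx hy
    | smul r x _ hx => rw [smul_comm]; exact Submodule.smul_mem _ _ hx
  let L : M →ₗ[A] N := (LinearMap.lsmul A M (∏ i, a i)).codRestrict N h2
  let B : Module.Basis I A N := Module.Basis.span hI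
  have hB : ∀ i, (B i : M) = v i := fun i => congrArg Subtype.val (Module.Basis.span_apply hI i)
  let e := Fintype.equivFin I
  refine ⟨Fintype.card I, fun l => (B.coord (e.symm l)).comp L, fun l => v (e.symm l), ∏ i, a i,
    Finset.prod_ne_zero_iff.2 fun i _ => ha i, fun d => ?_⟩
  have h3 := congrArg (Subtype.val) (B.sum_repr (L d))
  rw [← e.symm.sum_comp] at h3
  rw [show (∏ i, a i) • d = (L d : M) from rfl, ← h3, AddSubmonoidClass.coe_finsetSum]
  refine Finset.sum_congr rfl fun l _ => ?_
  rw [Submodule.coe_smul, hB]; rfl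

/-- Write `g i = (X - θ i) * h i` over `D`. In `D ⊗[A] C` the element `E = ∏ h i (Θ i)` satisfies
`(1 ⊗ x) * E = (πa x ⊗ 1) * E` and maps to `∏ g i'(θ i) ≠ 0` in `D`. Applying a suitable
`A`-linear functional `D → A` to the first factor produces `κ`. -/
lemma kappa_core {A D C : Type*} [CommRing A] [IsDomain A] [CommRing D] [IsDomain D] [Algebra A D]
    [Module.Finite A D] (hinj : Function.Injective (algebraMap A D)) [CommRing C] [Algebra A C]
    (πa : C →ₐ[A] D) {t : ℕ} (g : Fin t → Polynomial A) (Θ : Fin t → C)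
    (hgen : ∀ x, x ∈ Algebra.adjoin A (Set.range Θ))
    (hΘ : ∀ i, (g i).eval₂ (algebraMap A C) (Θ i) = 0)
    (hθ' : ∀ i, (g i).derivative.eval₂ (algebraMap A D) (πa (Θ i)) ≠ 0) :
    ∃ κ : C, πa κ ≠ 0 ∧ ∀ x, πa x = 0 → κ * x = 0 := by
  classical
  have hθ : ∀ i, (g i).eval₂ (algebraMap A D) (πa (Θ i)) = 0 := by
    intro i
    have := Polynomial.hom_eval₂ (g i) (algebraMap A C) πa.toRingHom (Θ i)
    rw [hΘ, map_zero] at this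
    have e : πa.toRingHom.comp (algebraMap A C) = algebraMap A D := RingHom.ext πa.commutes
    rw [e] at this
    exact this.symm
  let incD : D →ₐ[A] D ⊗[A] C := Algebra.TensorProduct.includeLeft
  let incC : C →ₐ[A] D ⊗[A] C := Algebra.TensorProduct.includeRight
  have hfac : ∀ i, ∃ h : Polynomial D, (g i).map (algebraMap A D) =
      (Polynomial.X - Polynomial.C (πa (Θ i))) * h := by
    intro i
    refine ⟨_, (Polynomial.mul_divByMonic_eq_iff_isRoot.2 ?_).symm⟩
    rw [Polynomial.IsRoot, Polynomial.eval_map]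
    exact hθ i
  choose h hh using hfac
  have hder : ∀ i, (h i).eval (πa (Θ i)) = (g i).derivative.eval₂ (algebraMap A D) (πa (Θ i)) := by
    intro i
    rw [← Polynomial.eval_map, ← Polynomial.derivative_map, hh]
    simp
  -- Since `(1 ⊗ Θ i - θ i ⊗ 1) * h i (Θ i) = g i (Θ i) = 0`, both actions of `C` on `E` agree.
  let E : D ⊗[A] C := ∏ i, (h i).eval₂ incD.toRingHom (incC (Θ i))
  have hE1 : ∀ i, (incC (Θ i) - incD (πa (Θ i))) * E = 0 := by
    intro i
    have h1 : (incC (Θ i) - incD (πa (Θ i))) * (h i).eval₂ incD.toRingHom (incC (Θ i)) = 0 := by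
      have h2 : ((g i).map (algebraMap A D)).eval₂ incD.toRingHom (incC (Θ i)) = 0 := by
        rw [Polynomial.eval₂_map]
        have h3 : incD.toRingHom.comp (algebraMap A D) =
            incC.toRingHom.comp (algebraMap A (C)) := by
          ext a
          exact (incD.commutes a).trans (incC.commutes a).symm
        rw [h3]
        have h4 := Polynomial.hom_eval₂ (g i) (algebraMap A (C)) incC.toRingHom (Θ i)
        rw [hΘ, map_zero] at h4
        exact h4.symm
      rw [hh, Polynomial.eval₂_mul, Polynomial.eval₂_sub, Polynomial.eval₂_X,
        Polynomial.eval₂_C] at h2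
      exact h2
    rw [show E = _ from (Finset.mul_prod_erase Finset.univ _ (Finset.mem_univ i)).symm, ← mul_assoc,
      h1, zero_mul]
  have hE : ∀ x : C, incC x * E = incD (πa x) * E := by
    intro x
    induction hgen x using Algebra.adjoin_induction with
    | mem x hx =>
      obtain ⟨i, rfl⟩ := hx
      have := hE1 i
      linear_combination this
    | algebraMap a => rw [πa.commutes, incC.commutes, incD.commutes]
    | add p q _ _ hp hq =>
      rw [map_add, add_mul, hp, hq, map_add, map_add, add_mul]
    | mul p q _ _ hp hq =>
      rw [map_mul, map_mul, map_mul]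
      linear_combination incC p * hq + incD (πa q) * hp
  let ρ : D ⊗[A] C →ₐ[A] D := Algebra.TensorProduct.productMap (AlgHom.id A D) πa
  have hρD : ∀ d, ρ (incD d) = d := fun d => by simp [ρ, incD]
  have hρC : ∀ x, ρ (incC x) = πa x := fun x => by simp [ρ, incC]
  have hρE : ρ E ≠ 0 := by
    have : ρ E = ∏ i, (g i).derivative.eval₂ (algebraMap A D) (πa (Θ i)) := by
      rw [show E = _ from rfl, map_prod]
      refine Finset.prod_congr rfl fun i _ => ?_
      have h1 := Polynomial.hom_eval₂ (h i) incD.toRingHom ρ.toRingHom (incC (Θ i))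
      refine h1.trans ?_
      have e1 : ρ.toRingHom.comp incD.toRingHom = RingHom.id D := RingHom.ext hρD
      have e2 : ρ.toRingHom (incC (Θ i)) = πa (Θ i) := hρC _
      rw [e1, e2, Polynomial.eval₂_id, hder]
    rw [this]
    exact Finset.prod_ne_zero_iff.2 fun i _ => hθ' i
  obtain ⟨n, ψ, b, a, ha, hψ⟩ := exists_functionals A D
  let Λ : Fin n → (D ⊗[A] C →ₗ[A] C) := fun l =>
    (TensorProduct.lid A (C)).toLinearMap.comp ((ψ l).rTensor (C))
  have hΛt : ∀ l d x, Λ l (d ⊗ₜ x) = ψ l d • x := fun l d x => by simp [Λ]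
  have hΛ : ∀ l x z, Λ l (incC x * z) = x * Λ l z := by
    intro l x z
    induction z using TensorProduct.induction_on with
    | zero => simp
    | tmul d y =>
      change Λ l ((1 ⊗ₜ x) * (d ⊗ₜ y)) = _
      rw [Algebra.TensorProduct.tmul_mul_tmul, hΛt, hΛt, one_mul, mul_smul_comm]
    | add y z hy hz => rw [mul_add, map_add, map_add, mul_add, hy, hz]
  have hsum : ∀ z, a • ρ z = ∑ l, b l * πa (Λ l z) := by
    intro z
    induction z using TensorProduct.induction_on with
    | zero => simp
    | tmul d y =>
      have h1 : ρ (d ⊗ₜ y) = d * πa y := by simp [ρ]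
      rw [h1, ← smul_mul_assoc, hψ, Finset.sum_mul]
      refine Finset.sum_congr rfl fun l _ => ?_
      rw [hΛt, map_smul, smul_mul_assoc, mul_smul_comm]
    | add y z hy hz =>
      rw [map_add, smul_add, hy, hz, ← Finset.sum_add_distrib]
      refine Finset.sum_congr rfl fun l _ => ?_
      rw [map_add, map_add, mul_add]
  have hex : ∃ l, πa (Λ l E) ≠ 0 := by
    by_contra! hc
    have h1 := hsum E
    rw [Finset.sum_eq_zero fun l _ => by rw [hc l, mul_zero], Algebra.smul_def] at h1
    rcases mul_eq_zero.1 h1 with h2 | h2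
    · exact ha (hinj (h2.trans (map_zero _).symm))
    · exact hρE h2
  obtain ⟨l, hl⟩ := hex
  refine ⟨Λ l E, hl, fun x hx => ?_⟩
  rw [mul_comm, ← hΛ, hE, hx, map_zero, zero_mul, map_zero]

/-- For `D` finite over a domain `A` and generated by simple roots `θ i` of monic polynomials,
the kernel of the presentation `CR g → D` is killed by an element outside of it. -/
theorem exists_kappa {A D : Type v} [CommRing A] [IsDomain A] [CommRing D] [IsDomain D] [Algebra A D]
    [Module.Finite A D] (hinj : Function.Injective (algebraMap A D)) {t : ℕ}
    (g : Fin t → Polynomial A) (θ : Fin t → D)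
    (hθ : ∀ i, (g i).eval₂ (algebraMap A D) (θ i) = 0)
    (hθ' : ∀ i, (g i).derivative.eval₂ (algebraMap A D) (θ i) ≠ 0) :
    ∃ κ : CR g, CR.lift (algebraMap A D) θ hθ κ ≠ 0 ∧
      ∀ x, CR.lift (algebraMap A D) θ hθ x = 0 → κ * x = 0 := by
  let πa : CR g →ₐ[A] D :=
    { CR.lift (algebraMap A D) θ hθ with commutes' := fun a => CR.lift_algebraMap _ _ _ a }
  have hr : ∀ i, πa (CR.root g i) = θ i := fun i => CR.lift_root _ _ hθ i
  refine kappa_core hinj πa g (CR.root g) (fun x => ?_) CR.eval_root fun i => ?_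
  · obtain ⟨p, rfl⟩ := Ideal.Quotient.mk_surjective x
    induction p using MvPolynomial.induction_on with
    | C a => exact Subalgebra.algebraMap_mem _ a
    | add p q hp hq => rw [map_add]; exact add_mem hp hq
    | mul_X p i hp =>
      rw [map_mul]
      exact mul_mem hp (Algebra.subset_adjoin (Set.mem_range_self i))
  · rw [hr]; exact hθ' i

end UBS

namespace UBS
open IsLocalRing (maximalIdeal)
universe v

lemma exists_pow_mem_map {A D : Type*} [CommRing A] [IsLocalRing A] [CommRing D] [IsLocalRing D]
    [Algebra A D] [Algebra.IsIntegral A D] {θ : D} (hθ : θ ∈ maximalIdeal D) :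
    ∃ N, θ ^ N ∈ (maximalIdeal A).map (algebraMap A D) := by
  change θ ∈ Ideal.radical _
  rw [Ideal.radical_eq_sInf, Ideal.mem_sInf]
  rintro P ⟨hP, hPp⟩
  have h1 : (P.comap (algebraMap A D)) = maximalIdeal A := by
    have h2 : maximalIdeal A ≤ P.comap (algebraMap A D) := Ideal.map_le_iff_le_comap.1 hP
    exact ((IsLocalRing.maximalIdeal.isMaximal A).eq_of_le
      (Ideal.IsPrime.comap (algebraMap A D) (K := P)).ne_top h2).symm
  have h2 : (P.comap (algebraMap A D)).IsMaximal := h1 ▸ inferInstance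
  have := Ideal.isMaximal_of_isIntegral_of_isMaximal_comap P h2
  rw [IsLocalRing.eq_maximalIdeal this]
  exact hθ

open Polynomial in
/-- Elements of the maximal ideal of a finite extension are roots of distinguished polynomials. -/
lemma exists_distinguished {A D : Type*} [CommRing A] [IsLocalRing A] [CommRing D] [IsLocalRing D]
    [Algebra A D] [Module.Finite A D] {θ : D} (hθ : θ ∈ maximalIdeal D) :
    ∃ g : A[X], g.Monic ∧ g.natDegree ≠ 0 ∧
      (∀ k, k < g.natDegree → g.coeff k ∈ maximalIdeal A) ∧ aeval θ g = 0 := by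
  obtain ⟨N, hN⟩ := exists_pow_mem_map (A := A) hθ
  obtain ⟨p, hp, -, hc, hpf⟩ :=
    LinearMap.exists_monic_and_natDegree_eq_and_coeff_mem_pow_and_aeval_eq_zero A
      (Algebra.lmul A D (θ ^ (N + 1))) (maximalIdeal A) (by
        rintro _ ⟨x, rfl⟩
        rw [Ideal.smul_top_eq_map]
        change θ ^ (N + 1) * x ∈ (maximalIdeal A).map (algebraMap A D)
        rw [pow_succ]
        exact Ideal.mul_mem_right _ _ (Ideal.mul_mem_right _ _ hN))
  rw [aeval_algHom_apply] at hpf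
  have hpf' : aeval (θ ^ (N + 1)) p = 0 := by
    have := congrArg (fun f => f 1) hpf
    simpa using this
  have hp0 : p.natDegree ≠ 0 := by
    intro h0
    rw [hp.natDegree_eq_zero.1 h0, map_one] at hpf'
    exact one_ne_zero hpf'
  refine ⟨expand A (N + 1) p, hp.expand (Nat.succ_pos N), ?_, ?_, ?_⟩
  · rw [natDegree_expand]
    exact mul_ne_zero hp0 (Nat.succ_ne_zero N)
  · intro k hk
    rw [natDegree_expand] at hk
    rw [coeff_expand (Nat.succ_pos N)]
    split_ifs with h
    · obtain ⟨k, rfl⟩ := h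
      rw [Nat.mul_div_cancel_left _ (Nat.succ_pos N)]
      have hk' : k < p.natDegree := by
        rw [mul_comm] at hk; exact lt_of_mul_lt_mul_right hk (Nat.zero_le _)
      exact Ideal.pow_le_self (by omega) (hc k)
    · exact zero_mem _
  · rw [expand_aeval, hpf']

open Polynomial in
/-- An element of the maximal ideal with a separable relation over `A` is a root of a distinguished
polynomial whose derivative does not vanish there. -/
lemma exists_distinguished_sep {A D : Type*} [CommRing A] [IsLocalRing A] [CommRing D]
    [IsDomain D] [IsLocalRing D]
    [Algebra A D] [Module.Finite A D] (hinj : Function.Injective (algebraMap A D))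
    {a : A} (ha : a ∈ maximalIdeal A) (ha0 : a ≠ 0) {θ : D} (hθ : θ ∈ maximalIdeal D)
    {μ : A[X]} (hμ : aeval θ μ = 0) (hμ' : aeval θ μ.derivative ≠ 0) :
    ∃ g : A[X], g.Monic ∧ g.natDegree ≠ 0 ∧
      (∀ k, k < g.natDegree → g.coeff k ∈ maximalIdeal A) ∧ aeval θ g = 0 ∧
      aeval θ g.derivative ≠ 0 := by
  obtain ⟨g, hg, hg0, hgm, hgθ⟩ := exists_distinguished (A := A) hθ
  by_cases hd : aeval θ g.derivative = 0
  · -- perturb `X ^ j * g` by a small multiple of `μ`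
    set q := X ^ (μ.natDegree + 1) * g with hq
    have hqm : q.Monic := (monic_X_pow _).mul hg
    have hqd : q.natDegree = μ.natDegree + 1 + g.natDegree := by
      rw [hq, (monic_X_pow _).natDegree_mul hg, natDegree_X_pow]
    have hlt : (C a * μ).natDegree < q.natDegree := by
      have := natDegree_C_mul_le a μ; omega
    have hdeg : (C a * μ).degree < q.degree := degree_lt_degree hlt
    have hnd : (q + C a * μ).natDegree = q.natDegree := natDegree_add_eq_left_of_natDegree_lt hlt
    refine ⟨q + C a * μ, hqm.add_of_left hdeg, ?_, ?_, ?_, ?_⟩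
    · rw [hnd]; omega
    · intro k hk
      rw [hnd] at hk
      rw [coeff_add, Polynomial.coeff_C_mul]
      refine add_mem ?_ (Ideal.mul_mem_right _ _ ha)
      rw [hq, coeff_X_pow_mul']
      split_ifs with h
      · exact hgm _ (by omega)
      · exact zero_mem _
    · rw [map_add, hq, map_mul, hgθ, map_mul, hμ, mul_zero, mul_zero, add_zero]
    · rw [derivative_add, hq, derivative_mul, derivative_mul, map_add, map_add, map_add, map_mul,
        map_mul, map_mul, map_mul, hgθ, hd, hμ, derivative_C, map_zero, aeval_C]
      simp only [mul_zero, zero_add]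
      exact mul_ne_zero (fun h => ha0 (hinj (h.trans (map_zero _).symm))) hμ'
  · exact ⟨g, hg, hg0, hgm, hgθ, hd⟩

theorem domD_sep {Λ : Type v} [CommRing Λ] [IsDomain Λ] [UniqueFactorizationMonoid Λ]
    [IsNoetherianRing Λ] [IsLocalRing Λ] {ϖ : Λ} (hϖ : maximalIdeal Λ = Ideal.span {ϖ})
    (h0 : ϖ ≠ 0) [Infinite (IsLocalRing.ResidueField Λ)] {d t : ℕ}
    {D : Type v} [CommRing D] [IsDomain D] [IsLocalRing D] [Algebra (MvPowerSeries (Fin d) Λ) D]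
    [Module.Finite (MvPowerSeries (Fin d) Λ) D]
    (hinj : Function.Injective (algebraMap (MvPowerSeries (Fin d) Λ) D))
    (θ : Fin t → D) (hθ : ∀ i, θ i ∈ maximalIdeal D)
    (hgen : Algebra.adjoin (MvPowerSeries (Fin d) Λ) (Set.range θ) = ⊤)
    (hsep : ∀ i, ∃ μ : Polynomial (MvPowerSeries (Fin d) Λ), Polynomial.aeval (θ i) μ = 0 ∧
      Polynomial.aeval (θ i) (Polynomial.derivative μ) ≠ 0) : DomD D := by
  have hC : MvPowerSeries.C (σ := Fin d) ϖ ∈ maximalIdeal (MvPowerSeries (Fin d) Λ) := by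
    rw [← ps_maximalIdeal, psI_eq]
    refine Ideal.mem_sup_left (Ideal.mem_map_of_mem _ ?_)
    rw [hϖ]; exact Ideal.mem_span_singleton_self _
  have hC0 : MvPowerSeries.C (σ := Fin d) ϖ ≠ 0 := by
    intro h
    have := congrArg MvPowerSeries.constantCoeff h
    rw [MvPowerSeries.constantCoeff_C, map_zero] at this
    exact h0 this
  choose μ hμ hμ' using hsep
  choose g hg hg0 hgm hgθ hgθ' using fun i =>
    exists_distinguished_sep hinj hC hC0 (hθ i) (hμ i) (hμ' i)
  obtain ⟨hloc, -, -, hP⟩ := pkg_CR hϖ h0 g hg hg0 hgm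
  have : IsDomain (MvPowerSeries (Fin d) Λ) := hinj.isDomain (algebraMap _ D)
  obtain ⟨κ, hκ0, hκ⟩ := exists_kappa hinj g θ hgθ hgθ'
  set π := CR.lift (algebraMap _ D) θ hgθ with hπ
  have hsurj : Function.Surjective π := by
    intro x
    have hx : x ∈ Algebra.adjoin (MvPowerSeries (Fin d) Λ) (Set.range θ) := by rw [hgen]; trivial
    induction hx using Algebra.adjoin_induction with
    | mem x hx => obtain ⟨i, rfl⟩ := hx; exact ⟨_, CR.lift_root _ _ hgθ i⟩
    | algebraMap a => exact ⟨_, CR.lift_algebraMap _ _ hgθ a⟩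
    | add p q _ _ hp hq =>
      obtain ⟨a, rfl⟩ := hp
      obtain ⟨b, rfl⟩ := hq
      exact ⟨a + b, map_add _ _ _⟩
    | mul p q _ _ hp hq =>
      obtain ⟨a, rfl⟩ := hp
      obtain ⟨b, rfl⟩ := hq
      exact ⟨a * b, map_mul _ _ _⟩
  refine (hP.descend hsurj hκ).domD ?_
  rw [map_mul]
  refine mul_ne_zero ?_ hκ0
  rw [map_prod]
  refine Finset.prod_ne_zero_iff.2 fun i _ => ?_
  rw [Polynomial.hom_eval₂]
  have e1 : π.comp (algebraMap _ (CR g)) = algebraMap _ D :=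
    RingHom.ext fun a => CR.lift_algebraMap _ _ hgθ a
  have e2 : π (CR.root g i) = θ i := CR.lift_root _ _ hgθ i
  rw [e1, e2]
  exact hgθ' i

end UBS

namespace UBS
open IsLocalRing (maximalIdeal)

lemma coeff_eps_map {C D : Type*} [CommRing C] [CommRing D] {ι : Type*} (π : C →+* D) (f : ι → C)
    (G : MvPolynomial (Option ι) C) (n : ℤ) :
    (eps (fun i => π (f i)) (MvPolynomial.map π G)).coeff n = π ((eps f G).coeff n) := by
  induction G using MvPolynomial.induction_on generalizing n with
  | C a =>
    rw [MvPolynomial.map_C, eps_C, eps_C, LaurentPolynomial.C_apply, LaurentPolynomial.C_apply]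
    split_ifs <;> simp
  | add p q hp hq =>
    rw [map_add, map_add, map_add, AddMonoidAlgebra.coeff_add, AddMonoidAlgebra.coeff_add,
      Finsupp.add_apply, Finsupp.add_apply, hp, hq, map_add]
  | mul_X p o hp =>
    rw [map_mul, MvPolynomial.map_X, map_mul, map_mul]
    cases o with
    | none => rw [eps_u, eps_u, coeff_mul_T, coeff_mul_T, hp]
    | some i =>
      rw [eps_W, eps_W, mul_left_comm, coeff_C_mul, coeff_mul_T, mul_left_comm, coeff_C_mul,
        coeff_mul_T, hp, map_mul]

section
variable {D D' : Type*} [CommRing D] [CommRing D'] [Algebra D D']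
open MvPolynomial (monomial)

/-- Apply a `D`-linear functional to the coefficients of a polynomial over `D'`. -/
noncomputable def coeffMap {σ : Type*} (l : D' →ₗ[D] D) (p : MvPolynomial σ D') :
    MvPolynomial σ D :=
  ∑ m ∈ p.support, monomial m (l (p.coeff m))

lemma coeff_coeffMap {σ : Type*} (l : D' →ₗ[D] D) (p : MvPolynomial σ D') (m : σ →₀ ℕ) :
    (coeffMap l p).coeff m = l (p.coeff m) := by
  classical
  rw [coeffMap, MvPolynomial.coeff_sum]
  simp only [MvPolynomial.coeff_monomial]
  rw [Finset.sum_ite_eq']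
  split_ifs with h
  · rfl
  · rw [MvPolynomial.notMem_support_iff.1 h, map_zero]

lemma coeffMap_add {σ : Type*} (l : D' →ₗ[D] D) (p q : MvPolynomial σ D') :
    coeffMap l (p + q) = coeffMap l p + coeffMap l q := by
  ext m
  simp only [MvPolynomial.coeff_add, coeff_coeffMap, map_add]

lemma coeffMap_map_mul {σ : Type*} (l : D' →ₗ[D] D) (p : MvPolynomial σ D)
    (q : MvPolynomial σ D') :
    coeffMap l (MvPolynomial.map (algebraMap D D') p * q) = p * coeffMap l q := by
  classical
  ext m
  simp only [coeff_coeffMap, MvPolynomial.coeff_mul, map_sum, MvPolynomial.coeff_map]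
  refine Finset.sum_congr rfl fun x _ => ?_
  rw [← Algebra.smul_def, map_smul, smul_eq_mul]

lemma coeffMap_C {σ : Type*} (l : D' →ₗ[D] D) (c : D') :
    coeffMap l (MvPolynomial.C c : MvPolynomial σ D') = MvPolynomial.C (l c) := by
  classical
  ext m
  rw [coeff_coeffMap, MvPolynomial.coeff_C, MvPolynomial.coeff_C]
  split_ifs <;> simp

/-- `D`-linear functionals send an extended ideal into the ideal itself. -/
lemma functional_mem (l : D' →ₗ[D] D) {I : Ideal D} {x : D'} (hx : x ∈ I.map (algebraMap D D')) :
    l x ∈ I := by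
  induction hx using Submodule.span_induction with
  | zero => simp
  | add x y _ _ hx hy => rw [map_add]; exact add_mem hx hy
  | mem x hx =>
    obtain ⟨a, ha, rfl⟩ := hx
    rw [Algebra.algebraMap_eq_smul_one, map_smul]
    exact Ideal.mul_mem_right _ _ ha
  | smul r x hx _ =>
    have h1 : r * x ∈ (I • ⊤ : Submodule D D') := by
      rw [Ideal.smul_top_eq_map]; exact Ideal.mul_mem_left _ _ hx
    refine Submodule.smul_induction_on (p := fun z => l z ∈ I) h1 (fun a ha z _ => ?_)
      fun x y hx hy => ?_
    · rw [map_smul]; exact Ideal.mul_mem_right _ _ ha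
    · rw [map_add]; exact add_mem hx hy

/-- Ideals primary to the maximal ideal stay so under integral extension. -/
lemma prim_map [IsLocalRing D] [IsLocalRing D'] [IsNoetherianRing D'] [Algebra.IsIntegral D D']
    (hinj : Function.Injective (algebraMap D D')) {J : Ideal D} (hJ : Prim J) :
    Prim (J.map (algebraMap D D')) := by
  have hloc : IsLocalHom (algebraMap D D') :=
    RingHom.IsIntegral.isLocalHom (algebraMap_isIntegral_iff.2 inferInstance) hinj
  refine ⟨(Ideal.map_mono hJ.1).trans ?_, ?_⟩
  · exact ((IsLocalRing.local_hom_TFAE (algebraMap D D')).out 0 2).1 hloc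
  obtain ⟨N, hN⟩ := hJ.2
  obtain ⟨M, hM⟩ := Ideal.exists_pow_le_of_le_radical_of_fg
    (I := maximalIdeal D') (J := (maximalIdeal D).map (algebraMap D D'))
    (fun x hx => exists_pow_mem_map hx) (IsNoetherian.noetherian _)
  refine ⟨M * N, ?_⟩
  rw [pow_mul]
  refine (Ideal.pow_right_mono hM N).trans ?_
  rw [← Ideal.map_pow]
  exact Ideal.map_mono hN

/-- The bounds descend along finite extensions of domains. -/
theorem DomD.transfer [IsDomain D] [IsLocalRing D] [IsDomain D'] [IsLocalRing D']
    [IsNoetherianRing D'] [Module.Finite D D'] (hinj : Function.Injective (algebraMap D D'))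
    (h : DomD D') : DomD D := by
  obtain ⟨c, hc, k, h1, h2⟩ := h
  obtain ⟨n, ψ, b, a, ha, hψ⟩ := exists_functionals D D'
  have hex : ∃ l, ψ l c ≠ 0 := by
    by_contra! hcon
    have := hψ c
    simp only [hcon, zero_smul, Finset.sum_const_zero] at this
    rw [Algebra.smul_def] at this
    rcases mul_eq_zero.1 this with h | h
    · exact ha (hinj (h.trans (map_zero _).symm))
    · exact hc h
  obtain ⟨i, hi⟩ := hex
  refine ⟨ψ i c, hi, k, fun J hJ n y hy => ?_, fun s g hg => ?_⟩
  · have h3 : algebraMap D D' y ∈ (J.map (algebraMap D D')).intClosure ^ n := by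
      have := Ideal.mem_map_of_mem (algebraMap D D') hy
      rw [Ideal.map_pow] at this
      refine Ideal.pow_right_mono ?_ n this
      rw [Ideal.intClosure, Ideal.map_span, Ideal.span_le]
      rintro _ ⟨x, hx, rfl⟩
      exact Ideal.subset_span (isIntegralOverIdeal_map _ hx)
    have h4 := h1 _ (prim_map hinj hJ) n _ h3
    rw [← Ideal.map_pow] at h4
    have h5 := functional_mem (ψ i) h4
    rwa [mul_comm, ← Algebra.smul_def, map_smul, smul_eq_mul, mul_comm] at h5
  · have h3 := h2 s (fun j => algebraMap D D' (g j)) (by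
      have := prim_map hinj hg
      rwa [Ideal.map_span, ← Set.range_comp] at this)
    rw [TB_bot] at h3 ⊢
    intro F hF
    have h4 := h3 (MvPolynomial.map (algebraMap D D') F) (by
      ext n; rw [coeff_eps_map, hF]; simp)
    have key : ∀ x ∈ relI (fun j => algebraMap D D' (g j)), ∀ q, coeffMap (ψ i) (q * x) ∈ relI g := by
      intro x hx
      rw [relI] at hx
      induction hx using Submodule.span_induction with
      | zero =>
        intro q
        convert zero_mem (relI g)
        ext m; rw [coeff_coeffMap]; simp
      | add x y _ _ hx hy =>
        intro q
        rw [mul_add, coeffMap_add]; exact add_mem (hx q) (hy q)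
      | mem x hx =>
        intro q
        obtain ⟨j, rfl⟩ := hx
        have : q * (MvPolynomial.X none * MvPolynomial.X (some j) -
            MvPolynomial.C (algebraMap D D' (g j))) =
            MvPolynomial.map (algebraMap D D') (MvPolynomial.X none * MvPolynomial.X (some j) -
            MvPolynomial.C (g j)) * q := by simp [mul_comm]
        dsimp only
        rw [this, coeffMap_map_mul]
        exact Ideal.mul_mem_right _ _ (u_mul_W_sub g j)
      | smul r x _ hx =>
        intro q
        rw [smul_eq_mul, ← mul_assoc]
        exact hx _
    have h5 := key _ h4 1
    have e : MvPolynomial.C c * MvPolynomial.X none ^ k * MvPolynomial.map (algebraMap D D') F =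
        MvPolynomial.map (algebraMap D D') (MvPolynomial.X none ^ k * F) * MvPolynomial.C c := by
      simp only [map_mul, map_pow, MvPolynomial.map_X]; ring
    rw [one_mul, e, coeffMap_map_mul, coeffMap_C] at h5
    convert h5 using 1
    ring

end
end UBS

namespace UBS
open IsLocalRing (maximalIdeal)
universe v

open Polynomial in
/-- In characteristic exponent `p`, the power `θ ^ p ^ e` is separable over `A` for all large `e`. -/
lemma exists_sep_power {A L : Type*} [CommRing A] [Field L] (f : A →+* L)
    (hf : Function.Injective f) (p : ℕ) [ExpChar L p] {θ : L} (hθ : f.IsIntegralElem θ) :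
    ∃ e₀, ∀ e, e₀ ≤ e → ∃ μ : A[X], μ.eval₂ f (θ ^ p ^ e) = 0 ∧
      μ.derivative.eval₂ f (θ ^ p ^ e) ≠ 0 := by
  let _ : Algebra A L := f.toAlgebra
  have hfa : algebraMap A L = f := rfl
  have : FaithfulSMul A L := (faithfulSMul_iff_algebraMap_injective A L).2 hf
  have : IsDomain A := IsDomain.of_faithfulSMul A L
  let _ := FractionRing.liftAlgebra A L
  set K := FractionRing A
  have : ExpChar K p := by
    obtain ⟨q, hq⟩ := ExpChar.exists K
    have := expChar_of_injective_ringHom (algebraMap K L).injective q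
    rwa [ExpChar.eq ‹ExpChar L p› this]
  have h_integral : IsIntegral A θ := hθ
  have h_integralK : IsIntegral K θ := h_integral.tower_top
  obtain ⟨g, hg, e₀, he⟩ := (minpoly.irreducible h_integralK).hasSeparableContraction p
  refine ⟨e₀, fun e hle => ?_⟩
  have h1 : IsSeparable K (θ ^ p ^ e₀) := by
    refine hg.of_dvd (minpoly.dvd K _ ?_)
    rw [← expand_aeval, he, minpoly.aeval]
  have h2 : ∀ n, IsSeparable K ((θ ^ p ^ e₀) ^ n) := by
    intro n
    induction n with
    | zero =>
      rw [pow_zero]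
      have := isSeparable_algebraMap (F := K) (K := L) (1 : K)
      rwa [map_one] at this
    | succ n ih => rw [pow_succ]; exact Field.isSeparable_mul ih h1
  have h3 : IsSeparable K (θ ^ p ^ e) := by
    have := h2 (p ^ (e - e₀))
    rwa [← pow_mul, ← pow_add, Nat.add_sub_cancel' hle] at this
  obtain ⟨b, hb, hbm⟩ := IsLocalization.integerNormalization_spec (nonZeroDivisors A)
    (minpoly K (θ ^ p ^ e))
  have hb0 : algebraMap A K b ≠ 0 := by
    rw [Ne, IsFractionRing.to_map_eq_zero_iff]; exact nonZeroDivisors.ne_zero hb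
  have key : ∀ (μ : A[X]) x, μ.eval₂ f x = aeval x (μ.map (algebraMap A K)) := by
    intro μ x
    rw [aeval_map_algebraMap]; rfl
  refine ⟨IsLocalization.integerNormalization (nonZeroDivisors A) (minpoly K (θ ^ p ^ e)),
    (key _ _).trans ?_, fun h => ?_⟩
  · rw [hbm, ← algebraMap_smul K b, map_smul, minpoly.aeval, smul_zero]
  · rw [key, ← derivative_map, hbm, derivative_smul, ← algebraMap_smul K b, map_smul,
      smul_eq_zero] at h
    exact h.elim hb0 (Separable.aeval_derivative_ne_zero h3 (minpoly.aeval _ _))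

open Polynomial in
/-- Working in an algebraic closure of the fraction field of `D`, take `D' = A^{1/p^e}[θ]`, where `A`
acts through the inverse of the `e`-th Frobenius: the relation of `θ ^ p ^ e` over `A` turns into a
separable relation of `θ` for this action. Finiteness of Frobenius makes `D'` finite over `D`. -/
lemma exists_sep_ext {A D : Type v} [CommRing A] [IsLocalRing A] [CommRing D] [IsDomain D]
    [IsLocalRing D] [Algebra A D] [Module.Finite A D] (hinj : Function.Injective (algebraMap A D))
    (p : ℕ) [ExpChar A p] (hfr : ∀ e, (iterateFrobenius A p e).Finite) {t : ℕ} (θ : Fin t → D)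
    (hθ : ∀ i, θ i ∈ maximalIdeal D) (hgen : Algebra.adjoin A (Set.range θ) = ⊤) :
    ∃ (D' : Type v) (_ : CommRing D') (_ : IsDomain D') (_ : IsLocalRing D') (_ : Algebra A D')
      (_ : Algebra D D') (θ' : Fin t → D'), Module.Finite A D' ∧ Module.Finite D D' ∧
      Function.Injective (algebraMap A D') ∧ Function.Injective (algebraMap D D') ∧
      (∀ i, θ' i ∈ maximalIdeal D') ∧ Algebra.adjoin A (Set.range θ') = ⊤ ∧
      ∀ i, ∃ μ : A[X], aeval (θ' i) μ = 0 ∧ aeval (θ' i) μ.derivative ≠ 0 := by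
  let L := AlgebraicClosure (FractionRing D)
  obtain ⟨j, hj⟩ : ∃ j : D →+* L, Function.Injective j :=
    ⟨(algebraMap (FractionRing D) L).comp (algebraMap D (FractionRing D)), by
      rw [RingHom.coe_comp]
      exact (algebraMap (FractionRing D) L).injective.comp (IsFractionRing.injective D _)⟩
  have hf : Function.Injective (j.comp (algebraMap A D)) := by
    rw [RingHom.coe_comp]; exact hj.comp hinj
  have hfint : ∀ x, (j.comp (algebraMap A D)).IsIntegralElem (j x) := by
    intro x
    obtain ⟨g, hg, hgx⟩ := Algebra.IsIntegral.isIntegral (R := A) x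
    exact ⟨g, hg, by rw [← hom_eval₂, hgx, map_zero]⟩
  set f : A →+* L := j.comp (algebraMap A D) with hfdef
  have : ExpChar L p := expChar_of_injective_ringHom hf p
  have : ExpChar D p := expChar_of_injective_ringHom hinj p
  choose e₀ he₀ using fun i => exists_sep_power f hf p (hfint (θ i))
  -- One exponent that serves all generators.
  set e := ∑ i, e₀ i with he
  choose μ hμ hμ' using fun i => he₀ i e (Finset.single_le_sum (fun _ _ => zero_le) (Finset.mem_univ i))
  let F := iterateFrobenius L p e
  have hFinj : Function.Injective F := iterateFrobenius_inj L p e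
  -- The embedding `a ↦ a ^ (1 / p ^ e)`.
  obtain ⟨φ, hφ⟩ : ∃ φ : A →+* L, ∀ a, φ a ^ p ^ e = f a :=
    ⟨((iterateFrobeniusEquiv L p e).symm : L →+* L).comp f, fun a => by
      have := (iterateFrobeniusEquiv L p e).apply_symm_apply (f a)
      rwa [iterateFrobeniusEquiv_def] at this⟩
  have hφF : F.comp φ = f := RingHom.ext hφ
  have hφf : φ.comp (iterateFrobenius A p e) = f := by
    ext a
    rw [RingHom.comp_apply, iterateFrobenius_def, map_pow, hφ]
  have hφinj : Function.Injective φ := by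
    intro a b h
    refine hf ?_
    rw [← hφ, ← hφ, h]
  clear_value f
  let _ : Algebra A L := φ.toAlgebra
  have hAL : algebraMap A L = φ := rfl
  set D' := Algebra.adjoin A (Set.range fun i => j (θ i)) with hD'
  have hjD' : ∀ x, j x ∈ D' := by
    intro x
    have hx : x ∈ Algebra.adjoin A (Set.range θ) := by rw [hgen]; trivial
    induction hx using Algebra.adjoin_induction with
    | mem x hx => obtain ⟨i, rfl⟩ := hx; exact Algebra.subset_adjoin ⟨i, rfl⟩
    | algebraMap a =>
      have : j (algebraMap A D a) = algebraMap A L (a ^ p ^ e) := by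
        rw [hAL, map_pow, hφ, hfdef]; rfl
      rw [this]
      exact D'.algebraMap_mem _
    | add p q _ _ hp hq => rw [map_add]; exact add_mem hp hq
    | mul p q _ _ hp hq => rw [map_mul]; exact mul_mem hp hq
  let i' : D →+* D' := j.codRestrict D' hjD'
  have hi' : ∀ x, (i' x : L) = j x := fun x => rfl
  have hi'inj : Function.Injective i' := fun x y h => hj (congrArg Subtype.val h)
  have hfinA : Module.Finite A D' := by
    refine ⟨(Submodule.fg_top _).2 (fg_adjoin_of_finite (Set.finite_range _) ?_)⟩
    rintro _ ⟨i, rfl⟩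
    have := hfint (θ i)
    rw [← hφf] at this
    exact RingHom.isIntegralElem.of_comp _ _ this
  have hpow : ∀ x : D', ∃ y : D, i' y = x ^ p ^ e := by
    rintro ⟨x, hx⟩
    suffices ∃ y : D, j y = x ^ p ^ e by
      obtain ⟨y, hy⟩ := this
      exact ⟨y, Subtype.ext hy⟩
    induction hx using Algebra.adjoin_induction with
    | mem x hx =>
      obtain ⟨i, rfl⟩ := hx
      exact ⟨θ i ^ p ^ e, map_pow _ _ _⟩
    | algebraMap a => exact ⟨algebraMap A D a, by rw [hAL, hφ, hfdef]; rfl⟩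
    | add x y _ _ hx hy =>
      obtain ⟨a, ha⟩ := hx
      obtain ⟨b, hb⟩ := hy
      exact ⟨a + b, by rw [map_add, ha, hb, add_pow_expChar_pow]⟩
    | mul x y _ _ hx hy =>
      obtain ⟨a, ha⟩ := hx
      obtain ⟨b, hb⟩ := hy
      exact ⟨a * b, by rw [map_mul, ha, hb, mul_pow]⟩
  have hp0 : p ^ e ≠ 0 := (expChar_pow_pos A p e).ne'
  have hunit : ∀ y, IsUnit (i' y) → IsUnit y := by
    intro y hy
    obtain ⟨z, hz⟩ := hy.exists_right_inv
    obtain ⟨w, hw⟩ := hpow z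
    have : y ^ p ^ e * w = 1 := hi'inj (by rw [map_mul, map_pow, hw, ← mul_pow, hz, one_pow, map_one])
    exact (isUnit_pow_iff hp0).1 (IsUnit.of_mul_eq_one _ this)
  have hloc : IsLocalRing D' := by
    refine IsLocalRing.of_nonunits_add fun x y hx hy hxy => ?_
    obtain ⟨a, ha⟩ := hpow x
    obtain ⟨b, hb⟩ := hpow y
    have ha' : a ∈ nonunits D := fun h => hx ((isUnit_pow_iff hp0).1 (ha ▸ h.map i'))
    have hb' : b ∈ nonunits D := fun h => hy ((isUnit_pow_iff hp0).1 (hb ▸ h.map i'))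
    refine IsLocalRing.nonunits_add ha' hb' (hunit _ ?_)
    have : ExpChar D' p := expChar_of_injective_ringHom hi'inj p
    rw [map_add, ha, hb, ← add_pow_expChar_pow]
    exact hxy.pow _
  let _ : Algebra D D' := i'.toAlgebra
  have hinjA : Function.Injective (algebraMap A D') := fun a b h =>
    hφinj (congrArg Subtype.val h)
  refine ⟨D', inferInstance, inferInstance, hloc, inferInstance, inferInstance,
    fun i => ⟨j (θ i), hjD' _⟩, hfinA, ?_, hinjA, hi'inj, fun i => ?_, ?_, fun i => ⟨μ i, ?_, ?_⟩⟩
  · have h1 : ((algebraMap A D').comp (iterateFrobenius A p e)).Finite :=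
      RingHom.Finite.comp (RingHom.finite_algebraMap.2 hfinA) (hfr e)
    have h2 : (algebraMap A D').comp (iterateFrobenius A p e) = i'.comp (algebraMap A D) := by
      ext a
      change φ (iterateFrobenius A p e a) = j (algebraMap A D a)
      rw [← RingHom.comp_apply, hφf, hfdef]; rfl
    rw [h2] at h1
    exact RingHom.Finite.of_comp_finite h1
  · exact fun h => hθ i (hunit _ h)
  · have hset : (Set.range fun i => (⟨j (θ i), hjD' _⟩ : D')) =
        ((↑) : D' → L) ⁻¹' (Set.range fun i => j (θ i)) := by
      ext x
      constructor
      · rintro ⟨i, rfl⟩; exact ⟨i, rfl⟩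
      · rintro ⟨i, hi⟩; exact ⟨i, Subtype.ext hi⟩
    rw [hset]
    exact Algebra.adjoin_adjoin_coe_preimage (R := A) (s := Set.range fun i => j (θ i))
  · refine Subtype.ext (hFinj ?_)
    rw [← Subalgebra.coe_val, ← aeval_algHom_apply]
    change F (eval₂ φ (j (θ i)) (μ i)) = F 0
    rw [hom_eval₂, hφF, map_zero]
    exact hμ i
  · intro h
    have h' := congrArg (fun x : D' => F x) h
    refine hμ' i ?_
    dsimp only at h'
    rw [← Subalgebra.coe_val, ← aeval_algHom_apply] at h'
    change F (eval₂ φ (j (θ i)) (μ i).derivative) = F 0 at h'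
    rw [hom_eval₂, hφF, map_zero] at h'
    exact h'

theorem domD_fin {Λ : Type v} [CommRing Λ] [IsDomain Λ] [UniqueFactorizationMonoid Λ]
    [IsNoetherianRing Λ] [IsLocalRing Λ] {ϖ : Λ} (hϖ : maximalIdeal Λ = Ideal.span {ϖ})
    (h0 : ϖ ≠ 0) [Infinite (IsLocalRing.ResidueField Λ)] {d : ℕ}
    {D : Type v} [CommRing D] [IsDomain D] [IsLocalRing D] [Algebra (MvPowerSeries (Fin d) Λ) D]
    [Module.Finite (MvPowerSeries (Fin d) Λ) D]
    (hinj : Function.Injective (algebraMap (MvPowerSeries (Fin d) Λ) D))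
    (hres : ∀ x : D, ∃ a : MvPowerSeries (Fin d) Λ, x - algebraMap _ D a ∈ maximalIdeal D)
    (p : ℕ) [ExpChar (MvPowerSeries (Fin d) Λ) p]
    (hfr : ∀ e, (iterateFrobenius (MvPowerSeries (Fin d) Λ) p e).Finite) : DomD D := by
  obtain ⟨t, v, hv⟩ := Module.Finite.exists_fin (R := MvPowerSeries (Fin d) Λ) (M := D)
  choose a ha using fun i => hres (v i)
  have hgen : Algebra.adjoin (MvPowerSeries (Fin d) Λ)
      (Set.range fun i => v i - algebraMap _ D (a i)) = ⊤ := by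
    rw [eq_top_iff]
    intro x _
    have hx : x ∈ Submodule.span (MvPowerSeries (Fin d) Λ) (Set.range v) := by rw [hv]; trivial
    have hle : Submodule.span (MvPowerSeries (Fin d) Λ) (Set.range v) ≤
        (Algebra.adjoin (MvPowerSeries (Fin d) Λ)
          (Set.range fun i => v i - algebraMap _ D (a i))).toSubmodule := by
      rw [Submodule.span_le]
      rintro _ ⟨i, rfl⟩
      have := add_mem (Algebra.subset_adjoin (R := MvPowerSeries (Fin d) Λ)
        (s := Set.range fun i => v i - algebraMap _ D (a i)) ⟨i, rfl⟩)
        (Subalgebra.algebraMap_mem _ (a i))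
      rwa [sub_add_cancel] at this
    exact hle hx
  obtain ⟨D', _, _, _, _, _, θ', h1, h2, h3, h4, h5, h6, h7⟩ :=
    exists_sep_ext hinj p hfr _ ha hgen
  have : IsNoetherianRing D' := IsNoetherianRing.of_finite (MvPowerSeries (Fin d) Λ) D'
  exact (domD_sep hϖ h0 h3 θ' h5 h6 h7).transfer h4

end UBS

namespace UBS
open IsLocalRing (maximalIdeal)
universe v

/-- Over a complete local ring, a noetherian local algebra with the same residue field and with
maximal ideal the radical of the extended one is finite. -/
lemma finite_of_res {A D : Type*} [CommRing A] [IsLocalRing A] [IsAdicComplete (maximalIdeal A) A]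
    [CommRing D] [IsNoetherianRing D] [IsLocalRing D] (φ : A →+* D)
    (hmap : (maximalIdeal A).map φ ≤ maximalIdeal D)
    (hrad : maximalIdeal D ≤ ((maximalIdeal A).map φ).radical)
    (hres : ∀ x, ∃ a, x - φ a ∈ maximalIdeal D) : φ.Finite := by
  let _ := φ.toAlgebra
  obtain ⟨N, hN⟩ := Ideal.exists_pow_le_of_le_radical_of_fg hrad (IsNoetherian.noetherian _)
  obtain ⟨M, ⟨S, hS⟩, hM⟩ := exists_fg_approx (A := A) (maximalIdeal D) hres N
  have hH : IsHausdorff (maximalIdeal A) D := by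
    rw [← IsHausdorff.map_algebraMap_iff (S := D)]
    change IsHausdorff ((maximalIdeal A).map φ) D
    exact IsHausdorff.of_isLocalRing _ _ (ne_top_of_le_ne_top (maximalIdeal.isMaximal D).ne_top hmap)
  refine complete_nakayama (maximalIdeal _) (fun i => (S.equivFin.symm i : D)) fun x => ?_
  obtain ⟨n, hn, h⟩ := hM x
  rw [← hS] at hn
  have : Set.range (fun i => (S.equivFin.symm i : D)) = S := by
    ext y
    constructor
    · rintro ⟨j, rfl⟩; exact (S.equivFin.symm j).2
    · intro hy; exact ⟨S.equivFin ⟨y, hy⟩, by simp⟩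
  rw [← this] at hn
  obtain ⟨c, hc⟩ := (Submodule.mem_span_range_iff_exists_fun _).1 hn
  refine ⟨c, ?_⟩
  rw [hc]
  exact hN h

lemma finite_iterateFrobenius {A : Type*} [CommRing A] [IsNoetherianRing A] [IsLocalRing A]
    [IsAdicComplete (maximalIdeal A) A] (p : ℕ) [ExpChar A p]
    (hperf : ∀ x : A, ∃ y, x - y ^ p ∈ maximalIdeal A) (e : ℕ) :
    (iterateFrobenius A p e).Finite := by
  have hp0 : p ^ e ≠ 0 := (expChar_pow_pos A p e).ne'
  refine finite_of_res _ ?_ ?_ ?_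
  · rw [Ideal.map_le_iff_le_comap]
    intro x hx
    rw [Ideal.mem_comap, iterateFrobenius_def]
    exact Ideal.pow_mem_of_mem _ hx _ (Nat.pos_of_ne_zero hp0)
  · intro x hx
    refine ⟨p ^ e, ?_⟩
    rw [← iterateFrobenius_def]
    exact Ideal.mem_map_of_mem _ hx
  · simp only [iterateFrobenius_def]
    clear hp0
    induction e with
    | zero => exact fun x => ⟨x, by simp⟩
    | succ e ih =>
      intro x
      obtain ⟨y, hy⟩ := hperf x
      obtain ⟨z, hz⟩ := ih y
      refine ⟨z, ?_⟩
      have h1 : (y - z ^ p ^ e) ^ p ∈ maximalIdeal A :=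
        Ideal.pow_mem_of_mem _ hz _ (expChar_pos A p)
      have h2 : (y - z ^ p ^ e) ^ p = y ^ p - z ^ p ^ (e + 1) := by
        rw [sub_pow_expChar, ← pow_mul, pow_succ]
      rw [h2] at h1
      have := add_mem hy h1
      rwa [sub_add_sub_cancel] at this

theorem domD_complete {Λ D : Type v} [CommRing Λ] [IsNoetherianRing Λ] [IsDomain Λ]
    [UniqueFactorizationMonoid Λ] [IsLocalRing Λ] [Infinite (IsLocalRing.ResidueField Λ)]
    (ϖ : Λ) (hϖ : maximalIdeal Λ = Ideal.span {ϖ}) [IsAdicComplete (maximalIdeal Λ) Λ]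
    (p : ℕ) [ExpChar Λ p] (hperf : ∀ x : Λ, ∃ y, x - y ^ p ∈ maximalIdeal Λ)
    [CommRing D] [IsNoetherianRing D] [IsDomain D] [IsLocalRing D]
    [IsAdicComplete (maximalIdeal D) D] (σ : Λ →+* D) (h0 : σ ϖ ≠ 0) (hm : σ ϖ ∈ maximalIdeal D)
    (hres : ∀ x, ∃ a, x - σ a ∈ maximalIdeal D) : DomD D := by
  have hϖ0 : ϖ ≠ 0 := fun h => h0 (by rw [h, map_zero])
  obtain ⟨d, φ, hφ, hfin, -, hφC, -⟩ := noether_norm ϖ hϖ σ h0 hm hres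
  let _ := φ.toAlgebra
  have : Module.Finite (MvPowerSeries (Fin d) Λ) D := hfin
  have hC : Function.Injective (MvPowerSeries.C (σ := Fin d) (R := Λ)) := by
    intro a b h
    have := congrArg MvPowerSeries.constantCoeff h
    rwa [MvPowerSeries.constantCoeff_C, MvPowerSeries.constantCoeff_C] at this
  have : ExpChar (MvPowerSeries (Fin d) Λ) p := expChar_of_injective_ringHom hC p
  have : IsAdicComplete (maximalIdeal (MvPowerSeries (Fin d) Λ)) (MvPowerSeries (Fin d) Λ) := by
    rw [← ps_maximalIdeal]; infer_instance
  refine domD_fin hϖ hϖ0 hφ (fun x => ?_) p (finite_iterateFrobenius p fun x => ?_)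
  · obtain ⟨a, ha⟩ := hres x
    exact ⟨MvPowerSeries.C a, by change x - φ _ ∈ _; rwa [hφC]⟩
  · obtain ⟨y, hy⟩ := hperf (MvPowerSeries.constantCoeff x)
    refine ⟨MvPowerSeries.C y, ?_⟩
    rw [IsLocalRing.mem_maximalIdeal, mem_nonunits_iff, MvPowerSeries.isUnit_iff_constantCoeff,
      map_sub, map_pow, MvPowerSeries.constantCoeff_C]
    exact hy

theorem domD_field {D : Type*} [CommRing D] [IsDomain D] [IsLocalRing D]
    (h : maximalIdeal D = ⊥) : DomD D := by
  have hG : GPkg D 1 1 0 := by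
    intro J hJ
    have hJ0 : J = ⊥ := le_bot_iff.1 (h ▸ hJ.1)
    have hsp : Ideal.span (Set.range (Fin.elim0 : Fin 0 → D)) = ⊥ := by
      rw [Set.range_eq_empty, Ideal.span_empty]
    refine ⟨Fin.elim0, fun i => i.elim0, ?_, ?_, ?_, ?_⟩
    · rw [hsp]; exact ⟨bot_le, 1, by rw [h, pow_one]⟩
    · intro z hz
      rw [hJ0] at hz
      rw [hsp]
      exact integral_self hz
    · exact (TB_of_regular _ (fun i => i.elim0)).mono (zero_le)
    · intro n y hy
      rw [hsp] at hy ⊢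
      rw [one_mul]
      rcases Nat.lt_or_ge 1 n with hn | hn
      · obtain ⟨m, hm, a, ha, hy⟩ := hy
        have hb : ∀ i, i ≠ 0 → (⊥ : Ideal D) ^ i = ⊥ := fun i hi => by
          rw [← Ideal.zero_eq_bot, zero_pow hi]
        rw [Finset.sum_eq_zero, add_zero] at hy
        · rw [pow_eq_zero_iff hm.ne'] at hy
          rw [hy]; exact zero_mem _
        · intro i hi
          rw [Finset.mem_Icc] at hi
          have := ha i hi.1 hi.2
          rw [hb n (by omega), hb i (by omega), Ideal.mem_bot] at this
          rw [this, zero_mul]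
      · rw [Nat.sub_eq_zero_of_le hn, pow_zero, Ideal.one_eq_top]
        trivial
  exact hG.domD one_ne_zero

end UBS

/-! ### Quotients by primes -/

namespace UBS
open IsLocalRing (maximalIdeal)

lemma prim_map_surj {R S : Type*} [CommRing R] [CommRing S] [IsLocalRing R] [IsLocalRing S]
    (π : R →+* S) (hπ : Function.Surjective π) {J : Ideal R} (hJ : Prim J) : Prim (J.map π) := by
  have h1 := IsLocalRing.map_maximalIdeal_of_surjective π hπ
  refine ⟨h1 ▸ Ideal.map_mono hJ.1, ?_⟩
  obtain ⟨N, hN⟩ := hJ.2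
  refine ⟨N, ?_⟩
  rw [← h1, ← Ideal.map_pow]
  exact Ideal.map_mono hN

lemma map_intClosure_le {R S : Type*} [CommRing R] [CommRing S] (φ : R →+* S) (J : Ideal R) :
    J.intClosure.map φ ≤ (J.map φ).intClosure := by
  rw [Ideal.intClosure, Ideal.map_span, Ideal.span_le]
  rintro _ ⟨x, hx, rfl⟩
  exact Ideal.subset_span (isIntegralOverIdeal_map _ hx)

/-- Bounds for the domain `R ⧸ p` are bounds modulo `p` in `R`, up to a multiplier outside `p`. -/
theorem Dom.of_quotient {R : Type*} [CommRing R] [IsLocalRing R] {p : Ideal R} [p.IsPrime]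
    [IsLocalRing (R ⧸ p)] (h : DomD (R ⧸ p)) : Dom p := by
  obtain ⟨c', hc, k, h1, h2⟩ := h
  obtain ⟨c, rfl⟩ := Ideal.Quotient.mk_surjective c'
  have hs := Ideal.Quotient.mk_surjective (I := p)
  refine ⟨c, fun hcp => hc (Ideal.Quotient.eq_zero_iff_mem.2 hcp), k, fun J hJ n y hy => ?_,
    fun s g hg F hF => ?_⟩
  · have h3 := Ideal.mem_map_of_mem (Ideal.Quotient.mk p) hy
    rw [Ideal.map_pow] at h3
    have h4 := h1 _ (prim_map_surj _ hs hJ) n _ (Ideal.pow_right_mono (map_intClosure_le _ _) _ h3)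
    rw [← Ideal.map_pow, ← map_mul, ← Ideal.mem_comap,
      Ideal.comap_map_of_surjective' _ hs, Ideal.mk_ker] at h4
    exact h4
  · have hg' : Prim (Ideal.span (Set.range fun j => Ideal.Quotient.mk p (g j))) := by
      have := prim_map_surj _ hs hg
      rwa [Ideal.map_span, ← Set.range_comp] at this
    have h3 := TB_bot.1 (h2 s _ hg') (MvPolynomial.map (Ideal.Quotient.mk p) F) (by
      ext n
      rw [coeff_eps_map, Ideal.Quotient.eq_zero_iff_mem.2 (hF n)]; simp)
    have h4 : relI (fun j => Ideal.Quotient.mk p (g j)) =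
        (relI g).map (MvPolynomial.map (Ideal.Quotient.mk p)) := by
      rw [relI, relI, Ideal.map_span, ← Set.range_comp]
      congr 2
      ext1 i
      simp
    have h5 : MvPolynomial.C (Ideal.Quotient.mk p c) * MvPolynomial.X none ^ k *
        MvPolynomial.map (Ideal.Quotient.mk p) F = MvPolynomial.map (Ideal.Quotient.mk p)
          (MvPolynomial.C c * MvPolynomial.X none ^ k * F) := by simp
    rw [h4, h5, ← Ideal.mem_comap, Ideal.comap_map_of_surjective' _ (MvPolynomial.map_surjective _ hs),
      MvPolynomial.ker_map, Ideal.mk_ker] at h3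
    exact h3

end UBS

/-! ### Coefficient rings -/

namespace UBS
open IsLocalRing (maximalIdeal)

/-- The `n`-th ghost component of a Witt vector with all components in the kernel lies in the
`(n + 1)`-st power of the kernel, so that it factors through Witt vectors of the quotient. -/
lemma ghost_mem {A K : Type*} [CommRing A] [CommRing K] (p : ℕ) [hp : Fact p.Prime] (q : A →+* K)
    (hpm : (p : A) ∈ RingHom.ker q) {x : WittVector p A}
    (hx : WittVector.map q x = 0) (n : ℕ) :
    WittVector.ghostComponent n x ∈ RingHom.ker q ^ (n + 1) := by
  rw [WittVector.ghostComponent_apply, aeval_wittPolynomial]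
  refine sum_mem fun i hi => ?_
  rw [Finset.mem_range] at hi
  have h1 : x.coeff i ∈ RingHom.ker q := by
    rw [RingHom.mem_ker, ← WittVector.map_coeff, hx, WittVector.zero_coeff]
  have h2 : n - i + 1 ≤ p ^ (n - i) :=
    ((n - i).lt_two_pow_self).succ_le.trans (Nat.pow_le_pow_left hp.out.two_le _)
  refine Ideal.pow_le_pow_right (show n + 1 ≤ i + p ^ (n - i) by omega) ?_
  rw [pow_add]
  exact Ideal.mul_mem_mul (Ideal.pow_mem_pow hpm _) (Ideal.pow_mem_pow h1 _)

/-- The `n`-th ghost component composed with the inverse of the `n`-th Frobenius gives compatible maps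
into `A ⧸ m ^ (n + 1)`, where `m` is the kernel of `q`; they lift to the complete ring `A`. -/
theorem exists_witt_lift {A K : Type*} [CommRing A] [CommRing K] (p : ℕ) [Fact p.Prime] [CharP K p]
    [PerfectRing K p] (q : A →+* K) (hq : Function.Surjective q) [IsAdicComplete (RingHom.ker q) A] :
    ∃ θ : WittVector p K →+* A, ∀ w, q (θ w) = w.coeff 0 := by
  set m := RingHom.ker q with hm
  have hpm : (p : A) ∈ m := by rw [hm, RingHom.mem_ker, map_natCast, CharP.cast_eq_zero]
  -- The ghost component of `WittVector p A`, descended to Witt vectors of the residue ring.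
  let gh (n : ℕ) : WittVector p K →+* A ⧸ m ^ (n + 1) :=
    RingHom.liftOfSurjective (WittVector.map q) (WittVector.map_surjective _ hq)
      ⟨(Ideal.Quotient.mk (m ^ (n + 1))).comp (WittVector.ghostComponent n), fun x hx => by
        rw [RingHom.mem_ker, RingHom.comp_apply, Ideal.Quotient.eq_zero_iff_mem]
        exact ghost_mem p q hpm hx n⟩
  have hgh : ∀ n x, gh n (WittVector.map q x) =
      Ideal.Quotient.mk _ (WittVector.ghostComponent n x) := fun n x =>
    RingHom.liftOfSurjective_comp_apply ..
  -- Untwisting by Frobenius makes these maps compatible in `n`.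
  let θ (n : ℕ) : WittVector p K →+* A ⧸ m ^ (n + 1) :=
    (gh n).comp (WittVector.map (((frobeniusEquiv K p).symm ^ n : K ≃+* K) : K →+* K))
  have hθ : ∀ n (y : A), θ n (WittVector.teichmuller p (q y ^ p ^ n)) =
      Ideal.Quotient.mk _ (y ^ p ^ n) := by
    intro n y
    have h1 : ((frobeniusEquiv K p).symm ^ n : K ≃+* K) (q y ^ p ^ n) = q y := by
      induction n with
      | zero => simp
      | succ n ih =>
        rw [pow_succ, pow_succ, pow_mul, RingAut.mul_apply,
          show (frobeniusEquiv K p).symm ((q y ^ p ^ n) ^ p) = q y ^ p ^ n from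
            (frobeniusEquiv K p).symm_apply_apply _, ih]
    simp only [θ, RingHom.comp_apply, WittVector.map_teichmuller, RingHom.coe_coe]
    rw [h1, ← WittVector.map_teichmuller, hgh, WittVector.ghostComponent_teichmuller]
  have hroot : ∀ n (x : K), ∃ y : A, q y ^ p ^ n = x := by
    intro n x
    obtain ⟨z, hz⟩ := (iterateFrobeniusEquiv K p n).surjective x
    obtain ⟨y, rfl⟩ := hq z
    exact ⟨y, by rw [← hz, iterateFrobeniusEquiv_def]⟩
  have hcomp : ∀ n, (Ideal.Quotient.factorPowSucc m (n + 1)).comp (θ (n + 1)) = θ n := by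
    intro n
    refine WittVector.eq_of_apply_teichmuller_eq _ _ ⟨n + 1, ?_⟩ fun x => ?_
    · have : (p : A ⧸ m ^ (n + 1)) = Ideal.Quotient.mk _ (p : A) := by simp
      rw [this, ← map_pow, Ideal.Quotient.eq_zero_iff_mem]
      exact Ideal.pow_mem_pow hpm _
    · obtain ⟨y, rfl⟩ := hroot (n + 1) x
      rw [RingHom.comp_apply, hθ]
      have : q y ^ p ^ (n + 1) = q (y ^ p) ^ p ^ n := by
        rw [map_pow, ← pow_mul, ← pow_succ']
      rw [this, hθ, ← pow_mul, ← pow_succ']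
      simp
  refine ⟨IsAdicComplete.StrictMono.liftRingHom m Order.succ_strictMono θ (fun {n} => hcomp n), fun w => ?_⟩
  have h1 : Ideal.Quotient.mk _ (IsAdicComplete.StrictMono.liftRingHom m Order.succ_strictMono θ (fun {n} => hcomp n) w) = θ 0 w :=
    IsAdicComplete.StrictMono.mk_liftRingHom m Order.succ_strictMono θ (fun {n} => hcomp n) (n := 0) w
  obtain ⟨x, rfl⟩ := WittVector.map_surjective q hq w
  have h2 : θ 0 (WittVector.map q x) = Ideal.Quotient.mk _ (x.coeff 0) := by
    have h3 : WittVector.map (((frobeniusEquiv K p).symm ^ 0 : K ≃+* K) : K →+* K)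
        (WittVector.map q x) = WittVector.map q x := by
      ext i; simp
    simp only [θ, RingHom.comp_apply]
    rw [h3, hgh, WittVector.ghostComponent_apply, aeval_wittPolynomial]
    simp
  rw [h2] at h1
  have h4 := Ideal.Quotient.eq.1 h1
  rw [WittVector.map_coeff, ← sub_eq_zero, ← map_sub]
  exact RingHom.mem_ker.1 (hm ▸ (Ideal.pow_le_self (Nat.succ_ne_zero _) h4))

end UBS

namespace UBS
open IsLocalRing (maximalIdeal)
universe v

/-- Existence of a coefficient field in equal characteristic zero. -/
theorem coeffField_zero {A K : Type*} [CommRing A] [IsLocalRing A] [Field K] [CharZero K]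
    (q : A →+* K) (hq : Function.Surjective q) [IsAdicComplete (RingHom.ker q) A] :
    ∃ σ : K →+* A, ∀ x, q (σ x) = x := by
  have hunit : ∀ a : A, q a ≠ 0 → IsUnit a := by
    intro a ha
    by_contra h
    have h1 : RingHom.ker q = maximalIdeal A :=
      IsLocalRing.eq_maximalIdeal (RingHom.ker_isMaximal_of_surjective q hq)
    have h2 : a ∈ RingHom.ker q := h1 ▸ h
    exact ha h2
  let r : ℚ →+* A := IsLocalization.lift (M := nonZeroDivisors ℤ) (g := Int.castRingHom A)
    (fun y => hunit _ (by
      rw [eq_intCast, map_intCast]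
      exact Int.cast_ne_zero.2 (nonZeroDivisors.ne_zero y.2)))
  let _ : Algebra ℚ A := r.toAlgebra
  have : Algebra.FormallySmooth ℚ K := by
    obtain ⟨s, hs⟩ := exists_isTranscendenceBasis ℚ K
    have : Algebra.IsAlgebraic (IntermediateField.adjoin ℚ (Set.range ((↑) : s → K))) K :=
      hs.isAlgebraic_field
    exact .of_algebraicIndependent_of_isSeparable hs.1
  let f : K →+* A ⧸ RingHom.ker q := (RingHom.quotientKerEquivOfSurjective hq).symm
  let f' : K →ₐ[ℚ] A ⧸ RingHom.ker q := { f with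
    commutes' := fun x => by
      change (f.comp (algebraMap ℚ K)) x = _
      rw [Subsingleton.elim (f.comp (algebraMap ℚ K)) (algebraMap ℚ _)] }
  obtain ⟨g, hg⟩ := Algebra.FormallySmooth.exists_mkₐ_comp_eq_of_isAdicComplete f'
  refine ⟨g, fun x => ?_⟩
  have h1 : Ideal.Quotient.mk (RingHom.ker q) (g x) = f x := DFunLike.congr_fun hg x
  have h2 := congrArg (RingHom.quotientKerEquivOfSurjective hq) h1
  simpa [f] using h2

/-- Existence of a coefficient field in characteristic `p` when the residue field is perfect. -/
theorem coeffField_p {A K : Type*} [CommRing A] [CommRing K] (p : ℕ) [Fact p.Prime] [CharP K p]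
    [PerfectRing K p] (hpA : (p : A) = 0) (q : A →+* K) (hq : Function.Surjective q)
    [IsAdicComplete (RingHom.ker q) A] : ∃ σ : K →+* A, ∀ x, q (σ x) = x := by
  obtain ⟨θ, hθ⟩ := exists_witt_lift p q hq
  have hk : RingHom.ker (WittVector.constantCoeff (p := p) (R := K)) ≤ RingHom.ker θ := by
    rw [WittVector.ker_constantCoeff, Ideal.span_singleton_le_iff_mem, RingHom.mem_ker,
      map_natCast, hpA]
  refine ⟨RingHom.liftOfSurjective _ (WittVector.constantCoeff_surjective p) ⟨θ, hk⟩, fun x => ?_⟩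
  obtain ⟨w, rfl⟩ := WittVector.constantCoeff_surjective p x
  have : RingHom.liftOfSurjective _ (WittVector.constantCoeff_surjective p) ⟨θ, hk⟩
    (WittVector.constantCoeff w) = θ w := RingHom.liftOfSurjective_comp_apply ..
  rw [this, hθ]; rfl

/-- A complete ring with finitely generated ideal of definition is noetherian if it has a noetherian
coefficient ring, being a quotient of a completed polynomial ring over it. -/
theorem noeth_of_coeff {Λ A : Type*} [CommRing Λ] [IsNoetherianRing Λ] (𝔩 : Ideal Λ)
    [IsAdicComplete 𝔩 Λ] [CommRing A] (𝔪 : Ideal A) [IsAdicComplete 𝔪 A] (hfg : 𝔪.FG)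
    (σ : Λ →+* A) (h𝔩 : 𝔩.map σ ≤ 𝔪) (hres : ∀ x, ∃ a, x - σ a ∈ 𝔪) : IsNoetherianRing A := by
  obtain ⟨r, f, hf⟩ := Submodule.fg_iff_exists_fin_generating_family.1 hfg
  let φ : MvPolynomial (Fin r) Λ →+* A := MvPolynomial.eval₂Hom σ f
  have hfm : ∀ i, f i ∈ 𝔪 := fun i => hf ▸ Submodule.subset_span ⟨i, rfl⟩
  have hφ : (polyI (Fin r) 𝔩).map φ ≤ 𝔪 := by
    rw [polyI, Ideal.map_sup, Ideal.map_map, Ideal.map_span, sup_le_iff]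
    constructor
    · have : φ.comp MvPolynomial.C = σ := by ext a; simp [φ]
      rwa [this]
    · rw [Ideal.span_le]
      rintro _ ⟨_, ⟨i, rfl⟩, rfl⟩
      simpa [φ] using hfm i
  obtain ⟨ψ, hψ⟩ := ApproxIso.lift (approxIso_ps 𝔩) φ 𝔪 hφ
  let _ := ψ.toAlgebra
  have hmap : (psI (Fin r) 𝔩).map ψ = 𝔪 := by
    have h1 : ψ.comp (psι (Fin r) Λ) = φ := RingHom.ext hψ
    refine le_antisymm ?_ ?_
    · rw [psI, Ideal.map_map, h1]; exact hφ
    · rw [← hf]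
      refine Submodule.span_le.2 ?_
      rintro _ ⟨i, rfl⟩
      have : f i = ψ (psι (Fin r) Λ (MvPolynomial.X i)) := by rw [hψ]; simp [φ]
      rw [this]
      exact Ideal.mem_map_of_mem _ (Ideal.mem_map_of_mem _
        (Ideal.mem_sup_right (Ideal.subset_span ⟨i, rfl⟩)))
  have hH : IsHausdorff (psI (Fin r) 𝔩) A := by
    rw [← IsHausdorff.map_algebraMap_iff (S := A)]
    change IsHausdorff ((psI (Fin r) 𝔩).map ψ) A
    rw [hmap]; infer_instance
  have : Module.Finite (MvPowerSeries (Fin r) Λ) A := by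
    refine complete_nakayama (psI (Fin r) 𝔩) (fun _ : Fin 1 => (1 : A)) fun x => ?_
    obtain ⟨a, ha⟩ := hres x
    refine ⟨fun _ => psι (Fin r) Λ (MvPolynomial.C a), ?_⟩
    change _ ∈ (psI (Fin r) 𝔩).map ψ
    rw [hmap]
    have : ψ (psι (Fin r) Λ (MvPolynomial.C a)) = σ a := by rw [hψ]; simp [φ]
    rw [Fin.sum_univ_one, Algebra.smul_def, mul_one]
    change x - ψ _ ∈ 𝔪
    rwa [this]
  exact IsNoetherianRing.of_finite (MvPowerSeries (Fin r) Λ) A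

end UBS

namespace UBS
open IsLocalRing (maximalIdeal)
universe v

lemma infinite_residue {A K : Type*} [CommRing A] [IsLocalRing A] [CommRing K] [Infinite K]
    [Nontrivial K] (q : A →+* K) (hq : Function.Surjective q) (hk : maximalIdeal A ≤ RingHom.ker q) :
    Infinite (IsLocalRing.ResidueField A) := by
  let f : IsLocalRing.ResidueField A →+* K := Ideal.Quotient.lift _ q fun a ha => hk ha
  refine Infinite.of_surjective f fun x => ?_
  obtain ⟨a, rfl⟩ := hq x
  exact ⟨IsLocalRing.residue A a, rfl⟩

/-- The equicharacteristic case. The base is `K⟦X⟧`, with `X` sent to a nonzero element of the maximal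
ideal. -/
theorem domD_coeffField {D K : Type v} [CommRing D] [IsNoetherianRing D] [IsDomain D]
    [IsLocalRing D] [IsAdicComplete (maximalIdeal D) D] [Field K] [IsAlgClosed K]
    (σ : K →+* D) (hσ : ∀ x, ∃ a, x - σ a ∈ maximalIdeal D) : DomD D := by
  by_cases h0 : maximalIdeal D = ⊥
  · exact domD_field h0
  obtain ⟨t, htm, ht0⟩ := Submodule.exists_mem_ne_zero_of_ne_bot h0
  let φ : MvPolynomial Unit K →+* D := MvPolynomial.eval₂Hom σ fun _ => t
  have hφ : (polyI Unit (⊥ : Ideal K)).map φ ≤ maximalIdeal D := by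
    rw [polyI, Ideal.map_bot, bot_sup_eq, Ideal.map_span, Ideal.span_le]
    rintro _ ⟨_, ⟨i, rfl⟩, rfl⟩
    simpa [φ] using htm
  obtain ⟨ψ, hψ⟩ := ApproxIso.lift (approxIso_ps (⊥ : Ideal K)) φ (maximalIdeal D) hφ
  have hX : ψ (PowerSeries.X : PowerSeries K) = t := by
    have : (PowerSeries.X : PowerSeries K) = psι Unit K (MvPolynomial.X ()) := by
      simp [PowerSeries.X]
    rw [this, hψ]; simp [φ]
  have hC : ∀ a, ψ (PowerSeries.C (R := K) a) = σ a := by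
    intro a
    have : (PowerSeries.C (R := K) a : PowerSeries K) = psι Unit K (MvPolynomial.C a) := by
      simp [PowerSeries.C]
    rw [this, hψ]; simp [φ]
  have hcomp : IsAdicComplete (maximalIdeal (PowerSeries K)) (PowerSeries K) := by
    rw [PowerSeries.maximalIdeal_eq_span_X]; infer_instance
  have hmem : ∀ x : PowerSeries K, x ∈ maximalIdeal (PowerSeries K) ↔
      PowerSeries.constantCoeff x = 0 := by
    intro x
    rw [PowerSeries.maximalIdeal_eq_span_X, Ideal.mem_span_singleton, PowerSeries.X_dvd_iff]
  have hinf : Infinite (IsLocalRing.ResidueField (PowerSeries K)) :=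
    infinite_residue (PowerSeries.constantCoeff (R := K)) PowerSeries.constantCoeff_surj
      fun x hx => (hmem x).1 hx
  obtain ⟨p, hp⟩ := ExpChar.exists K
  have : ExpChar (PowerSeries K) p := expChar_of_injective_ringHom PowerSeries.C_injective p
  refine domD_complete (Λ := PowerSeries K) PowerSeries.X PowerSeries.maximalIdeal_eq_span_X p
    (fun x => ?_) ψ (hX ▸ ht0) (hX ▸ htm) fun x => ?_
  · obtain ⟨y, hy⟩ := IsAlgClosed.exists_pow_nat_eq (PowerSeries.constantCoeff x) (expChar_pos K p)
    refine ⟨PowerSeries.C y, (hmem _).2 ?_⟩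
    rw [map_sub, map_pow, PowerSeries.constantCoeff_C, hy, sub_self]
  · obtain ⟨a, ha⟩ := hσ x
    exact ⟨PowerSeries.C a, by rwa [hC]⟩

/-- The equicharacteristic case uses a coefficient field, the mixed characteristic case the Witt
vectors of the residue field. -/
theorem domD_algClosed {D : Type v} [CommRing D] [IsNoetherianRing D] [IsDomain D] [IsLocalRing D]
    [IsAdicComplete (maximalIdeal D) D] {K : Type v} [Field K] [IsAlgClosed K] (q : D →+* K)
    (hq : Function.Surjective q) : DomD D := by
  have hk : RingHom.ker q = maximalIdeal D :=
    IsLocalRing.eq_maximalIdeal (RingHom.ker_isMaximal_of_surjective q hq)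
  have hc : IsAdicComplete (RingHom.ker q) D := by rw [hk]; infer_instance
  have key : (∃ σ : K →+* D, ∀ x, q (σ x) = x) → DomD D := by
    rintro ⟨σ, hσ⟩
    refine domD_coeffField σ fun x => ⟨q x, ?_⟩
    rw [← hk, RingHom.mem_ker, map_sub, hσ, sub_self]
  obtain ⟨p, hp⟩ := CharP.exists K
  rcases CharP.char_is_prime_or_zero K p with hpp | rfl
  · have : Fact p.Prime := ⟨hpp⟩
    have : ExpChar K p := ExpChar.prime hpp
    have : PerfectRing K p := PerfectField.toPerfectRing p
    by_cases hpD : (p : D) = 0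
    · exact key (coeffField_p p hpD q hq)
    · obtain ⟨θ, hθ⟩ := exists_witt_lift p q hq
      have hmax : maximalIdeal (WittVector p K) = Ideal.span {(p : WittVector p K)} := by
        rw [← WittVector.ker_constantCoeff]
        exact (IsLocalRing.eq_maximalIdeal
          (RingHom.ker_isMaximal_of_surjective (WittVector.constantCoeff (p := p) (R := K))
            (WittVector.constantCoeff_surjective p))).symm
      have : IsAdicComplete (maximalIdeal (WittVector p K)) (WittVector p K) := by
        rw [hmax]; infer_instance
      have hinf : Infinite (IsLocalRing.ResidueField (WittVector p K)) :=
        infinite_residue (WittVector.constantCoeff (p := p) (R := K))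
          (WittVector.constantCoeff_surjective p)
          (by rw [hmax, WittVector.ker_constantCoeff])
      have : CharZero D := by
        obtain ⟨r, hr⟩ := CharP.exists D
        rcases CharP.char_is_prime_or_zero D r with hrp | rfl
        · exfalso
          have h1 : ((r : ℕ) : K) = 0 := by
            rw [← map_natCast q, CharP.cast_eq_zero, map_zero]
          rw [CharP.cast_eq_zero_iff K p] at h1
          rw [(Nat.prime_dvd_prime_iff_eq hpp hrp).1 h1] at hpD
          exact hpD (CharP.cast_eq_zero D r)
        · exact CharP.charP_to_charZero D
      have : CharZero (WittVector p K) := ⟨fun a b h => by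
        have := congrArg θ h
        rw [map_natCast, map_natCast] at this
        exact Nat.cast_injective this⟩
      refine domD_complete (Λ := WittVector p K) (p : WittVector p K) hmax 1
        (fun x => ⟨x, by rw [pow_one, sub_self]; exact zero_mem _⟩) θ (by rwa [map_natCast]) ?_
        fun x => ?_
      · rw [map_natCast, ← hk, RingHom.mem_ker, map_natCast, CharP.cast_eq_zero]
      · obtain ⟨w, hw⟩ := WittVector.constantCoeff_surjective p (q x)
        refine ⟨w, ?_⟩
        rw [← hk, RingHom.mem_ker, map_sub, hθ, ← hw, sub_eq_zero]
        rfl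
  · have : CharZero K := CharP.charP_to_charZero K
    exact key (coeffField_zero q hq)

/-- Completeness passes to quotients of noetherian local rings. -/
lemma complete_quot {A D : Type*} [CommRing A] [IsLocalRing A] [IsAdicComplete (maximalIdeal A) A]
    [CommRing D] [IsNoetherianRing D] [IsLocalRing D] (π : A →+* D) (hπ : Function.Surjective π) :
    IsAdicComplete (maximalIdeal D) D := by
  have hm := IsLocalRing.map_maximalIdeal_of_surjective π hπ
  refine { haus' := (inferInstance : IsHausdorff (maximalIdeal D) D).haus', prec' := fun f hf => ?_ }
  have hd : ∀ n, ∃ a ∈ maximalIdeal A ^ n, π a = f (n + 1) - f n := by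
    intro n
    have h1 := (SModEq.sub_mem.1 (hf (Nat.le_succ n)).symm)
    rw [smul_eq_mul, Ideal.mul_top, ← hm, ← Ideal.map_pow,
      Ideal.mem_map_iff_of_surjective _ hπ] at h1
    exact h1
  choose d hdm hd using hd
  obtain ⟨a0, ha0⟩ := hπ (f 0)
  let g : ℕ → A := fun n => a0 + ∑ i ∈ Finset.range n, d i
  have hg : ∀ n, π (g n) = f n := by
    intro n
    simp only [g, map_add, map_sum, ha0, hd, Finset.sum_range_sub]
    ring
  obtain ⟨L, hL⟩ := IsPrecomplete.prec (I := maximalIdeal A) (M := A) inferInstance (f := g) (by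
    intro m n hmn
    rw [SModEq.sub_mem, smul_eq_mul, Ideal.mul_top, ← neg_mem_iff, neg_sub]
    have : g n - g m = ∑ i ∈ Finset.Ico m n, d i := by
      simp only [g, add_sub_add_left_eq_sub, Finset.sum_Ico_eq_sub _ hmn]
    rw [this]
    exact sum_mem fun i hi => Ideal.pow_le_pow_right (Finset.mem_Ico.1 hi).1 (hdm i))
  refine ⟨π L, fun n => ?_⟩
  have h1 := SModEq.sub_mem.1 (hL n)
  rw [smul_eq_mul, Ideal.mul_top] at h1
  rw [SModEq.sub_mem, smul_eq_mul, Ideal.mul_top, ← hg, ← map_sub, ← hm, ← Ideal.map_pow]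
  exact Ideal.mem_map_of_mem _ h1

theorem dom_complete {A : Type v} [CommRing A] [IsNoetherianRing A] [IsLocalRing A]
    [IsAdicComplete (maximalIdeal A) A] {K : Type v} [Field K] [IsAlgClosed K] (q : A →+* K)
    (hq : Function.Surjective q) (p : Ideal A) [p.IsPrime] : Dom p := by
  have : IsLocalRing (A ⧸ p) := IsLocalRing.of_surjective' _ Ideal.Quotient.mk_surjective
  have hk : RingHom.ker q = maximalIdeal A :=
    IsLocalRing.eq_maximalIdeal (RingHom.ker_isMaximal_of_surjective q hq)
  have := complete_quot (Ideal.Quotient.mk p) Ideal.Quotient.mk_surjective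
  have hp : p ≤ RingHom.ker q := hk ▸ IsLocalRing.le_maximalIdeal Ideal.IsPrime.ne_top'
  exact Dom.of_quotient (domD_algClosed (Ideal.Quotient.lift p q fun a ha => hp ha) fun x => by
    obtain ⟨a, rfl⟩ := hq x
    exact ⟨Ideal.Quotient.mk p a, rfl⟩)

end UBS

/-! ### Enlarging the residue field -/

namespace UBS
open IsLocalRing (maximalIdeal)

/-- A complete local ring with algebraically closed residue field and finitely generated maximal ideal
is noetherian. -/
theorem noeth_algClosed {A K : Type*} [CommRing A] [IsLocalRing A] [Field K] [IsAlgClosed K]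
    (q : A →+* K) (hq : Function.Surjective q) [IsAdicComplete (RingHom.ker q) A]
    (hfg : (RingHom.ker q).FG) : IsNoetherianRing A := by
  obtain ⟨p, hp⟩ := CharP.exists K
  rcases CharP.char_is_prime_or_zero K p with hpp | rfl
  · have : Fact p.Prime := ⟨hpp⟩
    have : ExpChar K p := ExpChar.prime hpp
    have : PerfectRing K p := PerfectField.toPerfectRing p
    obtain ⟨θ, hθ⟩ := exists_witt_lift p q hq
    refine noeth_of_coeff (Ideal.span {(p : WittVector p K)}) (RingHom.ker q) hfg θ ?_ fun x => ?_
    · rw [Ideal.map_span, Set.image_singleton, Ideal.span_singleton_le_iff_mem, RingHom.mem_ker,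
        map_natCast, map_natCast, CharP.cast_eq_zero]
    · obtain ⟨w, hw⟩ := WittVector.constantCoeff_surjective p (q x)
      refine ⟨w, ?_⟩
      rw [RingHom.mem_ker, map_sub, hθ, ← hw, sub_eq_zero]
      rfl
  · have : CharZero K := CharP.charP_to_charZero K
    obtain ⟨σ, hσ⟩ := coeffField_zero q hq
    refine noeth_of_coeff (⊥ : Ideal K) (RingHom.ker q) hfg σ (by simp) fun x => ⟨q x, ?_⟩
    rw [RingHom.mem_ker, map_sub, hσ, sub_self]

section Inflation
universe u
open Polynomial (Monic)

/-- Inclusion of the polynomial ring in the variables below `b`. -/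
noncomputable def ren (R : Type*) [CommRing R] {K : Type*} [LinearOrder K] (b : K) :
    MvPolynomial (Set.Iio b) R →+* MvPolynomial K R :=
  MvPolynomial.eval₂Hom MvPolynomial.C fun c => MvPolynomial.X c.1

/-- The relation imposed on the variable indexed by `b`: the polynomial `P b`, whose coefficients involve
only smaller variables, evaluated at that variable. -/
noncomputable def infF {R : Type*} [CommRing R] {K : Type*} [LinearOrder K]
    (P : ∀ b : K, Polynomial (MvPolynomial (Set.Iio b) R)) (b : K) : MvPolynomial K R :=
  (P b).eval₂ (ren R b) (MvPolynomial.X b)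

/-- Adjoining a root of a monic polynomial of positive degree is an injective extension. -/
lemma adjoinRoot_of_inj {B : Type*} [CommRing B] (f : Polynomial B) (hf : f.Monic)
    (h : Nontrivial B → 1 ≤ f.natDegree) : Function.Injective (AdjoinRoot.of f) := by
  rw [injective_iff_map_eq_zero]
  intro a ha
  by_contra hne
  have hB : Nontrivial B := ⟨a, 0, hne⟩
  have h1 : f ∣ Polynomial.C a := by
    rw [← AdjoinRoot.mk_eq_zero]; exact ha
  refine hf.not_dvd_of_natDegree_lt (by simpa using hne) ?_ h1
  rw [Polynomial.natDegree_C]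
  exact h hB

/-- Finitely many of the relations are solvable in an extension ring of `R ⧸ J`: the roots are adjoined
in increasing order. -/
theorem infl_finite {R K : Type u} [CommRing R] [LinearOrder K]
    (P : ∀ b : K, Polynomial (MvPolynomial (Set.Iio b) R)) (hP : ∀ b, (P b).Monic)
    (hd : ∀ b, 1 ≤ (P b).natDegree) (J : Ideal R) (T : Finset K) :
    ∃ (B : Type u) (_ : CommRing B) (g : R →+* B) (x : K → B), RingHom.ker g = J ∧
      ∀ b ∈ T, (P b).eval₂ (MvPolynomial.eval₂Hom g fun c => x c.1) (x b) = 0 := by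
  classical
  induction T using Finset.induction_on_max with
  | empty => exact ⟨R ⧸ J, inferInstance, Ideal.Quotient.mk J, 0, Ideal.mk_ker, by simp⟩
  | insert b T hT ih =>
    obtain ⟨B, _, g, x, hg, hx⟩ := ih
    let G : MvPolynomial (Set.Iio b) R →+* B := MvPolynomial.eval₂Hom g fun c => x c.1
    let f : Polynomial B := (P b).map G
    have hf : f.Monic := (hP b).map G
    have hinj : Function.Injective (AdjoinRoot.of f) := adjoinRoot_of_inj f hf fun _ => by
      simp only [f]
      rw [(hP b).natDegree_map]
      exact hd b
    let x' : K → AdjoinRoot f := Function.update (fun c => AdjoinRoot.of f (x c)) b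
      (AdjoinRoot.root f)
    have hx' : ∀ c, c ≠ b → x' c = AdjoinRoot.of f (x c) := fun c hc => by
      simp [x', hc]
    have hxb : x' b = AdjoinRoot.root f := by simp [x']
    have hcomp : ∀ c ≤ b, (MvPolynomial.eval₂Hom ((AdjoinRoot.of f).comp g)
        fun a : Set.Iio c => x' a.1) = (AdjoinRoot.of f).comp
          (MvPolynomial.eval₂Hom g fun a : Set.Iio c => x a.1) := by
      intro c hc
      refine MvPolynomial.ringHom_ext (fun r => by simp) fun a => ?_
      have := hx' a.1 (ne_of_lt (lt_of_lt_of_le a.2 hc))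
      simpa using this
    refine ⟨AdjoinRoot f, inferInstance, (AdjoinRoot.of f).comp g, x', ?_, fun c hc => ?_⟩
    · ext r
      rw [RingHom.mem_ker, RingHom.comp_apply, map_eq_zero_iff _ hinj, ← hg, RingHom.mem_ker]
    · rcases Finset.mem_insert.1 hc with rfl | hc
      · rw [hcomp c le_rfl, ← Polynomial.eval₂_map, hxb]
        exact AdjoinRoot.eval₂_root f
      · rw [hcomp c (hT c hc).le, hx' c (hT c hc).ne, ← Polynomial.hom_eval₂, hx c hc, map_zero]

/-- Imposing all relations at once does not enlarge an ideal `J` of `R`, since any membership involves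
only finitely many of them. -/
theorem infl_pure {R K : Type u} [CommRing R] [LinearOrder K]
    (P : ∀ b : K, Polynomial (MvPolynomial (Set.Iio b) R)) (hP : ∀ b, (P b).Monic)
    (hd : ∀ b, 1 ≤ (P b).natDegree) (J : Ideal R) (r : R)
    (hr : MvPolynomial.C r ∈ J.map (MvPolynomial.C (σ := K)) ⊔
      Ideal.span (Set.range (infF P))) : r ∈ J := by
  classical
  obtain ⟨a, ha, s, hs, has⟩ := Submodule.mem_sup.1 hr
  obtain ⟨t, ht, hst⟩ := Submodule.mem_span_finite_of_mem_span hs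
  obtain ⟨T, rfl⟩ : ∃ T : Finset K, t = T.image (infF P) := by
    obtain ⟨T, -, hT⟩ := Finset.exists_subset_injOn_image_eq_of_surjOn (f := infF P)
      Set.univ t (by intro y hy; simpa using ht hy)
    exact ⟨T, hT.2.symm⟩
  obtain ⟨B, _, g, x, hg, hx⟩ := infl_finite P hP hd J T
  let φ : MvPolynomial K R →+* B := MvPolynomial.eval₂Hom g x
  have hF : ∀ b ∈ T, φ (infF P b) = 0 := by
    intro b hb
    rw [← hx b hb, infF, Polynomial.hom_eval₂]
    congr 1
    · refine MvPolynomial.ringHom_ext (fun r => by simp [φ, ren]) fun c => by simp [φ, ren]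
    · simp [φ]
  have h1 : φ a = 0 := by
    have : J.map (MvPolynomial.C (σ := K)) ≤ RingHom.ker φ := by
      rw [Ideal.map_le_iff_le_comap]
      intro j hj
      rw [← hg] at hj
      simpa [φ] using hj
    exact this ha
  have h2 : φ s = 0 := by
    have : Ideal.span (T.image (infF P) : Set (MvPolynomial K R)) ≤ RingHom.ker φ := by
      rw [Ideal.span_le]
      intro y hy
      obtain ⟨b, hb, rfl⟩ := Finset.mem_image.1 hy
      exact hF b hb
    exact this hst
  have h3 : φ (MvPolynomial.C r) = 0 := by rw [← has, map_add, h1, h2, add_zero]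
  rw [← hg, RingHom.mem_ker]
  simpa [φ] using h3

end Inflation
end UBS

namespace UBS
set_option linter.unusedSectionVars false
open IsLocalRing (maximalIdeal)
universe u

section Kernel
variable {R k K : Type*} [CommRing R] [Field k] [Field K] [Algebra k K] [LinearOrder K]

/-- The subfield generated by the elements below `b`. -/
noncomputable def infE (k : Type*) {K : Type*} [Field k] [Field K] [Algebra k K] [LinearOrder K]
    (b : K) : IntermediateField k K := IntermediateField.adjoin k (Set.Iio b)

/-- Evaluation of the polynomials in the variables below `b`, with values in `infE k b`. -/
noncomputable def infe (ρ : R →+* k) (b : K) : MvPolynomial (Set.Iio b) R →+* infE k b :=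
  MvPolynomial.eval₂Hom ((algebraMap k (infE k b)).comp ρ) fun c =>
    ⟨c.1, IntermediateField.subset_adjoin k _ c.2⟩

/-- Evaluation of each variable at the corresponding element of `K`. -/
noncomputable def infQ (K : Type*) [Field K] [Algebra k K] (ρ : R →+* k) :
    MvPolynomial K R →+* K :=
  MvPolynomial.eval₂Hom ((algebraMap k K).comp ρ) id

lemma infQ_ren (ρ : R →+* k) (b : K) (z : MvPolynomial (Set.Iio b) R) :
    infQ K ρ (ren R b z) = (infe ρ b z : K) := by
  have : (infQ K ρ).comp (ren R b) = (algebraMap (infE k b) K).comp (infe ρ b) := by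
    refine MvPolynomial.ringHom_ext (fun r => ?_) fun c => ?_
    · simp [infQ, ren, infe]
    · simp [infQ, ren, infe]
  exact RingHom.congr_fun this z

/-- Every element of the algebra generated by the elements below `b` is a polynomial in them. -/
lemma infe_surjective [Algebra.IsAlgebraic k K] (ρ : R →+* k) (hρ : Function.Surjective ρ) (b : K) :
    Function.Surjective (infe ρ b) := by
  have key : ∀ x ∈ Algebra.adjoin k (Set.Iio b), ∃ z, (infe ρ b z : K) = x := by
    intro x hx
    induction hx using Algebra.adjoin_induction with
    | mem x hx => exact ⟨MvPolynomial.X ⟨x, hx⟩, by simp [infe]⟩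
    | algebraMap r =>
      obtain ⟨s, rfl⟩ := hρ r
      exact ⟨MvPolynomial.C s, by simp [infe]⟩
    | add x y _ _ hx hy =>
      obtain ⟨z, rfl⟩ := hx
      obtain ⟨w, rfl⟩ := hy
      exact ⟨z + w, by simp⟩
    | mul x y _ _ hx hy =>
      obtain ⟨z, rfl⟩ := hx
      obtain ⟨w, rfl⟩ := hy
      exact ⟨z * w, by simp⟩
  intro x
  have hx : (x : K) ∈ Algebra.adjoin k (Set.Iio b) := by
    have h1 := IntermediateField.adjoin_toSubalgebra_of_isAlgebraic (F := k) (E := K)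
      (S := Set.Iio b) (fun c _ => Algebra.IsAlgebraic.isAlgebraic c)
    rw [← h1]
    exact x.2
  obtain ⟨z, hz⟩ := key _ hx
  exact ⟨z, Subtype.ext hz⟩

/-- The minimal polynomial of `b` over the field generated by the smaller elements has a monic lift. -/
lemma exists_infP [Algebra.IsAlgebraic k K] (ρ : R →+* k) (hρ : Function.Surjective ρ) (b : K) :
    ∃ P : Polynomial (MvPolynomial (Set.Iio b) R), P.Monic ∧ 1 ≤ P.natDegree ∧
      P.map (infe ρ b) = minpoly (infE k b) b := by
  have h_integral : IsIntegral (infE k b) b :=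
    (Algebra.IsAlgebraic.isAlgebraic (R := k) b).isIntegral.tower_top
  obtain ⟨P, h1, h2, h3⟩ := Polynomial.lifts_and_natDegree_eq_and_monic
    (Polynomial.map_surjective _ (infe_surjective ρ hρ b) (minpoly (infE k b) b) :)
    (minpoly.monic h_integral)
  exact ⟨P, h3, h2 ▸ minpoly.natDegree_pos h_integral, h1⟩

lemma exists_eval₂_ren (b : K) (y : MvPolynomial K R) (hy : ∀ c ∈ y.vars, c ≤ b) :
    ∃ Y : Polynomial (MvPolynomial (Set.Iio b) R),
      Y.eval₂ (ren R b) (MvPolynomial.X b) = y := by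
  have h1 : y ∈ MvPolynomial.supported R (Set.Iic b) := MvPolynomial.mem_supported.2 hy
  rw [MvPolynomial.supported_eq_adjoin_X] at h1
  clear hy
  induction h1 using Algebra.adjoin_induction with
  | mem x hx =>
    obtain ⟨c, hc, rfl⟩ := hx
    rcases eq_or_lt_of_le hc with rfl | hc
    · exact ⟨Polynomial.X, by simp⟩
    · exact ⟨Polynomial.C (MvPolynomial.X ⟨c, hc⟩), by simp [ren]⟩
  | algebraMap r => exact ⟨Polynomial.C (MvPolynomial.C r), by simp [ren, MvPolynomial.algebraMap_eq]⟩
  | add x y _ _ hx hy =>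
    obtain ⟨z, rfl⟩ := hx
    obtain ⟨w, rfl⟩ := hy
    exact ⟨z + w, by simp⟩
  | mul x y _ _ hx hy =>
    obtain ⟨z, rfl⟩ := hx
    obtain ⟨w, rfl⟩ := hy
    exact ⟨z * w, by simp [Polynomial.eval₂_mul]⟩

/-- If the kernel of the evaluation is killed by `π` on the polynomials in variables below `b`, then also
on those in variables up to `b`, because the minimal polynomial of `b` divides. -/
lemma infl_step [Algebra.IsAlgebraic k K] (ρ : R →+* k) (hρ : Function.Surjective ρ) (b : K)
    (P : Polynomial (MvPolynomial (Set.Iio b) R)) (hP : P.map (infe ρ b) = minpoly (infE k b) b)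
    {T : Type*} [CommRing T] (π : MvPolynomial K R →+* T)
    (hπP : π (P.eval₂ (ren R b) (MvPolynomial.X b)) = 0)
    (h : ∀ z, infQ K ρ (ren R b z) = 0 → π (ren R b z) = 0)
    (Y : Polynomial (MvPolynomial (Set.Iio b) R))
    (hY : infQ K ρ (Y.eval₂ (ren R b) (MvPolynomial.X b)) = 0) :
    π (Y.eval₂ (ren R b) (MvPolynomial.X b)) = 0 := by
  have hk : RingHom.ker (infe ρ b) ≤ RingHom.ker (π.comp (ren R b)) := by
    intro z hz
    refine h z ?_
    rw [infQ_ren, (RingHom.mem_ker.1 hz)]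
    rfl
  let j := RingHom.liftOfSurjective (infe ρ b) (infe_surjective ρ hρ b) ⟨π.comp (ren R b), hk⟩
  have hj : j.comp (infe ρ b) = π.comp (ren R b) :=
    RingHom.ext fun z => RingHom.liftOfSurjective_comp_apply _ (infe_surjective ρ hρ b)
      ⟨π.comp (ren R b), hk⟩ z
  have hπ : ∀ Z : Polynomial (MvPolynomial (Set.Iio b) R),
      π (Z.eval₂ (ren R b) (MvPolynomial.X b)) =
        (Z.map (infe ρ b)).eval₂ j (π (MvPolynomial.X b)) := by
    intro Z
    rw [Polynomial.hom_eval₂, ← hj, Polynomial.eval₂_map]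
  have hroot : Polynomial.aeval b (Y.map (infe ρ b)) = 0 := by
    rw [Polynomial.hom_eval₂] at hY
    rw [Polynomial.aeval_def, Polynomial.eval₂_map, ← hY]
    congr 1
    · exact RingHom.ext fun z => (infQ_ren ρ b z).symm
    · simp [infQ]
  obtain ⟨W, hW⟩ := minpoly.dvd _ _ hroot
  rw [hπ, hW, Polynomial.eval₂_mul, ← hP, ← hπ, hπP, zero_mul]

lemma ren_mem_supported (b : K) (z : MvPolynomial (Set.Iio b) R) :
    ren R b z ∈ MvPolynomial.supported R (Set.Iio b) := by
  induction z using MvPolynomial.induction_on with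
  | C r =>
    simp only [ren, MvPolynomial.eval₂Hom_C]
    exact Subalgebra.algebraMap_mem _ r
  | add p q hp hq => rw [map_add]; exact add_mem hp hq
  | mul_X p c hp =>
    rw [map_mul]
    refine mul_mem hp ?_
    simp only [ren, MvPolynomial.eval₂Hom_X']
    exact Algebra.subset_adjoin ⟨c.1, c.2, rfl⟩

/-- The kernel of the evaluation at the residue field is generated by the relations and by the kernel
of `ρ`: well-founded induction on the largest variable occurring. -/
theorem infl_ker [Algebra.IsAlgebraic k K] [WellFoundedLT K] (ρ : R →+* k)
    (hρ : Function.Surjective ρ)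
    (P : ∀ b : K, Polynomial (MvPolynomial (Set.Iio b) R))
    (hP : ∀ b, (P b).map (infe ρ b) = minpoly (infE k b) b)
    {T : Type*} [CommRing T] (π : MvPolynomial K R →+* T)
    (hπP : ∀ b, π (infF P b) = 0) (hπm : ∀ r, ρ r = 0 → π (MvPolynomial.C r) = 0)
    (y : MvPolynomial K R) (hy : infQ K ρ y = 0) : π y = 0 := by
  have core : ∀ y : MvPolynomial K R, (∀ b ∈ y.vars, ∀ z : MvPolynomial K R,
      (∀ c ∈ z.vars, c < b) → infQ K ρ z = 0 → π z = 0) → infQ K ρ y = 0 → π y = 0 := by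
    intro y hy hQ
    by_cases hv : y.vars.Nonempty
    · obtain ⟨b, hbv, hle⟩ : ∃ b ∈ y.vars, ∀ c ∈ y.vars, c ≤ b :=
        ⟨y.vars.max' hv, Finset.max'_mem _ hv, fun c hc => Finset.le_max' _ _ hc⟩
      obtain ⟨Y, rfl⟩ := exists_eval₂_ren b y hle
      refine infl_step ρ hρ b (P b) (hP b) π (hπP b) (fun z hz => ?_) Y hQ
      refine hy b hbv _ ?_ hz
      exact fun c hc => MvPolynomial.mem_supported.1 (ren_mem_supported b z) hc
    · rw [Finset.not_nonempty_iff_eq_empty] at hv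
      have : y ∈ MvPolynomial.supported R (∅ : Set K) := by
        rw [MvPolynomial.mem_supported, hv]; simp
      rw [MvPolynomial.supported_empty] at this
      obtain ⟨r, rfl⟩ := Algebra.mem_bot.1 this
      refine hπm r ?_
      have : algebraMap k K (ρ r) = 0 := by simpa [infQ, MvPolynomial.algebraMap_eq] using hQ
      simpa using this
  have hwf : ∀ b : K, ∀ z : MvPolynomial K R,
      (∀ c ∈ z.vars, c < b) → infQ K ρ z = 0 → π z = 0 := by
    intro b
    induction b using WellFoundedLT.induction with
    | ind b ih => exact fun z hz => core z fun c hc => ih c (hz c hc)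
  exact core y (fun b _ => hwf b) hy

theorem infl_ker_ideal [Algebra.IsAlgebraic k K] [WellFoundedLT K] (ρ : R →+* k)
    (hρ : Function.Surjective ρ)
    (P : ∀ b : K, Polynomial (MvPolynomial (Set.Iio b) R))
    (hP : ∀ b, (P b).map (infe ρ b) = minpoly (infE k b) b) (𝔟 : Ideal (MvPolynomial K R))
    (hb : ∀ b, infF P b ∈ 𝔟) (hm : ∀ r, ρ r = 0 → MvPolynomial.C r ∈ 𝔟)
    (y : MvPolynomial K R) (hy : infQ K ρ y = 0) : y ∈ 𝔟 :=
  Ideal.Quotient.eq_zero_iff_mem.1 (infl_ker ρ hρ P hP (Ideal.Quotient.mk 𝔟)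
    (fun b => Ideal.Quotient.eq_zero_iff_mem.2 (hb b))
    (fun r hr => Ideal.Quotient.eq_zero_iff_mem.2 (hm r hr)) y hy)

end Kernel

/-- A local ring extends to a ring with algebraically closed residue field whose maximal ideal is
generated by that of `R`, in such a way that ideals are contracted from their extensions. The
elements of an algebraic closure are adjoined along a well-order. -/
theorem inflate {R : Type u} [CommRing R] [IsLocalRing R] : ∃ (K : Type u) (_ : Field K)
    (_ : IsAlgClosed K) (S : Type u) (_ : CommRing S) (f : R →+* S) (q : S →+* K),
    Function.Surjective q ∧ RingHom.ker q = (maximalIdeal R).map f ∧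
      ∀ J : Ideal R, (J.map f).comap f ≤ J := by
  classical
  let k := IsLocalRing.ResidueField R
  let K := AlgebraicClosure k
  let _ : LinearOrder K := linearOrderOfSTO (WellOrderingRel (α := K))
  have hwf : WellFoundedLT K := inferInstanceAs (IsWellFounded K WellOrderingRel)
  let ρ : R →+* k := IsLocalRing.residue R
  have hρ : Function.Surjective ρ := IsLocalRing.residue_surjective
  choose P hPm hPd hP using exists_infP (K := K) ρ hρ
  let 𝔞 : Ideal (MvPolynomial K R) := Ideal.span (Set.range (infF P))
  have hQ𝔞 : ∀ y ∈ 𝔞, infQ K ρ y = 0 := by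
    have : 𝔞 ≤ RingHom.ker (infQ K ρ) := by
      rw [Ideal.span_le]
      rintro _ ⟨b, rfl⟩
      change infQ K ρ _ = 0
      have h1 : (infQ K ρ).comp (ren R b) = (algebraMap (infE k b) K).comp (infe ρ b) :=
        RingHom.ext fun z => infQ_ren ρ b z
      have h2 : infQ K ρ (MvPolynomial.X b) = b := by simp [infQ]
      rw [infF, Polynomial.hom_eval₂, h1, ← Polynomial.eval₂_map, hP, h2]
      exact minpoly.aeval _ _
    exact fun y hy => this hy
  let q : MvPolynomial K R ⧸ 𝔞 →+* K := Ideal.Quotient.lift 𝔞 (infQ K ρ) hQ𝔞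
  let f : R →+* MvPolynomial K R ⧸ 𝔞 := (Ideal.Quotient.mk 𝔞).comp MvPolynomial.C
  refine ⟨K, inferInstance, inferInstance, MvPolynomial K R ⧸ 𝔞, inferInstance, f, q, fun x =>
    ⟨Ideal.Quotient.mk 𝔞 (MvPolynomial.X x), by simp [q, infQ]⟩, le_antisymm ?_ ?_, ?_⟩
  · intro s hs
    obtain ⟨y, rfl⟩ := Ideal.Quotient.mk_surjective s
    exact infl_ker_ideal ρ hρ P hP (((maximalIdeal R).map f).comap (Ideal.Quotient.mk 𝔞))
      (fun b => by
        have : infF P b ∈ 𝔞 := Ideal.subset_span ⟨b, rfl⟩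
        rw [Ideal.mem_comap, Ideal.Quotient.eq_zero_iff_mem.2 this]
        exact zero_mem _)
      (fun r hr => Ideal.mem_map_of_mem f ((IsLocalRing.residue_eq_zero_iff r).1 hr)) y hs
  · rw [Ideal.map_le_iff_le_comap]
    intro r hr
    have : ρ r = 0 := (IsLocalRing.residue_eq_zero_iff r).2 hr
    simp [f, q, infQ, this]
  · intro J r hr
    refine infl_pure P hPm hPd J r ?_
    have h1 : Ideal.Quotient.mk 𝔞 (MvPolynomial.C r) ∈
        (J.map MvPolynomial.C).map (Ideal.Quotient.mk 𝔞) := by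
      rw [Ideal.map_map]; exact hr
    rw [← Ideal.mem_comap, Ideal.comap_map_of_surjective' _ Ideal.Quotient.mk_surjective,
      Ideal.mk_ker] at h1
    exact h1
end UBS

/-! ### Completion and conclusion -/

namespace UBS
open IsLocalRing (maximalIdeal)
universe u

/-- The adic completion in the form needed: a complete noetherian local ring, in which ideals containing
a power of the kernel are still contracted. -/
theorem adic_cover {S K : Type u} [CommRing S] [Field K] [IsAlgClosed K] (q : S →+* K)
    (hq : Function.Surjective q) (hfg : (RingHom.ker q).FG) :
    ∃ (A : Type u) (_ : CommRing A) (_ : IsNoetherianRing A) (_ : IsLocalRing A)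
      (_ : IsAdicComplete (maximalIdeal A) A) (q' : A →+* K) (g : S →+* A),
      Function.Surjective q' ∧ (RingHom.ker q).map g = maximalIdeal A ∧
      ∀ (J : Ideal S) (N : ℕ), RingHom.ker q ^ N ≤ J → (J.map g).comap g ≤ J := by
  set 𝔐 := RingHom.ker q with h𝔐
  have hmax : 𝔐.IsMaximal := RingHom.ker_isMaximal_of_surjective q hq
  let g : S →+* AdicCompletion 𝔐 S := algebraMap S (AdicCompletion 𝔐 S)
  have hcm : IsAdicComplete (𝔐.map g) (AdicCompletion 𝔐 S) := AdicCompletion.isAdicComplete_self 𝔐 hfg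
  have hmm : (𝔐.map g).IsMaximal := AdicCompletion.isMaximal_map_of_le 𝔐 𝔐 le_rfl hfg
  have hloc : IsLocalRing (AdicCompletion 𝔐 S) :=
    isLocalRing_of_isAdicComplete_maximal (𝔐.map g)
  have hm : 𝔐.map g = maximalIdeal (AdicCompletion 𝔐 S) := IsLocalRing.eq_maximalIdeal hmm
  let q' : AdicCompletion 𝔐 S →+* K :=
    (Ideal.Quotient.lift 𝔐 q fun a ha => RingHom.mem_ker.1 ha).comp (AdicCompletion.evalOneₐ 𝔐).toRingHom
  have hqg : ∀ s, q' (g s) = q s := by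
    intro s
    have := RingHom.congr_fun (AdicCompletion.evalOneₐ_comp_algebraMap_eq_mk 𝔐) s
    rw [RingHom.comp_apply] at this
    simp only [q', RingHom.comp_apply, g]
    rw [this, Ideal.Quotient.lift_mk]
  have hq' : Function.Surjective q' := fun x => by
    obtain ⟨s, rfl⟩ := hq x
    exact ⟨g s, hqg s⟩
  have hk : RingHom.ker q' = 𝔐.map g :=
    (IsLocalRing.eq_maximalIdeal (RingHom.ker_isMaximal_of_surjective q' hq')).trans hm.symm
  have hc1 : IsAdicComplete (RingHom.ker q') (AdicCompletion 𝔐 S) := by rw [hk]; exact hcm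
  have hno : IsNoetherianRing (AdicCompletion 𝔐 S) :=
    noeth_algClosed q' hq' (by rw [hk]; exact hfg.map g)
  refine ⟨AdicCompletion 𝔐 S, inferInstance, hno, hloc, hm ▸ hcm, q', g, hq', hm,
    fun J N hN s hs => ?_⟩
  let ev : AdicCompletion 𝔐 S →+* S ⧸ 𝔐 ^ N := (AdicCompletion.evalₐ 𝔐 N : _ →ₐ[S] _)
  have hev : ev.comp g = Ideal.Quotient.mk (𝔐 ^ N) :=
    RingHom.ext fun x => AlgHom.commutes (AdicCompletion.evalₐ 𝔐 N) x
  have h1 : ev (g s) ∈ (J.map g).map ev := Ideal.mem_map_of_mem _ hs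
  rw [Ideal.map_map, hev, ← RingHom.comp_apply, hev, ← Ideal.mem_comap,
    Ideal.comap_map_of_surjective' _ Ideal.Quotient.mk_surjective, Ideal.mk_ker,
    sup_eq_left.2 hN] at h1
  exact h1

lemma sup_pow_le {R : Type*} [CommRing R] (I J : Ideal R) (n : ℕ) :
    (I ⊔ J) ^ n ≤ I ^ n ⊔ J := by
  induction n with
  | zero => simp
  | succ n ih =>
    rw [pow_succ, pow_succ]
    refine (Ideal.mul_mono_left ih).trans ?_
    rw [Ideal.mul_sup, Ideal.sup_mul]
    exact sup_le (sup_le_sup le_rfl Ideal.mul_le_left) (Ideal.mul_le_right.trans le_sup_right)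

/-- Reduction to complete noetherian local rings with algebraically closed residue field. -/
theorem exists_cover {R : Type u} [CommRing R] [IsNoetherianRing R] [IsLocalRing R] :
    ∃ (K : Type u) (_ : Field K) (_ : IsAlgClosed K) (A : Type u) (_ : CommRing A)
      (_ : IsNoetherianRing A) (_ : IsLocalRing A) (_ : IsAdicComplete (maximalIdeal A) A)
      (q : A →+* K) (g : R →+* A), Function.Surjective q ∧
      (maximalIdeal R).map g = maximalIdeal A ∧
      ∀ (J : Ideal R) (N : ℕ), maximalIdeal R ^ N ≤ J → (J.map g).comap g ≤ J := by
  obtain ⟨K, _, _, S, _, f, q, hq, hk, hf⟩ := inflate (R := R)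
  obtain ⟨A, _, h1, h2, h3, q', g, hq', hg, hgJ⟩ := adic_cover q hq
    (by rw [hk]; exact Ideal.FG.map (IsNoetherian.noetherian _) f)
  refine ⟨K, inferInstance, inferInstance, A, inferInstance, h1, h2, h3, q', g.comp f, hq', ?_,
    fun J N hN => ?_⟩
  · rw [← Ideal.map_map, ← hk, hg]
  · rw [← Ideal.map_map, ← Ideal.comap_comap]
    refine le_trans (Ideal.comap_mono (hgJ (J.map f) N ?_)) (hf J)
    rw [hk, ← Ideal.map_pow]
    exact Ideal.map_mono hN

/-- The uniform bound for ideals primary to the maximal ideal. -/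
theorem bs_local {R : Type u} [CommRing R] [IsNoetherianRing R] [IsLocalRing R] :
    ∃ k, ∀ J : Ideal R, Prim J → ∀ n, J.intClosure ^ n ≤ J ^ (n - k) := by
  obtain ⟨K, _, _, A, _, _, _, _, q, g, hq, hm, hg⟩ := exists_cover (R := R)
  obtain ⟨k, -, hk⟩ := devissage (fun p hp => dom_complete q hq p) (⊥ : Ideal A)
  refine ⟨k, fun J hJ n => ?_⟩
  obtain ⟨hJm, N, hN⟩ := hJ
  have hJ' : Prim (J.map g) := by
    refine ⟨hm ▸ Ideal.map_mono hJm, N, ?_⟩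
    rw [← hm, ← Ideal.map_pow]
    exact Ideal.map_mono hN
  have h1 : (J.intClosure ^ n).map g ≤ (J ^ (n - k)).map g := by
    rw [Ideal.map_pow, Ideal.map_pow]
    refine (Ideal.pow_right_mono (map_intClosure_le g J) n).trans ?_
    simpa using hk _ hJ' n
  refine (Ideal.map_le_iff_le_comap.1 h1).trans (hg _ (N * (n - k)) ?_)
  rw [pow_mul]
  exact Ideal.pow_right_mono hN _

end UBS

theorem intDimBound_exists_of_local {R : Type*} [CommRing R] [IsNoetherianRing R]
    [IsLocalRing R] : ∃ k : ℕ, IntDimBound R k := by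
  obtain ⟨k, hk⟩ := UBS.bs_local (R := R)
  refine ⟨k, fun J n hn => ?_⟩
  rcases Nat.eq_zero_or_pos (n - k) with h0 | hpos
  · rw [h0, pow_zero, Ideal.one_eq_top]; exact le_top
  by_cases hJ : J = ⊤
  · rw [hJ, Ideal.top_pow]; exact le_top
  have hJm : J ≤ IsLocalRing.maximalIdeal R := IsLocalRing.le_maximalIdeal hJ
  -- `J + 𝔪 ^ N` is `𝔪`-primary; Krull's intersection theorem in `R ⧸ J ^ (n - k)` then removes `𝔪 ^ N`.
  have key : ∀ N, 0 < N →
      J.intClosure ^ n ≤ J ^ (n - k) ⊔ IsLocalRing.maximalIdeal R ^ N := by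
    intro N hN
    have hP : UBS.Prim (J ⊔ IsLocalRing.maximalIdeal R ^ N) :=
      ⟨sup_le hJm (Ideal.pow_le_self hN.ne'), N, le_sup_right⟩
    have h1 : J.intClosure ≤ (J ⊔ IsLocalRing.maximalIdeal R ^ N).intClosure :=
      Ideal.span_mono fun x hx => UBS.isIntegralOverIdeal_mono le_sup_left hx
    refine (Ideal.pow_right_mono h1 n).trans ((hk _ hP n).trans ?_)
    exact UBS.sup_pow_le _ _ _
  intro x hx
  have hinf : ⨅ i, (IsLocalRing.maximalIdeal R ^ i • ⊤ : Submodule R (R ⧸ J ^ (n - k))) = ⊥ :=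
    Ideal.iInf_pow_smul_eq_bot_of_isLocalRing _ Ideal.IsPrime.ne_top'
  rw [← Ideal.Quotient.eq_zero_iff_mem, ← Submodule.mem_bot R, ← hinf, Submodule.mem_iInf]
  intro N
  have h2 := key (N + 1) N.succ_pos hx
  obtain ⟨a, ha, b, hb, rfl⟩ := Submodule.mem_sup.1 h2
  rw [map_add, Ideal.Quotient.eq_zero_iff_mem.2 ha, zero_add]
  have : Ideal.Quotient.mk (J ^ (n - k)) b = b • 1 := by
    rw [Algebra.smul_def, mul_one]; rfl
  rw [this]
  exact Submodule.smul_mem_smul (Ideal.pow_le_pow_right N.le_succ hb) trivial
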